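/- Fix k ≥ 4, 0 < μ < 1/10 and 0 < (8k+7)ν < μ. There exist ε₀ > 0 and C > 0 such that for every ε ∈ (0,ε₀) and every global C^∞ solution u of the Cauchy problem: for j = 1,2 and all (σ,ω) ∈ ℝ×S¹, |V_j(t_{1,σ};σ,ω) − ε∂_σF_j(σ,ω)| ≤ Cε^{2−μ}, where t_{1,σ} = max{ε^{−1}, −2σ}. -/

import Mathlib

/-!
Write `u = εz + w`, where `z` is the free wave with the same data (`ZZ`, built from Poisson's formula
`MM`). The operator in the definition of `V` is `-½` times the characteristic derivative
`Wr v = (∂ₜ - ∂ᵣ)(r^{1/2} v)` (`Vop_eq`), so the theorem amounts to two estimates along the rays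
`r = t + σ` at `t = max(ε⁻¹, -2σ)`, where `t ≥ ε⁻¹` and `r ≥ t / 2`. The error obtained is in fact
`O(ε²)`, hence `O(ε^{2-μ})` (`comp_bound`).

*The free part.* The limit of `Wr z` along a ray is `-2 ∂_σ F₀` (`Wr_limit`). In characteristic form
the wave equation reads `(∂ₜ + ∂ᵣ) Wr v = r^{1/2} □v + r^{-3/2} (Ω² v + v / 4)` (`ray_deriv`). Free
waves are `O(t^{-1/2})` (`ZZ_decay`), also after rotations, so the right-hand side for `z` is `O(t⁻²)`
and integrating from `t` to infinity gives the rate `O(1 / t)` (`Wr_rate`), which is `O(ε)`.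

*The nonlinear part.* Here `w` has zero data and a cubic source, so `w` should be of size `ε³`, with a
small power of time lost. The nonlinear terms are not integrable in time in two dimensions, and the
loss is kept small by a bootstrap exploiting their dissipative sign.
The system is a pair of equations `□v = -q ∂ₜv` with `q ≥ 0`, which gives finite speed of propagation
for arbitrary smooth solutions (`finite_speed`). On a bounded time interval, energy estimates on flat
slices show that `u` is `O(ε)` and `w` is `O(ε³)` (`local_bounds`). Translating time by `R + 1` puts
the supports inside the cone `|x| ≤ t - 1`, and from then on energies of words in the boosts on the
hyperboloids `t² - |x|² = s²` are used (`hE_deriv`), together with a Klainerman–Sobolev inequality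
(`hyp_sobolev`) and a Gagliardo–Nirenberg inequality (`gn1`) for the cubic terms.

The bootstrap hypothesis `Pb` is a bound for `t^{1/2} |∂ₜu|`. Under it, the energies of order two and
three grow at most like `s^{1/16}` and `s^{1/2}` (`boot_energy`); growth is measured in powers of
`zr s = s^{1/16}`. These energies make the error terms in `ray_deriv` integrable along rays, so that
`Wr u` solves a damped linear equation with integrable forcing (`ray_err`). Since the damping has the
favourable sign, it may be ignored, and `t^{1/2} |∂ₜu|` is bounded by a multiple of the initial size
which does not depend on the bootstrap constant (`ray_bound`). This improves the hypothesis
(`boot_dec`), and the same energy estimate applied to `w` gives `|w| ≲ ε³ s^{1/4}` and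
`s |∂w| ≲ ε³ s^{1/4}` on all hyperboloids (`global_bounds`).

At the time in question either `t = ε⁻¹`, and a loss of one power of `t` costs only `ε⁻¹`, or
`r = t / 2`, well inside the cone, where `s` is comparable to `t` and there is no loss; in both cases
`|Wr w| ≲ ε³ / ε = ε²` (`Wr_w`).
-/

open Real MeasureTheory Filter Topology

noncomputable section

/-- Partial derivative in `t`. -/
def pt (u : ℝ → ℝ → ℝ → ℝ) : ℝ → ℝ → ℝ → ℝ :=
  fun t x1 x2 => deriv (fun s => u s x1 x2) t

/-- Partial derivative in `x₁`. -/
def p1 (u : ℝ → ℝ → ℝ → ℝ) : ℝ → ℝ → ℝ → ℝ :=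
  fun t x1 x2 => deriv (fun y => u t y x2) x1

/-- Partial derivative in `x₂`. -/
def p2 (u : ℝ → ℝ → ℝ → ℝ) : ℝ → ℝ → ℝ → ℝ :=
  fun t x1 x2 => deriv (fun y => u t x1 y) x2

/-- The d'Alembertian `□ = ∂ₜ² − ∂₁² − ∂₂²`. -/
def dAlembert (u : ℝ → ℝ → ℝ → ℝ) : ℝ → ℝ → ℝ → ℝ :=
  fun t x1 x2 => pt (pt u) t x1 x2 - p1 (p1 u) t x1 x2 - p2 (p2 u) t x1 x2

/-- `u : ℝ×ℝ² → ℝ` (curried) is C^∞. -/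
def Smooth3 (u : ℝ → ℝ → ℝ → ℝ) : Prop :=
  ContDiff ℝ (⊤ : ℕ∞) (fun p : ℝ × ℝ × ℝ => u p.1 p.2.1 p.2.2)

/-- Compactly supported C^∞ function on ℝ². -/
def SmoothCompact2 (f : ℝ → ℝ → ℝ) : Prop :=
  ContDiff ℝ (⊤ : ℕ∞) (fun p : ℝ × ℝ => f p.1 p.2) ∧
    HasCompactSupport (fun p : ℝ × ℝ => f p.1 p.2)

/-- Global C^∞ solution of the Cauchy problem
`□u₁ = −(∂ₜu₂)²∂ₜu₁`, `□u₂ = −(∂ₜu₁)²∂ₜu₂` with data `(εf_j, εg_j)`. -/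
structure IsSolution (ε : ℝ) (f1 f2 g1 g2 : ℝ → ℝ → ℝ)
    (u1 u2 : ℝ → ℝ → ℝ → ℝ) : Prop where
  smooth1 : Smooth3 u1
  smooth2 : Smooth3 u2
  pde1 : ∀ t x1 x2 : ℝ, 0 < t →
    dAlembert u1 t x1 x2 = -(pt u2 t x1 x2) ^ 2 * pt u1 t x1 x2
  pde2 : ∀ t x1 x2 : ℝ, 0 < t →
    dAlembert u2 t x1 x2 = -(pt u1 t x1 x2) ^ 2 * pt u2 t x1 x2
  init1 : ∀ x1 x2 : ℝ, u1 0 x1 x2 = ε * f1 x1 x2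
  init2 : ∀ x1 x2 : ℝ, u2 0 x1 x2 = ε * f2 x1 x2
  initd1 : ∀ x1 x2 : ℝ, pt u1 0 x1 x2 = ε * g1 x1 x2
  initd2 : ∀ x1 x2 : ℝ, pt u2 0 x1 x2 = ε * g2 x1 x2

/-- `‖u(t)‖_E²  = ½∫ ((∂ₜu)² + (∂₁u)² + (∂₂u)²) dx`. -/
def energySq (u : ℝ → ℝ → ℝ → ℝ) (t : ℝ) : ℝ :=
  (1 / 2) * ∫ x : ℝ × ℝ,
    ((pt u t x.1 x.2) ^ 2 + (p1 u t x.1 x.2) ^ 2 + (p2 u t x.1 x.2) ^ 2)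

/-- The energy norm `‖u(t)‖_E`. -/
def energyNorm (u : ℝ → ℝ → ℝ → ℝ) (t : ℝ) : ℝ :=
  Real.sqrt (energySq u t)

/-- `|x|` in coordinates. -/
def radius (x1 x2 : ℝ) : ℝ := Real.sqrt (x1 ^ 2 + x2 ^ 2)

/-- The Japanese bracket `⟨z⟩ = (1+z²)^{1/2}`. -/
def jb (z : ℝ) : ℝ := Real.sqrt (1 + z ^ 2)

/-- `U(t,x) = D(|x|^{1/2}u(t,x))` where `D = ½(∂_r − ∂ₜ)`. -/
def Uop (u : ℝ → ℝ → ℝ → ℝ) : ℝ → ℝ → ℝ → ℝ :=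
  fun t x1 x2 =>
    (1 / 2) * ((x1 / radius x1 x2) *
        p1 (fun s y1 y2 => radius y1 y2 ^ ((1 : ℝ) / 2) * u s y1 y2) t x1 x2
      + (x2 / radius x1 x2) *
        p2 (fun s y1 y2 => radius y1 y2 ^ ((1 : ℝ) / 2) * u s y1 y2) t x1 x2
      - pt (fun s y1 y2 => radius y1 y2 ^ ((1 : ℝ) / 2) * u s y1 y2) t x1 x2)

/-- `V(t;σ,ω) = U(t,(t+σ)ω)`. -/
def Vop (u : ℝ → ℝ → ℝ → ℝ) (t σ ω1 ω2 : ℝ) : ℝ :=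
  Uop u t ((t + σ) * ω1) ((t + σ) * ω2)

/-- The rotation vector field `Ω = x₁∂₂ − x₂∂₁`. -/
def rot (u : ℝ → ℝ → ℝ → ℝ) : ℝ → ℝ → ℝ → ℝ :=
  fun t x1 x2 => x1 * p2 u t x1 x2 - x2 * p1 u t x1 x2

/-- `H` for component `a` (the other component being `b`):
`H_a = ½(|x|^{1/2}(∂ₜu_b)²(∂ₜu_a) + t⁻¹U_b²U_a) − (8|x|^{3/2})⁻¹(4Ω²+1)u_a`. -/
def Hfun (ua ub : ℝ → ℝ → ℝ → ℝ) (t x1 x2 : ℝ) : ℝ :=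
  (1 / 2) * (radius x1 x2 ^ ((1 : ℝ) / 2) * (pt ub t x1 x2) ^ 2 * pt ua t x1 x2
      + (1 / t) * (Uop ub t x1 x2) ^ 2 * Uop ua t x1 x2)
    - (1 / (8 * radius x1 x2 ^ ((3 : ℝ) / 2))) *
        (4 * rot (rot ua) t x1 x2 + ua t x1 x2)

/-- `K_a(t;σ,ω) = H_a(t,(t+σ)ω)`. -/
def Kfun (ua ub : ℝ → ℝ → ℝ → ℝ) (t σ ω1 ω2 : ℝ) : ℝ :=
  Hfun ua ub t ((t + σ) * ω1) ((t + σ) * ω2)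

/-- `ρ = V₁K₁ − V₂K₂`. -/
def rhoFun (u1 u2 : ℝ → ℝ → ℝ → ℝ) (t σ ω1 ω2 : ℝ) : ℝ :=
  Vop u1 t σ ω1 ω2 * Kfun u1 u2 t σ ω1 ω2 -
    Vop u2 t σ ω1 ω2 * Kfun u2 u1 t σ ω1 ω2

/-- The Radon transform: line integral of `φ` over `{y : y·ω = s}`. -/
def Rline (φ : ℝ → ℝ → ℝ) (s ω1 ω2 : ℝ) : ℝ :=
  ∫ τ : ℝ, φ (s * ω1 - τ * ω2) (s * ω2 + τ * ω1)

/-- `R₂[φ](σ,ω) = (2√2π)⁻¹ ∫_σ^∞ R[φ](s,ω)(s−σ)^{−1/2} ds`. -/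
def R2 (φ : ℝ → ℝ → ℝ) (σ ω1 ω2 : ℝ) : ℝ :=
  (1 / (2 * Real.sqrt 2 * Real.pi)) *
    ∫ s in Set.Ioi σ, Rline φ s ω1 ω2 / Real.sqrt (s - σ)

/-- The Friedlander radiation field `F₀[φ,ψ] = −∂_σR₂[φ] + R₂[ψ]`. -/
def F0 (φ ψ : ℝ → ℝ → ℝ) (σ ω1 ω2 : ℝ) : ℝ :=
  -deriv (fun σ' => R2 φ σ' ω1 ω2) σ + R2 ψ σ ω1 ω2

/-- `∂_σF₀[φ,ψ]`. -/
def dF0 (φ ψ : ℝ → ℝ → ℝ) (σ ω1 ω2 : ℝ) : ℝ :=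
  deriv (fun σ' => F0 φ ψ σ' ω1 ω2) σ

/-- The vector fields `Γ = (S, L₁, L₂, Ω, ∂ₜ, ∂₁, ∂₂)`. -/
def Gam (i : Fin 7) (u : ℝ → ℝ → ℝ → ℝ) : ℝ → ℝ → ℝ → ℝ :=
  match i with
  | 0 => fun t x1 x2 => t * pt u t x1 x2 + x1 * p1 u t x1 x2 + x2 * p2 u t x1 x2
  | 1 => fun t x1 x2 => t * p1 u t x1 x2 + x1 * pt u t x1 x2
  | 2 => fun t x1 x2 => t * p2 u t x1 x2 + x2 * pt u t x1 x2
  | 3 => rot u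
  | 4 => pt u
  | 5 => p1 u
  | 6 => p2 u

/-- `Γ^α = Γ₀^{α₀}⋯Γ₆^{α₆}`. -/
def GamMulti (α : Fin 7 → ℕ) (u : ℝ → ℝ → ℝ → ℝ) : ℝ → ℝ → ℝ → ℝ :=
  (Gam 0)^[α 0] ((Gam 1)^[α 1] ((Gam 2)^[α 2] ((Gam 3)^[α 3]
    ((Gam 4)^[α 4] ((Gam 5)^[α 5] ((Gam 6)^[α 6] u))))))

/-- Pointwise norm `|φ(t,x)|_s = Σ_{|α|≤s}|Γ^αφ(t,x)|`, for a (finite) family of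
components, `|Γ^αφ|` being the Euclidean norm of the vector of components. -/
def ptwiseNorm (s : ℕ) (us : List (ℝ → ℝ → ℝ → ℝ)) (t x1 x2 : ℝ) : ℝ :=
  ∑ α : Fin 7 → Fin (s + 1),
    if (∑ i, (α i : ℕ)) ≤ s then
      Real.sqrt ((us.map fun u => (GamMulti (fun i => (α i : ℕ)) u t x1 x2) ^ 2).sum)
    else 0

/-- `‖φ(t)‖_s = Σ_{|α|≤s}‖Γ^αφ(t,·)‖_{L²(ℝ²)}`. -/
def sobNorm (s : ℕ) (us : List (ℝ → ℝ → ℝ → ℝ)) (t : ℝ) : ℝ :=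
  ∑ α : Fin 7 → Fin (s + 1),
    if (∑ i, (α i : ℕ)) ≤ s then
      Real.sqrt (∫ x : ℝ × ℝ,
        (us.map fun u => (GamMulti (fun i => (α i : ℕ)) u t x.1 x.2) ^ 2).sum)
    else 0

/-- The components of `∂u = (∂ₜu₁,∂₁u₁,∂₂u₁,∂ₜu₂,∂₁u₂,∂₂u₂)`. -/
def dList (u1 u2 : ℝ → ℝ → ℝ → ℝ) : List (ℝ → ℝ → ℝ → ℝ) :=
  [pt u1, p1 u1, p2 u1, pt u2, p1 u2, p2 u2]

/-- Smooth solution of the free wave equation with data `(φ0,φ1)`. -/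
def IsFreeSolution (φ0 φ1 : ℝ → ℝ → ℝ) (φ : ℝ → ℝ → ℝ → ℝ) : Prop :=
  Smooth3 φ ∧ (∀ t x1 x2 : ℝ, 0 < t → dAlembert φ t x1 x2 = 0) ∧
    (∀ x1 x2 : ℝ, φ 0 x1 x2 = φ0 x1 x2) ∧
    (∀ x1 x2 : ℝ, pt φ 0 x1 x2 = φ1 x1 x2)

/-- Mixed space-time partial `∂^α = ∂ₜ^{α₀}∂₁^{α₁}∂₂^{α₂}`. -/
def dmix (α : Fin 3 → ℕ) (u : ℝ → ℝ → ℝ → ℝ) : ℝ → ℝ → ℝ → ℝ :=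
  pt^[α 0] (p1^[α 1] (p2^[α 2] u))

/-! ### The algebra of smooth functions on space-time -/

/-- The algebra of smooth functions `ℝ × ℝ² → ℝ`, in the curried form of the statement. -/
def smoothAlg : Subalgebra ℝ (ℝ → ℝ → ℝ → ℝ) where
  carrier := {u | Smooth3 u}
  mul_mem' := fun {a b} (ha : Smooth3 a) (hb : Smooth3 b) => by
    unfold Smooth3 at *; exact ContDiff.mul ha hb
  add_mem' := fun {a b} (ha : Smooth3 a) (hb : Smooth3 b) => by
    unfold Smooth3 at *; exact ContDiff.add ha hb
  algebraMap_mem' := fun c => by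
    change ContDiff ℝ (⊤ : ℕ∞) (fun _ : ℝ × ℝ × ℝ => c); exact contDiff_const

/-- Smooth functions on space-time, as a type. -/
abbrev SF : Type := smoothAlg

instance : CoeFun SF (fun _ => ℝ → ℝ → ℝ → ℝ) := ⟨Subtype.val⟩

theorem SF.smooth (v : SF) : ContDiff ℝ (⊤ : ℕ∞) (fun p : ℝ × ℝ × ℝ => v p.1 p.2.1 p.2.2) := v.2

@[ext] theorem SF.ext' {u v : SF} (h : ∀ t x y, u t x y = v t x y) : u = v :=
  Subtype.ext (by funext t x y; exact h t x y)

@[simp] theorem SF.add_app (u v : SF) (t x y : ℝ) : (u + v) t x y = u t x y + v t x y := rfl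
@[simp] theorem SF.mul_app (u v : SF) (t x y : ℝ) : (u * v) t x y = u t x y * v t x y := rfl
@[simp] theorem SF.sub_app (u v : SF) (t x y : ℝ) : (u - v) t x y = u t x y - v t x y := rfl
@[simp] theorem SF.neg_app (u : SF) (t x y : ℝ) : (-u) t x y = -u t x y := rfl
@[simp] theorem SF.smul_app (c : ℝ) (u : SF) (t x y : ℝ) : (c • u) t x y = c * u t x y := rfl
@[simp] theorem SF.pow_app (u : SF) (n : ℕ) (t x y : ℝ) : (u ^ n) t x y = u t x y ^ n := rfl
@[simp] theorem SF.zero_app (t x y : ℝ) : (0 : SF) t x y = 0 := rfl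
@[simp] theorem SF.one_app (t x y : ℝ) : (1 : SF) t x y = 1 := rfl

@[simp] theorem SF.ofNat_app (n : ℕ) [n.AtLeastTwo] (t x y : ℝ) :
    (OfNat.ofNat n : SF) t x y = (OfNat.ofNat n : ℝ) := rfl

theorem SF.fderiv_smooth (v : SF) (w : ℝ × ℝ × ℝ) :
    ContDiff ℝ (⊤ : ℕ∞) (fun p : ℝ × ℝ × ℝ =>
      fderiv ℝ (fun p : ℝ × ℝ × ℝ => v p.1 p.2.1 p.2.2) p w) :=
  (v.smooth.fderiv_right (m := (⊤ : ℕ∞)) (by exact_mod_cast le_rfl)).clm_apply contDiff_const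

theorem SF.hasFDerivAt (v : SF) (p : ℝ × ℝ × ℝ) :
    HasFDerivAt (fun p : ℝ × ℝ × ℝ => v p.1 p.2.1 p.2.2)
      (fderiv ℝ (fun p : ℝ × ℝ × ℝ => v p.1 p.2.1 p.2.2) p) p :=
  (v.smooth.differentiable (by simp) p).hasFDerivAt

theorem SF.comp_raw (v : SF) {a b c : ℝ → ℝ} {a' b' c' s : ℝ} (ha : HasDerivAt a a' s)
    (hb : HasDerivAt b b' s) (hc : HasDerivAt c c' s) :
    HasDerivAt (fun s => v (a s) (b s) (c s))
      (fderiv ℝ (fun p : ℝ × ℝ × ℝ => v p.1 p.2.1 p.2.2) (a s, b s, c s) (a', b', c')) s :=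
  HasFDerivAt.comp_hasDerivAt (f := fun s => (a s, b s, c s)) s (v.hasFDerivAt (a s, b s, c s))
    (ha.prodMk (hb.prodMk hc))

theorem pt_eq (v : SF) (t x y : ℝ) : pt v t x y =
    fderiv ℝ (fun p : ℝ × ℝ × ℝ => v p.1 p.2.1 p.2.2) (t, x, y) (1, 0, 0) :=
  (v.comp_raw (hasDerivAt_id t) (hasDerivAt_const t x) (hasDerivAt_const t y)).deriv

theorem p1_eq (v : SF) (t x y : ℝ) : p1 v t x y =
    fderiv ℝ (fun p : ℝ × ℝ × ℝ => v p.1 p.2.1 p.2.2) (t, x, y) (0, 1, 0) :=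
  (v.comp_raw (hasDerivAt_const x t) (hasDerivAt_id x) (hasDerivAt_const x y)).deriv

theorem p2_eq (v : SF) (t x y : ℝ) : p2 v t x y =
    fderiv ℝ (fun p : ℝ × ℝ × ℝ => v p.1 p.2.1 p.2.2) (t, x, y) (0, 0, 1) :=
  (v.comp_raw (hasDerivAt_const y t) (hasDerivAt_const y x) (hasDerivAt_id y)).deriv

theorem pt_smooth (v : SF) : pt v ∈ smoothAlg := by
  change ContDiff ℝ (⊤ : ℕ∞) (fun p : ℝ × ℝ × ℝ => pt v p.1 p.2.1 p.2.2)
  simp_rw [pt_eq]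
  exact v.fderiv_smooth (1, 0, 0)

theorem p1_smooth (v : SF) : p1 v ∈ smoothAlg := by
  change ContDiff ℝ (⊤ : ℕ∞) (fun p : ℝ × ℝ × ℝ => p1 v p.1 p.2.1 p.2.2)
  simp_rw [p1_eq]
  exact v.fderiv_smooth (0, 1, 0)

theorem p2_smooth (v : SF) : p2 v ∈ smoothAlg := by
  change ContDiff ℝ (⊤ : ℕ∞) (fun p : ℝ × ℝ × ℝ => p2 v p.1 p.2.1 p.2.2)
  simp_rw [p2_eq]
  exact v.fderiv_smooth (0, 0, 1)

theorem SF.hasDerivAt_t (v : SF) (t x y : ℝ) : HasDerivAt (fun s => v s x y) (pt v t x y) t := by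
  have := v.comp_raw (hasDerivAt_id t) (hasDerivAt_const t x) (hasDerivAt_const t y)
  simpa [← pt_eq] using this

theorem SF.hasDerivAt_1 (v : SF) (t x y : ℝ) : HasDerivAt (fun s => v t s y) (p1 v t x y) x := by
  have := v.comp_raw (hasDerivAt_const x t) (hasDerivAt_id x) (hasDerivAt_const x y)
  simpa [← p1_eq] using this

theorem SF.hasDerivAt_2 (v : SF) (t x y : ℝ) : HasDerivAt (fun s => v t x s) (p2 v t x y) y := by
  have := v.comp_raw (hasDerivAt_const y t) (hasDerivAt_const y x) (hasDerivAt_id y)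
  simpa [← p2_eq] using this

/-- `∂ₜ` as a derivation of the algebra of smooth functions. -/
def Dt : Derivation ℝ SF SF where
  toFun v := ⟨pt v, pt_smooth v⟩
  map_add' u v := SF.ext' fun t x y => ((u.hasDerivAt_t t x y).add (v.hasDerivAt_t t x y)).deriv
  map_smul' c u := SF.ext' fun t x y => ((u.hasDerivAt_t t x y).const_mul c).deriv
  map_one_eq_zero' := SF.ext' fun t _ _ => (hasDerivAt_const t (1 : ℝ)).deriv
  leibniz' u v := SF.ext' fun t x y => by
    refine ((u.hasDerivAt_t t x y).mul (v.hasDerivAt_t t x y)).deriv.trans ?_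
    simp [smul_eq_mul]; ring

/-- `∂₁` as a derivation of the algebra of smooth functions. -/
def D1 : Derivation ℝ SF SF where
  toFun v := ⟨p1 v, p1_smooth v⟩
  map_add' u v := SF.ext' fun t x y => ((u.hasDerivAt_1 t x y).add (v.hasDerivAt_1 t x y)).deriv
  map_smul' c u := SF.ext' fun t x y => ((u.hasDerivAt_1 t x y).const_mul c).deriv
  map_one_eq_zero' := SF.ext' fun _ x _ => (hasDerivAt_const x (1 : ℝ)).deriv
  leibniz' u v := SF.ext' fun t x y => by
    refine ((u.hasDerivAt_1 t x y).mul (v.hasDerivAt_1 t x y)).deriv.trans ?_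
    simp [smul_eq_mul]; ring

/-- `∂₂` as a derivation of the algebra of smooth functions. -/
def D2 : Derivation ℝ SF SF where
  toFun v := ⟨p2 v, p2_smooth v⟩
  map_add' u v := SF.ext' fun t x y => ((u.hasDerivAt_2 t x y).add (v.hasDerivAt_2 t x y)).deriv
  map_smul' c u := SF.ext' fun t x y => ((u.hasDerivAt_2 t x y).const_mul c).deriv
  map_one_eq_zero' := SF.ext' fun _ _ y => (hasDerivAt_const y (1 : ℝ)).deriv
  leibniz' u v := SF.ext' fun t x y => by
    refine ((u.hasDerivAt_2 t x y).mul (v.hasDerivAt_2 t x y)).deriv.trans ?_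
    simp [smul_eq_mul]; ring

theorem Dt_coe (v : SF) : ((Dt v : SF) : ℝ → ℝ → ℝ → ℝ) = pt v := rfl
theorem D1_coe (v : SF) : ((D1 v : SF) : ℝ → ℝ → ℝ → ℝ) = p1 v := rfl
theorem D2_coe (v : SF) : ((D2 v : SF) : ℝ → ℝ → ℝ → ℝ) = p2 v := rfl

/-- Chain rule along a curve in space-time. -/
theorem SF.comp_curve (v : SF) {a b c : ℝ → ℝ} {a' b' c' s : ℝ} (ha : HasDerivAt a a' s)
    (hb : HasDerivAt b b' s) (hc : HasDerivAt c c' s) :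
    HasDerivAt (fun s => v (a s) (b s) (c s))
      (Dt v (a s) (b s) (c s) * a' + D1 v (a s) (b s) (c s) * b' + D2 v (a s) (b s) (c s) * c')
      s := by
  have := v.comp_raw ha hb hc
  convert this using 1
  rw [Dt_coe, D1_coe, D2_coe, pt_eq, p1_eq, p2_eq]
  have h : ((a', b', c') : ℝ × ℝ × ℝ) = a' • ((1, 0, 0) : ℝ × ℝ × ℝ) + b' • ((0, 1, 0) : ℝ × ℝ × ℝ)
      + c' • ((0, 0, 1) : ℝ × ℝ × ℝ) := by ext <;> simp
  rw [h, map_add, map_add, map_smul, map_smul, map_smul]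
  simp only [smul_eq_mul]; ring

/-- Symmetry of the second derivative. -/
theorem SF.second (v : SF) (w z : ℝ × ℝ × ℝ) (p : ℝ × ℝ × ℝ) :
    fderiv ℝ (fun q => fderiv ℝ (fun p : ℝ × ℝ × ℝ => v p.1 p.2.1 p.2.2) q w) p z
    = fderiv ℝ (fun q => fderiv ℝ (fun p : ℝ × ℝ × ℝ => v p.1 p.2.1 p.2.2) q z) p w := by
  have hd : DifferentiableAt ℝ (fderiv ℝ (fun p : ℝ × ℝ × ℝ => v p.1 p.2.1 p.2.2)) p :=
    (v.smooth.fderiv_right (m := (⊤ : ℕ∞)) (by exact_mod_cast le_rfl)).differentiable (by simp) p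
  rw [fderiv_clm_apply hd (differentiableAt_const _), fderiv_clm_apply hd (differentiableAt_const _)]
  have hs : IsSymmSndFDerivAt ℝ (fun p : ℝ × ℝ × ℝ => v p.1 p.2.1 p.2.2) p := by
    apply ContDiffAt.isSymmSndFDerivAt (n := (⊤ : ℕ∞)) v.smooth.contDiffAt
    simp only [minSmoothness_of_isRCLikeNormedField]
    exact WithTop.coe_le_coe.2 (le_top : (2 : ℕ∞) ≤ ⊤)
  simp [hs.eq]

@[simp] theorem D1_Dt (v : SF) : D1 (Dt v) = Dt (D1 v) := SF.ext' fun t x y => by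
  rw [D1_coe, Dt_coe (D1 v), p1_eq, pt_eq]
  have e1 : (fun p : ℝ × ℝ × ℝ => (Dt v) p.1 p.2.1 p.2.2) = fun p =>
    fderiv ℝ (fun p : ℝ × ℝ × ℝ => v p.1 p.2.1 p.2.2) p (1, 0, 0) := by
    funext p; rw [Dt_coe, pt_eq]
  have e2 : (fun p : ℝ × ℝ × ℝ => (D1 v) p.1 p.2.1 p.2.2) = fun p =>
    fderiv ℝ (fun p : ℝ × ℝ × ℝ => v p.1 p.2.1 p.2.2) p (0, 1, 0) := by
    funext p; rw [D1_coe, p1_eq]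
  rw [e1, e2, v.second]

@[simp] theorem D2_Dt (v : SF) : D2 (Dt v) = Dt (D2 v) := SF.ext' fun t x y => by
  rw [D2_coe, Dt_coe (D2 v), p2_eq, pt_eq]
  have e1 : (fun p : ℝ × ℝ × ℝ => (Dt v) p.1 p.2.1 p.2.2) = fun p =>
    fderiv ℝ (fun p : ℝ × ℝ × ℝ => v p.1 p.2.1 p.2.2) p (1, 0, 0) := by
    funext p; rw [Dt_coe, pt_eq]
  have e2 : (fun p : ℝ × ℝ × ℝ => (D2 v) p.1 p.2.1 p.2.2) = fun p =>
    fderiv ℝ (fun p : ℝ × ℝ × ℝ => v p.1 p.2.1 p.2.2) p (0, 0, 1) := by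
    funext p; rw [D2_coe, p2_eq]
  rw [e1, e2, v.second]

@[simp] theorem D2_D1 (v : SF) : D2 (D1 v) = D1 (D2 v) := SF.ext' fun t x y => by
  rw [D2_coe, D1_coe (D2 v), p2_eq, p1_eq]
  have e1 : (fun p : ℝ × ℝ × ℝ => (D1 v) p.1 p.2.1 p.2.2) = fun p =>
    fderiv ℝ (fun p : ℝ × ℝ × ℝ => v p.1 p.2.1 p.2.2) p (0, 1, 0) := by
    funext p; rw [D1_coe, p1_eq]
  have e2 : (fun p : ℝ × ℝ × ℝ => (D2 v) p.1 p.2.1 p.2.2) = fun p =>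
    fderiv ℝ (fun p : ℝ × ℝ × ℝ => v p.1 p.2.1 p.2.2) p (0, 0, 1) := by
    funext p; rw [D2_coe, p2_eq]
  rw [e1, e2, v.second]

/-- The coordinate function `t`. -/
def X0 : SF := ⟨fun t _ _ => t, (contDiff_fst : ContDiff ℝ (⊤ : ℕ∞) (Prod.fst : ℝ × ℝ × ℝ → ℝ))⟩
/-- The coordinate function `x₁`. -/
def X1 : SF := ⟨fun _ x _ => x, (contDiff_fst.comp contDiff_snd :
  ContDiff ℝ (⊤ : ℕ∞) (Prod.fst ∘ Prod.snd : ℝ × ℝ × ℝ → ℝ))⟩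
/-- The coordinate function `x₂`. -/
def X2 : SF := ⟨fun _ _ y => y, (contDiff_snd.comp contDiff_snd :
  ContDiff ℝ (⊤ : ℕ∞) (Prod.snd ∘ Prod.snd : ℝ × ℝ × ℝ → ℝ))⟩

@[simp] theorem X0_app (t x y : ℝ) : X0 t x y = t := rfl
@[simp] theorem X1_app (t x y : ℝ) : X1 t x y = x := rfl
@[simp] theorem X2_app (t x y : ℝ) : X2 t x y = y := rfl

@[simp] theorem Dt_X0 : Dt X0 = 1 := SF.ext' fun t _ _ => (hasDerivAt_id t).deriv
@[simp] theorem Dt_X1 : Dt X1 = 0 := SF.ext' fun t x _ => (hasDerivAt_const t x).deriv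
@[simp] theorem Dt_X2 : Dt X2 = 0 := SF.ext' fun t _ y => (hasDerivAt_const t y).deriv
@[simp] theorem D1_X0 : D1 X0 = 0 := SF.ext' fun t x _ => (hasDerivAt_const x t).deriv
@[simp] theorem D1_X1 : D1 X1 = 1 := SF.ext' fun _ x _ => (hasDerivAt_id x).deriv
@[simp] theorem D1_X2 : D1 X2 = 0 := SF.ext' fun _ x y => (hasDerivAt_const x y).deriv
@[simp] theorem D2_X0 : D2 X0 = 0 := SF.ext' fun t _ y => (hasDerivAt_const y t).deriv
@[simp] theorem D2_X1 : D2 X1 = 0 := SF.ext' fun _ x y => (hasDerivAt_const y x).deriv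
@[simp] theorem D2_X2 : D2 X2 = 1 := SF.ext' fun _ _ y => (hasDerivAt_id y).deriv

/-- The boost `L₁ = x₁∂ₜ + t∂₁`. -/
def L1 : Derivation ℝ SF SF := X1 • Dt + X0 • D1
/-- The boost `L₂ = x₂∂ₜ + t∂₂`. -/
def L2 : Derivation ℝ SF SF := X2 • Dt + X0 • D2
/-- The rotation `Ω = x₁∂₂ - x₂∂₁`. -/
def Om : Derivation ℝ SF SF := X1 • D2 - X2 • D1

theorem L1_def (v : SF) : L1 v = X1 * Dt v + X0 * D1 v := rfl
theorem L2_def (v : SF) : L2 v = X2 * Dt v + X0 * D2 v := rfl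
theorem Om_def (v : SF) : Om v = X1 * D2 v - X2 * D1 v := by
  simp [Om, Derivation.sub_apply]

/-- The d'Alembertian on smooth functions. -/
def box (v : SF) : SF := Dt (Dt v) - D1 (D1 v) - D2 (D2 v)

theorem box_app (v : SF) (t x y : ℝ) : box v t x y = dAlembert v t x y := rfl

theorem box_add (u v : SF) : box (u + v) = box u + box v := by simp [box]; ring
theorem box_sub (u v : SF) : box (u - v) = box u - box v := by simp [box]; ring
theorem box_smul (c : ℝ) (v : SF) : box (c • v) = c • box v := by simp [box, smul_sub]
theorem box_Dt (v : SF) : box (Dt v) = Dt (box v) := by simp [box]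
theorem box_D1 (v : SF) : box (D1 v) = D1 (box v) := by simp [box]
theorem box_D2 (v : SF) : box (D2 v) = D2 (box v) := by simp [box]
theorem box_L1 (v : SF) : box (L1 v) = L1 (box v) := by
  simp [box, L1_def]; ring
theorem box_L2 (v : SF) : box (L2 v) = L2 (box v) := by
  simp [box, L2_def]; ring
theorem box_Om (v : SF) : box (Om v) = Om (box v) := by
  simp [box, Om_def]; ring

/-! ### Integration over a square -/

theorem SF.cont (v : SF) : Continuous (fun p : ℝ × ℝ × ℝ => v p.1 p.2.1 p.2.2) := v.smooth.continuous

theorem SF.cont_comp {X : Type*} [TopologicalSpace X] (v : SF) {a b c : X → ℝ} (ha : Continuous a)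
    (hb : Continuous b) (hc : Continuous c) : Continuous (fun p => v (a p) (b p) (c p)) :=
  v.cont.comp (ha.prodMk (hb.prodMk hc))

theorem SF.contOn_comp {X : Type*} [TopologicalSpace X] (v : SF) {a b c : X → ℝ} {S : Set X}
    (ha : ContinuousOn a S) (hb : ContinuousOn b S) (hc : ContinuousOn c S) :
    ContinuousOn (fun p => v (a p) (b p) (c p)) S :=
  v.cont.comp_continuousOn (ha.prodMk (hb.prodMk hc))

/-- The square `[-B,B]²`. -/
def Qb (B : ℝ) : Set (ℝ × ℝ) := Set.Icc (-B) B ×ˢ Set.Icc (-B) B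

theorem Qb_compact (B : ℝ) : IsCompact (Qb B) := isCompact_Icc.prod isCompact_Icc
theorem Qb_meas (B : ℝ) : MeasurableSet (Qb B) := measurableSet_Icc.prod measurableSet_Icc

/-- The integral of `G` over the square `[-B,B]²`. -/
def J (B : ℝ) (G : ℝ → ℝ → ℝ) : ℝ := ∫ p in Qb B, G p.1 p.2

/-- Continuity of a curried function of two variables. -/
def Cont2 (G : ℝ → ℝ → ℝ) : Prop := Continuous (fun p : ℝ × ℝ => G p.1 p.2)

theorem Cont2.integrableOn {G : ℝ → ℝ → ℝ} (h : Cont2 G) (B : ℝ) :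
    IntegrableOn (fun p : ℝ × ℝ => G p.1 p.2) (Qb B) :=
  h.continuousOn.integrableOn_compact (Qb_compact B)

theorem J_add {B : ℝ} {G H : ℝ → ℝ → ℝ} (hG : Cont2 G) (hH : Cont2 H) :
    J B (fun x y => G x y + H x y) = J B G + J B H :=
  integral_add (hG.integrableOn B) (hH.integrableOn B)

theorem J_sub {B : ℝ} {G H : ℝ → ℝ → ℝ} (hG : Cont2 G) (hH : Cont2 H) :
    J B (fun x y => G x y - H x y) = J B G - J B H :=
  integral_sub (hG.integrableOn B) (hH.integrableOn B)

theorem J_const_mul {B c : ℝ} {G : ℝ → ℝ → ℝ} :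
    J B (fun x y => c * G x y) = c * J B G :=
  integral_const_mul _ _

theorem J_mono {B : ℝ} {G H : ℝ → ℝ → ℝ} (hG : Cont2 G) (hH : Cont2 H)
    (h : ∀ x y, G x y ≤ H x y) : J B G ≤ J B H :=
  setIntegral_mono (hG.integrableOn B) (hH.integrableOn B) fun p => h p.1 p.2

theorem J_nonneg {B : ℝ} {G : ℝ → ℝ → ℝ} (h : ∀ x y, 0 ≤ G x y) : 0 ≤ J B G :=
  integral_nonneg fun p => h p.1 p.2

/-- Differentiation under the integral sign over a square. -/
theorem J_hasDerivAt {B s₀ : ℝ} {U : Set ℝ} (hU : IsOpen U) (hs : s₀ ∈ U) {G G' : ℝ → ℝ → ℝ → ℝ}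
    (hG : ∀ s ∈ U, Cont2 (G s))
    (hG' : ContinuousOn (fun q : ℝ × ℝ × ℝ => G' q.1 q.2.1 q.2.2) (U ×ˢ Set.univ))
    (hd : ∀ s ∈ U, ∀ x y, HasDerivAt (fun s => G s x y) (G' s x y) s) :
    HasDerivAt (fun s => J B (G s)) (J B (G' s₀)) s₀ := by
  obtain ⟨δ, hδ, hball⟩ := Metric.isOpen_iff.1 hU s₀ hs
  have hsub : Metric.closedBall s₀ (δ / 2) ⊆ U :=
    (Metric.closedBall_subset_ball (by linarith)).trans hball
  have hK : IsCompact (Metric.closedBall s₀ (δ / 2) ×ˢ Qb B) :=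
    (isCompact_closedBall _ _).prod (Qb_compact B)
  obtain ⟨M, hM⟩ := hK.exists_bound_of_continuousOn
    (hG'.mono (Set.prod_mono hsub (Set.subset_univ _)))
  have hslice : ∀ s ∈ U, Cont2 (G' s) := fun s hs => by
    have : Continuous (fun p : ℝ × ℝ => ((s, p) : ℝ × ℝ × ℝ)) := by fun_prop
    rw [Cont2, ← continuousOn_univ]
    exact hG'.comp this.continuousOn (fun p _ => ⟨hs, trivial⟩)
  refine (hasDerivAt_integral_of_dominated_loc_of_deriv_le
    (μ := volume.restrict (Qb B)) (F := fun s (p : ℝ × ℝ) => G s p.1 p.2)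
    (F' := fun s (p : ℝ × ℝ) => G' s p.1 p.2) (x₀ := s₀) (s := Metric.ball s₀ (δ / 2))
    (bound := fun _ => M) (Metric.ball_mem_nhds _ (by positivity)) ?_ ?_ ?_ ?_ ?_ ?_).2
  · filter_upwards [Metric.ball_mem_nhds s₀ (half_pos hδ)] with s hs
    exact ((hG s (hsub (Metric.ball_subset_closedBall hs))).integrableOn B).aestronglyMeasurable
  · exact (hG s₀ hs).integrableOn B
  · exact ((hslice s₀ hs).integrableOn B).aestronglyMeasurable
  · refine (ae_restrict_iff' (Qb_meas B)).2 (ae_of_all _ fun p hp s hs => ?_)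
    exact hM (s, p) ⟨Metric.ball_subset_closedBall hs, hp⟩
  · exact integrable_const_iff.2 (Or.inr (by
      rw [isFiniteMeasure_restrict]; exact (Qb_compact B).measure_lt_top.ne))
  · exact ae_of_all _ fun p s hs => hd s (hsub (Metric.ball_subset_closedBall hs)) p.1 p.2

theorem J_iter2 {B : ℝ} {G : ℝ → ℝ → ℝ} (hG : Cont2 G) :
    J B G = ∫ x in Set.Icc (-B) B, ∫ y in Set.Icc (-B) B, G x y :=
  setIntegral_prod (fun p : ℝ × ℝ => G p.1 p.2) (hG.integrableOn B)

theorem J_swap {B : ℝ} {G : ℝ → ℝ → ℝ} : J B G = J B (fun x y => G y x) := by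
  unfold J Qb
  rw [Measure.volume_eq_prod]
  exact (setIntegral_prod_swap (μ := (volume : Measure ℝ)) (ν := (volume : Measure ℝ)) _ _
    (fun p : ℝ × ℝ => G p.1 p.2)).symm

theorem Cont2.swap {G : ℝ → ℝ → ℝ} (h : Cont2 G) : Cont2 (fun x y => G y x) :=
  h.comp continuous_swap

/-- The integral of a `∂₂`-derivative vanishes for functions vanishing on the sides. -/
theorem J_d2 {B : ℝ} (hB : 0 ≤ B) {G G' : ℝ → ℝ → ℝ} (hG' : Cont2 G')
    (hd : ∀ x y, HasDerivAt (fun y => G x y) (G' x y) y)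
    (h0 : ∀ x y, |y| = B → G x y = 0) : J B G' = 0 := by
  rw [J_iter2 hG']
  have : ∀ x, ∫ y in Set.Icc (-B) B, G' x y = 0 := fun x => by
    rw [integral_Icc_eq_integral_Ioc, ← intervalIntegral.integral_of_le (by linarith)]
    rw [intervalIntegral.integral_eq_sub_of_hasDerivAt (fun y _ => hd x y)]
    · rw [h0 x B (abs_of_nonneg hB), h0 x (-B) (by rw [abs_neg, abs_of_nonneg hB]), sub_zero]
    · have : Continuous (G' x) := hG'.comp (by fun_prop : Continuous fun y : ℝ => (x, y))
      exact this.intervalIntegrable _ _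
  simp [this]

theorem J_d1 {B : ℝ} (hB : 0 ≤ B) {G G' : ℝ → ℝ → ℝ} (hG' : Cont2 G')
    (hd : ∀ x y, HasDerivAt (fun x => G x y) (G' x y) x)
    (h0 : ∀ x y, |x| = B → G x y = 0) : J B G' = 0 := by
  rw [J_swap]
  exact J_d2 (G := fun x y => G y x) hB hG'.swap (fun x y => hd y x) (fun x y h => h0 y x h)

/-! ### A Sobolev inequality on squares -/

/-- The fundamental theorem of calculus for `(1 - (x - x₀) / a) h²`, which vanishes at
`x = x₀ + a`, and Young's inequality. -/
theorem sobolev_1d {a x₀ : ℝ} (ha : 0 < a) {h h' : ℝ → ℝ} (hc' : Continuous h')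
    (hd : ∀ x, HasDerivAt h (h' x) x) :
    h x₀ ^ 2 ≤ ∫ x in x₀..(x₀ + a), (2 / a * h x ^ 2 + a * h' x ^ 2) := by
  have hc : Continuous h := continuous_iff_continuousAt.2 fun x => (hd x).continuousAt
  have key : ∫ x in x₀..(x₀ + a),
      (-(1 / a) * h x ^ 2 + (1 - (x - x₀) / a) * (2 * h x * h' x)) = - h x₀ ^ 2 := by
    rw [intervalIntegral.integral_eq_sub_of_hasDerivAt
      (f := fun x => (1 - (x - x₀) / a) * h x ^ 2)]
    · have : a / a = 1 := div_self ha.ne'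
      simp [this]
    · intro x _
      have h1 : HasDerivAt (fun x : ℝ => 1 - (x - x₀) / a) (-(1 / a)) x := by
        simpa using (((hasDerivAt_id x).sub_const x₀).div_const a).const_sub 1
      have h2 : HasDerivAt (fun x => h x ^ 2) (2 * h x * h' x) x := by
        have := (hd x).fun_pow 2
        simpa using this
      exact h1.mul h2
    · exact Continuous.intervalIntegrable (by fun_prop) _ _
  have h3 : h x₀ ^ 2 = ∫ x in x₀..(x₀ + a),
      -(-(1 / a) * h x ^ 2 + (1 - (x - x₀) / a) * (2 * h x * h' x)) := by
    rw [intervalIntegral.integral_neg, key, neg_neg]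
  rw [h3]
  refine intervalIntegral.integral_mono_on (by linarith)
    (Continuous.intervalIntegrable (by fun_prop) _ _)
    (Continuous.intervalIntegrable (by fun_prop) _ _) fun x hx => ?_
  have hθ0 : 0 ≤ 1 - (x - x₀) / a := by
    rw [sub_nonneg, div_le_one ha]; linarith [hx.2]
  have hθ1 : 1 - (x - x₀) / a ≤ 1 := by
    have : 0 ≤ (x - x₀) / a := div_nonneg (by linarith [hx.1]) ha.le
    linarith
  set θ := 1 - (x - x₀) / a
  have h4 : -(2 * θ * (h x * h' x)) ≤ 1 / a * h x ^ 2 + a * h' x ^ 2 := by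
    have e1 : 0 ≤ (1 / a) * (h x + a * θ * h' x) ^ 2 := by positivity
    have e2 : (1 / a) * (h x + a * θ * h' x) ^ 2 =
        1 / a * h x ^ 2 + 2 * θ * (h x * h' x) + a * (θ ^ 2 * h' x ^ 2) := by
      field_simp
      ring
    have e3 : θ ^ 2 * h' x ^ 2 ≤ 1 * h' x ^ 2 :=
      mul_le_mul_of_nonneg_right (by nlinarith) (sq_nonneg _)
    nlinarith
  have e5 : 2 / a = 1 / a + 1 / a := by ring
  rw [e5]; nlinarith

/-- Pointwise bound on a square of side `a`, with an arbitrary nonnegative integrable majorant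
outside of the square. -/
theorem sobolev_sq {B a x₀ y₀ : ℝ} (ha : 0 < a) (hx1 : -B ≤ x₀) (hx2 : x₀ + a ≤ B) (hy1 : -B ≤ y₀)
    (hy2 : y₀ + a ≤ B) {g gx gy gxy H : ℝ → ℝ → ℝ} (cx : Cont2 gx) (cy : Cont2 gy)
    (cxy : Cont2 gxy) (c : Cont2 g) (cH : Cont2 H)
    (dx : ∀ x y, HasDerivAt (fun x => g x y) (gx x y) x)
    (dy : ∀ x y, HasDerivAt (fun y => g x y) (gy x y) y)
    (dxy : ∀ x y, HasDerivAt (fun y => gx x y) (gxy x y) y)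
    (hH0 : ∀ x y, 0 ≤ H x y)
    (hH : ∀ x y, x₀ ≤ x → x ≤ x₀ + a → y₀ ≤ y → y ≤ y₀ + a →
      4 * (g x y ^ 2 / a ^ 2 + gx x y ^ 2 + gy x y ^ 2 + a ^ 2 * gxy x y ^ 2) ≤ H x y) :
    g x₀ y₀ ^ 2 ≤ J B H := by
  have sx : ∀ {G : ℝ → ℝ → ℝ}, Cont2 G → ∀ y, Continuous fun x => G x y := fun hG y =>
    hG.comp (by fun_prop : Continuous fun x : ℝ => (x, y))
  have sy : ∀ {G : ℝ → ℝ → ℝ}, Cont2 G → ∀ x, Continuous (G x) := fun hG x =>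
    hG.comp (by fun_prop : Continuous fun y : ℝ => (x, y))
  have cK : Cont2 (fun x y => 2 / a * (2 / a * g x y ^ 2 + a * gy x y ^ 2)
      + a * (2 / a * gx x y ^ 2 + a * gxy x y ^ 2)) := by
    unfold Cont2 at *; fun_prop
  set K : ℝ → ℝ → ℝ := fun x y => 2 / a * (2 / a * g x y ^ 2 + a * gy x y ^ 2)
      + a * (2 / a * gx x y ^ 2 + a * gxy x y ^ 2) with hK
  have hle : x₀ ≤ x₀ + a := by linarith
  have hle' : y₀ ≤ y₀ + a := by linarith
  have cont_int : Continuous fun x => ∫ y in y₀..(y₀ + a), K x y :=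
    intervalIntegral.continuous_parametric_intervalIntegral_of_continuous'
      (f := fun x y => K x y) cK _ _
  have step : g x₀ y₀ ^ 2 ≤ ∫ x in x₀..(x₀ + a), ∫ y in y₀..(y₀ + a), K x y := by
    refine (sobolev_1d ha (sx cx y₀) (fun x => dx x y₀)).trans ?_
    refine intervalIntegral.integral_mono_on hle ?_ (cont_int.intervalIntegrable _ _) fun x _ => ?_
    · have h1 := sx c y₀
      have h2 := sx cx y₀
      exact Continuous.intervalIntegrable (by fun_prop) _ _
    · have h1 := sobolev_1d (x₀ := y₀) ha (sy cy x) (fun y => dy x y)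
      have h2 := sobolev_1d (x₀ := y₀) ha (sy cxy x) (fun y => dxy x y)
      have c1 := sy c x
      have c2 := sy cx x
      have c3 := sy cy x
      have c4 := sy cxy x
      have : ∫ y in y₀..(y₀ + a), K x y =
          2 / a * (∫ y in y₀..(y₀ + a), (2 / a * g x y ^ 2 + a * gy x y ^ 2)) +
          a * ∫ y in y₀..(y₀ + a), (2 / a * gx x y ^ 2 + a * gxy x y ^ 2) := by
        rw [← intervalIntegral.integral_const_mul, ← intervalIntegral.integral_const_mul,
          ← intervalIntegral.integral_add]
        · exact Continuous.intervalIntegrable (by fun_prop) _ _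
        · exact Continuous.intervalIntegrable (by fun_prop) _ _
      rw [this]
      gcongr
  refine step.trans ?_
  have e1 : ∫ x in x₀..(x₀ + a), ∫ y in y₀..(y₀ + a), K x y =
      ∫ p in Set.Icc x₀ (x₀ + a) ×ˢ Set.Icc y₀ (y₀ + a), K p.1 p.2 := by
    rw [Measure.volume_eq_prod, setIntegral_prod]
    · rw [intervalIntegral.integral_of_le hle, ← integral_Icc_eq_integral_Ioc]
      congr 1
      funext x
      rw [intervalIntegral.integral_of_le hle', ← integral_Icc_eq_integral_Ioc]
    · exact cK.continuousOn.integrableOn_compact (isCompact_Icc.prod isCompact_Icc)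
  rw [e1]
  refine (setIntegral_mono_on (cK.continuousOn.integrableOn_compact
    (isCompact_Icc.prod isCompact_Icc)) (cH.continuousOn.integrableOn_compact
    (isCompact_Icc.prod isCompact_Icc)) (measurableSet_Icc.prod measurableSet_Icc)
    (g := fun p : ℝ × ℝ => H p.1 p.2) fun p hp => ?_).trans ?_
  · refine le_trans ?_ (hH p.1 p.2 hp.1.1 hp.1.2 hp.2.1 hp.2.2)
    have : K p.1 p.2 = 4 * (g p.1 p.2 ^ 2 / a ^ 2) + 2 * gy p.1 p.2 ^ 2 + 2 * gx p.1 p.2 ^ 2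
        + a ^ 2 * gxy p.1 p.2 ^ 2 := by
      simp only [hK]; field_simp; ring
    rw [this]
    nlinarith [sq_nonneg (gy p.1 p.2), sq_nonneg (gx p.1 p.2),
      mul_nonneg (sq_nonneg a) (sq_nonneg (gxy p.1 p.2))]
  · refine setIntegral_mono_set (cH.integrableOn B) (ae_of_all _ fun p => hH0 p.1 p.2) ?_
    refine LE.le.eventuallyLE (Set.prod_mono ?_ ?_)
    · exact Set.Icc_subset_Icc hx1 hx2
    · exact Set.Icc_subset_Icc hy1 hy2

/-! ### Finite speed of propagation -/

theorem J_zero {B : ℝ} {G : ℝ → ℝ → ℝ} (hG : Cont2 G) (h0 : ∀ x y, 0 ≤ G x y) (hJ : J B G = 0)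
    {x y : ℝ} (hx : |x| < B) (hy : |y| < B) : G x y = 0 := by
  have h1 := (setIntegral_eq_zero_iff_of_nonneg_ae (f := fun p : ℝ × ℝ => G p.1 p.2)
    (ae_of_all _ fun p => h0 p.1 p.2) (hG.integrableOn B)).1 hJ
  have h2 : (fun p : ℝ × ℝ => G p.1 p.2) =ᵐ[volume.restrict (Set.Ioo (-B) B ×ˢ Set.Ioo (-B) B)]
      fun _ => (0 : ℝ) :=
    ae_restrict_of_ae_restrict_of_subset
      (Set.prod_mono Set.Ioo_subset_Icc_self Set.Ioo_subset_Icc_self) h1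
  have h3 := Measure.eqOn_open_of_ae_eq h2 (isOpen_Ioo.prod isOpen_Ioo) hG.continuousOn
    continuousOn_const
  exact h3 (x := (x, y)) ⟨abs_lt.1 hx, abs_lt.1 hy⟩

/-- The positive part squared is differentiable everywhere; it serves as a cutoff weight in the
proof of finite speed of propagation. -/
theorem hasDerivAt_cutoff (z : ℝ) :
    HasDerivAt (fun z : ℝ => max z 0 ^ 2) (2 * max z 0) z := by
  rcases lt_trichotomy z 0 with h | h | h
  · have : (fun z : ℝ => max z 0 ^ 2) =ᶠ[𝓝 z] fun _ => 0 := by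
      filter_upwards [Iio_mem_nhds h] with y hy
      simp [max_eq_right (Set.mem_Iio.1 hy).le]
    rw [max_eq_right h.le, mul_zero]
    exact (hasDerivAt_const z (0 : ℝ)).congr_of_eventuallyEq this
  · subst h
    rw [hasDerivAt_iff_isLittleO]
    have : (fun x' : ℝ => max x' 0 ^ 2 - max (0 : ℝ) 0 ^ 2 - (x' - 0) • (2 * max (0 : ℝ) 0))
        = fun x' => max x' 0 ^ 2 := by
      funext x; simp
    rw [this]
    refine Asymptotics.IsBigO.trans_isLittleO (g := fun x : ℝ => x ^ 2) ?_ ?_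
    · refine Asymptotics.isBigO_of_le _ fun x => ?_
      rw [norm_pow, norm_pow]
      gcongr
      rw [Real.norm_eq_abs, Real.norm_eq_abs, abs_of_nonneg (le_max_right _ _)]
      exact max_le (le_abs_self _) (abs_nonneg _)
    · simpa using (Asymptotics.isLittleO_pow_id (𝕜 := ℝ) (n := 2) (by norm_num))
  · have : (fun z : ℝ => max z 0 ^ 2) =ᶠ[𝓝 z] fun z => z ^ 2 := by
      filter_upwards [Ioi_mem_nhds h] with y hy
      simp [max_eq_left (Set.mem_Ioi.1 hy).le]
    rw [max_eq_left h.le]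
    have h2 := (hasDerivAt_pow 2 z).congr_of_eventuallyEq this
    simpa using h2

theorem hasDerivAt_sqrt1 {c b x₁ x : ℝ} (hc : 0 < c) (hb : 0 ≤ b) :
    HasDerivAt (fun x => √(c + (x - x₁) ^ 2 + b)) ((x - x₁) / √(c + (x - x₁) ^ 2 + b)) x := by
  have hp : 0 < c + (x - x₁) ^ 2 + b := by positivity
  have h1 : HasDerivAt (fun x => c + (x - x₁) ^ 2 + b) (2 * (x - x₁)) x := by
    have := ((((hasDerivAt_id x).sub_const x₁).fun_pow 2).const_add c).add_const b
    simpa using this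
  have := h1.sqrt hp.ne'
  convert this using 1
  have := (Real.sqrt_pos.2 hp).ne'
  field_simp

set_option maxHeartbeats 1600000 in
/-- Smooth solutions of `□v = -q ∂ₜv` with `q ≥ 0` whose data vanish near the base of a backward
cone vanish at its apex. The weight `χ(T' - t - √(δ² + |x - x₁|²))` with `χ(z) = max(z,0)²`
localises the energy to the cone. -/
theorem cone_vanish {v q : SF} (hq : ∀ t x y, 0 < t → 0 ≤ q t x y)
    (hbox : ∀ t x y, 0 < t → box v t x y = -q t x y * Dt v t x y) {t₁ x₁ y₁ T' : ℝ}
    (ht₁ : 0 ≤ t₁) (hT1 : t₁ < T')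
    (h0 : ∀ x y, (x - x₁) ^ 2 + (y - y₁) ^ 2 < T' ^ 2 → v 0 x y = 0)
    (h1 : ∀ x y, (x - x₁) ^ 2 + (y - y₁) ^ 2 < T' ^ 2 → Dt v 0 x y = 0) : v t₁ x₁ y₁ = 0 := by
  have hd1 : ∀ x y, (x - x₁) ^ 2 + (y - y₁) ^ 2 < T' ^ 2 → D1 v 0 x y = 0 := fun x y h => by
    have : (fun x => v 0 x y) =ᶠ[𝓝 x] fun _ => 0 := by
      have := (isOpen_lt (by fun_prop) (by fun_prop) :
        IsOpen {x : ℝ | (x - x₁) ^ 2 + (y - y₁) ^ 2 < T' ^ 2}).mem_nhds h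
      filter_upwards [this] with z hz using h0 z y hz
    exact this.deriv_eq.trans (deriv_const x 0)
  have hd2 : ∀ x y, (x - x₁) ^ 2 + (y - y₁) ^ 2 < T' ^ 2 → D2 v 0 x y = 0 := fun x y h => by
    have : (fun y => v 0 x y) =ᶠ[𝓝 y] fun _ => 0 := by
      have := (isOpen_lt (by fun_prop) (by fun_prop) :
        IsOpen {y : ℝ | (x - x₁) ^ 2 + (y - y₁) ^ 2 < T' ^ 2}).mem_nhds h
      filter_upwards [this] with z hz using h0 x z hz
    exact this.deriv_eq.trans (deriv_const y 0)
  have hT0 : 0 < T' := lt_of_le_of_lt ht₁ hT1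
  obtain ⟨δ, hδ0, hδ⟩ : ∃ δ, 0 < δ ∧ δ < T' - t₁ := ⟨(T' - t₁) / 2, by linarith, by linarith⟩
  set ψ : ℝ → ℝ → ℝ := fun x y => √(δ ^ 2 + (x - x₁) ^ 2 + (y - y₁) ^ 2) with hψ
  have ψpos : ∀ x y, 0 < ψ x y := fun x y => Real.sqrt_pos.2 (by positivity)
  have ψsq : ∀ x y, ψ x y ^ 2 = δ ^ 2 + (x - x₁) ^ 2 + (y - y₁) ^ 2 := fun x y =>
    Real.sq_sqrt (by positivity)
  have ψc : Cont2 ψ := by unfold Cont2; simp only [hψ]; fun_prop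
  set B := |x₁| + |y₁| + T' + 1 with hB
  have hBpos : 0 ≤ B := by have := abs_nonneg x₁; have := abs_nonneg y₁; linarith
  set m : ℝ → ℝ → ℝ → ℝ := fun t x y => max (T' - t - ψ x y) 0 with hm
  have m0 : ∀ t x y, 0 ≤ m t x y := fun t x y => le_max_right _ _
  have mc : Continuous (fun p : ℝ × ℝ × ℝ => m p.1 p.2.1 p.2.2) := by
    have : Continuous (fun p : ℝ × ℝ × ℝ => ψ p.2.1 p.2.2) := ψc.comp continuous_snd
    simp only [hm]; fun_prop
  set e : SF := Dt v ^ 2 + D1 v ^ 2 + D2 v ^ 2 with he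
  set e' : SF := 2 * (Dt v * Dt (Dt v) + D1 v * Dt (D1 v) + D2 v * Dt (D2 v)) with he'
  have hde : Dt e = e' := by
    simp [he, he', pow_two]; ring
  set w1 : SF := 2 * (Dt v * D1 v) with hw1
  set w2 : SF := 2 * (Dt v * D2 v) with hw2
  set E : ℝ → ℝ := fun t => J B (fun x y => m t x y ^ 2 * e t x y) with hE
  set E' : ℝ → ℝ := fun t => J B (fun x y => -(2 * m t x y) * e t x y + m t x y ^ 2 * e' t x y)
    with hE'
  have slice : ∀ (g : ℝ → ℝ → ℝ → ℝ), Continuous (fun p : ℝ × ℝ × ℝ => g p.1 p.2.1 p.2.2) →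
      ∀ t, Cont2 (g t) := fun g hg t =>
    hg.comp (by fun_prop : Continuous fun p : ℝ × ℝ => ((t, p) : ℝ × ℝ × ℝ))
  have hderiv : ∀ t, HasDerivAt E (E' t) t := fun t => by
    have ce := e.cont
    have ce' := e'.cont
    refine J_hasDerivAt isOpen_univ (Set.mem_univ t) (G := fun t x y => m t x y ^ 2 * e t x y)
      (G' := fun t x y => -(2 * m t x y) * e t x y + m t x y ^ 2 * e' t x y) ?_ ?_ ?_
    · intro s _
      exact slice (fun t x y => m t x y ^ 2 * e t x y) (by fun_prop) s
    · exact Continuous.continuousOn (by fun_prop)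
    · intro s _ x y
      have h2 : HasDerivAt (fun s => T' - s - ψ x y) (-1) s := by
        simpa using ((hasDerivAt_id s).const_sub T').sub_const (ψ x y)
      have h3 := (hasDerivAt_cutoff (T' - s - ψ x y)).comp s h2
      have h4 := e.hasDerivAt_t s x y
      rw [← Dt_coe, hde] at h4
      have := h3.mul h4
      exact this.congr_deriv (by simp only [hm, Function.comp]; ring)
  have hneg : ∀ t, 0 < t → E' t ≤ 0 := by
    intro t ht
    -- the divergence part of the energy identity
    have cm := slice m mc t
    have cs : ∀ g : SF, Cont2 (g t) := fun g => slice g g.cont t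
    have i1 : J B (fun x y => (-(2 * m t x y) * ((x - x₁) / ψ x y)) * w1 t x y
        + m t x y ^ 2 * (D1 w1) t x y) = 0 := by
      refine J_d1 hBpos (G := fun x y => m t x y ^ 2 * w1 t x y) ?_ ?_ ?_
      · have c1 := cs w1
        have c3 := cs (D1 w1)
        unfold Cont2 at *
        have : Continuous fun p : ℝ × ℝ => (p.1 - x₁) / ψ p.1 p.2 :=
          (by fun_prop : Continuous fun p : ℝ × ℝ => p.1 - x₁).div ψc fun p => (ψpos _ _).ne'
        fun_prop
      · intro x y
        have h2 : HasDerivAt (fun x => T' - t - ψ x y) (-((x - x₁) / ψ x y)) x :=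
          (hasDerivAt_sqrt1 (by positivity) (sq_nonneg (y - y₁))).const_sub (T' - t)
        have h3 := (hasDerivAt_cutoff (T' - t - ψ x y)).comp x h2
        have h4 := w1.hasDerivAt_1 t x y
        exact (h3.mul h4).congr_deriv (by
          simp only [hm, Function.comp, D1_coe]; ring)
      · intro x y hx
        have : m t x y = 0 := by
          refine max_eq_right ?_
          have : T' ≤ ψ x y := by
            refine Real.le_sqrt_of_sq_le ?_
            have h5 : T' + |y₁| + 1 ≤ |x - x₁| := by
              have := abs_sub_abs_le_abs_sub x x₁
              rw [hx] at this; linarith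
            have h6 : T' ^ 2 ≤ |x - x₁| ^ 2 := by
              refine pow_le_pow_left₀ (by linarith) ?_ 2
              have := abs_nonneg y₁; linarith
            rw [sq_abs] at h6
            nlinarith [sq_nonneg (y - y₁), sq_nonneg δ]
          linarith
        simp [this]
    have i2 : J B (fun x y => (-(2 * m t x y) * ((y - y₁) / ψ x y)) * w2 t x y
        + m t x y ^ 2 * (D2 w2) t x y) = 0 := by
      refine J_d2 hBpos (G := fun x y => m t x y ^ 2 * w2 t x y) ?_ ?_ ?_
      · have c1 := cs w2
        have c3 := cs (D2 w2)
        unfold Cont2 at *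
        have : Continuous fun p : ℝ × ℝ => (p.2 - y₁) / ψ p.1 p.2 :=
          (by fun_prop : Continuous fun p : ℝ × ℝ => p.2 - y₁).div ψc fun p => (ψpos _ _).ne'
        fun_prop
      · intro x y
        have h2 : HasDerivAt (fun y => T' - t - ψ x y) (-((y - y₁) / ψ x y)) y := by
          have := (hasDerivAt_sqrt1 (x₁ := y₁) (x := y) (sq_pos_of_pos hδ0)
            (sq_nonneg (x - x₁))).const_sub (T' - t)
          have e0 : ∀ y, δ ^ 2 + (y - y₁) ^ 2 + (x - x₁) ^ 2 = δ ^ 2 + (x - x₁) ^ 2 + (y - y₁) ^ 2 :=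
            fun y => by ring
          simp only [e0] at this
          exact this
        have h3 := (hasDerivAt_cutoff (T' - t - ψ x y)).comp y h2
        have h4 := w2.hasDerivAt_2 t x y
        exact (h3.mul h4).congr_deriv (by
          simp only [hm, Function.comp, D2_coe]; ring)
      · intro x y hx
        have : m t x y = 0 := by
          refine max_eq_right ?_
          have : T' ≤ ψ x y := by
            refine Real.le_sqrt_of_sq_le ?_
            have h5 : T' + |x₁| + 1 ≤ |y - y₁| := by
              have := abs_sub_abs_le_abs_sub y y₁
              rw [hx] at this; linarith
            have h6 : T' ^ 2 ≤ |y - y₁| ^ 2 := by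
              refine pow_le_pow_left₀ (by linarith) ?_ 2
              have := abs_nonneg x₁; linarith
            rw [sq_abs] at h6
            nlinarith [sq_nonneg (x - x₁), sq_nonneg δ]
          linarith
        simp [this]
    have cψ1 : Cont2 fun x y => (x - x₁) / ψ x y :=
      (by fun_prop : Continuous fun p : ℝ × ℝ => p.1 - x₁).div ψc fun p => (ψpos _ _).ne'
    have cψ2 : Cont2 fun x y => (y - y₁) / ψ x y :=
      (by fun_prop : Continuous fun p : ℝ × ℝ => p.2 - y₁).div ψc fun p => (ψpos _ _).ne'
    have c0 := cs w1
    have c1 := cs w2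
    have c3 := cs (D1 w1)
    have c4 := cs (D2 w2)
    have c5 := cs e
    have c6 := cs e'
    unfold Cont2 at cm c0 c1 c3 c4 c5 c6 cψ1 cψ2
    have hsum := J_add (B := B) (G := fun x y => (-(2 * m t x y) * ((x - x₁) / ψ x y)) *
        w1 t x y + m t x y ^ 2 * (D1 w1) t x y)
      (H := fun x y => (-(2 * m t x y) * ((y - y₁) / ψ x y)) * w2 t x y
        + m t x y ^ 2 * (D2 w2) t x y) (by unfold Cont2; fun_prop)
        (by unfold Cont2; fun_prop)
    rw [i1, i2, add_zero] at hsum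
    rw [← hsum]
    refine J_mono (by unfold Cont2; fun_prop) (by unfold Cont2; fun_prop) fun x y => ?_
    have hbx := hbox t x y ht
    have key1 : e' t x y = (D1 w1) t x y + (D2 w2) t x y
        + 2 * Dt v t x y * box v t x y := by
      have : e' = D1 w1 + D2 w2 + 2 * Dt v * box v := by
        simp only [he', box, hw1, hw2, two_mul, map_add, Derivation.leibniz, smul_eq_mul, D1_Dt, D2_Dt]
        ring
      rw [this]; rfl
    have ev : e t x y = Dt v t x y ^ 2 + D1 v t x y ^ 2 + D2 v t x y ^ 2 := rfl
    have ew1 : w1 t x y = 2 * (Dt v t x y * D1 v t x y) := rfl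
    have ew2 : w2 t x y = 2 * (Dt v t x y * D2 v t x y) := rfl
    rw [key1, hbx, ev, ew1, ew2]
    have hq' := hq t x y ht
    set a := (x - x₁) / ψ x y
    set b := (y - y₁) / ψ x y
    have hab : a ^ 2 + b ^ 2 ≤ 1 := by
      have : a ^ 2 + b ^ 2 = ((x - x₁) ^ 2 + (y - y₁) ^ 2) / ψ x y ^ 2 := by
        simp only [a, b]; ring
      rw [this, div_le_one (pow_pos (ψpos x y) 2), ψsq]
      nlinarith [sq_nonneg δ]
    set P := Dt v t x y
    set X := D1 v t x y
    set Y := D2 v t x y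
    have hm0 := m0 t x y
    have k1 : 0 ≤ P ^ 2 + X ^ 2 + Y ^ 2 - 2 * P * (a * X + b * Y) := by
      have : (a * X + b * Y) ^ 2 ≤ X ^ 2 + Y ^ 2 := by
        have h7 : (a * X + b * Y) ^ 2 ≤ (a ^ 2 + b ^ 2) * (X ^ 2 + Y ^ 2) := by
          nlinarith [sq_nonneg (a * Y - b * X)]
        nlinarith [sq_nonneg X, sq_nonneg Y]
      nlinarith [sq_nonneg (P - (a * X + b * Y))]
    have k2 := mul_nonneg hm0 k1
    have k3 : 0 ≤ m t x y ^ 2 * (q t x y * P ^ 2) := by positivity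
    nlinarith
  have hE0 : E 0 = 0 := by
    have : (fun x y => m 0 x y ^ 2 * e 0 x y) = fun _ _ => 0 := by
      funext x y
      by_cases h : (x - x₁) ^ 2 + (y - y₁) ^ 2 < T' ^ 2
      · have : e 0 x y = 0 := by
          change Dt v 0 x y ^ 2 + D1 v 0 x y ^ 2 + D2 v 0 x y ^ 2 = 0
          rw [h1 x y h, hd1 x y h, hd2 x y h]; ring
        rw [this, mul_zero]
      · have : m 0 x y = 0 := by
          refine max_eq_right ?_
          suffices T' ≤ ψ x y by linarith
          refine Real.le_sqrt_of_sq_le ?_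
          push Not at h
          nlinarith [sq_nonneg δ]
        rw [this]; ring
    simp only [hE, this]
    exact integral_zero _ _
  have hEzero : ∀ t, 0 ≤ t → E t = 0 := fun t ht => by
    have anti : AntitoneOn E (Set.Ici 0) := by
      refine antitoneOn_of_deriv_nonpos (convex_Ici 0)
        (fun s _ => (hderiv s).continuousAt.continuousWithinAt)
        (fun s _ => (hderiv s).differentiableAt.differentiableWithinAt) fun s hs => ?_
      rw [interior_Ici] at hs
      rw [(hderiv s).deriv]; exact hneg s hs
    have u1 := anti (Set.self_mem_Ici) (Set.mem_Ici.2 ht) ht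
    rw [hE0] at u1
    refine le_antisymm u1 (J_nonneg fun x y => ?_)
    have : 0 ≤ e t x y := by
      change 0 ≤ Dt v t x y ^ 2 + D1 v t x y ^ 2 + D2 v t x y ^ 2
      positivity
    positivity
  have hvt : ∀ t, 0 ≤ t → t ≤ t₁ → Dt v t x₁ y₁ = 0 := fun t ht htt => by
    have h2 := J_zero (B := B) (G := fun x y => m t x y ^ 2 * e t x y)
      (slice (fun t x y => m t x y ^ 2 * e t x y) (by have := e.cont; fun_prop) t)
      (fun x y => mul_nonneg (sq_nonneg _) (by
        change 0 ≤ Dt v t x y ^ 2 + D1 v t x y ^ 2 + D2 v t x y ^ 2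
        positivity)) (hEzero t ht) (x := x₁) (y := y₁)
        (by rw [hB]; have := abs_nonneg y₁; linarith) (by rw [hB]; have := abs_nonneg x₁; linarith)
    have h3 : 0 < m t x₁ y₁ := by
      refine lt_max_of_lt_left ?_
      have : ψ x₁ y₁ = δ := by simp [hψ, Real.sqrt_sq hδ0.le]
      rw [this]; linarith
    have h4 : e t x₁ y₁ = 0 := by
      rcases mul_eq_zero.1 h2 with h | h
      · exact absurd h (by positivity)
      · exact h
    have h5 : Dt v t x₁ y₁ ^ 2 + D1 v t x₁ y₁ ^ 2 + D2 v t x₁ y₁ ^ 2 = 0 := h4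
    nlinarith [sq_nonneg (Dt v t x₁ y₁), sq_nonneg (D1 v t x₁ y₁), sq_nonneg (D2 v t x₁ y₁)]
  have hconst : v t₁ x₁ y₁ = v 0 x₁ y₁ := by
    refine constant_of_has_deriv_right_zero (f := fun t => v t x₁ y₁) (a := 0) (b := t₁)
      (fun s _ => (v.hasDerivAt_t s x₁ y₁).continuousAt.continuousWithinAt) (fun s hs => ?_) t₁
      ⟨ht₁, le_rfl⟩
    have := v.hasDerivAt_t s x₁ y₁
    rw [← Dt_coe, hvt s hs.1 hs.2.le] at this
    exact this.hasDerivWithinAt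
  rw [hconst]
  refine h0 _ _ ?_
  have := pow_pos hT0 2
  simpa using this

/-- Domain of dependence for `□v = -q ∂ₜv`. The damping coefficient `q` only needs to be
nonnegative: the term then dissipates the energy outside a light cone, so no bound on `q` enters. -/
theorem finite_speed {v q : SF} (hq : ∀ t x y, 0 < t → 0 ≤ q t x y)
    (hbox : ∀ t x y, 0 < t → box v t x y = -q t x y * Dt v t x y) {R : ℝ} (hR : 0 ≤ R)
    (h0 : ∀ x y, R ^ 2 < x ^ 2 + y ^ 2 → v 0 x y = 0)
    (h1 : ∀ x y, R ^ 2 < x ^ 2 + y ^ 2 → Dt v 0 x y = 0) :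
    ∀ t x y, 0 ≤ t → (t + R) ^ 2 < x ^ 2 + y ^ 2 → v t x y = 0 := by
  intro t₁ x₁ y₁ ht₁ hout
  set ρ := √(x₁ ^ 2 + y₁ ^ 2) with hρ
  have hρ2 : ρ ^ 2 = x₁ ^ 2 + y₁ ^ 2 := Real.sq_sqrt (by positivity)
  have hρ0 : 0 ≤ ρ := Real.sqrt_nonneg _
  have hρt : t₁ + R < ρ := by
    rw [← hρ2] at hout; exact lt_of_pow_lt_pow_left₀ 2 hρ0 hout
  have key : ∀ x y, (x - x₁) ^ 2 + (y - y₁) ^ 2 < (ρ - R) ^ 2 → R ^ 2 < x ^ 2 + y ^ 2 := by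
    intro x y h
    by_contra hlt
    push Not at hlt
    -- triangle inequality for the Euclidean norm
    have h9 : (x * (x₁ - x) + y * (y₁ - y)) ≤ R * (ρ - R) := by
      refine abs_le_of_sq_le_sq' ?_ (mul_nonneg hR (by linarith)) |>.2
      have : (x * (x₁ - x) + y * (y₁ - y)) ^ 2 ≤
          (x ^ 2 + y ^ 2) * ((x - x₁) ^ 2 + (y - y₁) ^ 2) := by
        nlinarith [sq_nonneg (x * (y₁ - y) - y * (x₁ - x))]
      refine this.trans ?_
      rw [mul_pow]
      exact mul_le_mul hlt h.le (by positivity) (by positivity)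
    nlinarith
  exact cone_vanish hq hbox ht₁ (T' := ρ - R) (by linarith) (fun x y h => h0 x y (key x y h))
    (fun x y h => h1 x y (key x y h))

theorem free_unique {v w : SF} (hv : ∀ t x y, 0 < t → box v t x y = 0)
    (hw : ∀ t x y, 0 < t → box w t x y = 0) (h0 : ∀ x y, v 0 x y = w 0 x y)
    (h1 : ∀ x y, Dt v 0 x y = Dt w 0 x y) {t x y : ℝ} (ht : 0 ≤ t) : v t x y = w t x y := by
  have := cone_vanish (v := v - w) (q := 0) (fun _ _ _ _ => le_rfl) (t₁ := t) (T' := t + 1)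
    (x₁ := x) (y₁ := y) (fun t x y h => by
      rw [box_sub, SF.sub_app, hv t x y h, hw t x y h]; simp) ht (by linarith)
    (fun x y _ => by rw [SF.sub_app, h0, sub_self])
    (fun x y _ => by rw [map_sub, SF.sub_app, h1, sub_self])
  rw [SF.sub_app] at this
  linarith

/-! ### Sums over words in a pair of derivations -/

/-- The sum of `Φ (A^I v)` over all words `I` of length at most `k` in the two derivations. -/
def Qs {M : Type*} [Add M] (A B : Derivation ℝ SF SF) (Φ : SF → M) : ℕ → SF → M
  | 0, v => Φ v
  | k + 1, v => Φ v + Qs A B Φ k (A v) + Qs A B Φ k (B v)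

/-- The sum of `|A^I v|` at a point over all words `I` of length exactly `n`. -/
def Nw (A B : Derivation ℝ SF SF) (t x y : ℝ) : ℕ → SF → ℝ
  | 0, v => |v t x y|
  | n + 1, v => Nw A B t x y n (A v) + Nw A B t x y n (B v)

/-- The sum of `|A^I v|` at a point over all words of length at most `k`. -/
def Sw (A B : Derivation ℝ SF SF) (t x y : ℝ) (k : ℕ) (v : SF) : ℝ :=
  Qs A B (fun v => |v t x y|) k v

/-- The sum of `(A^I v)²` over all words of length at most `k`. -/
def Rw (A B : Derivation ℝ SF SF) (k : ℕ) (v : SF) : SF := Qs A B (fun v => v ^ 2) k v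

section words
variable {A B : Derivation ℝ SF SF} {t x y : ℝ}

theorem Qs_mono {P : SF → Prop} (hA : ∀ v, P v → P (A v)) (hB : ∀ v, P v → P (B v))
    {Φ Ψ : SF → ℝ} (h : ∀ v, P v → Φ v ≤ Ψ v) : ∀ (k : ℕ) (v : SF), P v →
    Qs A B Φ k v ≤ Qs A B Ψ k v
  | 0, v, hv => h v hv
  | k + 1, v, hv => add_le_add (add_le_add (h v hv) (Qs_mono hA hB h k _ (hA v hv)))
      (Qs_mono hA hB h k _ (hB v hv))

theorem Qs_congr {P : SF → Prop} (hA : ∀ v, P v → P (A v)) (hB : ∀ v, P v → P (B v))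
    {Φ Ψ : SF → ℝ} (h : ∀ v, P v → Φ v = Ψ v) (k : ℕ) (v : SF) (hv : P v) :
    Qs A B Φ k v = Qs A B Ψ k v :=
  le_antisymm (Qs_mono hA hB (fun v hv => (h v hv).le) k v hv)
    (Qs_mono hA hB (fun v hv => (h v hv).ge) k v hv)

theorem Qs_nonneg {Φ : SF → ℝ} (h : ∀ v, 0 ≤ Φ v) : ∀ (k : ℕ) (v : SF), 0 ≤ Qs A B Φ k v
  | 0, v => h v
  | k + 1, v => add_nonneg (add_nonneg (h v) (Qs_nonneg h k _)) (Qs_nonneg h k _)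

theorem Qs_add {Φ Ψ : SF → ℝ} : ∀ (k : ℕ) (v : SF),
    Qs A B (fun v => Φ v + Ψ v) k v = Qs A B Φ k v + Qs A B Ψ k v
  | 0, v => rfl
  | k + 1, v => by
    simp only [Qs]
    rw [Qs_add k, Qs_add k]; ring

theorem Qs_const_mul {c : ℝ} {Φ : SF → ℝ} : ∀ (k : ℕ) (v : SF),
    Qs A B (fun v => c * Φ v) k v = c * Qs A B Φ k v
  | 0, v => rfl
  | k + 1, v => by
    simp only [Qs]
    rw [Qs_const_mul k, Qs_const_mul k]; ring

/-- Transport along a linear map commuting with the derivations. -/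
theorem Qs_comp {f : SF → SF} (hA : ∀ v, A (f v) = f (A v)) (hB : ∀ v, B (f v) = f (B v))
    {Φ : SF → ℝ} : ∀ (k : ℕ) (v : SF), Qs A B (fun v => Φ (f v)) k v = Qs A B Φ k (f v)
  | 0, v => rfl
  | k + 1, v => by
    simp only [Qs]
    rw [Qs_comp hA hB k, Qs_comp hA hB k, hA, hB]

theorem Qs_le_succ {Φ : SF → ℝ} (h : ∀ v, 0 ≤ Φ v) : ∀ (k : ℕ) (v : SF),
    Qs A B Φ k v ≤ Qs A B Φ (k + 1) v
  | 0, v => by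
    simp only [Qs]
    linarith [h (A v), h (B v)]
  | k + 1, v => by
    rw [Qs, Qs]
    linarith [Qs_le_succ h k (A v), Qs_le_succ h k (B v)]

theorem Qs_le_of_le {Φ : SF → ℝ} (h : ∀ v, 0 ≤ Φ v) {k l : ℕ} (hkl : k ≤ l) (v : SF) :
    Qs A B Φ k v ≤ Qs A B Φ l v := by
  induction hkl with
  | refl => exact le_rfl
  | step _ ih => exact ih.trans (Qs_le_succ h _ v)

theorem Qs_self_le {Φ : SF → ℝ} (h : ∀ v, 0 ≤ Φ v) (k : ℕ) (v : SF) : Φ v ≤ Qs A B Φ k v :=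
  Qs_le_of_le h (Nat.zero_le k) v

theorem Qs_A_le {Φ : SF → ℝ} (h : ∀ v, 0 ≤ Φ v) (k : ℕ) (v : SF) :
    Qs A B Φ k (A v) ≤ Qs A B Φ (k + 1) v := by
  rw [Qs]; linarith [h v, Qs_nonneg (A := A) (B := B) h k (B v)]

theorem Qs_B_le {Φ : SF → ℝ} (h : ∀ v, 0 ≤ Φ v) (k : ℕ) (v : SF) :
    Qs A B Φ k (B v) ≤ Qs A B Φ (k + 1) v := by
  rw [Qs]; linarith [h v, Qs_nonneg (A := A) (B := B) h k (A v)]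

theorem Qs_hasDerivAt {P : SF → Prop} (hA : ∀ v, P v → P (A v)) (hB : ∀ v, P v → P (B v))
    {Φ : ℝ → SF → ℝ} {Φ' : SF → ℝ} {s : ℝ}
    (h : ∀ v, P v → HasDerivAt (fun s => Φ s v) (Φ' v) s) : ∀ (k : ℕ) (v : SF), P v →
    HasDerivAt (fun s => Qs A B (Φ s) k v) (Qs A B Φ' k v) s
  | 0, v, hv => h v hv
  | k + 1, v, hv => ((h v hv).add (Qs_hasDerivAt hA hB h k _ (hA v hv))).add
      (Qs_hasDerivAt hA hB h k _ (hB v hv))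

theorem Qs_app {Φ : SF → SF} : ∀ (k : ℕ) (v : SF),
    Qs A B Φ k v t x y = Qs A B (fun v => Φ v t x y) k v
  | 0, v => rfl
  | k + 1, v => by
    simp only [Qs, SF.add_app]
    rw [Qs_app k, Qs_app k]

theorem Sw_nonneg (k : ℕ) (v : SF) : 0 ≤ Sw A B t x y k v := Qs_nonneg (fun _ => abs_nonneg _) k v

theorem Sw_self (k : ℕ) (v : SF) : |v t x y| ≤ Sw A B t x y k v :=
  Qs_self_le (Φ := fun v : SF => |v t x y|) (fun _ => abs_nonneg _) k v

theorem Sw_mono {k l : ℕ} (h : k ≤ l) (v : SF) : Sw A B t x y k v ≤ Sw A B t x y l v :=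
  Qs_le_of_le (fun _ => abs_nonneg _) h v

theorem Sw_A (k : ℕ) (v : SF) : Sw A B t x y k (A v) ≤ Sw A B t x y (k + 1) v :=
  Qs_A_le (fun _ => abs_nonneg _) k v

theorem Sw_B (k : ℕ) (v : SF) : Sw A B t x y k (B v) ≤ Sw A B t x y (k + 1) v :=
  Qs_B_le (fun _ => abs_nonneg _) k v

theorem Sw_add : ∀ (k : ℕ) (u v : SF), Sw A B t x y k (u + v) ≤ Sw A B t x y k u + Sw A B t x y k v
  | 0, u, v => abs_add_le _ _
  | k + 1, u, v => by
    have h1 := Sw_add k (A u) (A v)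
    have h2 := Sw_add k (B u) (B v)
    have h3 := abs_add_le (u t x y) (v t x y)
    unfold Sw at *
    simp only [Qs, map_add, SF.add_app]
    linarith

theorem Sw_neg : ∀ (k : ℕ) (u : SF), Sw A B t x y k (-u) = Sw A B t x y k u
  | 0, u => abs_neg _
  | k + 1, u => by
    have h1 := Sw_neg k (A u)
    have h2 := Sw_neg k (B u)
    unfold Sw at *
    simp only [Qs, map_neg, SF.neg_app, abs_neg]
    rw [h1, h2]

theorem Nw_nonneg : ∀ (n : ℕ) (v : SF), 0 ≤ Nw A B t x y n v
  | 0, _ => abs_nonneg _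
  | n + 1, _ => add_nonneg (Nw_nonneg n _) (Nw_nonneg n _)

theorem Nw_add : ∀ (k : ℕ) (u v : SF), Nw A B t x y k (u + v) ≤ Nw A B t x y k u + Nw A B t x y k v
  | 0, u, v => abs_add_le _ _
  | k + 1, u, v => by
    have h1 := Nw_add k (A u) (A v)
    have h2 := Nw_add k (B u) (B v)
    simp only [Nw, map_add]
    linarith

theorem Nw_neg : ∀ (k : ℕ) (u : SF), Nw A B t x y k (-u) = Nw A B t x y k u
  | 0, u => abs_neg _
  | k + 1, u => by
    simp only [Nw, map_neg]
    rw [Nw_neg k, Nw_neg k]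

theorem Sw_eq_sum : ∀ (k : ℕ) (v : SF),
    Sw A B t x y k v = ∑ n ∈ Finset.range (k + 1), Nw A B t x y n v
  | 0, v => by simp [Sw, Qs, Nw]
  | k + 1, v => by
    have h1 := Sw_eq_sum k (A v)
    have h2 := Sw_eq_sum k (B v)
    rw [Finset.sum_range_succ']
    simp only [Nw, Finset.sum_add_distrib]
    rw [← h1, ← h2]
    simp only [Sw, Qs]; ring

theorem Nw_le_Sw {n k : ℕ} (h : n ≤ k) (v : SF) : Nw A B t x y n v ≤ Sw A B t x y k v := by
  rw [Sw_eq_sum]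
  exact Finset.single_le_sum (f := fun n => Nw A B t x y n v) (fun _ _ => Nw_nonneg _ _)
    (Finset.mem_range.2 (Nat.lt_succ_of_le h))

/-- Leibniz rule. -/
theorem Nw_mul : ∀ (n : ℕ) (f g : SF), Nw A B t x y n (f * g) ≤
    ∑ ij ∈ Finset.HasAntidiagonal.antidiagonal n, (n.choose ij.1 : ℝ) *
      (Nw A B t x y ij.1 f * Nw A B t x y ij.2 g)
  | 0, f, g => by simp [Nw, abs_mul]
  | n + 1, f, g => by
    rw [Finset.sum_antidiagonal_choose_succ_mul
      (fun i j => Nw A B t x y i f * Nw A B t x y j g) n]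
    rw [← Finset.sum_add_distrib]
    have hstep : ∀ D : Derivation ℝ SF SF, Nw A B t x y n (D (f * g)) ≤
        ∑ ij ∈ Finset.HasAntidiagonal.antidiagonal n, (n.choose ij.1 : ℝ) *
          (Nw A B t x y ij.1 f * Nw A B t x y ij.2 (D g)) +
        ∑ ij ∈ Finset.HasAntidiagonal.antidiagonal n, (n.choose ij.1 : ℝ) *
          (Nw A B t x y ij.1 (D f) * Nw A B t x y ij.2 g) := fun D => by
      have e : D (f * g) = f * D g + D f * g := by
        rw [Derivation.leibniz, smul_eq_mul, smul_eq_mul, mul_comm g]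
      rw [e]
      exact (Nw_add n _ _).trans (add_le_add (Nw_mul n _ _) (Nw_mul n _ _))
    have h1 := hstep A
    have h2 := hstep B
    have : Nw A B t x y (n + 1) (f * g) = Nw A B t x y n (A (f * g)) + Nw A B t x y n (B (f * g)) :=
      rfl
    rw [this]
    refine (add_le_add h1 h2).trans (le_of_eq ?_)
    rw [← Finset.sum_add_distrib, ← Finset.sum_add_distrib, ← Finset.sum_add_distrib]
    refine Finset.sum_congr rfl fun ij hij => ?_
    rw [Finset.HasAntidiagonal.mem_antidiagonal] at hij
    have : (n.choose ij.1 : ℝ) = n.choose ij.2 := by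
      rw [← Nat.choose_symm_of_eq_add hij.symm]
    simp only [Nw]
    rw [← this]
    ring

/-- Product estimate: one of the two factors carries at most half of the derivatives. -/
theorem Sw_mul (n : ℕ) (f g : SF) : Sw A B t x y n (f * g) ≤ (n + 1) * 2 ^ n *
    (Sw A B t x y (n / 2) f * Sw A B t x y n g + Sw A B t x y n f * Sw A B t x y (n / 2) g) := by
  set K := Sw A B t x y (n / 2) f * Sw A B t x y n g + Sw A B t x y n f * Sw A B t x y (n / 2) g
  have hK : 0 ≤ K := add_nonneg (mul_nonneg (Sw_nonneg _ _) (Sw_nonneg _ _))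
    (mul_nonneg (Sw_nonneg _ _) (Sw_nonneg _ _))
  have h : ∀ m ≤ n, Nw A B t x y m (f * g) ≤ 2 ^ n * K := fun m hm => by
    refine (Nw_mul m f g).trans ?_
    have : ∀ ij ∈ Finset.HasAntidiagonal.antidiagonal m, (m.choose ij.1 : ℝ) *
        (Nw A B t x y ij.1 f * Nw A B t x y ij.2 g) ≤ (m.choose ij.1 : ℝ) * K := by
      intro ij hij
      rw [Finset.HasAntidiagonal.mem_antidiagonal] at hij
      refine mul_le_mul_of_nonneg_left ?_ (Nat.cast_nonneg _)
      rcases le_or_gt ij.1 (n / 2) with h | h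
      · refine (mul_le_mul (Nw_le_Sw h f) (Nw_le_Sw (k := n) (by omega) g) (Nw_nonneg _ _)
          (Sw_nonneg _ _)).trans (le_add_of_nonneg_right
            (mul_nonneg (Sw_nonneg _ _) (Sw_nonneg _ _)))
      · refine (mul_le_mul (Nw_le_Sw (k := n) (by omega) f) (Nw_le_Sw (k := n / 2) (by omega) g)
          (Nw_nonneg _ _) (Sw_nonneg _ _)).trans (le_add_of_nonneg_left
            (mul_nonneg (Sw_nonneg _ _) (Sw_nonneg _ _)))
    refine (Finset.sum_le_sum this).trans ?_
    rw [← Finset.sum_mul]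
    refine mul_le_mul_of_nonneg_right ?_ hK
    have e : ∑ ij ∈ Finset.HasAntidiagonal.antidiagonal m, (m.choose ij.1 : ℝ) = 2 ^ m := by
      rw [Finset.Nat.sum_antidiagonal_eq_sum_range_succ_mk]
      have := Nat.sum_range_choose m
      exact_mod_cast this
    rw [e]
    exact pow_le_pow_right₀ (by norm_num) hm
  rw [Sw_eq_sum]
  refine (Finset.sum_le_card_nsmul _ _ (2 ^ n * K) fun m hm => h m ?_).trans ?_
  · have := Finset.mem_range.1 hm; omega
  · rw [Finset.card_range, nsmul_eq_mul]; push_cast; linarith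

theorem Rw_le_Sw : ∀ (k : ℕ) (v : SF), Rw A B k v t x y ≤ Sw A B t x y k v ^ 2
  | 0, v => by simp [Rw, Sw, Qs]
  | k + 1, v => by
    have h1 := Rw_le_Sw k (A v)
    have h2 := Rw_le_Sw k (B v)
    have e : Rw A B (k + 1) v t x y = v t x y ^ 2 + Rw A B k (A v) t x y + Rw A B k (B v) t x y := rfl
    have e2 : Sw A B t x y (k + 1) v = |v t x y| + Sw A B t x y k (A v) + Sw A B t x y k (B v) := rfl
    rw [e, e2]
    have := Sw_nonneg (A := A) (B := B) (t := t) (x := x) (y := y) k (A v)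
    have := Sw_nonneg (A := A) (B := B) (t := t) (x := x) (y := y) k (B v)
    have := abs_nonneg (v t x y)
    rw [← sq_abs (v t x y)]
    nlinarith [mul_nonneg ‹0 ≤ |v t x y|› ‹0 ≤ Sw A B t x y k (A v)›,
      mul_nonneg ‹0 ≤ |v t x y|› ‹0 ≤ Sw A B t x y k (B v)›,
      mul_nonneg ‹0 ≤ Sw A B t x y k (A v)› ‹0 ≤ Sw A B t x y k (B v)›]

theorem Sw_le_Rw : ∀ (k : ℕ) (v : SF), Sw A B t x y k v ^ 2 ≤ 3 ^ k * Rw A B k v t x y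
  | 0, v => by simp [Rw, Sw, Qs]
  | k + 1, v => by
    have h1 := Sw_le_Rw k (A v)
    have h2 := Sw_le_Rw k (B v)
    have e : Rw A B (k + 1) v t x y = v t x y ^ 2 + Rw A B k (A v) t x y + Rw A B k (B v) t x y := rfl
    have e2 : Sw A B t x y (k + 1) v = |v t x y| + Sw A B t x y k (A v) + Sw A B t x y k (B v) := rfl
    rw [e, e2]
    have h3 : |v t x y| ^ 2 ≤ 3 ^ k * v t x y ^ 2 := by
      rw [sq_abs]
      exact le_mul_of_one_le_left (sq_nonneg _) (one_le_pow₀ (by norm_num))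
    have h4 : (|v t x y| + Sw A B t x y k (A v) + Sw A B t x y k (B v)) ^ 2 ≤
        3 * (|v t x y| ^ 2 + Sw A B t x y k (A v) ^ 2 + Sw A B t x y k (B v) ^ 2) := by
      nlinarith [sq_nonneg (|v t x y| - Sw A B t x y k (A v)),
        sq_nonneg (|v t x y| - Sw A B t x y k (B v)),
        sq_nonneg (Sw A B t x y k (A v) - Sw A B t x y k (B v))]
    rw [pow_succ (3 : ℝ) k]
    nlinarith

theorem Rw_nonneg (k : ℕ) (v : SF) : 0 ≤ Rw A B k v t x y := by
  rw [Rw, Qs_app]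
  exact Qs_nonneg (fun v => sq_nonneg (v t x y)) k v

end words

/-! ### Vanishing sets, flat energies and local bounds -/

/-- Vanishing on the part of `O` lying in `t ≥ 0`. -/
def Van (O : Set (ℝ × ℝ × ℝ)) (v : SF) : Prop := ∀ t x y, 0 ≤ t → (t, x, y) ∈ O → v t x y = 0

theorem Van.Dt {O : Set (ℝ × ℝ × ℝ)} (hO : IsOpen O) {v : SF} (h : Van O v) : Van O (Dt v) := by
  intro t x y ht hp
  have h1 : ∀ᶠ s in 𝓝[Set.Ici t] t, v s x y = 0 := by
    have : (fun s : ℝ => ((s, x, y) : ℝ × ℝ × ℝ)) ⁻¹' O ∈ 𝓝 t :=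
      (hO.preimage (by fun_prop)).mem_nhds hp
    filter_upwards [nhdsWithin_le_nhds this, self_mem_nhdsWithin] with s hs hs'
    exact h s x y (ht.trans hs') hs
  have h2 : HasDerivWithinAt (fun s => v s x y) 0 (Set.Ici t) t :=
    (hasDerivWithinAt_const t _ (0 : ℝ)).congr_of_eventuallyEq h1 (h t x y ht hp)
  exact (uniqueDiffWithinAt_Ici t).eq_deriv _ (v.hasDerivAt_t t x y).hasDerivWithinAt h2

theorem Van.D1 {O : Set (ℝ × ℝ × ℝ)} (hO : IsOpen O) {v : SF} (h : Van O v) : Van O (D1 v) := by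
  intro t x y ht hp
  have : (fun z : ℝ => ((t, z, y) : ℝ × ℝ × ℝ)) ⁻¹' O ∈ 𝓝 x :=
    (hO.preimage (by fun_prop)).mem_nhds hp
  have h1 : (fun z => v t z y) =ᶠ[𝓝 x] fun _ => 0 := by
    filter_upwards [this] with z hz using h t z y ht hz
  exact (v.hasDerivAt_1 t x y).unique ((hasDerivAt_const x (0 : ℝ)).congr_of_eventuallyEq h1)

theorem Van.D2 {O : Set (ℝ × ℝ × ℝ)} (hO : IsOpen O) {v : SF} (h : Van O v) : Van O (D2 v) := by
  intro t x y ht hp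
  have : (fun z : ℝ => ((t, x, z) : ℝ × ℝ × ℝ)) ⁻¹' O ∈ 𝓝 y :=
    (hO.preimage (by fun_prop)).mem_nhds hp
  have h1 : (fun z => v t x z) =ᶠ[𝓝 y] fun _ => 0 := by
    filter_upwards [this] with z hz using h t x z ht hz
  exact (v.hasDerivAt_2 t x y).unique ((hasDerivAt_const y (0 : ℝ)).congr_of_eventuallyEq h1)

/-- An identity valid for `t > 0` extends to `t ≥ 0`. -/
theorem Van.of_pos {v : SF} (h : ∀ t x y, 0 < t → v t x y = 0) : Van Set.univ v := by
  intro t x y ht _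
  rcases ht.lt_or_eq with h' | h'
  · exact h t x y h'
  subst h'
  have h1 : Tendsto (fun s => v s x y) (𝓝[>] 0) (𝓝 (v 0 x y)) :=
    (v.hasDerivAt_t 0 x y).continuousAt.continuousWithinAt
  refine tendsto_nhds_unique h1 (tendsto_const_nhds.congr' ?_)
  filter_upwards [self_mem_nhdsWithin] with s hs using (h s x y hs).symm

/-- Vanishing of a function and of its time derivative at `t = 0`. -/
def Zd (v : SF) : Prop := ∀ x y, v 0 x y = 0 ∧ Dt v 0 x y = 0

theorem Zd.D1 {v : SF} (h : Zd v) : Zd (D1 v) := fun x y => by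
  refine ⟨?_, ?_⟩
  · have h1 : (fun z => v 0 z y) = fun _ => 0 := funext fun z => (h z y).1
    exact (v.hasDerivAt_1 0 x y).unique (h1 ▸ hasDerivAt_const x (0 : ℝ))
  · rw [← D1_Dt]
    have h1 : (fun z => _root_.Dt v 0 z y) = fun _ => 0 := funext fun z => (h z y).2
    exact ((_root_.Dt v).hasDerivAt_1 0 x y).unique (h1 ▸ hasDerivAt_const x (0 : ℝ))

theorem Zd.D2 {v : SF} (h : Zd v) : Zd (D2 v) := fun x y => by
  refine ⟨?_, ?_⟩
  · have h1 : (fun z => v 0 x z) = fun _ => 0 := funext fun z => (h x z).1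
    exact (v.hasDerivAt_2 0 x y).unique (h1 ▸ hasDerivAt_const y (0 : ℝ))
  · rw [← D2_Dt]
    have h1 : (fun z => _root_.Dt v 0 x z) = fun _ => 0 := funext fun z => (h x z).2
    exact ((_root_.Dt v).hasDerivAt_2 0 x y).unique (h1 ▸ hasDerivAt_const y (0 : ℝ))

/-- The flat energy density. -/
def eF (v : SF) : SF := Dt v ^ 2 + D1 v ^ 2 + D2 v ^ 2

theorem SF.cont2 (v : SF) (t : ℝ) : Cont2 (v t) :=
  v.cont_comp continuous_const continuous_fst continuous_snd

theorem J_SF_hasDerivAt (B : ℝ) (v : SF) (t : ℝ) :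
    HasDerivAt (fun t => J B (v t)) (J B (Dt v t)) t :=
  J_hasDerivAt isOpen_univ (Set.mem_univ t) (fun s _ => v.cont2 s)
    ((Dt v).cont.continuousOn) (fun s _ x y => v.hasDerivAt_t s x y)

/-- The set `|x| > t + R`. -/
def Outs (R : ℝ) : Set (ℝ × ℝ × ℝ) := {p | (p.1 + R) ^ 2 < p.2.1 ^ 2 + p.2.2 ^ 2}

theorem Outs_open (R : ℝ) : IsOpen (Outs R) := isOpen_lt (by fun_prop) (by fun_prop)

theorem Outs_of_abs1 {R t x y B : ℝ} (hR : 0 ≤ R) (ht : 0 ≤ t) (hB : t + R < B) (hx : |x| = B) :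
    (t, x, y) ∈ Outs R := by
  have : x ^ 2 = B ^ 2 := by rw [← hx, sq_abs]
  change (t + R) ^ 2 < x ^ 2 + y ^ 2
  nlinarith [sq_nonneg y]

theorem Outs_of_abs2 {R t x y B : ℝ} (hR : 0 ≤ R) (ht : 0 ≤ t) (hB : t + R < B) (hy : |y| = B) :
    (t, x, y) ∈ Outs R := by
  have : y ^ 2 = B ^ 2 := by rw [← hy, sq_abs]
  change (t + R) ^ 2 < x ^ 2 + y ^ 2
  nlinarith [sq_nonneg x]

/-- The flat energy identity. -/
theorem flat_energy {R B : ℝ} (hR : 0 ≤ R) {v : SF} (hv : Van (Outs R) v) {t : ℝ} (ht : 0 ≤ t)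
    (hB : t + R < B) :
    HasDerivAt (fun t => J B (eF v t)) (J B ((2 * Dt v * box v : SF) t)) t := by
  have h := J_SF_hasDerivAt B (eF v) t
  set g1 : SF := Dt v * D1 v + Dt v * D1 v with hg1
  set g2 : SF := Dt v * D2 v + Dt v * D2 v with hg2
  have e : Dt (eF v) = 2 * Dt v * box v + D1 g1 + D2 g2 := by
    simp [eF, hg1, hg2, box, pow_two]; ring
  have hB0 : 0 ≤ B := by linarith
  have z1 : J B (D1 g1 t) = 0 := J_d1 (G := g1 t) hB0 ((D1 g1).cont2 t)
    (fun x y => g1.hasDerivAt_1 t x y) fun x y hx => by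
      have := (hv.D1 (Outs_open R)) t x y ht (Outs_of_abs1 hR ht hB hx)
      rw [hg1, SF.add_app, SF.mul_app, this]; ring
  have z2 : J B (D2 g2 t) = 0 := J_d2 (G := g2 t) hB0 ((D2 g2).cont2 t)
    (fun x y => g2.hasDerivAt_2 t x y) fun x y hy => by
      have := (hv.D2 (Outs_open R)) t x y ht (Outs_of_abs2 hR ht hB hy)
      rw [hg2, SF.add_app, SF.mul_app, this]; ring
  refine h.congr_deriv ?_
  rw [e]
  have e1 : J B ((2 * Dt v * box v + D1 g1 + D2 g2 : SF) t) =
      J B ((2 * Dt v * box v + D1 g1 : SF) t) + J B (D2 g2 t) :=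
    J_add (SF.cont2 _ t) (SF.cont2 _ t)
  have e2 : J B ((2 * Dt v * box v + D1 g1 : SF) t) =
      J B ((2 * Dt v * box v : SF) t) + J B (D1 g1 t) :=
    J_add (SF.cont2 _ t) (SF.cont2 _ t)
  rw [e1, e2, z1, z2, add_zero, add_zero]

/-- Sum of the flat energies of all spatial derivatives of order at most `k`. -/
def EF (B : ℝ) (k : ℕ) (v : SF) (t : ℝ) : ℝ := Qs D1 D2 (fun v => J B (eF v t)) k v

theorem eF_nonneg (v : SF) (t x y : ℝ) : 0 ≤ eF v t x y := by
  simp only [eF, SF.add_app, SF.pow_app]; positivity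

theorem EF_nonneg (B : ℝ) (k : ℕ) (v : SF) (t : ℝ) : 0 ≤ EF B k v t :=
  Qs_nonneg (fun v => J_nonneg fun x y => eF_nonneg v t x y) k v

theorem Qs_J (A B' : Derivation ℝ SF SF) {B : ℝ} {Φ : SF → SF} {t : ℝ} : ∀ (k : ℕ) (v : SF),
    J B (Qs A B' Φ k v t) = Qs A B' (fun v => J B (Φ v t)) k v
  | 0, v => rfl
  | k + 1, v => by
    simp only [Qs]
    rw [← Qs_J A B' k, ← Qs_J A B' k]
    have e1 : J B ((Φ v + Qs A B' Φ k (A v) + Qs A B' Φ k (B' v) : SF) t) =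
        J B ((Φ v + Qs A B' Φ k (A v) : SF) t) + J B (Qs A B' Φ k (B' v) t) :=
      J_add (SF.cont2 _ t) (SF.cont2 _ t)
    have e2 : J B ((Φ v + Qs A B' Φ k (A v) : SF) t) =
        J B (Φ v t) + J B (Qs A B' Φ k (A v) t) :=
      J_add (SF.cont2 _ t) (SF.cont2 _ t)
    rw [e1, e2]

theorem Rw_Dt_le_EF (B : ℝ) (k : ℕ) (v : SF) (t : ℝ) : J B (Rw D1 D2 k (Dt v) t) ≤ EF B k v t := by
  rw [Rw, Qs_J, ← Qs_comp (f := Dt) D1_Dt D2_Dt (Φ := fun v => J B ((v ^ 2 : SF) t))]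
  refine Qs_mono (P := fun _ => True) (fun _ _ => trivial) (fun _ _ => trivial)
    (fun v _ => J_mono (SF.cont2 _ t) (SF.cont2 _ t) fun x y => ?_) k v trivial
  simp only [eF, SF.add_app, SF.pow_app]
  nlinarith [sq_nonneg (D1 v t x y), sq_nonneg (D2 v t x y)]

theorem Rw_D1_le_EF (B : ℝ) (k : ℕ) (v : SF) (t : ℝ) : J B (Rw D1 D2 k (D1 v) t) ≤ EF B k v t := by
  rw [Rw, Qs_J, ← Qs_comp (f := D1) (fun _ => rfl) D2_D1 (Φ := fun v => J B ((v ^ 2 : SF) t))]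
  refine Qs_mono (P := fun _ => True) (fun _ _ => trivial) (fun _ _ => trivial)
    (fun v _ => J_mono (SF.cont2 _ t) (SF.cont2 _ t) fun x y => ?_) k v trivial
  simp only [eF, SF.add_app, SF.pow_app]
  nlinarith [sq_nonneg (Dt v t x y), sq_nonneg (D2 v t x y)]

theorem Rw_D2_le_EF (B : ℝ) (k : ℕ) (v : SF) (t : ℝ) : J B (Rw D1 D2 k (D2 v) t) ≤ EF B k v t := by
  rw [Rw, Qs_J, ← Qs_comp (f := D2) (fun v => (D2_D1 v).symm) (fun _ => rfl)
    (Φ := fun v => J B ((v ^ 2 : SF) t))]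
  refine Qs_mono (P := fun _ => True) (fun _ _ => trivial) (fun _ _ => trivial)
    (fun v _ => J_mono (SF.cont2 _ t) (SF.cont2 _ t) fun x y => ?_) k v trivial
  simp only [eF, SF.add_app, SF.pow_app]
  nlinarith [sq_nonneg (Dt v t x y), sq_nonneg (D1 v t x y)]

/-- The energies of all spatial derivatives grow at most through the inhomogeneity. -/
theorem EF_deriv {R B : ℝ} (hR : 0 ≤ R) (k : ℕ) {v F : SF} (hv : Van (Outs R) v)
    (hF : Van Set.univ (box v - F)) {t : ℝ} (ht : 0 ≤ t) (hB : t + R < B) :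
    ∃ y', HasDerivAt (EF B k v) y' t ∧ y' ≤ EF B k v t + J B (Rw D1 D2 k F t) := by
  refine ⟨_, Qs_hasDerivAt (P := Van (Outs R)) (fun v h => h.D1 (Outs_open R))
    (fun v h => h.D2 (Outs_open R)) (Φ := fun t v => J B (eF v t))
    (fun v h => flat_energy hR h ht hB) k v hv, ?_⟩
  have h1 : Qs D1 D2 (fun v => J B ((2 * Dt v * box v : SF) t)) k v ≤
      Qs D1 D2 (fun v => J B (eF v t) + J B ((box v ^ 2 : SF) t)) k v := by
    refine Qs_mono (P := fun _ => True) (fun _ _ => trivial) (fun _ _ => trivial)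
      (fun v _ => ?_) k v trivial
    rw [← J_add (SF.cont2 _ t) (SF.cont2 _ t)]
    refine J_mono (SF.cont2 _ t) (SF.cont2 (eF v + box v ^ 2) t) fun x y => ?_
    change 2 * Dt v t x y * box v t x y ≤
      Dt v t x y ^ 2 + D1 v t x y ^ 2 + D2 v t x y ^ 2 + box v t x y ^ 2
    nlinarith [sq_nonneg (D1 v t x y), sq_nonneg (D2 v t x y),
      sq_nonneg (Dt v t x y - box v t x y)]
  rw [Qs_add] at h1
  refine h1.trans (add_le_add le_rfl (le_of_eq ?_))
  rw [Rw, Qs_J, Qs_comp (f := box) (Φ := fun v => J B ((v ^ 2 : SF) t))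
    (fun v => (box_D1 v).symm) (fun v => (box_D2 v).symm), ← Qs_J, ← Qs_J]
  have key : ∀ (k : ℕ) (f g : SF), Van Set.univ (f - g) → ∀ x y,
      Qs D1 D2 (fun v => v ^ 2) k f t x y = Qs D1 D2 (fun v => v ^ 2) k g t x y := by
    intro k
    induction k with
    | zero =>
      intro f g h x y
      have := h t x y ht trivial
      rw [SF.sub_app, sub_eq_zero] at this
      simp [Qs, this]
    | succ k ih =>
      intro f g h x y
      have h0 := h t x y ht trivial
      rw [SF.sub_app, sub_eq_zero] at h0
      have h1 := ih (D1 f) (D1 g) (by rw [← map_sub]; exact h.D1 isOpen_univ) x y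
      have h2 := ih (D2 f) (D2 g) (by rw [← map_sub]; exact h.D2 isOpen_univ) x y
      simp only [Qs, SF.add_app, SF.pow_app, h0, h1, h2]
  congr 1
  funext x y
  exact key k _ _ hF x y

/-- Scaling of the initial energies. -/
theorem EF_zero_scale (B c : ℝ) : ∀ (k : ℕ) (u z : SF), Zd (u - c • z) →
    EF B k u 0 = c ^ 2 * EF B k z 0
  | 0, u, z, h => by
    have e : ∀ D : Derivation ℝ SF SF, ∀ x y, D (u - c • z) 0 x y = D u 0 x y - c * D z 0 x y :=
      fun D x y => by rw [map_sub, Derivation.map_smul]; rfl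
    simp only [EF, Qs]
    rw [← J_const_mul]
    congr 1
    funext x y
    have h1 := (h x y).2
    have h2 := (h.D1 x y).1
    have h3 := (h.D2 x y).1
    rw [e] at h1 h2 h3
    simp only [eF, SF.add_app, SF.pow_app]
    rw [sub_eq_zero.1 h1, sub_eq_zero.1 h2, sub_eq_zero.1 h3]; ring
  | k + 1, u, z, h => by
    have h0 := EF_zero_scale B c 0 u z h
    have h1 := EF_zero_scale B c k (D1 u) (D1 z)
      (by have := h.D1; rwa [map_sub, Derivation.map_smul] at this)
    have h2 := EF_zero_scale B c k (D2 u) (D2 z)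
      (by have := h.D2; rwa [map_sub, Derivation.map_smul] at this)
    simp only [EF, Qs] at *
    rw [h0, h1, h2]; ring

/-- Sobolev inequality on a time slice. -/
theorem flat_sobolev {R B : ℝ} (hR : 0 ≤ R) {v : SF} (hv : Van (Outs R) v) {t : ℝ} (ht : 0 ≤ t)
    (hB : t + R + 1 ≤ B) (x y : ℝ) : v t x y ^ 2 ≤ 4 * J B (Rw D1 D2 2 v t) := by
  by_cases hp : (t, x, y) ∈ Outs R
  · rw [hv t x y ht hp]
    have : 0 ≤ J B (Rw D1 D2 2 v t) := J_nonneg fun x y => Rw_nonneg 2 v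
    nlinarith
  · have hp' : x ^ 2 + y ^ 2 ≤ (t + R) ^ 2 := not_lt.1 hp
    have hx : |x| ≤ t + R := abs_le_of_sq_le_sq (by nlinarith [sq_nonneg y]) (by linarith)
    have hy : |y| ≤ t + R := abs_le_of_sq_le_sq (by nlinarith [sq_nonneg x]) (by linarith)
    rw [abs_le] at hx hy
    rw [← J_const_mul]
    refine sobolev_sq (a := 1) (g := v t) (gx := D1 v t) (gy := D2 v t) (gxy := D2 (D1 v) t)
      one_pos (by linarith) (by linarith) (by linarith) (by linarith) (SF.cont2 _ t) (SF.cont2 _ t)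
      (SF.cont2 _ t) (SF.cont2 _ t) (SF.cont2 (4 * Rw D1 D2 2 v) t) (fun x y => v.hasDerivAt_1 t x y)
      (fun x y => v.hasDerivAt_2 t x y) (fun x y => (D1 v).hasDerivAt_2 t x y)
      (fun x y => mul_nonneg (by norm_num) (Rw_nonneg 2 v)) (fun x y _ _ _ _ => ?_)
    simp only [Rw, Qs, SF.add_app, SF.pow_app]
    nlinarith [sq_nonneg (D1 v t x y), sq_nonneg (D1 (D1 v) t x y), sq_nonneg (D2 v t x y),
      sq_nonneg (D2 (D2 v) t x y), sq_nonneg (D1 (D2 v) t x y), sq_nonneg (v t x y)]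

/-- Pointwise bound of spatial derivatives by `L²` norms. -/
theorem flat_sobolev_Sw {R B : ℝ} (hR : 0 ≤ R) {t : ℝ} (ht : 0 ≤ t)
    (hB : t + R + 1 ≤ B) (x y : ℝ) : ∀ (k : ℕ) (v : SF), Van (Outs R) v →
    Rw D1 D2 k v t x y ≤ 4 * 2 ^ k * J B (Rw D1 D2 (k + 2) v t)
  | 0, v, hv => by
    have := flat_sobolev hR hv ht hB x y
    simpa [Rw, Qs] using this
  | k + 1, v, hv => by
    have h1 := flat_sobolev_Sw hR ht hB x y k (D1 v) (hv.D1 (Outs_open R))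
    have h2 := flat_sobolev_Sw hR ht hB x y k (D2 v) (hv.D2 (Outs_open R))
    have h0 := flat_sobolev hR hv ht hB x y
    have n1 : ∀ k v, 0 ≤ J B (Rw D1 D2 k v t) := fun k v => J_nonneg fun x y => Rw_nonneg k v
    have e : J B (Rw D1 D2 (k + 1 + 2) v t) = J B ((v ^ 2 : SF) t) +
        J B (Rw D1 D2 (k + 2) (D1 v) t) + J B (Rw D1 D2 (k + 2) (D2 v) t) := by
      rw [Rw, Qs_J, Rw, Rw, Qs_J, Qs_J]; rfl
    have h3 : J B (Rw D1 D2 2 v t) ≤ J B (Rw D1 D2 (k + 1 + 2) v t) := by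
      rw [Rw, Rw, Qs_J, Qs_J]
      exact Qs_le_of_le (Φ := fun v : SF => J B ((v ^ 2 : SF) t))
        (fun v => J_nonneg fun x y => sq_nonneg _) (by omega) v
    have h4 : 0 ≤ J B ((v ^ 2 : SF) t) := J_nonneg fun x y => sq_nonneg _
    have e2 : Rw D1 D2 (k + 1) v t x y =
      v t x y ^ 2 + Rw D1 D2 k (D1 v) t x y + Rw D1 D2 k (D2 v) t x y := rfl
    rw [e2, pow_succ (2 : ℝ)]
    have h5 : (1 : ℝ) ≤ 2 ^ k := one_le_pow₀ (by norm_num)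
    have h6 := n1 (k + 2) (D1 v)
    have h7 := n1 (k + 2) (D2 v)
    nlinarith [mul_nonneg (sub_nonneg.2 h5) (n1 (k + 1 + 2) v), mul_nonneg (zero_le_one.trans h5) h4]

/-- Trilinear estimate: at most one factor carries more than half of the derivatives. -/
theorem Sw_tri {A B : Derivation ℝ SF SF} {t x y : ℝ} (n : ℕ) (a b : SF) :
    Sw A B t x y n (b * (b * a)) ≤ 3 * ((n + 1) * 2 ^ n) ^ 2 *
      ((Sw A B t x y (n / 2) a + Sw A B t x y (n / 2) b) ^ 2 *
        (Sw A B t x y n a + Sw A B t x y n b)) := by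
  have h1 := Sw_mul (A := A) (B := B) (t := t) (x := x) (y := y) n b (b * a)
  have h2 := Sw_mul (A := A) (B := B) (t := t) (x := x) (y := y) n b a
  have h3 := Sw_mul (A := A) (B := B) (t := t) (x := x) (y := y) (n / 2) b a
  have hm1 := Sw_mono (A := A) (B := B) (t := t) (x := x) (y := y) (Nat.div_le_self (n / 2) 2) a
  have hm2 := Sw_mono (A := A) (B := B) (t := t) (x := x) (y := y) (Nat.div_le_self (n / 2) 2) b
  have p : ∀ k v, 0 ≤ Sw A B t x y k v := fun k v => Sw_nonneg k v
  have p1 := p (n / 2) a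
  have p2 := p (n / 2) b
  have p3 := p n a
  have p4 := p n b
  have hc0 : (((n / 2 : ℕ) : ℝ) + 1) * 2 ^ (n / 2) ≤ ((n : ℝ) + 1) * 2 ^ n := by
    have : ((n / 2 : ℕ) : ℝ) ≤ n := by exact_mod_cast Nat.div_le_self n 2
    have : (2 : ℝ) ^ (n / 2) ≤ 2 ^ n := pow_le_pow_right₀ (by norm_num) (Nat.div_le_self n 2)
    gcongr
  have h3' : Sw A B t x y (n / 2) (b * a) ≤ ((n : ℝ) + 1) * 2 ^ n *
      (2 * (Sw A B t x y (n / 2) b * Sw A B t x y (n / 2) a)) := by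
    refine h3.trans (mul_le_mul hc0 ?_ ?_ (by positivity))
    · have := mul_le_mul_of_nonneg_right hm2 p1
      have := mul_le_mul_of_nonneg_left hm1 p2
      linarith
    · have := p (n / 2 / 2) a
      have := p (n / 2 / 2) b
      positivity
  set c : ℝ := ((n : ℝ) + 1) * 2 ^ n
  have hc : 0 ≤ c := by positivity
  generalize Sw A B t x y (n / 2) a = α₂ at *
  generalize Sw A B t x y (n / 2) b = β₂ at *
  generalize Sw A B t x y n a = α at *
  generalize Sw A B t x y n b = β at *
  refine h1.trans ?_
  have h4 : β₂ * Sw A B t x y n (b * a) + β * Sw A B t x y (n / 2) (b * a) ≤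
      β₂ * (c * (β₂ * α + β * α₂)) + β * (c * (2 * (β₂ * α₂))) :=
    add_le_add (mul_le_mul_of_nonneg_left h2 p2) (mul_le_mul_of_nonneg_left h3' p4)
  refine (mul_le_mul_of_nonneg_left h4 hc).trans ?_
  have e : c * (β₂ * (c * (β₂ * α + β * α₂)) + β * (c * (2 * (β₂ * α₂)))) =
      c ^ 2 * (β₂ ^ 2 * α + 3 * (β₂ * β * α₂)) := by ring
  have e3 : 3 * c ^ 2 * ((α₂ + β₂) ^ 2 * (α + β)) = c ^ 2 * (3 * ((α₂ + β₂) ^ 2 * (α + β))) := by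
    ring
  rw [e, e3]
  refine mul_le_mul_of_nonneg_left ?_ (sq_nonneg c)
  have q1 : 0 ≤ α₂ * α₂ * α := by positivity
  have q2 : 0 ≤ α₂ * β₂ * α := by positivity
  have q3 : 0 ≤ β₂ * β₂ * α := by positivity
  have q4 : 0 ≤ α₂ * α₂ * β := by positivity
  have q5 : 0 ≤ α₂ * β₂ * β := by positivity
  have q6 : 0 ≤ β₂ * β₂ * β := by positivity
  nlinarith

/-! ### Smallness of the solution on bounded time intervals -/

/-- The nonlinearity `-(∂ₜb)²∂ₜa`. -/
def Fn (a b : SF) : SF := -(Dt b * (Dt b * Dt a))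

/-- The system for `t ≥ 0`, together with finite propagation from `|x| ≤ R`. -/
structure Sol (R : ℝ) (a b : SF) : Prop where
  van1 : Van (Outs R) a
  van2 : Van (Outs R) b
  eq1 : Van Set.univ (box a - Fn a b)
  eq2 : Van Set.univ (box b - Fn b a)

theorem Sol.symm {R : ℝ} {a b : SF} (h : Sol R a b) : Sol R b a := ⟨h.van2, h.van1, h.eq2, h.eq1⟩

theorem ode_cmp {f B B' : ℝ → ℝ} {a b : ℝ}
    (h : ∀ t ∈ Set.Icc a b, ∃ y', HasDerivAt f y' t ∧ (f t = B t → y' < B' t))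
    (hB : ∀ t ∈ Set.Icc a b, HasDerivAt B (B' t) t) (h0 : f a ≤ B a) :
    ∀ t ∈ Set.Icc a b, f t ≤ B t := by
  classical
  choose! f' hf' using h
  exact image_le_of_deriv_right_lt_deriv_boundary'
    (fun t ht => (hf' t ht).1.continuousAt.continuousWithinAt)
    (fun t ht => (hf' t (Set.Ico_subset_Icc_self ht)).1.hasDerivWithinAt) h0
    (fun t ht => (hB t ht).continuousAt.continuousWithinAt)
    (fun t ht => (hB t (Set.Ico_subset_Icc_self ht)).hasDerivWithinAt)
    (fun t ht => (hf' t (Set.Ico_subset_Icc_self ht)).2)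

theorem J_Rw_mono {A A' : Derivation ℝ SF SF} {B : ℝ} {k l : ℕ} (h : k ≤ l) (v : SF) (t : ℝ) :
    J B (Rw A A' k v t) ≤ J B (Rw A A' l v t) := by
  rw [Rw, Rw, Qs_J, Qs_J]
  exact Qs_le_of_le (Φ := fun v : SF => J B ((v ^ 2 : SF) t))
    (fun v => J_nonneg fun x y => sq_nonneg _) h v

theorem flat_pointwise {R B : ℝ} (hR : 0 ≤ R) {t : ℝ} (ht : 0 ≤ t) (hB : t + R + 1 ≤ B) (x y : ℝ)
    {k l : ℕ} (hkl : k + 2 ≤ l) {v : SF} (hv : Van (Outs R) v) :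
    Sw D1 D2 t x y k v ^ 2 ≤ 4 * 6 ^ k * J B (Rw D1 D2 l v t) := by
  have h1 := Sw_le_Rw (A := D1) (B := D2) (t := t) (x := x) (y := y) k v
  have h2 := flat_sobolev_Sw hR ht hB x y k v hv
  have h3 := J_Rw_mono (A := D1) (A' := D2) (B := B) hkl v t
  have e : (6 : ℝ) ^ k = 3 ^ k * 2 ^ k := by rw [← mul_pow]; norm_num
  calc _ ≤ _ := h1
    _ ≤ 3 ^ k * (4 * 2 ^ k * J B (Rw D1 D2 l v t)) := by gcongr; exact h2.trans (by gcongr)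
    _ = _ := by rw [e]; ring

/-- The `L²` bound of the nonlinearity by the cube of the energy. -/
theorem Fn_L2 : ∃ C : ℝ, 0 < C ∧ ∀ (R B t : ℝ) (a b : SF), 0 ≤ R → 0 ≤ t → t + R + 1 ≤ B →
    Van (Outs R) a → Van (Outs R) b →
    J B (Rw D1 D2 5 (Fn a b) t) ≤ C * (EF B 5 a t + EF B 5 b t) ^ 3 := by
  set c : ℝ := 3 * (((5 : ℕ) + 1 : ℝ) * 2 ^ 5) ^ 2 with hc
  refine ⟨c ^ 2 * 288 ^ 2 * 486, by positivity, fun R B t a b hR ht hB ha hb => ?_⟩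
  set Y := EF B 5 a t + EF B 5 b t with hY
  have hY0 : 0 ≤ Y := add_nonneg (EF_nonneg _ _ _ _) (EF_nonneg _ _ _ _)
  have hpt : ∀ x y, Rw D1 D2 5 (Fn a b) t x y ≤ c ^ 2 * 288 ^ 2 * 486 * Y ^ 2 *
      (Rw D1 D2 5 (Dt a) + Rw D1 D2 5 (Dt b)) t x y := fun x y => by
    have h1 : Sw D1 D2 t x y 5 (Fn a b) ≤ c *
      ((Sw D1 D2 t x y 2 (Dt a) + Sw D1 D2 t x y 2 (Dt b)) ^ 2 *
        (Sw D1 D2 t x y 5 (Dt a) + Sw D1 D2 t x y 5 (Dt b))) := by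
      rw [Fn, Sw_neg]
      exact Sw_tri (A := D1) (B := D2) 5 (Dt a) (Dt b)
    have h2 : ∀ v, Van (Outs R) v → Sw D1 D2 t x y 2 (Dt v) ^ 2 ≤ 144 * EF B 5 v t := fun v hv => by
      refine (flat_pointwise hR ht hB x y (l := 5) (by norm_num) (hv.Dt (Outs_open R))).trans ?_
      have := Rw_Dt_le_EF B 5 v t
      linarith
    have h3 : (Sw D1 D2 t x y 2 (Dt a) + Sw D1 D2 t x y 2 (Dt b)) ^ 2 ≤ 288 * Y := by
      have := h2 a ha
      have := h2 b hb
      nlinarith [sq_nonneg (Sw D1 D2 t x y 2 (Dt a) - Sw D1 D2 t x y 2 (Dt b))]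
    have h4 : (Sw D1 D2 t x y 5 (Dt a) + Sw D1 D2 t x y 5 (Dt b)) ^ 2 ≤
        486 * (Rw D1 D2 5 (Dt a) + Rw D1 D2 5 (Dt b)) t x y := by
      have := Sw_le_Rw (A := D1) (B := D2) (t := t) (x := x) (y := y) 5 (Dt a)
      have := Sw_le_Rw (A := D1) (B := D2) (t := t) (x := x) (y := y) 5 (Dt b)
      rw [SF.add_app]
      nlinarith [sq_nonneg (Sw D1 D2 t x y 5 (Dt a) - Sw D1 D2 t x y 5 (Dt b))]
    have h5 : 0 ≤ Sw D1 D2 t x y 5 (Fn a b) := Sw_nonneg _ _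
    calc _ ≤ Sw D1 D2 t x y 5 (Fn a b) ^ 2 := Rw_le_Sw _ _
      _ ≤ (c * ((Sw D1 D2 t x y 2 (Dt a) + Sw D1 D2 t x y 2 (Dt b)) ^ 2 *
        (Sw D1 D2 t x y 5 (Dt a) + Sw D1 D2 t x y 5 (Dt b)))) ^ 2 := by gcongr
      _ = c ^ 2 * (((Sw D1 D2 t x y 2 (Dt a) + Sw D1 D2 t x y 2 (Dt b)) ^ 2) ^ 2 *
        (Sw D1 D2 t x y 5 (Dt a) + Sw D1 D2 t x y 5 (Dt b)) ^ 2) := by ring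
      _ ≤ c ^ 2 * ((288 * Y) ^ 2 * (486 * (Rw D1 D2 5 (Dt a) + Rw D1 D2 5 (Dt b)) t x y)) := by
        gcongr
      _ = _ := by ring
  have h6 := J_mono (B := B) (SF.cont2 (Rw D1 D2 5 (Fn a b)) t)
    (SF.cont2 ((c ^ 2 * 288 ^ 2 * 486 * Y ^ 2 : ℝ) • (Rw D1 D2 5 (Dt a) + Rw D1 D2 5 (Dt b))) t) hpt
  refine h6.trans ?_
  have e : J B (((c ^ 2 * 288 ^ 2 * 486 * Y ^ 2 : ℝ) • (Rw D1 D2 5 (Dt a) + Rw D1 D2 5 (Dt b)) : SF) t)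
      = c ^ 2 * 288 ^ 2 * 486 * Y ^ 2 * (J B (Rw D1 D2 5 (Dt a) t) + J B (Rw D1 D2 5 (Dt b) t)) := by
    rw [← J_add (SF.cont2 _ t) (SF.cont2 _ t), ← J_const_mul]; rfl
  rw [e]
  have h7 := Rw_Dt_le_EF B 5 a t
  have h8 := Rw_Dt_le_EF B 5 b t
  calc _ ≤ c ^ 2 * 288 ^ 2 * 486 * Y ^ 2 * Y := by gcongr; exact add_le_add h7 h8
    _ = _ := by ring

/-- Continuity argument for the fifth-order energies of the nonlinear system on a bounded time
interval: for small `ε` the cubic terms are absorbed and the energy grows at most exponentially. -/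
theorem flat_bound_u {R T B : ℝ} (hR : 0 ≤ R) (hB : T + R + 1 ≤ B) {E₀ : ℝ} (hE : 0 ≤ E₀) :
    ∃ C ε₀ : ℝ, 0 < C ∧ 0 < ε₀ ∧ ∀ ε, 0 < ε → ε < ε₀ → ∀ a b, Sol R a b →
      EF B 5 a 0 + EF B 5 b 0 ≤ ε ^ 2 * E₀ →
      ∀ t ∈ Set.Icc 0 T, EF B 5 a t + EF B 5 b t ≤ C * ε ^ 2 := by
  obtain ⟨C₁, hC₁, hF⟩ := Fn_L2
  set M := (E₀ + 1) * rexp (3 * |T|) with hM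
  have hM0 : 0 < M := by positivity
  refine ⟨M, 1 / (2 * C₁ * M ^ 2 + 1), hM0, by positivity, fun ε hε hε' a b hs h0 => ?_⟩
  have hq : 0 < 2 * C₁ * M ^ 2 + 1 := by positivity
  have hε1 : ε * (2 * C₁ * M ^ 2 + 1) < 1 := by rwa [lt_div_iff₀ hq] at hε'
  have hεle : ε ≤ 1 := by nlinarith [mul_pos hε (by positivity : 0 < 2 * C₁ * M ^ 2)]
  have hsm : 2 * C₁ * (M * ε ^ 2) ^ 2 < 1 := by
    have : ε ^ 4 ≤ ε := by
      calc ε ^ 4 ≤ ε ^ 1 := pow_le_pow_of_le_one hε.le hεle (by norm_num)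
        _ = ε := pow_one _
    have h2 : 2 * C₁ * (M * ε ^ 2) ^ 2 = 2 * C₁ * M ^ 2 * ε ^ 4 := by ring
    rw [h2]
    have := mul_le_mul_of_nonneg_left this (by positivity : 0 ≤ 2 * C₁ * M ^ 2)
    linarith
  have key := ode_cmp (f := fun t => EF B 5 a t + EF B 5 b t) (a := 0) (b := T)
    (B := fun t => (E₀ + 1) * ε ^ 2 * rexp (3 * t))
    (B' := fun t => (E₀ + 1) * ε ^ 2 * (rexp (3 * t) * 3)) (fun t ht => ?_) (fun t _ => ?_) ?_
  · intro t ht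
    refine (key t ht).trans ?_
    have : rexp (3 * t) ≤ rexp (3 * |T|) := Real.exp_le_exp.2 (by
      have := le_abs_self T
      linarith [ht.2])
    calc _ ≤ (E₀ + 1) * ε ^ 2 * rexp (3 * |T|) := by gcongr
      _ = _ := by rw [hM]; ring
  · obtain ⟨y1, d1, l1⟩ := EF_deriv hR 5 hs.van1 hs.eq1 ht.1 (by linarith [ht.2] : t + R < B)
    obtain ⟨y2, d2, l2⟩ := EF_deriv hR 5 hs.van2 hs.eq2 ht.1 (by linarith [ht.2] : t + R < B)
    refine ⟨y1 + y2, d1.add d2, fun heq => ?_⟩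
    have f1 := hF R B t a b hR ht.1 (by linarith [ht.2]) hs.van1 hs.van2
    have f2 := hF R B t b a hR ht.1 (by linarith [ht.2]) hs.van2 hs.van1
    rw [add_comm (EF B 5 b t)] at f2
    set Y := EF B 5 a t + EF B 5 b t
    have hY : 0 < Y := by rw [heq]; positivity
    have hYM : Y ≤ M * ε ^ 2 := by
      have : rexp (3 * t) ≤ rexp (3 * |T|) := Real.exp_le_exp.2 (by
        have := le_abs_self T
        linarith [ht.2])
      rw [heq]
      calc _ ≤ (E₀ + 1) * ε ^ 2 * rexp (3 * |T|) := by gcongr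
        _ = _ := by rw [hM]; ring
    have h3 : 2 * C₁ * Y ^ 2 < 1 :=
      lt_of_le_of_lt (by gcongr) hsm
    have e : (E₀ + 1) * ε ^ 2 * (rexp (3 * t) * 3) = 3 * Y := by rw [heq]; ring
    rw [e]
    nlinarith [mul_lt_mul_of_pos_right h3 hY]
  · have : HasDerivAt (fun t : ℝ => 3 * t) 3 t := by simpa using (hasDerivAt_id t).const_mul (3 : ℝ)
    exact (this.exp).const_mul _
  · simp only [mul_zero, Real.exp_zero, mul_one]
    nlinarith [sq_nonneg ε]

/-- Zero data and a cubic source of size `ε³` give an energy of size `ε⁶`. -/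
theorem flat_bound_w {R T B : ℝ} (hR : 0 ≤ R) (hB : T + R + 1 ≤ B) {C : ℝ} (hC : 0 < C) :
    ∃ C' : ℝ, 0 < C' ∧ ∀ ε, 0 < ε → ∀ a b w, Sol R a b → Van (Outs R) w →
      Van Set.univ (box w - Fn a b) → Zd w →
      (∀ t ∈ Set.Icc 0 T, EF B 5 a t + EF B 5 b t ≤ C * ε ^ 2) →
      ∀ t ∈ Set.Icc 0 T, EF B 5 w t ≤ C' * ε ^ 6 := by
  obtain ⟨C₁, hC₁, hF⟩ := Fn_L2
  set M := C₁ * C ^ 3 + 1 with hM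
  have hM0 : 0 < M := by positivity
  refine ⟨M * rexp (2 * |T|), by positivity, fun ε hε a b w hs hw hbw hz hab => ?_⟩
  have key := ode_cmp (f := EF B 5 w) (a := 0) (b := T)
    (B := fun t => M * ε ^ 6 * rexp (2 * t))
    (B' := fun t => M * ε ^ 6 * (rexp (2 * t) * 2)) (fun t ht => ?_) (fun t _ => ?_) ?_
  · intro t ht
    refine (key t ht).trans ?_
    have : rexp (2 * t) ≤ rexp (2 * |T|) := Real.exp_le_exp.2 (by
      have := le_abs_self T
      linarith [ht.2])
    calc _ ≤ M * ε ^ 6 * rexp (2 * |T|) := by gcongr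
      _ = _ := by ring
  · obtain ⟨y1, d1, l1⟩ := EF_deriv hR 5 hw hbw ht.1 (by linarith [ht.2] : t + R < B)
    refine ⟨y1, d1, fun heq => ?_⟩
    have f1 := hF R B t a b hR ht.1 (by linarith [ht.2]) hs.van1 hs.van2
    have h2 : (EF B 5 a t + EF B 5 b t) ^ 3 ≤ (C * ε ^ 2) ^ 3 := by
      have := hab t ht
      have : 0 ≤ EF B 5 a t + EF B 5 b t := add_nonneg (EF_nonneg _ _ _ _) (EF_nonneg _ _ _ _)
      gcongr
    have h3 : C₁ * (EF B 5 a t + EF B 5 b t) ^ 3 ≤ C₁ * C ^ 3 * ε ^ 6 := by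
      calc _ ≤ C₁ * (C * ε ^ 2) ^ 3 := by gcongr
        _ = _ := by ring
    have h4 : 1 ≤ rexp (2 * t) := Real.one_le_exp (by linarith [ht.1])
    have h5 : C₁ * C ^ 3 * ε ^ 6 < M * ε ^ 6 * rexp (2 * t) := by
      have : C₁ * C ^ 3 * ε ^ 6 < M * ε ^ 6 := by
        have : 0 < ε ^ 6 := by positivity
        nlinarith
      refine this.trans_le (le_mul_of_one_le_right (by positivity) h4)
    linarith
  · have : HasDerivAt (fun t : ℝ => 2 * t) 2 t := by simpa using (hasDerivAt_id t).const_mul (2 : ℝ)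
    exact (this.exp).const_mul _
  · have := EF_zero_scale B 0 5 w 0 (by simpa using hz)
    rw [this]
    simp only [mul_zero, Real.exp_zero, mul_one]
    have : 0 < M * ε ^ 6 := by positivity
    linarith

/-- All derivatives of order at most `n` are bounded by `c` on `K`. -/
def Bd (K : Set (ℝ × ℝ × ℝ)) : ℕ → ℝ → SF → Prop
  | 0, c, v => ∀ t x y, (t, x, y) ∈ K → |v t x y| ≤ c
  | n + 1, c, v => (∀ t x y, (t, x, y) ∈ K → |v t x y| ≤ c) ∧ Bd K n c (Dt v) ∧ Bd K n c (D1 v) ∧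
      Bd K n c (D2 v)

/-- All spatial derivatives of order at most `n` are bounded by `c` on `K`. -/
def Bx (K : Set (ℝ × ℝ × ℝ)) : ℕ → ℝ → SF → Prop
  | 0, c, v => ∀ t x y, (t, x, y) ∈ K → |v t x y| ≤ c
  | n + 1, c, v => (∀ t x y, (t, x, y) ∈ K → |v t x y| ≤ c) ∧ Bx K n c (D1 v) ∧ Bx K n c (D2 v)

section bd
variable {K : Set (ℝ × ℝ × ℝ)}

theorem Bd.zero : ∀ {n : ℕ} {c : ℝ} {v : SF}, Bd K n c v → Bd K 0 c v
  | 0, _, _, h => h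
  | _ + 1, _, _, h => h.1

theorem Bx.zero : ∀ {n : ℕ} {c : ℝ} {v : SF}, Bx K n c v → Bx K 0 c v
  | 0, _, _, h => h
  | _ + 1, _, _, h => h.1

theorem Bd.le : ∀ {n : ℕ} {c d : ℝ} {v : SF}, Bd K n c v → c ≤ d → Bd K n d v
  | 0, _, _, _, h, hc => fun t x y hp => (h t x y hp).trans hc
  | _ + 1, _, _, _, h, hc => ⟨fun t x y hp => (h.1 t x y hp).trans hc, h.2.1.le hc, h.2.2.1.le hc,
      h.2.2.2.le hc⟩

theorem Bx.le : ∀ {n : ℕ} {c d : ℝ} {v : SF}, Bx K n c v → c ≤ d → Bx K n d v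
  | 0, _, _, _, h, hc => fun t x y hp => (h t x y hp).trans hc
  | _ + 1, _, _, _, h, hc => ⟨fun t x y hp => (h.1 t x y hp).trans hc, h.2.1.le hc, h.2.2.le hc⟩

theorem Bd.pred : ∀ {n : ℕ} {c : ℝ} {v : SF}, Bd K (n + 1) c v → Bd K n c v
  | 0, _, _, h => h.1
  | _ + 1, _, _, h => ⟨h.1, h.2.1.pred, h.2.2.1.pred, h.2.2.2.pred⟩

theorem Bx.pred : ∀ {n : ℕ} {c : ℝ} {v : SF}, Bx K (n + 1) c v → Bx K n c v
  | 0, _, _, h => h.1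
  | _ + 1, _, _, h => ⟨h.1, h.2.1.pred, h.2.2.pred⟩

theorem Bd.of_le {m n : ℕ} (hmn : m ≤ n) {c : ℝ} {v : SF} (h : Bd K n c v) : Bd K m c v := by
  induction hmn with
  | refl => exact h
  | step _ ih => exact ih h.pred

theorem Bd.toBx : ∀ {n : ℕ} {c : ℝ} {v : SF}, Bd K n c v → Bx K n c v
  | 0, _, _, h => h
  | _ + 1, _, _, h => ⟨h.1, h.2.2.1.toBx, h.2.2.2.toBx⟩

theorem Bd.add : ∀ {n : ℕ} {c d : ℝ} {v w : SF}, Bd K n c v → Bd K n d w → Bd K n (c + d) (v + w)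
  | 0, _, _, _, _, h, h' => fun t x y hp =>
      (abs_add_le _ _).trans (add_le_add (h t x y hp) (h' t x y hp))
  | n + 1, _, _, _, _, h, h' => by
    refine ⟨fun t x y hp => (abs_add_le _ _).trans (add_le_add (h.1 t x y hp) (h'.1 t x y hp)), ?_⟩
    rw [map_add, map_add, map_add]
    exact ⟨h.2.1.add h'.2.1, h.2.2.1.add h'.2.2.1, h.2.2.2.add h'.2.2.2⟩

theorem Bx.add : ∀ {n : ℕ} {c d : ℝ} {v w : SF}, Bx K n c v → Bx K n d w → Bx K n (c + d) (v + w)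
  | 0, _, _, _, _, h, h' => fun t x y hp =>
      (abs_add_le _ _).trans (add_le_add (h t x y hp) (h' t x y hp))
  | n + 1, _, _, _, _, h, h' => by
    refine ⟨fun t x y hp => (abs_add_le _ _).trans (add_le_add (h.1 t x y hp) (h'.1 t x y hp)), ?_⟩
    rw [map_add, map_add]
    exact ⟨h.2.1.add h'.2.1, h.2.2.add h'.2.2⟩

theorem Bd.neg : ∀ {n : ℕ} {c : ℝ} {v : SF}, Bd K n c v → Bd K n c (-v)
  | 0, _, _, h => fun t x y hp => by rw [SF.neg_app, abs_neg]; exact h t x y hp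
  | n + 1, _, _, h => by
    refine ⟨fun t x y hp => by rw [SF.neg_app, abs_neg]; exact h.1 t x y hp, ?_⟩
    rw [map_neg, map_neg, map_neg]
    exact ⟨h.2.1.neg, h.2.2.1.neg, h.2.2.2.neg⟩

theorem Bd.const_zero : ∀ {n : ℕ} {c : ℝ}, 0 ≤ c → Bd K n c 0
  | 0, _, hc => fun t x y _ => by simpa using hc
  | n + 1, _, hc => by
    refine ⟨fun t x y _ => by simpa using hc, ?_⟩
    rw [map_zero, map_zero, map_zero]
    exact ⟨const_zero hc, const_zero hc, const_zero hc⟩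

theorem Bd.one : ∀ {n : ℕ}, Bd K n 1 1
  | 0 => fun t x y _ => by simp
  | n + 1 => by
    refine ⟨fun t x y _ => by simp, ?_⟩
    simp only [Derivation.map_one_eq_zero]
    exact ⟨const_zero one_pos.le, const_zero one_pos.le, const_zero one_pos.le⟩

theorem Bd.mul : ∀ {n : ℕ} {c d : ℝ} {v w : SF}, Bd K n c v → Bd K n d w → 0 ≤ c → 0 ≤ d →
    Bd K n (2 ^ n * (c * d)) (v * w)
  | 0, c, d, _, _, h, h', hc, hd => fun t x y hp => by
    rw [SF.mul_app, abs_mul, pow_zero, one_mul]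
    exact mul_le_mul (h t x y hp) (h' t x y hp) (abs_nonneg _) hc
  | n + 1, c, d, v, w, h, h', hc, hd => by
    have hcd : 0 ≤ c * d := mul_nonneg hc hd
    have e : ∀ D : Derivation ℝ SF SF, D (v * w) = v * D w + D v * w := fun D => by
      rw [Derivation.leibniz, smul_eq_mul, smul_eq_mul, mul_comm w]
    have e2 : (2 : ℝ) ^ (n + 1) * (c * d) = 2 ^ n * (c * d) + 2 ^ n * (c * d) := by ring
    refine ⟨fun t x y hp => ?_, ?_⟩
    · rw [SF.mul_app, abs_mul]
      refine (mul_le_mul (h.1 t x y hp) (h'.1 t x y hp) (abs_nonneg _) hc).trans ?_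
      exact le_mul_of_one_le_left hcd (one_le_pow₀ (by norm_num))
    · rw [e, e, e, e2]
      exact ⟨(h.pred.mul h'.2.1 hc hd).add (h.2.1.mul h'.pred hc hd),
        (h.pred.mul h'.2.2.1 hc hd).add (h.2.2.1.mul h'.pred hc hd),
        (h.pred.mul h'.2.2.2 hc hd).add (h.2.2.2.mul h'.pred hc hd)⟩

theorem Bd.congr (hK : ∀ p ∈ K, 0 ≤ p.1) : ∀ {n : ℕ} {c : ℝ} {v w : SF}, Bd K n c w →
    Van Set.univ (v - w) → Bd K n c v
  | 0, _, v, w, h, hv => fun t x y hp => by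
    have := hv t x y (hK _ hp) trivial
    rw [SF.sub_app, sub_eq_zero] at this
    rw [this]; exact h t x y hp
  | n + 1, _, v, w, h, hv => by
    have h1 := hv.Dt isOpen_univ
    have h2 := hv.D1 isOpen_univ
    have h3 := hv.D2 isOpen_univ
    rw [map_sub] at h1 h2 h3
    refine ⟨fun t x y hp => ?_, h.2.1.congr hK h1, h.2.2.1.congr hK h2, h.2.2.2.congr hK h3⟩
    have := hv t x y (hK _ hp) trivial
    rw [SF.sub_app, sub_eq_zero] at this
    rw [this]; exact h.1 t x y hp

theorem Bd.X {X : SF} {T : ℝ} (hT : 1 ≤ T) (hX : ∀ t x y, (t, x, y) ∈ K → |X t x y| ≤ T)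
    (h0 : Dt X = 0 ∨ Dt X = 1) (h1 : D1 X = 0 ∨ D1 X = 1) (h2 : D2 X = 0 ∨ D2 X = 1) :
    ∀ n, Bd K n T X
  | 0 => hX
  | n + 1 => by
    have : ∀ Y : SF, Y = 0 ∨ Y = 1 → Bd K n T Y := fun Y hY => by
      rcases hY with rfl | rfl
      · exact const_zero (by linarith)
      · exact Bd.one.le hT
    exact ⟨hX, this _ h0, this _ h1, this _ h2⟩

/-- The boosts cost one derivative. -/
theorem Bd.boosts {T : ℝ} (hT : 1 ≤ T) (hK : ∀ t x y, (t, x, y) ∈ K → |t| ≤ T ∧ |x| ≤ T ∧ |y| ≤ T)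
    {n : ℕ} {c : ℝ} (hc : 0 ≤ c) {v : SF} (h : Bd K (n + 1) c v) :
    Bd K n (2 ^ (n + 1) * T * c) (L1 v) ∧ Bd K n (2 ^ (n + 1) * T * c) (L2 v) := by
  have hT0 : 0 ≤ T := by linarith
  have a0 : Bd K n T X0 := Bd.X hT (fun t x y hp => (hK t x y hp).1) (by simp) (by simp) (by simp) n
  have a1 : Bd K n T X1 := Bd.X hT (fun t x y hp => (hK t x y hp).2.1) (by simp) (by simp) (by simp) n
  have a2 : Bd K n T X2 := Bd.X hT (fun t x y hp => (hK t x y hp).2.2) (by simp) (by simp) (by simp) n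
  have e : 2 ^ (n + 1) * T * c = 2 ^ n * (T * c) + 2 ^ n * (T * c) := by ring
  rw [L1_def, L2_def, e]
  exact ⟨(a1.mul h.2.1 hT0 hc).add (a0.mul h.2.2.1 hT0 hc),
    (a2.mul h.2.1 hT0 hc).add (a0.mul h.2.2.2 hT0 hc)⟩

theorem Bx.of_Sw {c : ℝ} : ∀ {n : ℕ} {v : SF},
    (∀ t x y, (t, x, y) ∈ K → Sw D1 D2 t x y n v ≤ c) → Bx K n c v
  | 0, _, h => h
  | n + 1, _, h => ⟨fun t x y hp => (Sw_self (A := D1) (B := D2) _ _).trans (h t x y hp),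
      of_Sw fun t x y hp => (Sw_A n _).trans (h t x y hp),
      of_Sw fun t x y hp => (Sw_B n _).trans (h t x y hp)⟩

/-- The wave equation trades time derivatives for spatial ones. -/
theorem Bd.of_Bx : ∀ (N : ℕ) {c : ℝ} {v : SF}, 0 ≤ c → Bx K (N + 1) c v → Bx K N c (Dt v) →
    (∀ M, M + 1 ≤ N → Bd K M c (box v)) → Bd K (N + 1) (3 ^ N * c) v
  | 0, c, v, _, h, h', _ => by
    rw [pow_zero, one_mul]; exact ⟨h.1, h', h.2.1, h.2.2⟩
  | N + 1, c, v, hc, h, h', hb => by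
    have q1 := Bd.of_Bx N hc h.2.1 (by rw [← D1_Dt]; exact h'.2.1)
      (fun M hM => by rw [box_D1]; exact (hb (M + 1) (by omega)).2.2.1)
    have q2 := Bd.of_Bx N hc h.2.2 (by rw [← D2_Dt]; exact h'.2.2)
      (fun M hM => by rw [box_D2]; exact (hb (M + 1) (by omega)).2.2.2)
    have e : Dt (Dt v) = D1 (D1 v) + D2 (D2 v) + box v := by simp only [box]; ring
    have q3 : Bx K N (3 * c) (Dt (Dt v)) := by
      rw [e, show 3 * c = c + c + c by ring]
      exact (h.2.1.2.1.add h.2.2.2.2).add (hb N le_rfl).toBx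
    have q4 := Bd.of_Bx N (c := 3 * c) (v := Dt v) (by linarith) (h'.le (by linarith)) q3
      (fun M hM => by rw [box_Dt]; exact (hb (M + 1) (by omega)).2.1.le (by linarith))
    have e2 : (3 : ℝ) ^ (N + 1) * c = 3 ^ N * (3 * c) := by ring
    have l1 : 3 ^ N * c ≤ 3 ^ (N + 1) * c := by
      rw [e2]; exact mul_le_mul_of_nonneg_left (by linarith) (by positivity)
    refine ⟨fun t x y hp => (h.1 t x y hp).trans ?_, by rw [e2]; exact q4, q1.le l1, q2.le l1⟩
    exact le_mul_of_one_le_left hc (one_le_pow₀ (by norm_num))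

theorem Bd.Fn {n : ℕ} {c : ℝ} (hc : 0 ≤ c) {a b : SF} (ha : Bd K (n + 1) c a)
    (hb : Bd K (n + 1) c b) : Bd K n (4 ^ n * c ^ 3) (Fn a b) := by
  have := (hb.2.1.mul (hb.2.1.mul ha.2.1 hc hc) hc (by positivity)).neg
  have e : (4 : ℝ) ^ n * c ^ 3 = 2 ^ n * (c * (2 ^ n * (c * c))) := by
    rw [show (4 : ℝ) = 2 * 2 by norm_num, mul_pow]; ring
  rw [e]; exact this

/-- Bounds for all derivatives of a solution from bounds for its spatial derivatives. -/
theorem Bd.sol (hK : ∀ p ∈ K, 0 ≤ p.1) : ∀ N : ℕ, ∃ C : ℝ, 1 ≤ C ∧ ∀ (R c : ℝ) (a b : SF), 0 ≤ c →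
    c ≤ 1 → Sol R a b → Bx K (N + 1) c a → Bx K N c (Dt a) → Bx K (N + 1) c b → Bx K N c (Dt b) →
    Bd K (N + 1) (C * c) a ∧ Bd K (N + 1) (C * c) b
  | 0 => ⟨1, le_rfl, fun R c a b hc hc1 hs h1 h2 h3 h4 => by
      rw [one_mul]; exact ⟨⟨h1.1, h2, h1.2.1, h1.2.2⟩, ⟨h3.1, h4, h3.2.1, h3.2.2⟩⟩⟩
  | N + 1 => by
    obtain ⟨C, hC, H⟩ := Bd.sol hK N
    have hC4 : 1 ≤ 4 ^ N * C ^ 3 := one_le_mul_of_one_le_of_one_le (one_le_pow₀ (by norm_num))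
      (one_le_pow₀ hC)
    refine ⟨3 ^ (N + 1) * (4 ^ N * C ^ 3), one_le_mul_of_one_le_of_one_le
      (one_le_pow₀ (by norm_num)) hC4, fun R c a b hc hc1 hs h1 h2 h3 h4 => ?_⟩
    obtain ⟨ha, hb⟩ := H R c a b hc hc1 hs h1.pred h2.pred h3.pred h4.pred
    have hCc : 0 ≤ C * c := by positivity
    have hle : 4 ^ N * (C * c) ^ 3 ≤ 4 ^ N * C ^ 3 * c := by
      have : c ^ 3 ≤ c := by
        calc c ^ 3 ≤ c ^ 1 := pow_le_pow_of_le_one hc hc1 (by norm_num)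
          _ = c := pow_one c
      rw [mul_pow, ← mul_assoc]
      exact mul_le_mul_of_nonneg_left this (by positivity)
    have hcl : c ≤ 4 ^ N * C ^ 3 * c := le_mul_of_one_le_left hc hC4
    have f1 := ((Bd.Fn hCc ha hb).congr hK hs.eq1).le hle
    have f2 := ((Bd.Fn hCc hb ha).congr hK hs.eq2).le hle
    rw [mul_assoc]
    exact ⟨Bd.of_Bx (N + 1) (by positivity) (h1.le hcl) (h2.le hcl)
        (fun M hM => f1.of_le (by omega)),
      Bd.of_Bx (N + 1) (by positivity) (h3.le hcl) (h4.le hcl) (fun M hM => f2.of_le (by omega))⟩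

end bd

/-- The box `0 ≤ t ≤ T`, `|x₁|, |x₂| ≤ B`. -/
def Kb (T B : ℝ) : Set (ℝ × ℝ × ℝ) := {p | (0 ≤ p.1 ∧ p.1 ≤ T) ∧ |p.2.1| ≤ B ∧ |p.2.2| ≤ B}

/-- Energy bounds give pointwise bounds for spatial derivatives. -/
theorem Bx.of_EF {R T B m : ℝ} (hR : 0 ≤ R) (hT : 0 ≤ T) (hB : T + R + 1 ≤ B) (hm : 0 ≤ m) {v : SF}
    (hv : Van (Outs R) v) (hE : ∀ t ∈ Set.Icc 0 T, EF B 5 v t ≤ m ^ 2) :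
    Bx (Kb T B) 4 ((30 + 60 * B) * m) v ∧ Bx (Kb T B) 3 ((30 + 60 * B) * m) (Dt v) := by
  have hB0 : 0 ≤ B := by linarith
  have hle : 30 * m ≤ (30 + 60 * B) * m := by
    nlinarith [mul_nonneg hB0 hm]
  have key : ∀ (w : SF), Van (Outs R) w → (∀ t, J B (Rw D1 D2 5 w t) ≤ EF B 5 v t) →
      ∀ t ∈ Set.Icc 0 T, ∀ x y, Sw D1 D2 t x y 3 w ≤ 30 * m := fun w hw hwE t ht x y => by
    have := flat_pointwise hR ht.1 (by linarith [ht.2] : t + R + 1 ≤ B) x y (k := 3) (l := 5)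
      (by norm_num) hw
    refine abs_le_of_sq_le_sq' ?_ (by positivity) |>.2
    have h1 := hwE t
    have h2 := hE t ht
    nlinarith [sq_nonneg m]
  have k0 := key (Dt v) (hv.Dt (Outs_open R)) (fun t => Rw_Dt_le_EF B 5 v t)
  have k1 := key (D1 v) (hv.D1 (Outs_open R)) (fun t => Rw_D1_le_EF B 5 v t)
  have k2 := key (D2 v) (hv.D2 (Outs_open R)) (fun t => Rw_D2_le_EF B 5 v t)
  refine ⟨⟨fun t x y hp => ?_, Bx.of_Sw fun t x y hp => (k1 t hp.1 x y).trans hle,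
    Bx.of_Sw fun t x y hp => (k2 t hp.1 x y).trans hle⟩,
    Bx.of_Sw fun t x y hp => (k0 t hp.1 x y).trans hle⟩
  have hmv := Convex.norm_image_sub_le_of_norm_hasDerivWithin_le (f := fun x => v t x y)
    (f' := fun x => D1 v t x y) (C := 30 * m) (s := Set.univ) (x := -B) (y := x)
    (fun z _ => (v.hasDerivAt_1 t z y).hasDerivWithinAt)
    (fun z _ => (Sw_self (A := D1) (B := D2) 3 _).trans (k1 t hp.1 z y)) convex_univ trivial trivial
  have hz : v t (-B) y = 0 := hv t (-B) y hp.1.1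
    (Outs_of_abs1 (B := B) hR hp.1.1 (by linarith [hp.1.2]) (by rw [abs_neg, abs_of_nonneg hB0]))
  rw [hz, sub_zero, Real.norm_eq_abs, Real.norm_eq_abs] at hmv
  have h2 : |x - -B| ≤ 2 * B := by
    have := hp.2.1
    rw [abs_le] at this ⊢
    simp only at this
    constructor <;> linarith
  refine hmv.trans ?_
  have := mul_le_mul_of_nonneg_left h2 (by positivity : 0 ≤ 30 * m)
  nlinarith

/-- On a bounded time interval the solution is `O(ε)` and differs from the free solution by
`O(ε³)`, together with its derivatives of order at most four. -/
theorem local_bounds {R T B : ℝ} (hR : 0 ≤ R) (hT : 0 ≤ T) (hB : T + R + 1 ≤ B) (z₁ z₂ : SF)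
    (hz₁ : Van (Outs R) z₁) (hz₂ : Van (Outs R) z₂)
    (hb₁ : Van Set.univ (box z₁)) (hb₂ : Van Set.univ (box z₂)) :
    ∃ C ε₀ : ℝ, 0 < C ∧ 0 < ε₀ ∧ ∀ ε, 0 < ε → ε < ε₀ → ∀ a b, Sol R a b →
      Zd (a - ε • z₁) → Zd (b - ε • z₂) →
      (Bd (Kb T B) 4 (C * ε) a ∧ Bd (Kb T B) 4 (C * ε) b) ∧
      (Bd (Kb T B) 4 (C * ε ^ 3) (a - ε • z₁) ∧ Bd (Kb T B) 4 (C * ε ^ 3) (b - ε • z₂)) := by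
  set E₀ := EF B 5 z₁ 0 + EF B 5 z₂ 0 with hE₀
  have hE₀0 : 0 ≤ E₀ := add_nonneg (EF_nonneg _ _ _ _) (EF_nonneg _ _ _ _)
  obtain ⟨C₁, ε₁, hC₁, hε₁, H₁⟩ := flat_bound_u hR hB hE₀0
  obtain ⟨C₂, hC₂, H₂⟩ := flat_bound_w (T := T) hR hB hC₁
  have hK : ∀ p ∈ Kb T B, 0 ≤ p.1 := fun p hp => hp.1.1
  obtain ⟨C₃, hC₃, H₃⟩ := Bd.sol hK 3
  have hB0 : 0 ≤ B := by linarith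
  set A₁ := (30 + 60 * B) * √C₁ with hA₁
  set A₂ := (30 + 60 * B) * √C₂ with hA₂
  have hA₁0 : 0 < A₁ := mul_pos (by linarith) (Real.sqrt_pos.2 hC₁)
  have hA₂0 : 0 < A₂ := mul_pos (by linarith) (Real.sqrt_pos.2 hC₂)
  have hsub : ∀ ε, Van (Outs R) (ε • z₁) ∧ Van (Outs R) (ε • z₂) := fun ε =>
    ⟨fun t x y ht hp => by rw [SF.smul_app, hz₁ t x y ht hp, mul_zero],
      fun t x y ht hp => by rw [SF.smul_app, hz₂ t x y ht hp, mul_zero]⟩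
  set C₄ := C₃ * A₁ with hC₄
  have hC₄0 : 0 < C₄ := by positivity
  set C₅ := 27 * (A₂ + 16 * C₄ ^ 3) with hC₅
  have hC₅0 : 0 < C₅ := by positivity
  refine ⟨C₄ + C₅, min ε₁ (1 / A₁), by positivity, by positivity, fun ε hε hε' a b hs ha hb => ?_⟩
  have hεA : A₁ * ε ≤ 1 := by
    have := (lt_min_iff.1 hε').2
    rw [lt_div_iff₀ hA₁0] at this; linarith
  have hEn := H₁ ε hε (lt_min_iff.1 hε').1 a b hs (by
    rw [EF_zero_scale B ε 5 a z₁ ha, EF_zero_scale B ε 5 b z₂ hb, ← mul_add])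
  have hEab : ∀ t ∈ Set.Icc 0 T, EF B 5 b t + EF B 5 a t ≤ C₁ * ε ^ 2 := fun t ht => by
    rw [add_comm]; exact hEn t ht
  have sq1 : (√C₁ * ε) ^ 2 = C₁ * ε ^ 2 := by rw [mul_pow, Real.sq_sqrt hC₁.le]
  have sq2 : (√C₂ * ε ^ 3) ^ 2 = C₂ * ε ^ 6 := by rw [mul_pow, Real.sq_sqrt hC₂.le]; ring
  have n1 : 0 ≤ √C₁ * ε := by positivity
  have n2 : 0 ≤ √C₂ * ε ^ 3 := by positivity
  have ba := Bx.of_EF hR hT hB n1 hs.van1 (fun t ht => by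
    rw [sq1]; have := EF_nonneg B 5 b t; linarith [hEn t ht])
  have bb := Bx.of_EF hR hT hB n1 hs.van2 (fun t ht => by
    rw [sq1]; have := EF_nonneg B 5 a t; linarith [hEn t ht])
  rw [← mul_assoc, ← hA₁] at ba bb
  obtain ⟨da, db⟩ := H₃ R (A₁ * ε) a b (by positivity) hεA hs ba.1 ba.2 bb.1 bb.2
  rw [← mul_assoc, ← hC₄] at da db
  have hw : ∀ (p q z : SF), Sol R p q → Van (Outs R) z → Van Set.univ (box z) → Zd (p - ε • z) →
      (∀ t ∈ Set.Icc 0 T, EF B 5 p t + EF B 5 q t ≤ C₁ * ε ^ 2) →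
      Bd (Kb T B) 4 (C₄ * ε) p → Bd (Kb T B) 4 (C₄ * ε) q →
      Bd (Kb T B) 4 ((C₄ + C₅) * ε ^ 3) (p - ε • z) := fun p q z hpq hz hbz hzd hE dp dq => by
    have v1 : Van (Outs R) (p - ε • z) := fun t x y ht hp => by
      rw [SF.sub_app, SF.smul_app, hz t x y ht hp, hpq.van1 t x y ht hp]; ring
    have v2 : Van Set.univ (box (p - ε • z) - Fn p q) := fun t x y ht hp => by
      have h1 := hpq.eq1 t x y ht hp
      have h2 := hbz t x y ht hp
      rw [box_sub, box_smul, SF.sub_app, SF.sub_app, SF.smul_app, h2]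
      rw [SF.sub_app] at h1
      linarith
    have bw := Bx.of_EF hR hT hB n2 v1 (fun t ht => by
      rw [sq2]; exact H₂ ε hε p q _ hpq v1 v2 hzd hE t ht)
    rw [← mul_assoc, ← hA₂] at bw
    have hle : A₂ * ε ^ 3 ≤ (A₂ + 16 * C₄ ^ 3) * ε ^ 3 := by
      have : 0 ≤ 16 * C₄ ^ 3 * ε ^ 3 := by positivity
      linarith
    have f : Bd (Kb T B) 2 ((A₂ + 16 * C₄ ^ 3) * ε ^ 3) (box (p - ε • z)) :=
      ((Bd.Fn (n := 2) (by positivity) dp.pred dq.pred).congr hK v2).le (by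
        have : 0 ≤ A₂ * ε ^ 3 := by positivity
        have e : (4 : ℝ) ^ 2 * (C₄ * ε) ^ 3 = 16 * C₄ ^ 3 * ε ^ 3 := by ring
        rw [e]; linarith)
    refine (Bd.of_Bx 3 (by positivity) (bw.1.le hle) (bw.2.le hle)
      (fun M hM => f.of_le (by omega))).le ?_
    have : 0 ≤ C₄ * ε ^ 3 := by positivity
    have e : (3 : ℝ) ^ 3 * ((A₂ + 16 * C₄ ^ 3) * ε ^ 3) = C₅ * ε ^ 3 := by rw [hC₅]; ring
    rw [e]; linarith
  have hl : C₄ * ε ≤ (C₄ + C₅) * ε := by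
    have : 0 ≤ C₅ * ε := by positivity
    linarith
  exact ⟨⟨da.le hl, db.le hl⟩, hw a b z₁ hs hz₁ hb₁ ha hEn da db,
    hw b a z₂ hs.symm hz₂ hb₂ hb hEab db da⟩

/-! ### Hyperboloids: calculus, flux identity and energies -/

/-- Time translation by `b`. -/
def sh (b : ℝ) (v : SF) : SF := ⟨fun t x y => v (t - b) x y, by
  change ContDiff ℝ (⊤ : ℕ∞) (fun p : ℝ × ℝ × ℝ => v (p.1 - b) p.2.1 p.2.2)
  exact v.smooth.comp (f := fun p : ℝ × ℝ × ℝ => (p.1 - b, p.2.1, p.2.2)) (by fun_prop)⟩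

@[simp] theorem sh_app (b : ℝ) (v : SF) (t x y : ℝ) : sh b v t x y = v (t - b) x y := rfl

theorem sh_Dt (b : ℝ) (v : SF) : Dt (sh b v) = sh b (Dt v) := SF.ext' fun t x y =>
  deriv_comp_sub_const (f := fun s => v s x y) b t
theorem sh_D1 (b : ℝ) (v : SF) : D1 (sh b v) = sh b (D1 v) := rfl
theorem sh_D2 (b : ℝ) (v : SF) : D2 (sh b v) = sh b (D2 v) := rfl
theorem sh_sub (b : ℝ) (v w : SF) : sh b (v - w) = sh b v - sh b w := rfl
theorem sh_smul (b c : ℝ) (v : SF) : sh b (c • v) = c • sh b v := rfl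
theorem sh_box (b : ℝ) (v : SF) : box (sh b v) = sh b (box v) := by
  simp only [box, sh_Dt, sh_D1, sh_D2, sh_sub]
theorem sh_Fn (b : ℝ) (v w : SF) : Fn (sh b v) (sh b w) = sh b (Fn v w) := by
  simp only [Fn, sh_Dt]; rfl

/-- Vanishing on a set of space-time points. -/
def Vo (O : Set (ℝ × ℝ × ℝ)) (v : SF) : Prop := ∀ t x y, (t, x, y) ∈ O → v t x y = 0

theorem Vo.Dt {O : Set (ℝ × ℝ × ℝ)} (hO : IsOpen O) {v : SF} (h : Vo O v) : Vo O (Dt v) := by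
  intro t x y hp
  have : (fun z : ℝ => ((z, x, y) : ℝ × ℝ × ℝ)) ⁻¹' O ∈ 𝓝 t :=
    (hO.preimage (by fun_prop)).mem_nhds hp
  have h1 : (fun z => v z x y) =ᶠ[𝓝 t] fun _ => 0 := by
    filter_upwards [this] with z hz using h z x y hz
  exact (v.hasDerivAt_t t x y).unique ((hasDerivAt_const t (0 : ℝ)).congr_of_eventuallyEq h1)

theorem Vo.D1 {O : Set (ℝ × ℝ × ℝ)} (hO : IsOpen O) {v : SF} (h : Vo O v) : Vo O (D1 v) := by
  intro t x y hp
  have : (fun z : ℝ => ((t, z, y) : ℝ × ℝ × ℝ)) ⁻¹' O ∈ 𝓝 x :=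
    (hO.preimage (by fun_prop)).mem_nhds hp
  have h1 : (fun z => v t z y) =ᶠ[𝓝 x] fun _ => 0 := by
    filter_upwards [this] with z hz using h t z y hz
  exact (v.hasDerivAt_1 t x y).unique ((hasDerivAt_const x (0 : ℝ)).congr_of_eventuallyEq h1)

theorem Vo.D2 {O : Set (ℝ × ℝ × ℝ)} (hO : IsOpen O) {v : SF} (h : Vo O v) : Vo O (D2 v) := by
  intro t x y hp
  have : (fun z : ℝ => ((t, x, z) : ℝ × ℝ × ℝ)) ⁻¹' O ∈ 𝓝 y :=
    (hO.preimage (by fun_prop)).mem_nhds hp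
  have h1 : (fun z => v t x z) =ᶠ[𝓝 y] fun _ => 0 := by
    filter_upwards [this] with z hz using h t x z hz
  exact (v.hasDerivAt_2 t x y).unique ((hasDerivAt_const y (0 : ℝ)).congr_of_eventuallyEq h1)

theorem Vo.L1 {O : Set (ℝ × ℝ × ℝ)} (hO : IsOpen O) {v : SF} (h : Vo O v) : Vo O (L1 v) := by
  intro t x y hp
  rw [L1_def, SF.add_app, SF.mul_app, SF.mul_app, h.Dt hO t x y hp, h.D1 hO t x y hp]; ring

theorem Vo.L2 {O : Set (ℝ × ℝ × ℝ)} (hO : IsOpen O) {v : SF} (h : Vo O v) : Vo O (L2 v) := by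
  intro t x y hp
  rw [L2_def, SF.add_app, SF.mul_app, SF.mul_app, h.Dt hO t x y hp, h.D2 hO t x y hp]; ring

theorem Vo.mul_right {O : Set (ℝ × ℝ × ℝ)} {v : SF} (h : Vo O v) (w : SF) : Vo O (v * w) :=
  fun t x y hp => by rw [SF.mul_app, h t x y hp, zero_mul]

/-- The part of the exterior `|x| > t - 1` of the cone in `t > t₀`. -/
def Oc (t₀ : ℝ) : Set (ℝ × ℝ × ℝ) := {p | t₀ < p.1 ∧ (p.1 - 1) ^ 2 < p.2.1 ^ 2 + p.2.2 ^ 2}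

theorem Oc_open (t₀ : ℝ) : IsOpen (Oc t₀) :=
  IsOpen.and (p₁ := fun p : ℝ × ℝ × ℝ => t₀ < p.1)
    (p₂ := fun p : ℝ × ℝ × ℝ => (p.1 - 1) ^ 2 < p.2.1 ^ 2 + p.2.2 ^ 2)
    (isOpen_lt (by fun_prop) (by fun_prop)) (isOpen_lt (by fun_prop) (by fun_prop))

/-- The half space `t > t₀`. -/
def Ot (t₀ : ℝ) : Set (ℝ × ℝ × ℝ) := {p | t₀ < p.1}

theorem Ot_open (t₀ : ℝ) : IsOpen (Ot t₀) := isOpen_lt (by fun_prop) (by fun_prop)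

/-- The height of the hyperboloid `t² - |x|² = s²` over `(x,y)`. -/
def hT (s x y : ℝ) : ℝ := √(s ^ 2 + x ^ 2 + y ^ 2)

/-- Restriction of `v` to the hyperboloid `t² - |x|² = s²`. -/
def Hy (s : ℝ) (v : SF) (x y : ℝ) : ℝ := v (hT s x y) x y

theorem hT_sq (s x y : ℝ) : hT s x y ^ 2 = s ^ 2 + x ^ 2 + y ^ 2 := sq_sqrt (by positivity)
theorem hT_nonneg (s x y : ℝ) : 0 ≤ hT s x y := sqrt_nonneg _
theorem hT_pos {s : ℝ} (hs : 0 < s) (x y : ℝ) : 0 < hT s x y := sqrt_pos.2 (by positivity)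
theorem hT_ge {s : ℝ} (x y : ℝ) : s ≤ hT s x y :=
  le_sqrt_of_sq_le (by nlinarith [sq_nonneg x, sq_nonneg y])
theorem hT_ge_x (s x y : ℝ) : |x| ≤ hT s x y :=
  le_sqrt_of_sq_le (by rw [sq_abs]; nlinarith [sq_nonneg s, sq_nonneg y])
theorem hT_ge_y (s x y : ℝ) : |y| ≤ hT s x y :=
  le_sqrt_of_sq_le (by rw [sq_abs]; nlinarith [sq_nonneg s, sq_nonneg x])

theorem hT_cont : Continuous (fun q : ℝ × ℝ × ℝ => hT q.1 q.2.1 q.2.2) := by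
  unfold hT; fun_prop

theorem hT_cont2 (s : ℝ) : Cont2 (hT s) := by
  unfold Cont2 hT; fun_prop

theorem Hy_cont3 (v : SF) : Continuous (fun q : ℝ × ℝ × ℝ => Hy q.1 v q.2.1 q.2.2) :=
  v.cont_comp hT_cont (by fun_prop) (by fun_prop)

theorem Hy_cont2 (s : ℝ) (v : SF) : Cont2 (Hy s v) :=
  v.cont_comp (hT_cont2 s) continuous_fst continuous_snd

theorem hT_d0 {s : ℝ} (hs : 0 < s) (x y : ℝ) :
    HasDerivAt (fun s => hT s x y) (s / hT s x y) s := by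
  have := (((hasDerivAt_pow 2 s).add_const (x ^ 2)).add_const (y ^ 2)).sqrt
    (show s ^ 2 + x ^ 2 + y ^ 2 ≠ 0 by positivity)
  refine this.congr_deriv ?_
  have := hT_pos hs x y
  unfold hT at *
  field_simp; norm_num

theorem hT_d1 {s : ℝ} (hs : 0 < s) (x y : ℝ) :
    HasDerivAt (fun x => hT s x y) (x / hT s x y) x := by
  have := (((hasDerivAt_pow 2 x).const_add (s ^ 2)).add_const (y ^ 2)).sqrt
    (show s ^ 2 + x ^ 2 + y ^ 2 ≠ 0 by positivity)
  refine this.congr_deriv ?_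
  have := hT_pos hs x y
  unfold hT at *
  field_simp; norm_num

theorem hT_d2 {s : ℝ} (hs : 0 < s) (x y : ℝ) :
    HasDerivAt (fun y => hT s x y) (y / hT s x y) y := by
  have := ((hasDerivAt_pow 2 y).const_add (s ^ 2 + x ^ 2)).sqrt
    (show s ^ 2 + x ^ 2 + y ^ 2 ≠ 0 by positivity)
  refine this.congr_deriv ?_
  have := hT_pos hs x y
  unfold hT at *
  field_simp; norm_num

theorem Hy_d0 {s : ℝ} (hs : 0 < s) (v : SF) (x y : ℝ) :
    HasDerivAt (fun s => Hy s v x y) (s / hT s x y * Hy s (Dt v) x y) s :=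
  (v.comp_curve (hT_d0 hs x y) (hasDerivAt_const s x) (hasDerivAt_const s y)).congr_deriv (by
    unfold Hy; ring)

theorem Hy_d1 {s : ℝ} (hs : 0 < s) (v : SF) (x y : ℝ) :
    HasDerivAt (fun x => Hy s v x y) (Hy s (L1 v) x y / hT s x y) x :=
  (v.comp_curve (hT_d1 hs x y) (hasDerivAt_id x) (hasDerivAt_const x y)).congr_deriv (by
    have := hT_pos hs x y
    simp only [Hy, L1_def, SF.add_app, SF.mul_app, X1_app, X0_app, id]; field_simp; ring)

theorem Hy_d2 {s : ℝ} (hs : 0 < s) (v : SF) (x y : ℝ) :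
    HasDerivAt (fun y => Hy s v x y) (Hy s (L2 v) x y / hT s x y) y :=
  (v.comp_curve (hT_d2 hs x y) (hasDerivAt_const y x) (hasDerivAt_id y)).congr_deriv (by
    have := hT_pos hs x y
    simp only [Hy, L2_def, SF.add_app, SF.mul_app, X2_app, X0_app, id]; field_simp; ring)

theorem Vo.hy {t₀ s : ℝ} (hs : t₀ < s) {v : SF} (h : Vo (Oc t₀) v) {x y : ℝ}
    (hT' : s ^ 2 + 1 < 2 * hT s x y) : Hy s v x y = 0 := by
  refine h _ _ _ ⟨hs.trans_le (hT_ge x y), ?_⟩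
  have := hT_sq s x y
  simp only
  nlinarith

theorem hT_big {s x y : ℝ} (hs : 1 < s) (h : s ^ 2 ≤ |x| ∨ s ^ 2 ≤ |y|) :
    s ^ 2 + 1 < 2 * hT s x y := by
  have : s ^ 2 ≤ hT s x y := h.elim (fun h => h.trans (hT_ge_x s x y)) (fun h => h.trans (hT_ge_y s x y))
  nlinarith

theorem Vo.hyB {t₀ s B : ℝ} (ht₀ : 1 ≤ t₀) (hs : t₀ < s) (hB : s ^ 2 ≤ B) {v : SF}
    (h : Vo (Oc t₀) v) {x y : ℝ} (hxy : |x| = B ∨ |y| = B) : Hy s v x y = 0 :=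
  h.hy hs (hT_big (by linarith) (hxy.imp (fun e => by rw [e]; exact hB) fun e => by rw [e]; exact hB))

/-- The flux of a current `(P₀,P₁,P₂)` through the hyperboloids varies by its divergence. -/
theorem flux {t₀ s B : ℝ} (ht₀ : 1 ≤ t₀) (hs : t₀ < s) (hB : s ^ 2 ≤ B) {P0 P1 P2 : SF}
    (h1 : Vo (Oc t₀) P1) (h2 : Vo (Oc t₀) P2) :
    HasDerivAt (fun s => J B (fun x y => Hy s P0 x y - x / hT s x y * Hy s P1 x y
      - y / hT s x y * Hy s P2 x y))
      (J B (fun x y => s / hT s x y * Hy s (Dt P0 + D1 P1 + D2 P2) x y)) s := by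
  have hs0 : 0 < s := by linarith
  have hB0 : 0 ≤ B := (sq_nonneg s).trans hB
  let G' : ℝ → ℝ → ℝ → ℝ := fun s x y => s / hT s x y * Hy s (Dt P0) x y
    - (x * (-(s / hT s x y) / hT s x y ^ 2) * Hy s P1 x y
      + x / hT s x y * (s / hT s x y * Hy s (Dt P1) x y))
    - (y * (-(s / hT s x y) / hT s x y ^ 2) * Hy s P2 x y
      + y / hT s x y * (s / hT s x y * Hy s (Dt P2) x y))
  have cT : ∀ s : ℝ, 0 < s → Continuous (fun p : ℝ × ℝ => hT s p.1 p.2) := fun s _ => hT_cont2 s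
  have cH : ∀ s v, Continuous (fun p : ℝ × ℝ => Hy s v p.1 p.2) := fun s v => Hy_cont2 s v
  have key := J_hasDerivAt (B := B) (U := Set.Ioi 0) isOpen_Ioi (show s ∈ Set.Ioi (0:ℝ) from hs0)
    (G := fun s x y => Hy s P0 x y - x / hT s x y * Hy s P1 x y - y / hT s x y * Hy s P2 x y)
    (G' := G') ?_ ?_ ?_
  · refine key.congr_deriv ?_
    -- the two boundary terms which integrate to zero
    let A1 : ℝ → ℝ → ℝ := fun x y => s * (-(x / hT s x y) / hT s x y ^ 2) * Hy s P1 x y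
      + s / hT s x y * (Hy s (L1 P1) x y / hT s x y)
    let A2 : ℝ → ℝ → ℝ := fun x y => s * (-(y / hT s x y) / hT s x y ^ 2) * Hy s P2 x y
      + s / hT s x y * (Hy s (L2 P2) x y / hT s x y)
    have hTn : ∀ p : ℝ × ℝ, hT s p.1 p.2 ≠ 0 := fun p => (hT_pos hs0 _ _).ne'
    have cA1 : Cont2 A1 := by
      have := cT s hs0; have := cH s P1; have := cH s (L1 P1)
      change Continuous fun p : ℝ × ℝ => s * (-(p.1 / hT s p.1 p.2) / hT s p.1 p.2 ^ 2) *
        Hy s P1 p.1 p.2 + s / hT s p.1 p.2 * (Hy s (L1 P1) p.1 p.2 / hT s p.1 p.2)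
      fun_prop (disch := first | exact hTn | exact fun p => pow_ne_zero 2 (hTn p))
    have cA2 : Cont2 A2 := by
      have := cT s hs0; have := cH s P2; have := cH s (L2 P2)
      change Continuous fun p : ℝ × ℝ => s * (-(p.2 / hT s p.1 p.2) / hT s p.1 p.2 ^ 2) *
        Hy s P2 p.1 p.2 + s / hT s p.1 p.2 * (Hy s (L2 P2) p.1 p.2 / hT s p.1 p.2)
      fun_prop (disch := first | exact hTn | exact fun p => pow_ne_zero 2 (hTn p))
    have z1 : J B A1 = 0 := J_d1 (G := fun x y => s / hT s x y * Hy s P1 x y) hB0 cA1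
      (fun x y => (((hasDerivAt_const x s).div (hT_d1 hs0 x y) (hT_pos hs0 x y).ne').mul
        (Hy_d1 hs0 P1 x y)).congr_deriv (by simp only [A1, Pi.div_apply]; ring))
      (fun x y hx => by simp [h1.hyB ht₀ hs hB (Or.inl hx)])
    have z2 : J B A2 = 0 := J_d2 (G := fun x y => s / hT s x y * Hy s P2 x y) hB0 cA2
      (fun x y => (((hasDerivAt_const y s).div (hT_d2 hs0 x y) (hT_pos hs0 x y).ne').mul
        (Hy_d2 hs0 P2 x y)).congr_deriv (by simp only [A2, Pi.div_apply]; ring))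
      (fun x y hx => by simp [h2.hyB ht₀ hs hB (Or.inr hx)])
    have cD : Cont2 (fun x y => s / hT s x y * Hy s (Dt P0 + D1 P1 + D2 P2) x y) := by
      have := cT s hs0; have := cH s (Dt P0 + D1 P1 + D2 P2)
      change Continuous fun p : ℝ × ℝ => s / hT s p.1 p.2 *
        Hy s (Dt P0 + D1 P1 + D2 P2) p.1 p.2
      fun_prop (disch := exact hTn)
    have e : G' s = fun x y => (s / hT s x y * Hy s (Dt P0 + D1 P1 + D2 P2) x y - A1 x y) - A2 x y := by
      funext x y
      have hp := hT_pos hs0 x y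
      simp only [G', A1, A2, Hy, L1_def, L2_def, SF.add_app, SF.mul_app, X0_app, X1_app, X2_app]
      field_simp
      ring
    rw [e, J_sub (G := fun x y => s / hT s x y * Hy s (Dt P0 + D1 P1 + D2 P2) x y - A1 x y)
      (cD.sub cA1) cA2, J_sub cD cA1, z1, z2]; ring
  · intro s hs
    have hTn : ∀ p : ℝ × ℝ, hT s p.1 p.2 ≠ 0 := fun p => (hT_pos hs _ _).ne'
    have := cT s hs; have := cH s P0; have := cH s P1; have := cH s P2
    change Continuous fun p : ℝ × ℝ => Hy s P0 p.1 p.2 - p.1 / hT s p.1 p.2 * Hy s P1 p.1 p.2 -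
      p.2 / hT s p.1 p.2 * Hy s P2 p.1 p.2
    fun_prop (disch := exact hTn)
  · have hTn : ∀ p ∈ Set.Ioi (0:ℝ) ×ˢ (Set.univ : Set (ℝ × ℝ)), hT p.1 p.2.1 p.2.2 ≠ 0 :=
      fun p hp => (hT_pos hp.1 _ _).ne'
    have hTn2 : ∀ p ∈ Set.Ioi (0:ℝ) ×ˢ (Set.univ : Set (ℝ × ℝ)), hT p.1 p.2.1 p.2.2 ^ 2 ≠ 0 :=
      fun p hp => pow_ne_zero 2 (hTn p hp)
    have c0 := hT_cont.continuousOn (s := Set.Ioi (0:ℝ) ×ˢ (Set.univ : Set (ℝ × ℝ)))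
    have c1 := (Hy_cont3 (Dt P0)).continuousOn (s := Set.Ioi (0:ℝ) ×ˢ (Set.univ : Set (ℝ × ℝ)))
    have c2 := (Hy_cont3 P1).continuousOn (s := Set.Ioi (0:ℝ) ×ˢ (Set.univ : Set (ℝ × ℝ)))
    have c3 := (Hy_cont3 P2).continuousOn (s := Set.Ioi (0:ℝ) ×ˢ (Set.univ : Set (ℝ × ℝ)))
    have c4 := (Hy_cont3 (Dt P1)).continuousOn (s := Set.Ioi (0:ℝ) ×ˢ (Set.univ : Set (ℝ × ℝ)))
    have c5 := (Hy_cont3 (Dt P2)).continuousOn (s := Set.Ioi (0:ℝ) ×ˢ (Set.univ : Set (ℝ × ℝ)))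
    simp only [G']
    fun_prop (disch := first | exact hTn | exact hTn2)
  · intro s hs x y
    have d := (hasDerivAt_const s (1:ℝ)).div (hT_d0 hs x y) (hT_pos hs x y).ne'
    have d1 := (d.const_mul x).mul (Hy_d0 hs P1 x y)
    have d2 := (d.const_mul y).mul (Hy_d0 hs P2 x y)
    refine (((Hy_d0 hs P0 x y).sub d1).sub d2).congr_deriv ?_ |>.congr_of_eventuallyEq ?_
    · simp only [G', Pi.div_apply]; ring
    · exact Eventually.of_forall fun z => by simp [div_eq_mul_inv]

/-- The energy density on the hyperboloids. -/
def hD (s : ℝ) (v : SF) (x y : ℝ) : ℝ :=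
  (s ^ 2 * Hy s (Dt v) x y ^ 2 + Hy s (L1 v) x y ^ 2 + Hy s (L2 v) x y ^ 2) / hT s x y ^ 2

/-- The energy on the hyperboloids. -/
def hE (B s : ℝ) (v : SF) : ℝ := J B (hD s v)

theorem hD_nonneg (s : ℝ) (v : SF) (x y : ℝ) : 0 ≤ hD s v x y := by unfold hD; positivity

theorem hD_cont {s : ℝ} (hs : 0 < s) (v : SF) : Cont2 (hD s v) := by
  have hTn : ∀ p : ℝ × ℝ, hT s p.1 p.2 ^ 2 ≠ 0 := fun p => pow_ne_zero 2 (hT_pos hs _ _).ne'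
  have : Continuous (fun p : ℝ × ℝ => hT s p.1 p.2) := hT_cont2 s
  have h1 : Continuous (fun p : ℝ × ℝ => Hy s (Dt v) p.1 p.2) := Hy_cont2 s _
  have h2 : Continuous (fun p : ℝ × ℝ => Hy s (L1 v) p.1 p.2) := Hy_cont2 s _
  have h3 : Continuous (fun p : ℝ × ℝ => Hy s (L2 v) p.1 p.2) := Hy_cont2 s _
  unfold Cont2 hD
  fun_prop (disch := exact hTn)

theorem hE_nonneg (B s : ℝ) (v : SF) : 0 ≤ hE B s v := J_nonneg (hD_nonneg s v)

/-- The energy identity on hyperboloids: flux of the current with components `|∂v|²` and `-2 ∂ₜv ∂ᵢv`,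
whose divergence is `2 ∂ₜv □v`. The support condition removes boundary terms. -/
theorem hE_deriv {t₀ s B : ℝ} (ht₀ : 1 ≤ t₀) (hs : t₀ < s) (hB : s ^ 2 ≤ B) {v : SF}
    (h : Vo (Oc t₀) v) : HasDerivAt (fun s => hE B s v)
      (J B (fun x y => s / hT s x y * (2 * Hy s (Dt v) x y * Hy s (box v) x y))) s := by
  have hO := Oc_open t₀
  have key := flux ht₀ hs hB (P0 := eF v) (P1 := -(Dt v * D1 v + Dt v * D1 v))
    (P2 := -(Dt v * D2 v + Dt v * D2 v))
    (fun t x y hp => by simp [h.Dt hO t x y hp]) (fun t x y hp => by simp [h.Dt hO t x y hp])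
  have e1 : ∀ᶠ z in 𝓝 s, hE B z v = J B (fun x y => Hy z (eF v) x y
      - x / hT z x y * Hy z (-(Dt v * D1 v + Dt v * D1 v)) x y
      - y / hT z x y * Hy z (-(Dt v * D2 v + Dt v * D2 v)) x y) := by
    filter_upwards [lt_mem_nhds (show 0 < s by linarith)] with z hz
    unfold hE; congr 1; funext x y
    have hp := hT_pos hz x y
    have hq := hT_sq z x y
    simp only [hD, Hy, eF, L1_def, L2_def, SF.add_app, SF.mul_app, SF.neg_app, SF.pow_app, X0_app,
      X1_app, X2_app]
    rw [show z ^ 2 = hT z x y ^ 2 - x ^ 2 - y ^ 2 by rw [hq]; ring]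
    field_simp
    ring
  refine (key.congr_of_eventuallyEq e1).congr_deriv ?_
  congr 1; funext x y
  have e : Dt (eF v) + D1 (-(Dt v * D1 v + Dt v * D1 v)) + D2 (-(Dt v * D2 v + Dt v * D2 v)) =
      Dt v * box v + Dt v * box v := by
    simp [eF, box]; ring
  rw [e]
  simp only [Hy, SF.add_app, SF.mul_app]; ring

/-- Energies of order `k` on the hyperboloids, built with the boosts. -/
def HE (B : ℝ) (k : ℕ) (v : SF) (s : ℝ) : ℝ := Qs L1 L2 (hE B s) k v

theorem HE_nonneg (B : ℝ) (k : ℕ) (v : SF) (s : ℝ) : 0 ≤ HE B k v s := Qs_nonneg (hE_nonneg B s) k v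

/-! ### Weighted norms and the Sobolev inequality on hyperboloids -/

/-- The density of the hyperboloidal energy, up to the weight `T⁻²`. -/
def eH (s : ℝ) (v : SF) : SF := (s ^ 2) • Dt v ^ 2 + L1 v ^ 2 + L2 v ^ 2

/-- The integral over the hyperboloid of parameter `s` with weight `T⁻²`. Other powers of `T` are
obtained by multiplying `v` with powers of the coordinate function `X0`. -/
def JH (B s : ℝ) (v : SF) : ℝ := J B (fun x y => Hy s v x y / hT s x y ^ 2)

theorem JH_cont2 {s : ℝ} (hs : 0 < s) (v : SF) : Cont2 (fun x y => Hy s v x y / hT s x y ^ 2) :=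
  Continuous.div (Hy_cont2 s v) ((hT_cont2 s).pow 2) fun p => pow_ne_zero 2 (hT_pos hs p.1 p.2).ne'

theorem JH_add {B s : ℝ} (hs : 0 < s) (v w : SF) : JH B s (v + w) = JH B s v + JH B s w := by
  unfold JH
  rw [← J_add (JH_cont2 hs v) (JH_cont2 hs w)]
  congr 1; funext x y; simp only [Hy, SF.add_app]; ring

theorem JH_smul {B s : ℝ} (c : ℝ) (v : SF) : JH B s (c • v) = c * JH B s v := by
  unfold JH
  rw [← J_const_mul]
  congr 1; funext x y; simp only [Hy, SF.smul_app]; ring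

theorem JH_mono {B s : ℝ} (hs : 0 < s) {v w : SF} (h : ∀ x y, Hy s v x y ≤ Hy s w x y) :
    JH B s v ≤ JH B s w :=
  J_mono (JH_cont2 hs v) (JH_cont2 hs w) fun x y => by
    have := hT_pos hs x y
    have := h x y
    gcongr

theorem JH_nonneg {B s : ℝ} {v : SF} (h : ∀ x y, 0 ≤ Hy s v x y) : 0 ≤ JH B s v :=
  J_nonneg fun x y => div_nonneg (h x y) (sq_nonneg _)

theorem hE_eq (B s : ℝ) (v : SF) : hE B s v = JH B s (eH s v) := by
  unfold hE JH
  congr 1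

theorem Qs_JH (A A' : Derivation ℝ SF SF) {B s : ℝ} (hs : 0 < s) {Φ : SF → SF} :
    ∀ (k : ℕ) (v : SF), JH B s (Qs A A' Φ k v) = Qs A A' (fun v => JH B s (Φ v)) k v
  | 0, v => rfl
  | k + 1, v => by
    rw [Qs, Qs, JH_add hs, JH_add hs, Qs_JH A A' hs k, Qs_JH A A' hs k]

theorem HE_eq {B s : ℝ} (hs : 0 < s) (k : ℕ) (v : SF) :
    HE B k v s = JH B s (Qs L1 L2 (eH s) k v) := by
  rw [Qs_JH L1 L2 hs, HE]
  rfl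

theorem Qs_peel {A A' : Derivation ℝ SF SF} {Φ : SF → ℝ} : ∀ (k : ℕ) (v : SF),
    Qs A A' Φ (k + 1) v = Φ v + Qs A A' (fun v => Φ (A v) + Φ (A' v)) k v
  | 0, v => by simp [Qs, add_assoc]
  | k + 1, v => by
    rw [Qs, Qs_peel k, Qs_peel k, Qs]; ring

theorem Qs_sq {A A' : Derivation ℝ SF SF} {Φ : SF → ℝ} : ∀ (k : ℕ) (v : SF),
    Qs A A' Φ k v ^ 2 ≤ 3 ^ k * Qs A A' (fun v => Φ v ^ 2) k v
  | 0, v => by simp [Qs]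
  | k + 1, v => by
    have h1 := Qs_sq (A := A) (A' := A') (Φ := Φ) k (A v)
    have h2 := Qs_sq (A := A) (A' := A') (Φ := Φ) k (A' v)
    rw [Qs, Qs]
    have h3 : Φ v ^ 2 ≤ 3 ^ k * Φ v ^ 2 :=
      le_mul_of_one_le_left (sq_nonneg _) (one_le_pow₀ (by norm_num))
    rw [pow_succ (3 : ℝ) k]
    nlinarith [sq_nonneg (Φ v - Qs A A' Φ k (A v)), sq_nonneg (Φ v - Qs A A' Φ k (A' v)),
      sq_nonneg (Qs A A' Φ k (A v) - Qs A A' Φ k (A' v))]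

theorem L1_Dt (v : SF) : L1 (Dt v) = Dt (L1 v) + -D1 v := by simp [L1_def]; ring
theorem L2_Dt (v : SF) : L2 (Dt v) = Dt (L2 v) + -D2 v := by simp [L2_def]; ring
theorem L1_D1 (v : SF) : L1 (D1 v) = D1 (L1 v) + -Dt v := by simp [L1_def]; ring
theorem L2_D1 (v : SF) : L2 (D1 v) = D1 (L2 v) := by simp [L2_def]
theorem L1_D2 (v : SF) : L1 (D2 v) = D2 (L1 v) := by simp [L1_def]
theorem L2_D2 (v : SF) : L2 (D2 v) = D2 (L2 v) + -Dt v := by simp [L2_def]; ring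

/-- Boosts commute with the translations up to translations. -/
theorem Sw_D_le (t x y : ℝ) : ∀ (k : ℕ) (u : SF),
    Sw L1 L2 t x y k (Dt u) + Sw L1 L2 t x y k (D1 u) + Sw L1 L2 t x y k (D2 u) ≤
      3 ^ k * Qs L1 L2 (fun v => |Dt v t x y| + |D1 v t x y| + |D2 v t x y|) k u
  | 0, u => by simp [Sw, Qs]
  | k + 1, u => by
    have i0 := Sw_D_le t x y k u
    have i1 := Sw_D_le t x y k (L1 u)
    have i2 := Sw_D_le t x y k (L2 u)
    have e : ∀ v, Sw L1 L2 t x y (k + 1) v =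
      |v t x y| + Sw L1 L2 t x y k (L1 v) + Sw L1 L2 t x y k (L2 v) := fun v => rfl
    rw [e, e, e, L1_Dt, L2_Dt, L1_D1, L2_D1, L1_D2, L2_D2]
    have a1 := Sw_add (A := L1) (B := L2) (t := t) (x := x) (y := y) k (Dt (L1 u)) (-D1 u)
    have a2 := Sw_add (A := L1) (B := L2) (t := t) (x := x) (y := y) k (Dt (L2 u)) (-D2 u)
    have a3 := Sw_add (A := L1) (B := L2) (t := t) (x := x) (y := y) k (D1 (L1 u)) (-Dt u)
    have a4 := Sw_add (A := L1) (B := L2) (t := t) (x := x) (y := y) k (D2 (L2 u)) (-Dt u)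
    rw [Sw_neg] at a1 a2 a3 a4
    have hn : ∀ v : SF, 0 ≤ |Dt v t x y| + |D1 v t x y| + |D2 v t x y| := fun v => by positivity
    have m := Qs_le_succ (A := L1) (B := L2) hn k u
    have p1 := Sw_nonneg (A := L1) (B := L2) (t := t) (x := x) (y := y) k (D1 u)
    have p2 := Sw_nonneg (A := L1) (B := L2) (t := t) (x := x) (y := y) k (D2 u)
    have h3 : (1 : ℝ) ≤ 3 ^ k := one_le_pow₀ (by norm_num)
    rw [Qs] at m ⊢
    rw [pow_succ (3 : ℝ) k]
    set q := Qs L1 L2 (fun v => |Dt v t x y| + |D1 v t x y| + |D2 v t x y|) k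
    nlinarith [hn u, mul_le_mul_of_nonneg_left m (show (0 : ℝ) ≤ 3 ^ k by positivity),
      mul_le_mul_of_nonneg_right h3 (hn u)]

set_option maxHeartbeats 1600000 in
/-- The boosts of translation derivatives are controlled by the energy density of boosts, because
the commutator of a boost with a translation is again a translation; the factor `s²` is the weight
of the ordinary gradient in the energy density. -/
theorem Rw_D_le {s t x y : ℝ} (hs : 0 < s) (hst : s ≤ t) (hx : |x| ≤ t) (hy : |y| ≤ t) (k : ℕ)
    (u : SF) : s ^ 2 * (Rw L1 L2 k (Dt u) t x y + Rw L1 L2 k (D1 u) t x y +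
      Rw L1 L2 k (D2 u) t x y) ≤ 15 * 27 ^ k * Qs L1 L2 (fun v => eH s v t x y) k u := by
  have ht : 0 < t := hs.trans_le hst
  have r1 := Rw_le_Sw (A := L1) (B := L2) (t := t) (x := x) (y := y) k (Dt u)
  have r2 := Rw_le_Sw (A := L1) (B := L2) (t := t) (x := x) (y := y) k (D1 u)
  have r3 := Rw_le_Sw (A := L1) (B := L2) (t := t) (x := x) (y := y) k (D2 u)
  have n1 := Sw_nonneg (A := L1) (B := L2) (t := t) (x := x) (y := y) k (Dt u)
  have n2 := Sw_nonneg (A := L1) (B := L2) (t := t) (x := x) (y := y) k (D1 u)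
  have n3 := Sw_nonneg (A := L1) (B := L2) (t := t) (x := x) (y := y) k (D2 u)
  have h1 := Sw_D_le t x y k u
  have h2 := Qs_sq (A := L1) (A' := L2) (Φ := fun v => |Dt v t x y| + |D1 v t x y| + |D2 v t x y|) k u
  have h3 : s ^ 2 * Qs L1 L2 (fun v => (|Dt v t x y| + |D1 v t x y| + |D2 v t x y|) ^ 2) k u ≤
      15 * Qs L1 L2 (fun v => eH s v t x y) k u := by
    rw [← Qs_const_mul, ← Qs_const_mul]
    refine Qs_mono (P := fun _ => True) (fun _ _ => trivial) (fun _ _ => trivial) (fun v _ => ?_) k u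
      trivial
    have hD : ∀ a l d : ℝ, |a| ≤ t → l = a * Dt v t x y + t * d →
        s ^ 2 * d ^ 2 ≤ 2 * l ^ 2 + 2 * (s ^ 2 * Dt v t x y ^ 2) := by
      intro a l d ha hl
      have e1 : t * d = l - a * Dt v t x y := by rw [hl]; ring
      have e2 : (t * d) ^ 2 ≤ 2 * l ^ 2 + 2 * (a * Dt v t x y) ^ 2 := by
        rw [e1]; nlinarith [sq_nonneg (l + a * Dt v t x y)]
      have ha2 : a ^ 2 ≤ t ^ 2 := sq_le_sq' (by linarith [neg_abs_le a]) (by linarith [le_abs_self a])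
      have hst2 : s ^ 2 ≤ t ^ 2 := by gcongr
      have e3 : t ^ 2 * d ^ 2 ≤ 2 * l ^ 2 + 2 * (t ^ 2 * Dt v t x y ^ 2) := by
        nlinarith [mul_le_mul_of_nonneg_right ha2 (sq_nonneg (Dt v t x y))]
      have e4 : t ^ 2 * (d ^ 2 - 2 * Dt v t x y ^ 2) ≤ 2 * l ^ 2 := by linarith
      rcases le_total (d ^ 2 - 2 * Dt v t x y ^ 2) 0 with h | h
      · nlinarith [mul_nonneg (sq_nonneg s) (neg_nonneg.2 h), sq_nonneg l]
      · nlinarith [mul_le_mul_of_nonneg_right hst2 h]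
    have d1 := hD x (L1 v t x y) (D1 v t x y) hx (by simp [L1_def])
    have d2 := hD y (L2 v t x y) (D2 v t x y) hy (by simp [L2_def])
    have e : eH s v t x y = s ^ 2 * Dt v t x y ^ 2 + L1 v t x y ^ 2 + L2 v t x y ^ 2 := by
      simp [eH]
    rw [e]
    have c : (|Dt v t x y| + |D1 v t x y| + |D2 v t x y|) ^ 2 ≤
        3 * (Dt v t x y ^ 2 + D1 v t x y ^ 2 + D2 v t x y ^ 2) := by
      rw [← sq_abs (Dt v t x y), ← sq_abs (D1 v t x y), ← sq_abs (D2 v t x y)]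
      nlinarith [sq_nonneg (|Dt v t x y| - |D1 v t x y|), sq_nonneg (|Dt v t x y| - |D2 v t x y|),
        sq_nonneg (|D1 v t x y| - |D2 v t x y|)]
    have c' := mul_le_mul_of_nonneg_left c (sq_nonneg s)
    have n1 := sq_nonneg (L1 v t x y)
    have n2 := sq_nonneg (L2 v t x y)
    clear hD r1 r2 r3 h1 h2
    linarith
  set S := Sw L1 L2 t x y k (Dt u) + Sw L1 L2 t x y k (D1 u) + Sw L1 L2 t x y k (D2 u) with hS
  have hS0 : 0 ≤ S := by positivity
  have h4 : Rw L1 L2 k (Dt u) t x y + Rw L1 L2 k (D1 u) t x y + Rw L1 L2 k (D2 u) t x y ≤ S ^ 2 := by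
    rw [hS]
    nlinarith [mul_nonneg n1 n2, mul_nonneg n1 n3, mul_nonneg n2 n3]
  have h5 : S ^ 2 ≤ 9 ^ k * (3 ^ k *
      Qs L1 L2 (fun v => (|Dt v t x y| + |D1 v t x y| + |D2 v t x y|) ^ 2) k u) := by
    calc S ^ 2 ≤ (3 ^ k * Qs L1 L2 (fun v => |Dt v t x y| + |D1 v t x y| + |D2 v t x y|) k u) ^ 2 := by
          gcongr
      _ = 9 ^ k * Qs L1 L2 (fun v => |Dt v t x y| + |D1 v t x y| + |D2 v t x y|) k u ^ 2 := by
          rw [mul_pow, ← pow_mul, mul_comm k 2, pow_mul]; norm_num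
      _ ≤ _ := by gcongr
  have h6 : (27 : ℝ) ^ k = 9 ^ k * 3 ^ k := by rw [← mul_pow]; norm_num
  calc _ ≤ s ^ 2 * (9 ^ k * (3 ^ k *
      Qs L1 L2 (fun v => (|Dt v t x y| + |D1 v t x y| + |D2 v t x y|) ^ 2) k u)) := by
        gcongr; exact h4.trans h5
    _ = 27 ^ k * (s ^ 2 * Qs L1 L2 (fun v => (|Dt v t x y| + |D1 v t x y| + |D2 v t x y|) ^ 2) k u) := by
        rw [h6]; ring
    _ ≤ 27 ^ k * (15 * Qs L1 L2 (fun v => eH s v t x y) k u) := by gcongr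
    _ = _ := by ring

theorem Rw_L_le (s t x y : ℝ) (k : ℕ) (u : SF) :
    Rw L1 L2 k (L1 u) t x y ≤ Qs L1 L2 (fun v => eH s v t x y) k u ∧
      Rw L1 L2 k (L2 u) t x y ≤ Qs L1 L2 (fun v => eH s v t x y) k u := by
  have h0 : ∀ v : SF, 0 ≤ v t x y ^ 2 := fun v => sq_nonneg _
  have hp := Qs_peel (A := L1) (A' := L2) (Φ := fun v => v t x y ^ 2) k u
  have hd : Qs L1 L2 (fun v => v t x y ^ 2) (k + 1) u = u t x y ^ 2 +
    Qs L1 L2 (fun v => v t x y ^ 2) k (L1 u) + Qs L1 L2 (fun v => v t x y ^ 2) k (L2 u) := rfl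
  have hm : Qs L1 L2 (fun v => L1 v t x y ^ 2 + L2 v t x y ^ 2) k u ≤
      Qs L1 L2 (fun v => eH s v t x y) k u := by
    refine Qs_mono (P := fun _ => True) (fun _ _ => trivial) (fun _ _ => trivial) (fun v _ => ?_) k u
      trivial
    simp only [eH, SF.add_app, SF.smul_app, SF.pow_app]
    nlinarith [mul_nonneg (sq_nonneg s) (sq_nonneg (Dt v t x y))]
  have e : ∀ v, Rw L1 L2 k v t x y = Qs L1 L2 (fun v => v t x y ^ 2) k v := fun v => by
    rw [Rw, Qs_app]; rfl
  have n1 := Qs_nonneg (A := L1) (B := L2) h0 k (L1 u)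
  have n2 := Qs_nonneg (A := L1) (B := L2) h0 k (L2 u)
  rw [e, e]
  constructor <;> linarith

/-- The hyperboloidal energy controls all first derivatives. -/
theorem JH_D_le {B s : ℝ} (hs : 0 < s) (k : ℕ) (u : SF) :
    s ^ 2 * (JH B s (Rw L1 L2 k (Dt u)) + JH B s (Rw L1 L2 k (D1 u)) + JH B s (Rw L1 L2 k (D2 u)))
      ≤ 15 * 27 ^ k * HE B k u s := by
  rw [HE_eq hs, ← JH_add hs, ← JH_add hs, ← JH_smul, ← JH_smul]
  refine JH_mono hs fun x y => ?_
  simp only [Hy, SF.smul_app, SF.add_app]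
  rw [Qs_app]
  exact Rw_D_le hs (hT_ge x y) (hT_ge_x s x y) (hT_ge_y s x y) k u

theorem JH_L_le {B s : ℝ} (hs : 0 < s) (k : ℕ) (u : SF) :
    JH B s (Rw L1 L2 k (L1 u)) ≤ HE B k u s ∧ JH B s (Rw L1 L2 k (L2 u)) ≤ HE B k u s := by
  rw [HE_eq hs]
  constructor
  all_goals
    refine JH_mono hs fun x y => ?_
    simp only [Hy]
    rw [Qs_app (Φ := eH s)]
  · exact (Rw_L_le s _ x y k u).1
  · exact (Rw_L_le s _ x y k u).2

/-- The hyperboloid is a graph with slope at most one in each variable. -/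
theorem hT_close {s x y x' y' δ : ℝ} (hδ : 0 ≤ δ) (hx : |x - x'| ≤ δ) (hy : |y - y'| ≤ δ) :
    hT s x y ≤ hT s x' y' + 2 * δ := by
  have h1 := hT_sq s x y
  have h2 := hT_sq s x' y'
  have n1 := hT_nonneg s x y
  have n2 := hT_nonneg s x' y'
  have g1 := hT_ge_x s x' y'
  have g2 := hT_ge_y s x' y'
  by_contra! hlt
  have hx2 : x ^ 2 ≤ x' ^ 2 + 2 * |x'| * δ + δ ^ 2 := by
    have e : |x| ≤ |x'| + δ := by
      have := abs_sub_abs_le_abs_sub x x'; linarith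
    rw [← sq_abs x, ← sq_abs x']; nlinarith [abs_nonneg x, abs_nonneg x']
  have hy2 : y ^ 2 ≤ y' ^ 2 + 2 * |y'| * δ + δ ^ 2 := by
    have e : |y| ≤ |y'| + δ := by
      have := abs_sub_abs_le_abs_sub y y'; linarith
    rw [← sq_abs y, ← sq_abs y']; nlinarith [abs_nonneg y, abs_nonneg y']
  nlinarith [mul_le_mul_of_nonneg_right g1 hδ, mul_le_mul_of_nonneg_right g2 hδ]

set_option maxHeartbeats 1600000 in
/-- The Klainerman–Sobolev inequality on hyperboloids, with a free scale `ρ`. -/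
theorem hyp_sobolev {t₀ s B ρ : ℝ} (ht₀ : 1 ≤ t₀) (hs : t₀ < s) (hB : 2 * s ^ 2 ≤ B) (hρ : 0 < ρ)
    (hρ1 : ρ ≤ 1) {v : SF} (hv : Vo (Oc t₀) v) (x y : ℝ) : Hy s v x y ^ 2 ≤
      256 * JH B s ((ρ⁻¹ ^ 2) • v ^ 2 + L1 v ^ 2 + L2 v ^ 2 + (ρ ^ 2) • (L2 (L1 v)) ^ 2) := by
  have hs0 : 0 < s := by linarith
  have hnn : ∀ x y, 0 ≤ Hy s ((ρ⁻¹ ^ 2) • v ^ 2 + L1 v ^ 2 + L2 v ^ 2 + (ρ ^ 2) • (L2 (L1 v)) ^ 2) x y := by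
    intro x y
    simp only [Hy, SF.smul_app, SF.add_app, SF.pow_app]
    positivity
  by_cases hsup : s ^ 2 + 1 < 2 * hT s x y
  · rw [hv.hy hs hsup]
    have := JH_nonneg (B := B) hnn
    simpa using this
  push Not at hsup
  have hT0 := hT_pos hs0 x y
  have hTs : hT s x y ≤ s ^ 2 := by nlinarith
  have hx := hT_ge_x s x y
  have hy := hT_ge_y s x y
  -- Sobolev on a square of side comparable to `ρ T`, on which the height is comparable to `T`.
  set a := ρ * hT s x y / 4 with ha
  have ha0 : 0 < a := by positivity
  have ha1 : a ≤ hT s x y / 4 := by rw [ha]; nlinarith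
  rw [← JH_smul]
  unfold JH
  have c0 : Continuous (fun p : ℝ × ℝ => hT s p.1 p.2) := hT_cont2 s
  have hTn : ∀ p : ℝ × ℝ, hT s p.1 p.2 ≠ 0 := fun p => (hT_pos hs0 p.1 p.2).ne'
  have c1 : Continuous (fun p : ℝ × ℝ => Hy s (L1 v) p.1 p.2) := Hy_cont2 s _
  have c2 : Continuous (fun p : ℝ × ℝ => Hy s (L2 v) p.1 p.2) := Hy_cont2 s _
  have c3 : Continuous (fun p : ℝ × ℝ => Hy s (L2 (L1 v)) p.1 p.2) := Hy_cont2 s _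
  refine sobolev_sq (a := a) (g := Hy s v) (gx := fun x y => Hy s (L1 v) x y / hT s x y)
    (gy := fun x y => Hy s (L2 v) x y / hT s x y)
    (gxy := fun x y => Hy s (L2 (L1 v)) x y / hT s x y ^ 2 - Hy s (L1 v) x y * y / hT s x y ^ 3)
    ha0 ?_ ?_ ?_ ?_ (c1.div c0 hTn) (c2.div c0 hTn) ?_ (Hy_cont2 s v) (JH_cont2 hs0 _)
    (fun x y => Hy_d1 hs0 v x y) (fun x y => Hy_d2 hs0 v x y) ?_ ?_ ?_
  · linarith [neg_abs_le x]
  · linarith [le_abs_self x]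
  · linarith [neg_abs_le y]
  · linarith [le_abs_self y]
  · have hTn' : ∀ p : ℝ × ℝ, hT s p.1 p.2 ^ 2 ≠ 0 := fun p => pow_ne_zero 2 (hTn p)
    have hTn'' : ∀ p : ℝ × ℝ, hT s p.1 p.2 ^ 3 ≠ 0 := fun p => pow_ne_zero 3 (hTn p)
    exact (c3.div (c0.pow 2) hTn').sub ((c1.mul continuous_snd).div (c0.pow 3) hTn'')
  · intro x y
    have hp := hT_pos hs0 x y
    refine ((Hy_d2 hs0 (L1 v) x y).div (hT_d2 hs0 x y) hp.ne').congr_deriv ?_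
    field_simp
  · intro x y
    have := hnn x y
    simp only [Hy, SF.smul_app] at this ⊢
    positivity
  · intro x' y' h1 h2 h3 h4
    have hp := hT_pos hs0 x' y'
    have k1 : hT s x' y' ≤ hT s x y + 2 * a := hT_close ha0.le
      (abs_le.2 ⟨by linarith, by linarith⟩) (abs_le.2 ⟨by linarith, by linarith⟩)
    have k2 : hT s x y ≤ hT s x' y' + 2 * a := hT_close ha0.le
      (abs_le.2 ⟨by linarith, by linarith⟩) (abs_le.2 ⟨by linarith, by linarith⟩)
    have hy' := hT_ge_y s x' y'
    simp only [Hy, SF.smul_app, SF.add_app, SF.pow_app]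
    set T := hT s x' y'
    set T₀ := hT s x y
    set p := v T x' y'
    set q := L1 v T x' y'
    set r := L2 v T x' y'
    set w := L2 (L1 v) T x' y'
    have haT : a ≤ ρ * T / 2 := by rw [ha]; nlinarith
    have b1 : p ^ 2 / a ^ 2 ≤ 64 * (ρ⁻¹ ^ 2 * p ^ 2) / T ^ 2 := by
      have : ρ * T / 8 ≤ a := by rw [ha]; nlinarith
      calc p ^ 2 / a ^ 2 ≤ p ^ 2 / (ρ * T / 8) ^ 2 := by gcongr
        _ = _ := by field_simp; norm_num
    have b2 : (w / T ^ 2 - q * y' / T ^ 3) ^ 2 ≤ 2 * w ^ 2 / T ^ 4 + 2 * q ^ 2 / T ^ 4 := by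
      have e : (q * y' / T ^ 3) ^ 2 ≤ q ^ 2 / T ^ 4 := by
        have : y' ^ 2 ≤ T ^ 2 := sq_le_sq' (by linarith [neg_abs_le y']) (by linarith [le_abs_self y'])
        calc (q * y' / T ^ 3) ^ 2 = q ^ 2 * y' ^ 2 / T ^ 6 := by rw [div_pow, mul_pow, ← pow_mul]
          _ ≤ q ^ 2 * T ^ 2 / T ^ 6 := by gcongr
          _ = _ := by field_simp
      have e2 : (w / T ^ 2) ^ 2 = w ^ 2 / T ^ 4 := by rw [div_pow, ← pow_mul]
      have e3 := sq_nonneg (w / T ^ 2 + q * y' / T ^ 3)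
      have e4 : 2 * w ^ 2 / T ^ 4 + 2 * q ^ 2 / T ^ 4 = 2 * (w ^ 2 / T ^ 4) + 2 * (q ^ 2 / T ^ 4) := by ring
      rw [e4, ← e2]; nlinarith
    have b3 : a ^ 2 * (w / T ^ 2 - q * y' / T ^ 3) ^ 2 ≤ (ρ ^ 2 * w ^ 2 + q ^ 2) / T ^ 2 := by
      calc _ ≤ (ρ * T / 2) ^ 2 * (2 * w ^ 2 / T ^ 4 + 2 * q ^ 2 / T ^ 4) := by gcongr
        _ = (ρ ^ 2 * w ^ 2 + ρ ^ 2 * q ^ 2) / T ^ 2 / 2 := by field_simp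
        _ ≤ (ρ ^ 2 * w ^ 2 + ρ ^ 2 * q ^ 2) / T ^ 2 := by
          have : 0 ≤ (ρ ^ 2 * w ^ 2 + ρ ^ 2 * q ^ 2) / T ^ 2 := by positivity
          linarith
        _ ≤ _ := by
          gcongr
          exact mul_le_of_le_one_left (sq_nonneg _) (pow_le_one₀ hρ.le hρ1)
    have e5 : 256 * (ρ⁻¹ ^ 2 * p ^ 2 + q ^ 2 + r ^ 2 + ρ ^ 2 * w ^ 2) / T ^ 2 =
      4 * (64 * (ρ⁻¹ ^ 2 * p ^ 2) / T ^ 2) + 256 * (q ^ 2 / T ^ 2) + 256 * (r ^ 2 / T ^ 2) +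
        256 * (ρ ^ 2 * w ^ 2 / T ^ 2) := by ring
    have e6 : (ρ ^ 2 * w ^ 2 + q ^ 2) / T ^ 2 = ρ ^ 2 * w ^ 2 / T ^ 2 + q ^ 2 / T ^ 2 := by ring
    have z1 : 0 ≤ q ^ 2 / T ^ 2 := by positivity
    have z2 : 0 ≤ r ^ 2 / T ^ 2 := by positivity
    have z3 : 0 ≤ ρ ^ 2 * w ^ 2 / T ^ 2 := by positivity
    change 4 * (p ^ 2 / a ^ 2 + (q / T) ^ 2 + (r / T) ^ 2 + _) ≤ 256 * _ / T ^ 2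
    rw [e5, div_pow q T, div_pow r T]
    linarith

/-! ### The cubic nonlinearity on hyperboloids -/

/-- Gagliardo–Nirenberg interpolation, by integration by parts along the hyperboloid. -/
theorem gn1 {t₀ s B K : ℝ} (ht₀ : 1 ≤ t₀) (hs : t₀ < s) (hB : s ^ 2 ≤ B) {f : SF}
    (hf : Vo (Oc t₀) f) (hK : ∀ x y, hT s x y * Hy s f x y ^ 2 ≤ K ^ 2) :
    JH B s (X0 * L1 f ^ 4) ≤ 9 * K ^ 2 * JH B s (L1 (L1 f) ^ 2) := by
  have hs0 : 0 < s := by linarith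
  have hB0 : 0 ≤ B := le_trans (sq_nonneg s) hB
  set P : SF := f * L1 f ^ 2 * L1 (L1 f) + f * L1 f ^ 2 * L1 (L1 f) + f * L1 f ^ 2 * L1 (L1 f) with hP
  have e1 : L1 (f * (L1 f * (L1 f * L1 f))) = L1 f ^ 4 + P := by
    simp [hP]; ring
  have h0 : JH B s (X0 * (L1 f ^ 4 + P)) = 0 := by
    have e2 : JH B s (X0 * (L1 f ^ 4 + P)) = J B (fun x y =>
        Hy s (L1 (f * (L1 f * (L1 f * L1 f)))) x y / hT s x y) := by
      rw [e1]; unfold JH; congr 1; funext x y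
      have := hT_pos hs0 x y
      simp only [Hy, SF.mul_app, X0_app]; field_simp
    rw [e2]
    exact J_d1 hB0 (Continuous.div (Hy_cont2 s _) (hT_cont2 s) fun p => (hT_pos hs0 p.1 p.2).ne')
      (fun x y => Hy_d1 hs0 _ x y)
      (fun x y hx => (hf.mul_right _).hyB ht₀ hs hB (Or.inl hx))
  -- Young's inequality, from the square of `b² + 3ac` with `a = f`, `b = L₁f`, `c = L₁L₁f`.
  have h1 : JH B s (X0 * L1 f ^ 4) ≤ JH B s (X0 * (L1 f ^ 4 + P) + ((1 / 2 : ℝ) • (X0 * L1 f ^ 4) +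
      (9 / 2 * K ^ 2) • L1 (L1 f) ^ 2)) := by
    refine JH_mono hs0 fun x y => ?_
    have hk := hK x y
    have hTp := hT_pos hs0 x y
    simp only [Hy, hP, SF.smul_app, SF.add_app, SF.pow_app, SF.mul_app, X0_app] at hk ⊢
    set T := hT s x y
    set a := f T x y
    set b := L1 f T x y
    set c := L1 (L1 f) T x y
    have := mul_le_mul_of_nonneg_right hk (sq_nonneg c)
    nlinarith [mul_nonneg hTp.le (sq_nonneg (b ^ 2 + 3 * a * c))]
  rw [JH_add hs0, h0, JH_add hs0, JH_smul, JH_smul] at h1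
  linarith

/-- The counterpart of `gn1` for the second boost. -/
theorem gn2 {t₀ s B K : ℝ} (ht₀ : 1 ≤ t₀) (hs : t₀ < s) (hB : s ^ 2 ≤ B) {f : SF}
    (hf : Vo (Oc t₀) f) (hK : ∀ x y, hT s x y * Hy s f x y ^ 2 ≤ K ^ 2) :
    JH B s (X0 * L2 f ^ 4) ≤ 9 * K ^ 2 * JH B s (L2 (L2 f) ^ 2) := by
  have hs0 : 0 < s := by linarith
  have hB0 : 0 ≤ B := le_trans (sq_nonneg s) hB
  set P : SF := f * L2 f ^ 2 * L2 (L2 f) + f * L2 f ^ 2 * L2 (L2 f) + f * L2 f ^ 2 * L2 (L2 f) with hP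
  have e1 : L2 (f * (L2 f * (L2 f * L2 f))) = L2 f ^ 4 + P := by
    simp [hP]; ring
  have h0 : JH B s (X0 * (L2 f ^ 4 + P)) = 0 := by
    have e2 : JH B s (X0 * (L2 f ^ 4 + P)) = J B (fun x y =>
        Hy s (L2 (f * (L2 f * (L2 f * L2 f)))) x y / hT s x y) := by
      rw [e1]; unfold JH; congr 1; funext x y
      have := hT_pos hs0 x y
      simp only [Hy, SF.mul_app, X0_app]; field_simp
    rw [e2]
    exact J_d2 hB0 (Continuous.div (Hy_cont2 s _) (hT_cont2 s) fun p => (hT_pos hs0 p.1 p.2).ne')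
      (fun x y => Hy_d2 hs0 _ x y)
      (fun x y hx => (hf.mul_right _).hyB ht₀ hs hB (Or.inr hx))
  have h1 : JH B s (X0 * L2 f ^ 4) ≤ JH B s (X0 * (L2 f ^ 4 + P) + ((1 / 2 : ℝ) • (X0 * L2 f ^ 4) +
      (9 / 2 * K ^ 2) • L2 (L2 f) ^ 2)) := by
    refine JH_mono hs0 fun x y => ?_
    have hk := hK x y
    have hTp := hT_pos hs0 x y
    simp only [Hy, hP, SF.smul_app, SF.add_app, SF.pow_app, SF.mul_app, X0_app] at hk ⊢
    set T := hT s x y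
    set a := f T x y
    set b := L2 f T x y
    set c := L2 (L2 f) T x y
    have := mul_le_mul_of_nonneg_right hk (sq_nonneg c)
    nlinarith [mul_nonneg hTp.le (sq_nonneg (b ^ 2 + 3 * a * c))]
  rw [JH_add hs0, h0, JH_add hs0, JH_smul, JH_smul] at h1
  linarith

theorem gn_sum {t₀ s B K : ℝ} (ht₀ : 1 ≤ t₀) (hs : t₀ < s) (hB : s ^ 2 ≤ B) {f : SF}
    (hf : Vo (Oc t₀) f) (hK : ∀ x y, hT s x y * Hy s f x y ^ 2 ≤ K ^ 2) :
    JH B s (X0 * L1 f ^ 4) + JH B s (X0 * L2 f ^ 4) ≤ 9 * K ^ 2 * JH B s (Rw L1 L2 2 f) := by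
  have hs0 : 0 < s := by linarith
  have h1 := gn1 ht₀ hs hB hf hK
  have h2 := gn2 ht₀ hs hB hf hK
  have h3 : JH B s (L1 (L1 f) ^ 2) + JH B s (L2 (L2 f) ^ 2) ≤ JH B s (Rw L1 L2 2 f) := by
    rw [← JH_add hs0]
    refine JH_mono hs0 fun x y => ?_
    simp only [Hy, Rw, Qs, SF.add_app, SF.pow_app]
    nlinarith [sq_nonneg (f (hT s x y) x y), sq_nonneg (L1 f (hT s x y) x y),
      sq_nonneg (L2 f (hT s x y) x y), sq_nonneg (L1 (L2 f) (hT s x y) x y),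
      sq_nonneg (L2 (L1 f) (hT s x y) x y)]
  nlinarith [mul_le_mul_of_nonneg_left h3 (show 0 ≤ 9 * K ^ 2 by positivity)]

/-- The size of the words of length `n` applied to a cubic product. -/
theorem Nw_cubic {A A' : Derivation ℝ SF SF} (t x y : ℝ) (f g : SF) :
    ∃ a : ℕ → ℝ, (∀ n, a n = Nw A A' t x y n f + Nw A A' t x y n g) ∧
      Nw A A' t x y 0 (-(g * (g * f))) ≤ a 0 ^ 3 ∧
      Nw A A' t x y 1 (-(g * (g * f))) ≤ 3 * a 0 ^ 2 * a 1 ∧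
      Nw A A' t x y 2 (-(g * (g * f))) ≤ 3 * a 0 ^ 2 * a 2 + 6 * a 0 * a 1 ^ 2 ∧
      Nw A A' t x y 3 (-(g * (g * f))) ≤
        3 * a 0 ^ 2 * a 3 + 18 * a 0 * a 1 * a 2 + 6 * a 1 ^ 3 := by
  refine ⟨fun n => Nw A A' t x y n f + Nw A A' t x y n g, fun n => rfl, ?_⟩
  set p : ℕ → ℝ := fun n => Nw A A' t x y n f with hp
  set q : ℕ → ℝ := fun n => Nw A A' t x y n g with hq
  set m : ℕ → ℝ := fun n => Nw A A' t x y n (g * f) with hm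
  have p0 : ∀ n, 0 ≤ p n := fun n => Nw_nonneg n f
  have q0 : ∀ n, 0 ≤ q n := fun n => Nw_nonneg n g
  have m0 : ∀ n, 0 ≤ m n := fun n => Nw_nonneg n _
  set a : ℕ → ℝ := fun n => p n + q n with ha
  have a0 : ∀ n, 0 ≤ a n := fun n => add_nonneg (p0 n) (q0 n)
  have pa : ∀ n, p n ≤ a n := fun n => by simp only [ha]; linarith [q0 n]
  have qa : ∀ n, q n ≤ a n := fun n => by simp only [ha]; linarith [p0 n]
  have hmul : ∀ i j, q i * p j ≤ a i * a j := fun i j =>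
    mul_le_mul (qa i) (pa j) (p0 j) (a0 i)
  have M : ∀ n, m n ≤ ∑ ij ∈ Finset.HasAntidiagonal.antidiagonal n,
      (n.choose ij.1 : ℝ) * (q ij.1 * p ij.2) := fun n => Nw_mul n g f
  have N : ∀ n, Nw A A' t x y n (g * (g * f)) ≤ ∑ ij ∈ Finset.HasAntidiagonal.antidiagonal n,
      (n.choose ij.1 : ℝ) * (q ij.1 * m ij.2) := fun n => Nw_mul n g (g * f)
  have M0 := M 0
  have M1 := M 1
  have M2 := M 2
  have M3 := M 3
  have N0 := N 0
  have N1 := N 1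
  have N2 := N 2
  have N3 := N 3
  simp [Finset.Nat.antidiagonal_succ] at M0 M1 M2 M3 N0 N1 N2 N3
  have B0 : m 0 ≤ a 0 * a 0 := M0.trans (hmul 0 0)
  have B1 : m 1 ≤ 2 * (a 0 * a 1) := by linarith [hmul 0 1, hmul 1 0, mul_comm (a 0) (a 1)]
  have B2 : m 2 ≤ 2 * (a 0 * a 2) + 2 * (a 1 * a 1) := by
    linarith [hmul 0 2, hmul 1 1, hmul 2 0, mul_comm (a 0) (a 2)]
  have B3 : m 3 ≤ 2 * (a 0 * a 3) + 6 * (a 1 * a 2) := by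
    linarith [hmul 0 3, hmul 1 2, hmul 2 1, hmul 3 0, mul_comm (a 0) (a 3), mul_comm (a 1) (a 2)]
  have hmm : ∀ i j c, m j ≤ c → q i * m j ≤ a i * c := fun i j c h =>
    mul_le_mul (qa i) h (m0 j) (a0 i)
  rw [Nw_neg, Nw_neg, Nw_neg, Nw_neg]
  refine ⟨?_, ?_, ?_, ?_⟩
  · have := hmm 0 0 _ B0
    calc _ ≤ _ := N0
      _ ≤ _ := this
      _ = a 0 ^ 3 := by ring
  · have h1 := hmm 0 1 _ B1
    have h2 := hmm 1 0 _ B0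
    change _ ≤ 3 * a 0 ^ 2 * a 1
    linarith
  · have h1 := hmm 0 2 _ B2
    have h2 := hmm 1 1 _ B1
    have h3 := hmm 2 0 _ B0
    change _ ≤ 3 * a 0 ^ 2 * a 2 + 6 * a 0 * a 1 ^ 2
    linarith
  · have h1 := hmm 0 3 _ B3
    have h2 := hmm 1 2 _ B2
    have h3 := hmm 2 1 _ B1
    have h4 := hmm 3 0 _ B0
    change _ ≤ 3 * a 0 ^ 2 * a 3 + 18 * a 0 * a 1 * a 2 + 6 * a 1 ^ 3
    linarith

/-- Pointwise bound for the boosts of order at most two of a cubic term; `aᵢ` stands for the size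
of the words of length `i` in the boosts and `T` for the height on the hyperboloid. The quartic
expression in `a₁` is left to Gagliardo–Nirenberg interpolation. -/
theorem cubic2 {T K a0 a1 a2 S : ℝ} (hT : 0 < T)
    (hK : T * a0 ^ 2 ≤ 4 * K ^ 2) (hS0 : 0 ≤ S)
    (hS : S ≤ a0 ^ 3 + 3 * a0 ^ 2 * a1 + (3 * a0 ^ 2 * a2 + 6 * a0 * a1 ^ 2)) :
    T ^ 2 * S ^ 2 ≤ 1000 * (K ^ 4 * (a0 ^ 2 + a1 ^ 2 + a2 ^ 2) + K ^ 2 * (T * a1 ^ 4)) := by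
  have n : ∀ z : ℝ, 0 ≤ z → z ≤ T * a0 ^ 2 → z ≤ 4 * K ^ 2 := fun z _ h => h.trans hK
  have hz : 0 ≤ T * a0 ^ 2 := by positivity
  have k4 : (T * a0 ^ 2) ^ 2 ≤ 16 * K ^ 4 := by
    calc (T * a0 ^ 2) ^ 2 ≤ (4 * K ^ 2) ^ 2 := by gcongr
      _ = _ := by ring
  have hS2 : (T * S) ^ 2 ≤ (T * (a0 ^ 3 + 3 * a0 ^ 2 * a1 + (3 * a0 ^ 2 * a2 + 6 * a0 * a1 ^ 2))) ^ 2 := by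
    gcongr
  have e : (T * (a0 ^ 3 + 3 * a0 ^ 2 * a1 + (3 * a0 ^ 2 * a2 + 6 * a0 * a1 ^ 2))) ^ 2 ≤
      4 * ((T * a0 ^ 2) ^ 2 * a0 ^ 2 + 9 * ((T * a0 ^ 2) ^ 2 * a1 ^ 2) +
        9 * ((T * a0 ^ 2) ^ 2 * a2 ^ 2) + 36 * ((T * a0 ^ 2) * (T * a1 ^ 4))) := by
    have h4 : ∀ u v w z : ℝ, (u + v + (w + z)) ^ 2 ≤ 4 * (u ^ 2 + v ^ 2 + w ^ 2 + z ^ 2) := by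
      intro u v w z
      nlinarith [sq_nonneg (u - v), sq_nonneg (u - w), sq_nonneg (u - z), sq_nonneg (v - w),
        sq_nonneg (v - z), sq_nonneg (w - z)]
    calc _ = T ^ 2 * (a0 ^ 3 + 3 * a0 ^ 2 * a1 + (3 * a0 ^ 2 * a2 + 6 * a0 * a1 ^ 2)) ^ 2 := by ring
      _ ≤ T ^ 2 * _ := mul_le_mul_of_nonneg_left (h4 _ _ _ _) (sq_nonneg T)
      _ = _ := by ring
  have g0 := mul_le_mul_of_nonneg_right k4 (sq_nonneg a0)
  have g1 := mul_le_mul_of_nonneg_right k4 (sq_nonneg a1)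
  have g2 := mul_le_mul_of_nonneg_right k4 (sq_nonneg a2)
  have g3 := mul_le_mul_of_nonneg_right hK (show 0 ≤ T * a1 ^ 4 by positivity)
  have z0 : 0 ≤ K ^ 4 * a0 ^ 2 := by positivity
  have z1 : 0 ≤ K ^ 4 * a1 ^ 2 := by positivity
  have z2 : 0 ≤ K ^ 4 * a2 ^ 2 := by positivity
  have z3 : 0 ≤ K ^ 2 * (T * a1 ^ 4) := by positivity
  rw [← mul_pow]
  linarith

/-- Pointwise bound for the third-order boosts of a cubic term, with the symbols of `cubic2`; `X`
bounds the first-order words pointwise. -/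
theorem cubic3 {T K X a0 a1 a2 a3 S : ℝ}
    (hT : 0 < T) (hK : T * a0 ^ 2 ≤ 4 * K ^ 2) (hX : T * a1 ^ 2 ≤ 16 * X) (hX0 : 0 ≤ X)
    (hS0 : 0 ≤ S) (hS : S ≤ 3 * a0 ^ 2 * a3 + 18 * a0 * a1 * a2 + 6 * a1 ^ 3) :
    T ^ 2 * S ^ 2 ≤ 100000 * (K ^ 4 * a3 ^ 2 + K ^ 2 * X * a2 ^ 2 + X * (T * a1 ^ 4)) := by
  have hz : 0 ≤ T * a0 ^ 2 := by positivity
  have hz1 : 0 ≤ T * a1 ^ 2 := by positivity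
  have k4 : (T * a0 ^ 2) ^ 2 ≤ 16 * K ^ 4 := by
    calc (T * a0 ^ 2) ^ 2 ≤ (4 * K ^ 2) ^ 2 := by gcongr
      _ = _ := by ring
  have kx : (T * a0 ^ 2) * (T * a1 ^ 2) ≤ (4 * K ^ 2) * (16 * X) := by gcongr
  have hS2 : (T * S) ^ 2 ≤ (T * (3 * a0 ^ 2 * a3 + 18 * a0 * a1 * a2 + 6 * a1 ^ 3)) ^ 2 := by
    gcongr
  have e : (T * (3 * a0 ^ 2 * a3 + 18 * a0 * a1 * a2 + 6 * a1 ^ 3)) ^ 2 ≤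
      3 * (9 * ((T * a0 ^ 2) ^ 2 * a3 ^ 2) + 324 * ((T * a0 ^ 2) * (T * a1 ^ 2) * a2 ^ 2) +
        36 * ((T * a1 ^ 2) * (T * a1 ^ 4))) := by
    have h4 : ∀ u v w : ℝ, (u + v + w) ^ 2 ≤ 3 * (u ^ 2 + v ^ 2 + w ^ 2) := by
      intro u v w
      nlinarith [sq_nonneg (u - v), sq_nonneg (u - w), sq_nonneg (v - w)]
    calc _ = T ^ 2 * (3 * a0 ^ 2 * a3 + 18 * a0 * a1 * a2 + 6 * a1 ^ 3) ^ 2 := by ring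
      _ ≤ T ^ 2 * _ := mul_le_mul_of_nonneg_left (h4 _ _ _) (sq_nonneg T)
      _ = _ := by ring
  have g0 := mul_le_mul_of_nonneg_right k4 (sq_nonneg a3)
  have g1 := mul_le_mul_of_nonneg_right kx (sq_nonneg a2)
  have g2 := mul_le_mul_of_nonneg_right hX (show 0 ≤ T * a1 ^ 4 by positivity)
  have z0 : 0 ≤ K ^ 4 * a3 ^ 2 := by positivity
  have z1 : 0 ≤ K ^ 2 * X * a2 ^ 2 := by positivity
  have z2 : 0 ≤ X * (T * a1 ^ 4) := by positivity
  rw [← mul_pow]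
  linarith

/-- The sum of the fourth powers of the boosts of `f` and `g`. -/
def Q4 (f g : SF) : SF := L1 f ^ 4 + L2 f ^ 4 + (L1 g ^ 4 + L2 g ^ 4)

theorem JH_Q4 {t₀ s B K : ℝ} (ht₀ : 1 ≤ t₀) (hs : t₀ < s) (hB : s ^ 2 ≤ B) {f g : SF}
    (hf : Vo (Oc t₀) f) (hg : Vo (Oc t₀) g)
    (hKf : ∀ x y, hT s x y * Hy s f x y ^ 2 ≤ K ^ 2)
    (hKg : ∀ x y, hT s x y * Hy s g x y ^ 2 ≤ K ^ 2) :
    JH B s (X0 * Q4 f g) ≤ 9 * K ^ 2 * (JH B s (Rw L1 L2 2 f) + JH B s (Rw L1 L2 2 g)) := by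
  have hs0 : 0 < s := by linarith
  have e : X0 * Q4 f g = X0 * L1 f ^ 4 + X0 * L2 f ^ 4 + (X0 * L1 g ^ 4 + X0 * L2 g ^ 4) := by
    rw [Q4]; ring
  rw [e, JH_add hs0, JH_add hs0, JH_add hs0]
  linarith [gn_sum ht₀ hs hB hf hKf, gn_sum ht₀ hs hB hg hKg]

set_option maxHeartbeats 1600000 in
/-- Pointwise form of the bounds for the cubic term of order two and three. -/
theorem cubic_pointwise {T x y K : ℝ} (hT : 0 < T) {f g : SF}
    (hKf : T * f T x y ^ 2 ≤ K ^ 2) (hKg : T * g T x y ^ 2 ≤ K ^ 2) :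
    T ^ 2 * Rw L1 L2 2 (-(g * (g * f))) T x y ≤ 100000 * (K ^ 4 *
      (Rw L1 L2 2 f T x y + Rw L1 L2 2 g T x y) + K ^ 2 * (T * Q4 f g T x y)) ∧
    ∀ X : ℝ, T * L1 f T x y ^ 2 ≤ X → T * L2 f T x y ^ 2 ≤ X → T * L1 g T x y ^ 2 ≤ X →
      T * L2 g T x y ^ 2 ≤ X → T ^ 2 * Rw L1 L2 3 (-(g * (g * f))) T x y ≤ 100000000 * (K ^ 4 *
        (Rw L1 L2 3 f T x y + Rw L1 L2 3 g T x y) + K ^ 2 * X *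
        (Rw L1 L2 2 f T x y + Rw L1 L2 2 g T x y) + (K ^ 2 + X) * (T * Q4 f g T x y)) := by
  obtain ⟨a, ha, b0, b1, b2, b3⟩ := Nw_cubic (A := L1) (A' := L2) T x y f g
  have a0 : ∀ n, 0 ≤ a n := fun n => by rw [ha]; exact add_nonneg (Nw_nonneg _ _) (Nw_nonneg _ _)
  set F := -(g * (g * f)) with hF
  have hsq : ∀ n k, n ≤ k → a n ^ 2 ≤ 2 * 3 ^ k * (Rw L1 L2 k f T x y + Rw L1 L2 k g T x y) := by
    intro n k h
    have h1 := Nw_le_Sw (A := L1) (B := L2) (t := T) (x := x) (y := y) h f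
    have h2 := Nw_le_Sw (A := L1) (B := L2) (t := T) (x := x) (y := y) h g
    have h3 := Sw_le_Rw (A := L1) (B := L2) (t := T) (x := x) (y := y) k f
    have h4 := Sw_le_Rw (A := L1) (B := L2) (t := T) (x := x) (y := y) k g
    have h5 : a n ≤ Sw L1 L2 T x y k f + Sw L1 L2 T x y k g := by rw [ha]; linarith
    have h6 : a n ^ 2 ≤ (Sw L1 L2 T x y k f + Sw L1 L2 T x y k g) ^ 2 := by
      have := a0 n; gcongr
    nlinarith [sq_nonneg (Sw L1 L2 T x y k f - Sw L1 L2 T x y k g)]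
  have ea0 : a 0 = |f T x y| + |g T x y| := by rw [ha]; rfl
  have ea1 : a 1 = |L1 f T x y| + |L2 f T x y| + (|L1 g T x y| + |L2 g T x y|) := by rw [ha]; rfl
  have hK0 : T * a 0 ^ 2 ≤ 4 * K ^ 2 := by
    have : a 0 ^ 2 ≤ 2 * (f T x y ^ 2 + g T x y ^ 2) := by
      rw [ea0, ← sq_abs (f T x y), ← sq_abs (g T x y)]
      nlinarith [sq_nonneg (|f T x y| - |g T x y|)]
    nlinarith [mul_le_mul_of_nonneg_left this hT.le]
  have s4 : a 1 ^ 2 ≤ 4 * (L1 f T x y ^ 2 + L2 f T x y ^ 2 + (L1 g T x y ^ 2 + L2 g T x y ^ 2)) := by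
    rw [ea1, ← sq_abs (L1 f T x y), ← sq_abs (L2 f T x y), ← sq_abs (L1 g T x y),
      ← sq_abs (L2 g T x y)]
    have h4 : ∀ u v w z : ℝ, (u + v + (w + z)) ^ 2 ≤ 4 * (u ^ 2 + v ^ 2 + (w ^ 2 + z ^ 2)) := by
      intro u v w z
      nlinarith [sq_nonneg (u - v), sq_nonneg (u - w), sq_nonneg (u - z), sq_nonneg (v - w),
        sq_nonneg (v - z), sq_nonneg (w - z)]
    exact h4 _ _ _ _
  have q4 : a 1 ^ 4 ≤ 64 * Q4 f g T x y := by
    have e : Q4 f g T x y = (L1 f T x y ^ 2) ^ 2 + (L2 f T x y ^ 2) ^ 2 +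
        ((L1 g T x y ^ 2) ^ 2 + (L2 g T x y ^ 2) ^ 2) := by
      simp only [Q4, SF.add_app, SF.pow_app]; ring
    have h4 : ∀ u v w z : ℝ, (u + v + (w + z)) ^ 2 ≤ 4 * (u ^ 2 + v ^ 2 + (w ^ 2 + z ^ 2)) := by
      intro u v w z
      nlinarith [sq_nonneg (u - v), sq_nonneg (u - w), sq_nonneg (u - z), sq_nonneg (v - w),
        sq_nonneg (v - z), sq_nonneg (w - z)]
    calc a 1 ^ 4 = (a 1 ^ 2) ^ 2 := by ring
      _ ≤ (4 * (L1 f T x y ^ 2 + L2 f T x y ^ 2 + (L1 g T x y ^ 2 + L2 g T x y ^ 2))) ^ 2 := by gcongr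
      _ = 16 * (L1 f T x y ^ 2 + L2 f T x y ^ 2 + (L1 g T x y ^ 2 + L2 g T x y ^ 2)) ^ 2 := by ring
      _ ≤ 16 * (4 * Q4 f g T x y) := by rw [e]; gcongr; exact h4 _ _ _ _
      _ = _ := by ring
  have tq : T * a 1 ^ 4 ≤ 64 * (T * Q4 f g T x y) := by nlinarith [mul_le_mul_of_nonneg_left q4 hT.le]
  set R2 := Rw L1 L2 2 f T x y + Rw L1 L2 2 g T x y with hR2
  set R3 := Rw L1 L2 3 f T x y + Rw L1 L2 3 g T x y with hR3
  have e2 : Sw L1 L2 T x y 2 F = Nw L1 L2 T x y 0 F + Nw L1 L2 T x y 1 F + Nw L1 L2 T x y 2 F := by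
    rw [Sw_eq_sum]; simp [Finset.sum_range_succ]
  have e3 : Sw L1 L2 T x y 3 F = Sw L1 L2 T x y 2 F + Nw L1 L2 T x y 3 F := by
    rw [Sw_eq_sum, Sw_eq_sum, Finset.sum_range_succ]
  have c2 := cubic2 (S := Sw L1 L2 T x y 2 F) (a0 := a 0) (a1 := a 1) (a2 := a 2) hT hK0
    (Sw_nonneg _ _) (by rw [e2]; linarith)
  have k2 : (0 : ℝ) ≤ K ^ 4 := by positivity
  have d0 := mul_le_mul_of_nonneg_left (hsq 0 2 (by norm_num)) k2
  have d1 := mul_le_mul_of_nonneg_left (hsq 1 2 (by norm_num)) k2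
  have d2 := mul_le_mul_of_nonneg_left (hsq 2 2 (by norm_num)) k2
  have d3 := mul_le_mul_of_nonneg_left tq (sq_nonneg K)
  have nR2 : 0 ≤ R2 := add_nonneg (Rw_nonneg _ _) (Rw_nonneg _ _)
  have nR3 : 0 ≤ R3 := add_nonneg (Rw_nonneg _ _) (Rw_nonneg _ _)
  have nQ : 0 ≤ T * Q4 f g T x y := by
    have : 0 ≤ Q4 f g T x y := by
      simp only [Q4, SF.add_app, SF.pow_app]; positivity
    positivity
  have n1 : 0 ≤ K ^ 4 * R2 := by positivity
  have n2 : 0 ≤ K ^ 2 * (T * Q4 f g T x y) := by positivity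
  refine ⟨?_, fun X X1 X2 X3 X4 => ?_⟩
  · have r := mul_le_mul_of_nonneg_left (Rw_le_Sw (A := L1) (B := L2) (t := T) (x := x) (y := y) 2 F)
      (sq_nonneg T)
    rw [← hR2] at d0 d1 d2
    linarith
  · have hX0 : 0 ≤ X := le_trans (by positivity) X1
    have hX : T * a 1 ^ 2 ≤ 16 * X := by nlinarith [mul_le_mul_of_nonneg_left s4 hT.le]
    have c3 := cubic3 (S := Nw L1 L2 T x y 3 F) (a0 := a 0) (a1 := a 1) (a2 := a 2) (a3 := a 3) hT hK0 hX hX0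
      (Nw_nonneg _ _) b3
    have r := mul_le_mul_of_nonneg_left (Rw_le_Sw (A := L1) (B := L2) (t := T) (x := x) (y := y) 3 F)
      (sq_nonneg T)
    have r2 : T ^ 2 * Sw L1 L2 T x y 3 F ^ 2 ≤ 2 * (T ^ 2 * Sw L1 L2 T x y 2 F ^ 2) +
        2 * (T ^ 2 * Nw L1 L2 T x y 3 F ^ 2) := by
      rw [e3]
      nlinarith [mul_nonneg (sq_nonneg T) (sq_nonneg (Sw L1 L2 T x y 2 F - Nw L1 L2 T x y 3 F))]
    have f0 := mul_le_mul_of_nonneg_left (hsq 0 3 (by norm_num)) k2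
    have f1 := mul_le_mul_of_nonneg_left (hsq 1 3 (by norm_num)) k2
    have f2 := mul_le_mul_of_nonneg_left (hsq 2 3 (by norm_num)) k2
    have f3 := mul_le_mul_of_nonneg_left (hsq 3 3 (by norm_num)) k2
    have f4 := mul_le_mul_of_nonneg_left (hsq 2 2 (by norm_num)) (show 0 ≤ K ^ 2 * X by positivity)
    have f5 := mul_le_mul_of_nonneg_left tq hX0
    rw [← hR3] at f0 f1 f2 f3
    rw [← hR2] at f4
    have n3 : 0 ≤ K ^ 4 * R3 := by positivity
    have n4 : 0 ≤ K ^ 2 * X * R2 := by positivity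
    have n5 : 0 ≤ X * (T * Q4 f g T x y) := by positivity
    clear hsq b0 b1 b2 b3
    linarith

/-! ### The energy inequality on hyperboloids -/

theorem Hy_Rw_nonneg (s x y : ℝ) (k : ℕ) (v : SF) : 0 ≤ Hy s (Rw L1 L2 k v) x y := Rw_nonneg k v

theorem Rw_mono_k (t x y : ℝ) {k l : ℕ} (h : k ≤ l) (v : SF) :
    Rw L1 L2 k v t x y ≤ Rw L1 L2 l v t x y := by
  rw [Rw, Rw, Qs_app, Qs_app]
  exact Qs_le_of_le (fun v => by rw [SF.pow_app]; positivity) h v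

theorem HE_mono_k (B s : ℝ) {k l : ℕ} (h : k ≤ l) (v : SF) : HE B k v s ≤ HE B l v s :=
  Qs_le_of_le (hE_nonneg B s) h v

/-- The cubic nonlinearity in weighted `L²`, up to second order. Only the pointwise bound
`K` of the undifferentiated factors enters, thanks to `gn1` and `gn2`. -/
theorem JH_F2 {t₀ s B K : ℝ} (ht₀ : 1 ≤ t₀) (hs : t₀ < s) (hB : s ^ 2 ≤ B) {f g : SF}
    (hf : Vo (Oc t₀) f) (hg : Vo (Oc t₀) g)
    (hKf : ∀ x y, hT s x y * Hy s f x y ^ 2 ≤ K ^ 2)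
    (hKg : ∀ x y, hT s x y * Hy s g x y ^ 2 ≤ K ^ 2) :
    JH B s (X0 ^ 2 * Rw L1 L2 2 (-(g * (g * f)))) ≤ 1000000 * K ^ 4 *
      (JH B s (Rw L1 L2 2 f) + JH B s (Rw L1 L2 2 g)) := by
  have hs0 : 0 < s := by linarith
  have h := JH_mono (B := B) hs0 (v := X0 ^ 2 * Rw L1 L2 2 (-(g * (g * f))))
    (w := (100000 * K ^ 4) • (Rw L1 L2 2 f + Rw L1 L2 2 g) + (100000 * K ^ 2) • (X0 * Q4 f g))
    fun x y => by
      have := (cubic_pointwise (hT_pos hs0 x y) (hKf x y) (hKg x y)).1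
      simp only [Hy, SF.mul_app, SF.pow_app, X0_app, SF.add_app, SF.smul_app]
      linarith
  rw [JH_add hs0, JH_smul, JH_smul, JH_add hs0] at h
  have hq := mul_le_mul_of_nonneg_left (JH_Q4 ht₀ hs hB hf hg hKf hKg)
    (show 0 ≤ 100000 * K ^ 2 by positivity)
  linarith

/-- The cubic nonlinearity in weighted `L²` at third order. Besides `K`, a pointwise bound `X` for
once boosted factors is needed. -/
theorem JH_F3 {t₀ s B K X : ℝ} (ht₀ : 1 ≤ t₀) (hs : t₀ < s) (hB : s ^ 2 ≤ B) {f g : SF}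
    (hf : Vo (Oc t₀) f) (hg : Vo (Oc t₀) g)
    (hKf : ∀ x y, hT s x y * Hy s f x y ^ 2 ≤ K ^ 2)
    (hKg : ∀ x y, hT s x y * Hy s g x y ^ 2 ≤ K ^ 2)
    (hX : ∀ x y, hT s x y * Hy s (L1 f) x y ^ 2 ≤ X ∧ hT s x y * Hy s (L2 f) x y ^ 2 ≤ X ∧
      hT s x y * Hy s (L1 g) x y ^ 2 ≤ X ∧ hT s x y * Hy s (L2 g) x y ^ 2 ≤ X) :
    JH B s (X0 ^ 2 * Rw L1 L2 3 (-(g * (g * f)))) ≤ 1000000000 *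
      (K ^ 4 * (JH B s (Rw L1 L2 3 f) + JH B s (Rw L1 L2 3 g)) +
        K ^ 2 * X * (JH B s (Rw L1 L2 2 f) + JH B s (Rw L1 L2 2 g))) := by
  have hs0 : 0 < s := by linarith
  have hX0 : 0 ≤ X := le_trans (mul_nonneg (hT_nonneg s 0 0) (sq_nonneg _)) (hX 0 0).1
  have h := JH_mono (B := B) hs0 (v := X0 ^ 2 * Rw L1 L2 3 (-(g * (g * f))))
    (w := (100000000 * K ^ 4) • (Rw L1 L2 3 f + Rw L1 L2 3 g) +
      (100000000 * (K ^ 2 * X)) • (Rw L1 L2 2 f + Rw L1 L2 2 g) +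
      (100000000 * (K ^ 2 + X)) • (X0 * Q4 f g))
    fun x y => by
      obtain ⟨h1, h2, h3, h4⟩ := hX x y
      have := (cubic_pointwise (hT_pos hs0 x y) (hKf x y) (hKg x y)).2 X h1 h2 h3 h4
      simp only [Hy, SF.mul_app, SF.pow_app, X0_app, SF.add_app, SF.smul_app]
      linarith
  rw [JH_add hs0, JH_add hs0, JH_smul, JH_smul, JH_smul, JH_add hs0, JH_add hs0] at h
  have hq := mul_le_mul_of_nonneg_left (JH_Q4 ht₀ hs hB hf hg hKf hKg)
    (show 0 ≤ 100000000 * (K ^ 2 + X) by positivity)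
  have m1 := JH_mono (B := B) hs0 fun x y => Rw_mono_k (hT s x y) x y (show 2 ≤ 3 by norm_num) f
  have m2 := JH_mono (B := B) hs0 fun x y => Rw_mono_k (hT s x y) x y (show 2 ≤ 3 by norm_num) g
  have m3 := mul_le_mul_of_nonneg_left (add_le_add m1 m2) (show 0 ≤ K ^ 4 by positivity)
  have n1 : 0 ≤ JH B s (Rw L1 L2 2 f) := JH_nonneg fun x y => Hy_Rw_nonneg s x y 2 f
  have n2 : 0 ≤ JH B s (Rw L1 L2 2 g) := JH_nonneg fun x y => Hy_Rw_nonneg s x y 2 g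
  have n3 : 0 ≤ K ^ 2 * X * (JH B s (Rw L1 L2 2 f) + JH B s (Rw L1 L2 2 g)) := by positivity
  linarith

/-- On the support of `v`, the hyperboloid of parameter `s` stays below the height `s²`. -/
theorem T_mul_sq_le {t₀ s c : ℝ} (ht₀ : 1 ≤ t₀) (hs : t₀ < s) {v : SF} (hv : Vo (Oc t₀) v)
    {x y : ℝ} (h : Hy s v x y ^ 2 ≤ c) : hT s x y * Hy s v x y ^ 2 ≤ s ^ 2 * c := by
  have hc : 0 ≤ c := le_trans (sq_nonneg _) h
  by_cases hT' : s ^ 2 + 1 < 2 * hT s x y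
  · rw [hv.hy hs hT']
    simp only [ne_eq, OfNat.ofNat_ne_zero, not_false_eq_true, zero_pow, mul_zero]; positivity
  · have h1 : 1 ≤ s ^ 2 := by nlinarith
    have h2 : hT s x y ≤ s ^ 2 := by linarith
    exact mul_le_mul h2 h (sq_nonneg _) (sq_nonneg _)

theorem Rw2_ge (t x y : ℝ) (f : SF) :
    f t x y ^ 2 + L1 f t x y ^ 2 + L2 f t x y ^ 2 + L1 (L1 f) t x y ^ 2 + L2 (L1 f) t x y ^ 2 +
      L1 (L2 f) t x y ^ 2 + L2 (L2 f) t x y ^ 2 = Rw L1 L2 2 f t x y := by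
  simp only [Rw, Qs, SF.add_app, SF.pow_app]; ring

/-- `hyp_sobolev` at the scale `ρ = 1`. -/
theorem sob_one {t₀ s B : ℝ} (ht₀ : 1 ≤ t₀) (hs : t₀ < s) (hB : 2 * s ^ 2 ≤ B) {v : SF}
    (hv : Vo (Oc t₀) v) (x y : ℝ) : Hy s v x y ^ 2 ≤ 256 * JH B s (Rw L1 L2 2 v) := by
  have hs0 : 0 < s := by linarith
  refine (hyp_sobolev ht₀ hs hB one_pos le_rfl hv x y).trans ?_
  refine mul_le_mul_of_nonneg_left (JH_mono hs0 fun x y => ?_) (by norm_num)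
  simp only [Hy, SF.add_app, SF.pow_app, SF.smul_app]
  rw [← Rw2_ge]
  nlinarith [sq_nonneg (L1 (L1 v) (hT s x y) x y), sq_nonneg (L1 (L2 v) (hT s x y) x y),
    sq_nonneg (L2 (L2 v) (hT s x y) x y)]

/-- The weight `ρ` distributes the loss between the second and the third order norm. -/
theorem sob_rho {t₀ s B ρ : ℝ} (ht₀ : 1 ≤ t₀) (hs : t₀ < s) (hB : 2 * s ^ 2 ≤ B) (hρ : 0 < ρ)
    (hρ1 : ρ ≤ 1) {f : SF} (hf : Vo (Oc t₀) f) (x y : ℝ) :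
    Hy s (L1 f) x y ^ 2 ≤
      256 * ((ρ⁻¹ ^ 2) * JH B s (Rw L1 L2 2 f) + ρ ^ 2 * JH B s (Rw L1 L2 3 f)) ∧
    Hy s (L2 f) x y ^ 2 ≤
      256 * ((ρ⁻¹ ^ 2) * JH B s (Rw L1 L2 2 f) + ρ ^ 2 * JH B s (Rw L1 L2 3 f)) := by
  have hs0 : 0 < s := by linarith
  have hi : 1 ≤ ρ⁻¹ ^ 2 := one_le_pow₀ ((one_le_inv₀ hρ).2 hρ1)
  have e3 : ∀ t x y : ℝ, f t x y ^ 2 + Rw L1 L2 2 (L1 f) t x y + Rw L1 L2 2 (L2 f) t x y =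
      Rw L1 L2 3 f t x y := fun t x y => by simp only [Rw, Qs, SF.add_app, SF.pow_app]
  have hO := Oc_open t₀
  constructor
  · refine (hyp_sobolev ht₀ hs hB hρ hρ1 (hf.L1 hO) x y).trans ?_
    rw [← JH_smul (ρ⁻¹ ^ 2), ← JH_smul (ρ ^ 2), ← JH_add hs0]
    refine mul_le_mul_of_nonneg_left (JH_mono hs0 fun x y => ?_) (by norm_num)
    simp only [Hy, SF.add_app, SF.pow_app, SF.smul_app]
    rw [← e3, ← Rw2_ge, ← Rw2_ge, ← Rw2_ge]
    set T := hT s x y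
    have p1 : ρ ^ 2 * L2 (L1 (L1 f)) T x y ^ 2 ≤ ρ ^ 2 * (f T x y ^ 2 + (L1 f T x y ^ 2 + L1 (L1 f) T x y ^ 2 + L2 (L1 f) T x y ^ 2 + L1 (L1 (L1 f)) T x y ^ 2 +
          L2 (L1 (L1 f)) T x y ^ 2 + L1 (L2 (L1 f)) T x y ^ 2 + L2 (L2 (L1 f)) T x y ^ 2) +
        (L2 f T x y ^ 2 + L1 (L2 f) T x y ^ 2 + L2 (L2 f) T x y ^ 2 + L1 (L1 (L2 f)) T x y ^ 2 +
            L2 (L1 (L2 f)) T x y ^ 2 + L1 (L2 (L2 f)) T x y ^ 2 + L2 (L2 (L2 f)) T x y ^ 2)) := by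
      refine mul_le_mul_of_nonneg_left ?_ (sq_nonneg _)
      have q : ∀ u v w z : ℝ, 0 ≤ u → 0 ≤ v → 0 ≤ w → z ≤ v → z ≤ u + v + w := by
        intros; linarith
      refine q _ _ _ _ (sq_nonneg _) (by positivity) (by positivity) ?_
      nlinarith [sq_nonneg (L1 f T x y), sq_nonneg (L1 (L1 f) T x y), sq_nonneg (L2 (L1 f) T x y),
        sq_nonneg (L1 (L1 (L1 f)) T x y), sq_nonneg (L1 (L2 (L1 f)) T x y),
        sq_nonneg (L2 (L2 (L1 f)) T x y)]
    have p2 : ρ⁻¹ ^ 2 * L1 f T x y ^ 2 + L1 (L1 f) T x y ^ 2 + L2 (L1 f) T x y ^ 2 ≤ ρ⁻¹ ^ 2 * (f T x y ^ 2 + L1 f T x y ^ 2 + L2 f T x y ^ 2 + L1 (L1 f) T x y ^ 2 +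
          L2 (L1 f) T x y ^ 2 + L1 (L2 f) T x y ^ 2 + L2 (L2 f) T x y ^ 2) := by
      have a1 := mul_le_mul_of_nonneg_right hi (sq_nonneg (L1 (L1 f) T x y))
      have a2 := mul_le_mul_of_nonneg_right hi (sq_nonneg (L2 (L1 f) T x y))
      have a3 : 0 ≤ ρ⁻¹ ^ 2 * (f T x y ^ 2 + L2 f T x y ^ 2 + L1 (L2 f) T x y ^ 2 + L2 (L2 f) T x y ^ 2) := by
        positivity
      linarith
    linarith
  · refine (hyp_sobolev ht₀ hs hB hρ hρ1 (hf.L2 hO) x y).trans ?_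
    rw [← JH_smul (ρ⁻¹ ^ 2), ← JH_smul (ρ ^ 2), ← JH_add hs0]
    refine mul_le_mul_of_nonneg_left (JH_mono hs0 fun x y => ?_) (by norm_num)
    simp only [Hy, SF.add_app, SF.pow_app, SF.smul_app]
    rw [← e3, ← Rw2_ge, ← Rw2_ge, ← Rw2_ge]
    set T := hT s x y
    have p1 : ρ ^ 2 * L2 (L1 (L2 f)) T x y ^ 2 ≤ ρ ^ 2 * (f T x y ^ 2 + (L1 f T x y ^ 2 + L1 (L1 f) T x y ^ 2 + L2 (L1 f) T x y ^ 2 + L1 (L1 (L1 f)) T x y ^ 2 +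
          L2 (L1 (L1 f)) T x y ^ 2 + L1 (L2 (L1 f)) T x y ^ 2 + L2 (L2 (L1 f)) T x y ^ 2) +
        (L2 f T x y ^ 2 + L1 (L2 f) T x y ^ 2 + L2 (L2 f) T x y ^ 2 + L1 (L1 (L2 f)) T x y ^ 2 +
            L2 (L1 (L2 f)) T x y ^ 2 + L1 (L2 (L2 f)) T x y ^ 2 + L2 (L2 (L2 f)) T x y ^ 2)) := by
      refine mul_le_mul_of_nonneg_left ?_ (sq_nonneg _)
      have q : ∀ u v w z : ℝ, 0 ≤ u → 0 ≤ v → 0 ≤ w → z ≤ w → z ≤ u + v + w := by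
        intros; linarith
      refine q _ _ _ _ (sq_nonneg _) (by positivity) (by positivity) ?_
      nlinarith [sq_nonneg (L2 f T x y), sq_nonneg (L1 (L2 f) T x y), sq_nonneg (L2 (L2 f) T x y),
        sq_nonneg (L1 (L1 (L2 f)) T x y), sq_nonneg (L1 (L2 (L2 f)) T x y),
        sq_nonneg (L2 (L2 (L2 f)) T x y)]
    have p2 : ρ⁻¹ ^ 2 * L2 f T x y ^ 2 + L1 (L2 f) T x y ^ 2 + L2 (L2 f) T x y ^ 2 ≤ ρ⁻¹ ^ 2 * (f T x y ^ 2 + L1 f T x y ^ 2 + L2 f T x y ^ 2 + L1 (L1 f) T x y ^ 2 +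
          L2 (L1 f) T x y ^ 2 + L1 (L2 f) T x y ^ 2 + L2 (L2 f) T x y ^ 2) := by
      have a1 := mul_le_mul_of_nonneg_right hi (sq_nonneg (L1 (L2 f) T x y))
      have a2 := mul_le_mul_of_nonneg_right hi (sq_nonneg (L2 (L2 f) T x y))
      have a3 : 0 ≤ ρ⁻¹ ^ 2 * (f T x y ^ 2 + L1 f T x y ^ 2 + L1 (L1 f) T x y ^ 2 + L2 (L1 f) T x y ^ 2) := by
        positivity
      linarith
    linarith

theorem Qs_X0 {B s : ℝ} (hs : 0 < s) : ∀ (k : ℕ) (w : SF),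
    Qs L1 L2 (fun w => JH B s (X0 ^ 2 * w ^ 2)) k w = JH B s (X0 ^ 2 * Rw L1 L2 k w)
  | 0, w => rfl
  | k + 1, w => by
    have e : X0 ^ 2 * Rw L1 L2 (k + 1) w =
        X0 ^ 2 * w ^ 2 + X0 ^ 2 * Rw L1 L2 k (L1 w) + X0 ^ 2 * Rw L1 L2 k (L2 w) := by
      simp only [Rw, Qs]; ring
    rw [e, JH_add hs, JH_add hs, ← Qs_X0 hs k, ← Qs_X0 hs k]; rfl

theorem Rw_congr {O : Set (ℝ × ℝ × ℝ)} (hO : IsOpen O) {t x y : ℝ} (hp : (t, x, y) ∈ O) :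
    ∀ (k : ℕ) (u w : SF), Vo O (u - w) → Rw L1 L2 k u t x y = Rw L1 L2 k w t x y
  | 0, u, w, h => by
    have := h t x y hp
    simp only [SF.sub_app] at this
    simp only [Rw, Qs, SF.pow_app, sub_eq_zero.1 this]
  | k + 1, u, w, h => by
    have h0 := h t x y hp
    have h1 := Rw_congr hO hp k (L1 u) (L1 w) (by rw [← map_sub]; exact h.L1 hO)
    have h2 := Rw_congr hO hp k (L2 u) (L2 w) (by rw [← map_sub]; exact h.L2 hO)
    simp only [SF.sub_app] at h0
    simp only [Rw] at h1 h2
    simp only [Rw, Qs, SF.pow_app, SF.add_app, h1, h2, sub_eq_zero.1 h0]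

/-- The energy inequality, with the source split by Young's inequality with weight `η`. -/
theorem HE_deriv {t₀ s B η : ℝ} (ht₀ : 1 ≤ t₀) (hs : t₀ < s) (hB : s ^ 2 ≤ B) (hη : 0 < η)
    {v F : SF} (hv : Vo (Oc t₀) v) (hF : Vo (Ot t₀) (box v - F)) (k : ℕ) :
    ∃ y', HasDerivAt (HE B k v) y' s ∧
      s * y' ≤ η * HE B k v s + η⁻¹ * (s ^ 2 * JH B s (X0 ^ 2 * Rw L1 L2 k F)) := by
  have hs0 : 0 < s := by linarith
  have hO := Oc_open t₀
  refine ⟨_, Qs_hasDerivAt (P := Vo (Oc t₀)) (fun v h => h.L1 hO) (fun v h => h.L2 hO)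
    (fun v h => hE_deriv ht₀ hs hB h) k v hv, ?_⟩
  rw [← Qs_const_mul]
  have h1 : Qs L1 L2 (fun v => s * J B (fun x y => s / hT s x y *
      (2 * Hy s (Dt v) x y * Hy s (box v) x y))) k v ≤
      Qs L1 L2 (fun v => η * hE B s v + η⁻¹ * s ^ 2 * JH B s (X0 ^ 2 * box v ^ 2)) k v := by
    refine Qs_mono (P := fun _ => True) (fun _ _ => trivial) (fun _ _ => trivial)
      (fun v _ => ?_) k v trivial
    rw [hE_eq, ← JH_smul, ← JH_smul, ← JH_add hs0, ← J_const_mul]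
    have hTn : ∀ p : ℝ × ℝ, hT s p.1 p.2 ≠ 0 := fun p => (hT_pos hs0 p.1 p.2).ne'
    have c1 : Continuous fun p : ℝ × ℝ => hT s p.1 p.2 := hT_cont2 s
    have c2 : Continuous fun p : ℝ × ℝ => Hy s (Dt v) p.1 p.2 := Hy_cont2 s _
    have c3 : Continuous fun p : ℝ × ℝ => Hy s (box v) p.1 p.2 := Hy_cont2 s _
    refine J_mono (by unfold Cont2; fun_prop (disch := exact hTn)) (JH_cont2 hs0 _) fun x y => ?_
    have hTp := hT_pos hs0 x y
    simp only [Hy, eH, SF.add_app, SF.pow_app, SF.smul_app, SF.mul_app, X0_app]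
    set T := hT s x y
    set p := Dt v T x y
    set q := box v T x y
    rw [show s * (s / T * (2 * p * q)) = (2 * (s ^ 2 * p * q * T)) / T ^ 2 by field_simp]
    refine div_le_div_of_nonneg_right ?_ (sq_nonneg T)
    have e : η * (s ^ 2 * p ^ 2) + η⁻¹ * s ^ 2 * (T ^ 2 * q ^ 2) - 2 * (s ^ 2 * p * q * T) =
        η⁻¹ * (s * (η * p - T * q)) ^ 2 := by field_simp; ring
    have e2 : 0 ≤ η⁻¹ * (s * (η * p - T * q)) ^ 2 := by positivity
    have e3 : 0 ≤ η * (L1 v T x y ^ 2 + L2 v T x y ^ 2) := by positivity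
    linarith
  refine h1.trans (le_of_eq ?_)
  rw [Qs_add, Qs_const_mul, Qs_const_mul,
    Qs_comp (f := fun v => box v) (fun v => (box_L1 v).symm) (fun v => (box_L2 v).symm)
      (Φ := fun w => JH B s (X0 ^ 2 * w ^ 2)), Qs_X0 hs0]
  have e : JH B s (X0 ^ 2 * Rw L1 L2 k (box v)) = JH B s (X0 ^ 2 * Rw L1 L2 k F) := by
    unfold JH; congr 1; funext x y
    have hp : (hT s x y, x, y) ∈ Ot t₀ := lt_of_lt_of_le hs (hT_ge x y)
    simp only [Hy, SF.mul_app, Rw_congr (Ot_open t₀) hp k _ _ hF]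
  rw [e]; unfold HE; ring

/-! ### Growth of the energies under the bootstrap hypothesis -/

/-- The sixteenth root, the unit in which all growth rates are measured. -/
def zr (s : ℝ) : ℝ := s ^ ((1 : ℝ) / 16)

theorem zr_pow {s : ℝ} (hs : 0 ≤ s) : zr s ^ 16 = s := by
  rw [zr, ← rpow_natCast, ← rpow_mul hs]; norm_num

theorem zr_pos {s : ℝ} (hs : 0 < s) : 0 < zr s := rpow_pos_of_pos hs _

theorem one_le_zr {s : ℝ} (hs : 1 ≤ s) : 1 ≤ zr s := one_le_rpow hs (by norm_num)

theorem zr_mono {s t : ℝ} (hs : 0 ≤ s) (h : s ≤ t) : zr s ≤ zr t :=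
  rpow_le_rpow hs h (by norm_num)

theorem zr_deriv {s : ℝ} (hs : 0 < s) : HasDerivAt zr (zr s / (16 * s)) s := by
  refine (Real.hasDerivAt_rpow_const (p := (1 : ℝ) / 16) (Or.inl hs.ne')).congr_deriv ?_
  rw [rpow_sub_one hs.ne', zr]; field_simp

/-- Comparison with a power of `s`. -/
theorem power_cmp {f : ℝ → ℝ} {s₀ s₁ E : ℝ} (n : ℕ) (hs₀ : 1 ≤ s₀) (hE : 0 ≤ E)
    (h : ∀ s ∈ Set.Icc s₀ s₁, ∃ y', HasDerivAt f y' s ∧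
      (f s = E * zr s ^ n → s * y' < n / 16 * (E * zr s ^ n)))
    (h0 : f s₀ ≤ E) : ∀ s ∈ Set.Icc s₀ s₁, f s ≤ E * zr s ^ n := by
  refine ode_cmp (B' := fun s => n / 16 * (E * zr s ^ n) / s) (fun s hs => ?_) (fun s hs => ?_) ?_
  · obtain ⟨y', h1, h2⟩ := h s hs
    have hs0 : 0 < s := by linarith [hs.1]
    exact ⟨y', h1, fun e => by rw [lt_div_iff₀ hs0, mul_comm]; exact h2 e⟩
  · have hs0 : 0 < s := by linarith [hs.1]
    refine (((zr_deriv hs0).pow n).const_mul E).congr_deriv ?_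
    cases n with
    | zero => simp
    | succ m => simp only [Nat.add_sub_cancel, pow_succ]; field_simp
  · have : 1 ≤ zr s₀ ^ n := one_le_pow₀ (one_le_zr hs₀)
    nlinarith

/-- A solution of the system for times larger than `t₀`, supported in a translated light cone. -/
structure HSol (t₀ : ℝ) (a b : SF) : Prop where
  va : Vo (Oc t₀) a
  vb : Vo (Oc t₀) b
  ea : Vo (Ot t₀) (box a - Fn a b)
  eb : Vo (Ot t₀) (box b - Fn b a)

theorem HSol.symm {t₀ : ℝ} {a b : SF} (h : HSol t₀ a b) : HSol t₀ b a := ⟨h.vb, h.va, h.eb, h.ea⟩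

/-- The bootstrap hypothesis on the hyperboloid of parameter `s`. -/
def Pb (K s : ℝ) (a b : SF) : Prop := ∀ x y, hT s x y * Hy s (Dt a) x y ^ 2 ≤ K ^ 2 ∧
  hT s x y * Hy s (Dt b) x y ^ 2 ≤ K ^ 2

theorem Pb.symm {K s : ℝ} {a b : SF} (h : Pb K s a b) : Pb K s b a := fun x y => (h x y).symm

/-- The energy of the pair. -/
def EE (B : ℝ) (k : ℕ) (a b : SF) (s : ℝ) : ℝ := HE B k a s + HE B k b s

theorem EE_comm (B : ℝ) (k : ℕ) (a b : SF) (s : ℝ) : EE B k a b s = EE B k b a s := add_comm _ _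

theorem EE_nonneg (B : ℝ) (k : ℕ) (a b : SF) (s : ℝ) : 0 ≤ EE B k a b s :=
  add_nonneg (HE_nonneg _ _ _ _) (HE_nonneg _ _ _ _)

theorem JH_Dt_le {B s : ℝ} (hs : 0 < s) (k : ℕ) (u : SF) :
    s ^ 2 * JH B s (Rw L1 L2 k (Dt u)) ≤ 15 * 27 ^ k * HE B k u s := by
  have h := JH_D_le (B := B) hs k u
  have h1 : 0 ≤ JH B s (Rw L1 L2 k (D1 u)) := JH_nonneg fun x y => Hy_Rw_nonneg s x y k _
  have h2 : 0 ≤ JH B s (Rw L1 L2 k (D2 u)) := JH_nonneg fun x y => Hy_Rw_nonneg s x y k _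
  nlinarith [mul_nonneg (sq_nonneg s) (add_nonneg h1 h2)]

section
variable {t₀ s B K : ℝ} {a b : SF}

theorem F2_bound (ht₀ : 1 ≤ t₀) (hs : t₀ < s) (hB : 2 * s ^ 2 ≤ B) (h : HSol t₀ a b)
    (hK : Pb K s a b) : s ^ 2 * JH B s (X0 ^ 2 * Rw L1 L2 2 (Fn a b)) ≤
      11000000000 * K ^ 4 * EE B 2 a b s := by
  have hs0 : 0 < s := by linarith
  have hO := Oc_open t₀
  have h1 := JH_F2 ht₀ hs (by nlinarith) (h.va.Dt hO) (h.vb.Dt hO) (fun x y => (hK x y).1)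
    (fun x y => (hK x y).2) (B := B)
  have h2 := JH_Dt_le (B := B) hs0 2 a
  have h3 := JH_Dt_le (B := B) hs0 2 b
  have h4 := mul_le_mul_of_nonneg_left h1 (sq_nonneg s)
  have h5 := mul_le_mul_of_nonneg_left (add_le_add h2 h3) (show 0 ≤ 1000000 * K ^ 4 by positivity)
  have h6 : 0 ≤ K ^ 4 * EE B 2 a b s := mul_nonneg (by positivity) (EE_nonneg _ _ _ _ _)
  unfold Fn; unfold EE at h6 ⊢
  linarith

theorem energy2_deriv (ht₀ : 1 ≤ t₀) (hs : t₀ < s) (hB : 2 * s ^ 2 ≤ B) (h : HSol t₀ a b)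
    (hK0 : 0 < K) (hK : Pb K s a b) : ∃ y', HasDerivAt (HE B 2 a) y' s ∧
      s * y' ≤ 20000000000 * K ^ 2 * EE B 2 a b s := by
  obtain ⟨y', h1, h2⟩ := HE_deriv ht₀ hs (B := B) (by nlinarith) (show 0 < K ^ 2 by positivity)
    h.va h.ea 2
  refine ⟨y', h1, h2.trans ?_⟩
  have h3 := mul_le_mul_of_nonneg_left (F2_bound ht₀ hs hB h hK)
    (show 0 ≤ (K ^ 2)⁻¹ by positivity)
  have e : (K ^ 2)⁻¹ * (11000000000 * K ^ 4 * EE B 2 a b s) =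
      11000000000 * K ^ 2 * EE B 2 a b s := by field_simp
  rw [e] at h3
  have h4 : 0 ≤ K ^ 2 * HE B 2 b s := mul_nonneg (by positivity) (HE_nonneg _ _ _ _)
  have h5 : 0 ≤ K ^ 2 * EE B 2 a b s := mul_nonneg (by positivity) (EE_nonneg _ _ _ _ _)
  have h6 : K ^ 2 * EE B 2 a b s = K ^ 2 * HE B 2 a s + K ^ 2 * HE B 2 b s := by unfold EE; ring
  linarith

theorem energy2w_deriv (ht₀ : 1 ≤ t₀) (hs : t₀ < s) (hB : 2 * s ^ 2 ≤ B) (h : HSol t₀ a b)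
    (hK : Pb K s a b) {w : SF} (hw : Vo (Oc t₀) w) (hw' : Vo (Ot t₀) (box w - Fn a b)) :
    ∃ y', HasDerivAt (HE B 2 w) y' s ∧
      s * y' ≤ 1 / 4 * HE B 2 w s + 100000000000 * K ^ 4 * EE B 2 a b s := by
  obtain ⟨y', h1, h2⟩ := HE_deriv ht₀ hs (B := B) (by nlinarith) (show (0 : ℝ) < 1 / 4 by norm_num)
    hw hw' 2
  refine ⟨y', h1, h2.trans ?_⟩
  have h3 := F2_bound ht₀ hs hB h hK
  have h4 : 0 ≤ K ^ 4 * EE B 2 a b s := mul_nonneg (by positivity) (EE_nonneg _ _ _ _ _)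
  rw [show ((1 : ℝ) / 4)⁻¹ = 4 by norm_num]
  linarith

/-- Pointwise bound for once boosted time derivatives, from `hyp_sobolev` at a free scale `ρ`: a small
`ρ` reduces the contribution of the third-order energy. -/
theorem X_bound (ht₀ : 1 ≤ t₀) (hs : t₀ < s) (hB : 2 * s ^ 2 ≤ B) {ρ : ℝ} (hρ : 0 < ρ)
    (hρ1 : ρ ≤ 1) (ha : Vo (Oc t₀) a) (x y : ℝ) :
    hT s x y * Hy s (L1 (Dt a)) x y ^ 2 ≤
      100000000 * (ρ⁻¹ ^ 2 * HE B 2 a s + ρ ^ 2 * HE B 3 a s) ∧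
    hT s x y * Hy s (L2 (Dt a)) x y ^ 2 ≤
      100000000 * (ρ⁻¹ ^ 2 * HE B 2 a s + ρ ^ 2 * HE B 3 a s) := by
  have hs0 : 0 < s := by linarith
  have hO := Oc_open t₀
  have h2 := mul_le_mul_of_nonneg_left (JH_Dt_le (B := B) hs0 2 a) (sq_nonneg ρ⁻¹)
  have h3 := mul_le_mul_of_nonneg_left (JH_Dt_le (B := B) hs0 3 a) (sq_nonneg ρ)
  have n2 : 0 ≤ ρ⁻¹ ^ 2 * HE B 2 a s := mul_nonneg (by positivity) (HE_nonneg _ _ _ _)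
  have n3 : 0 ≤ ρ ^ 2 * HE B 3 a s := mul_nonneg (by positivity) (HE_nonneg _ _ _ _)
  obtain ⟨g1, g2⟩ := sob_rho ht₀ hs hB hρ hρ1 (ha.Dt hO) x y
  have g3 := T_mul_sq_le ht₀ hs ((ha.Dt hO).L1 hO) g1
  have g4 := T_mul_sq_le ht₀ hs ((ha.Dt hO).L2 hO) g2
  constructor
  · refine g3.trans ?_
    linarith
  · refine g4.trans ?_
    linarith

/-- Growth of the third-order energy. The scale `ρ` of `X_bound` is chosen only in `boot_energy`. -/
theorem energy3_deriv (ht₀ : 1 ≤ t₀) (hs : t₀ < s) (hB : 2 * s ^ 2 ≤ B) (h : HSol t₀ a b)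
    (hK0 : 0 < K) (hK : Pb K s a b) {ρ : ℝ} (hρ : 0 < ρ) (hρ1 : ρ ≤ 1) :
    ∃ y', HasDerivAt (HE B 3 a) y' s ∧
      s * y' ≤ 400000000000000 * (K ^ 2 * EE B 3 a b s +
        100000000 * (ρ⁻¹ ^ 2 * EE B 2 a b s + ρ ^ 2 * EE B 3 a b s) * EE B 2 a b s) := by
  have hs0 : 0 < s := by linarith
  have hO := Oc_open t₀
  obtain ⟨y', h1, h2⟩ := HE_deriv ht₀ hs (B := B) (by nlinarith) (show 0 < K ^ 2 by positivity)
    h.va h.ea 3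
  refine ⟨y', h1, h2.trans ?_⟩
  set X : ℝ := 100000000 * (ρ⁻¹ ^ 2 * EE B 2 a b s + ρ ^ 2 * EE B 3 a b s) with hX
  have hXa : 100000000 * (ρ⁻¹ ^ 2 * HE B 2 a s + ρ ^ 2 * HE B 3 a s) ≤ X := by
    have n2 : 0 ≤ ρ⁻¹ ^ 2 * HE B 2 b s := mul_nonneg (by positivity) (HE_nonneg _ _ _ _)
    have n3 : 0 ≤ ρ ^ 2 * HE B 3 b s := mul_nonneg (by positivity) (HE_nonneg _ _ _ _)
    rw [hX]; unfold EE; linarith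
  have hXb : 100000000 * (ρ⁻¹ ^ 2 * HE B 2 b s + ρ ^ 2 * HE B 3 b s) ≤ X := by
    have n2 : 0 ≤ ρ⁻¹ ^ 2 * HE B 2 a s := mul_nonneg (by positivity) (HE_nonneg _ _ _ _)
    have n3 : 0 ≤ ρ ^ 2 * HE B 3 a s := mul_nonneg (by positivity) (HE_nonneg _ _ _ _)
    rw [hX]; unfold EE; linarith
  have X0 : 0 ≤ X := by
    have n2 : 0 ≤ ρ⁻¹ ^ 2 * EE B 2 a b s := mul_nonneg (by positivity) (EE_nonneg _ _ _ _ _)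
    have n3 : 0 ≤ ρ ^ 2 * EE B 3 a b s := mul_nonneg (by positivity) (EE_nonneg _ _ _ _ _)
    rw [hX]; positivity
  have hF := JH_F3 ht₀ hs (B := B) (X := X) (by nlinarith) (h.va.Dt hO) (h.vb.Dt hO)
    (fun x y => (hK x y).1) (fun x y => (hK x y).2) (fun x y => by
      obtain ⟨p1, p2⟩ := X_bound (B := B) ht₀ hs hB hρ hρ1 h.va x y
      obtain ⟨p3, p4⟩ := X_bound (B := B) ht₀ hs hB hρ hρ1 h.vb x y
      exact ⟨p1.trans hXa, p2.trans hXa, p3.trans hXb, p4.trans hXb⟩)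
  have q2 := add_le_add (JH_Dt_le (B := B) hs0 2 a) (JH_Dt_le (B := B) hs0 2 b)
  have q3 := add_le_add (JH_Dt_le (B := B) hs0 3 a) (JH_Dt_le (B := B) hs0 3 b)
  have r2 := mul_le_mul_of_nonneg_left q2 X0
  have r3 := mul_le_mul_of_nonneg_left q3 (sq_nonneg K)
  have hF' := mul_le_mul_of_nonneg_left hF (show 0 ≤ (K ^ 2)⁻¹ * s ^ 2 by positivity)
  have e : (K ^ 2)⁻¹ * s ^ 2 * (1000000000 * (K ^ 4 * (JH B s (Rw L1 L2 3 (Dt a)) +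
      JH B s (Rw L1 L2 3 (Dt b))) + K ^ 2 * X * (JH B s (Rw L1 L2 2 (Dt a)) +
      JH B s (Rw L1 L2 2 (Dt b))))) = 1000000000 * (K ^ 2 * (s ^ 2 * JH B s (Rw L1 L2 3 (Dt a)) +
      s ^ 2 * JH B s (Rw L1 L2 3 (Dt b))) + X * (s ^ 2 * JH B s (Rw L1 L2 2 (Dt a)) +
      s ^ 2 * JH B s (Rw L1 L2 2 (Dt b)))) := by field_simp
  rw [e] at hF'
  have n1 : 0 ≤ K ^ 2 * HE B 3 a s := mul_nonneg (by positivity) (HE_nonneg _ _ _ _)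
  have n2 : 0 ≤ K ^ 2 * HE B 3 b s := mul_nonneg (by positivity) (HE_nonneg _ _ _ _)
  have n3 : 0 ≤ X * HE B 2 a s := mul_nonneg X0 (HE_nonneg _ _ _ _)
  have n4 : 0 ≤ X * HE B 2 b s := mul_nonneg X0 (HE_nonneg _ _ _ _)
  rw [← mul_assoc ((K ^ 2)⁻¹)]
  unfold Fn
  unfold EE
  linarith
end

/-- Growth of the energies as long as the bootstrap hypothesis holds. The bounds for the
first two energies do not involve the constant `K` of that hypothesis. -/
theorem boot_energy {t₀ s₀ s₁ B K δ : ℝ} {a b : SF} (ht₀ : 1 ≤ t₀) (hs₀ : t₀ < s₀)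
    (hB : 2 * s₁ ^ 2 ≤ B) (h : HSol t₀ a b) (hK0 : 0 < K)
    (hK : ∀ s ∈ Set.Icc s₀ s₁, Pb K s a b) (hδ : 0 < δ)
    (hsmall : 1000000000000000000000000 * (K ^ 2 + δ) ≤ 1 / 4)
    (h0 : EE B 3 a b s₀ ≤ δ) :
    (∀ s ∈ Set.Icc s₀ s₁, EE B 2 a b s ≤ δ * zr s) ∧
    (∀ s ∈ Set.Icc s₀ s₁, EE B 3 a b s ≤ δ * zr s ^ 8) ∧
    ∀ w : SF, Vo (Oc t₀) w → Vo (Ot t₀) (box w - Fn a b) → ∀ E' : ℝ, 0 < E' →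
      1000000000000 * K ^ 4 * δ ≤ E' → HE B 2 w s₀ ≤ E' →
      ∀ s ∈ Set.Icc s₀ s₁, HE B 2 w s ≤ E' * zr s ^ 8 := by
  have hs1 : 1 ≤ s₀ := by linarith
  have hBs : ∀ s ∈ Set.Icc s₀ s₁, 2 * s ^ 2 ≤ B := fun s hs => by
    have : s ^ 2 ≤ s₁ ^ 2 := pow_le_pow_left₀ (by linarith [hs.1]) hs.2 2
    linarith
  have H2 : ∀ s ∈ Set.Icc s₀ s₁, EE B 2 a b s ≤ δ * zr s := by
    have := power_cmp (f := EE B 2 a b) (s₁ := s₁) 1 hs1 hδ.le (fun s hs => ?_)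
      ((add_le_add (HE_mono_k B s₀ (by norm_num) a) (HE_mono_k B s₀ (by norm_num) b)).trans h0)
    · simpa using this
    · have hz := zr_pos (show 0 < s by linarith [hs.1])
      obtain ⟨y1, d1, i1⟩ := energy2_deriv ht₀ (by linarith [hs.1]) (hBs s hs) h hK0 (hK s hs)
      obtain ⟨y2, d2, i2⟩ := energy2_deriv ht₀ (by linarith [hs.1]) (hBs s hs) h.symm hK0
        (hK s hs).symm
      rw [EE_comm] at i2
      refine ⟨y1 + y2, d1.add d2, fun e => ?_⟩
      rw [e] at i1 i2
      have hp : 0 < δ * zr s ^ 1 := by positivity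
      have := mul_le_mul_of_nonneg_right (show K ^ 2 ≤ 1 / 1000000000000 by linarith) hp.le
      push_cast
      linarith
  have hz1 : ∀ s ∈ Set.Icc s₀ s₁, 1 ≤ zr s := fun s hs => one_le_zr (by linarith [hs.1])
  refine ⟨H2, ?_, ?_⟩
  · refine power_cmp 8 hs1 hδ.le (fun s hs => ?_) h0
    have hz := hz1 s hs
    have hzp : 0 < zr s := by linarith
    -- With `ρ = s^{-1/8}` both `ρ^{-2} E₂²` and `ρ² E₃ E₂` grow at most like `s^{1/2}`.
    have hρ : 0 < (zr s ^ 2)⁻¹ := by positivity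
    have hρ1 : (zr s ^ 2)⁻¹ ≤ 1 := inv_le_one_of_one_le₀ (one_le_pow₀ hz)
    obtain ⟨y1, d1, i1⟩ := energy3_deriv ht₀ (by linarith [hs.1]) (hBs s hs) h hK0 (hK s hs) hρ hρ1
    obtain ⟨y2, d2, i2⟩ := energy3_deriv ht₀ (by linarith [hs.1]) (hBs s hs) h.symm hK0
      (hK s hs).symm hρ hρ1
    rw [EE_comm B 3 b a, EE_comm B 2 b a] at i2
    refine ⟨y1 + y2, d1.add d2, fun e => ?_⟩
    rw [e, inv_inv] at i1 i2
    have h2 := H2 s hs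
    have n2 := EE_nonneg B 2 a b s
    set z := zr s
    set e2 := EE B 2 a b s
    have hp : 0 < δ * z ^ 8 := by positivity
    have k1 := mul_le_mul_of_nonneg_right (show K ^ 2 + δ ≤ 1 / 1000000000000000000000000 by linarith)
      hp.le
    have k2 : (z ^ 2) ^ 2 * e2 * e2 ≤ δ * (δ * z ^ 8) := by
      have : e2 * e2 ≤ (δ * z) * (δ * z) := mul_le_mul h2 h2 n2 (by positivity)
      calc (z ^ 2) ^ 2 * e2 * e2 = z ^ 4 * (e2 * e2) := by ring
        _ ≤ z ^ 4 * ((δ * z) * (δ * z)) := by gcongr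
        _ = δ * (δ * z ^ 6) := by ring
        _ ≤ δ * (δ * z ^ 8) := by gcongr; norm_num
    have k3 : ((z ^ 2)⁻¹) ^ 2 * (δ * z ^ 8) * e2 ≤ δ * (δ * z ^ 8) := by
      calc ((z ^ 2)⁻¹) ^ 2 * (δ * z ^ 8) * e2 ≤ ((z ^ 2)⁻¹) ^ 2 * (δ * z ^ 8) * (δ * z) := by gcongr
        _ = δ * (δ * z ^ 5) := by field_simp
        _ ≤ δ * (δ * z ^ 8) := by gcongr; norm_num
    push_cast
    nlinarith
  · intro w hw hw' E' hE'0 hE' hw0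
    refine power_cmp 8 hs1 hE'0.le (fun s hs => ?_) hw0
    obtain ⟨y', d, i⟩ := energy2w_deriv ht₀ (by linarith [hs.1]) (hBs s hs) h (hK s hs) hw hw'
    refine ⟨y', d, fun e => ?_⟩
    rw [e] at i
    have hz := hz1 s hs
    have h2 := mul_le_mul_of_nonneg_left (H2 s hs) (show 0 ≤ 100000000000 * K ^ 4 by positivity)
    have h3 : zr s ≤ zr s ^ 8 := le_self_pow₀ hz (by norm_num)
    have h4 : 0 ≤ 1000000000000 * K ^ 4 * δ := by positivity
    have h5 := mul_le_mul hE' h3 (by linarith) hE'0.le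
    have hp : 0 < E' * zr s ^ 8 := by positivity
    push_cast
    nlinarith

/-! ### Pointwise decay on hyperboloids -/

section
variable {t₀ s B p : ℝ} {v : SF}

/-- Pointwise decay of the gradient from the second-order energy. -/
theorem decay_D (ht₀ : 1 ≤ t₀) (hs : t₀ < s) (hB : 2 * s ^ 2 ≤ B) (hv : Vo (Oc t₀) v)
    (hp : 0 ≤ p) (h : HE B 2 v s ≤ p ^ 2) (x y : ℝ) :
    s * |Hy s (Dt v) x y| ≤ 2000 * p ∧ s * |Hy s (D1 v) x y| ≤ 2000 * p ∧
      s * |Hy s (D2 v) x y| ≤ 2000 * p := by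
  have hs0 : 0 < s := by linarith
  have h0 := JH_D_le (B := B) hs0 2 v
  have n0 : 0 ≤ JH B s (Rw L1 L2 2 (Dt v)) := JH_nonneg fun x y => Hy_Rw_nonneg s x y 2 _
  have n1 : 0 ≤ JH B s (Rw L1 L2 2 (D1 v)) := JH_nonneg fun x y => Hy_Rw_nonneg s x y 2 _
  have n2 : 0 ≤ JH B s (Rw L1 L2 2 (D2 v)) := JH_nonneg fun x y => Hy_Rw_nonneg s x y 2 _
  have hs2 : 0 < s ^ 2 := by positivity
  have key : ∀ z j : ℝ, z ^ 2 ≤ 256 * j → s ^ 2 * j ≤ 10935 * p ^ 2 → s * |z| ≤ 2000 * p := by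
    intro z j hz hj
    refine abs_le_of_sq_le_sq' ?_ (by positivity) |>.2
    rw [mul_pow, sq_abs]
    nlinarith [mul_le_mul_of_nonneg_left hz hs2.le, sq_nonneg p]
  have hp' : (15 * 27 ^ 2 : ℝ) * HE B 2 v s ≤ 10935 * p ^ 2 := by linarith
  have m0 := mul_nonneg hs2.le n0
  have m1 := mul_nonneg hs2.le n1
  have m2 := mul_nonneg hs2.le n2
  refine ⟨key _ _ (sob_one ht₀ hs hB (hv.Dt (Oc_open _)) x y) (by linarith),
    key _ _ (sob_one ht₀ hs hB (hv.D1 (Oc_open _)) x y) (by linarith),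
    key _ _ (sob_one ht₀ hs hB (hv.D2 (Oc_open _)) x y) (by linarith)⟩

/-- Pointwise bound of the boosts of `v` from the second-order energy. -/
theorem decay_L (ht₀ : 1 ≤ t₀) (hs : t₀ < s) (hB : 2 * s ^ 2 ≤ B) (hv : Vo (Oc t₀) v)
    (hp : 0 ≤ p) (h : HE B 2 v s ≤ p ^ 2) (x y : ℝ) :
    |Hy s (L1 v) x y| ≤ 16 * p ∧ |Hy s (L2 v) x y| ≤ 16 * p := by
  have hs0 : 0 < s := by linarith
  have h0 := JH_L_le (B := B) hs0 2 v
  have key : ∀ z j : ℝ, z ^ 2 ≤ 256 * j → j ≤ p ^ 2 → |z| ≤ 16 * p := by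
    intro z j hz hj
    refine abs_le_of_sq_le_sq' ?_ (by positivity) |>.2
    rw [sq_abs]; linarith
  exact ⟨key _ _ (sob_one ht₀ hs hB (hv.L1 (Oc_open _)) x y) (h0.1.trans h),
    key _ _ (sob_one ht₀ hs hB (hv.L2 (Oc_open _)) x y) (h0.2.trans h)⟩
end

/-- Integration of a derivative bound `A zr^j / s` along the hyperbolic time. -/
theorem zr_integrate {f f' : ℝ → ℝ} {s₀ s₁ A : ℝ} (j : ℕ) (hj : 1 ≤ j) (hs₀ : 1 ≤ s₀) (hA : 0 ≤ A)
    (hd : ∀ s ∈ Set.Icc s₀ s₁, HasDerivAt f (f' s) s)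
    (hb : ∀ s ∈ Set.Icc s₀ s₁, s * |f' s| ≤ A * zr s ^ j) :
    ∀ s ∈ Set.Icc s₀ s₁, |f s| ≤ |f s₀| + 16 * A * zr s ^ j := by
  have hB : ∀ s : ℝ, 0 < s → HasDerivAt (fun s => |f s₀| + 16 * A * zr s ^ j)
      (16 * A * (j * zr s ^ (j - 1) * (zr s / (16 * s)))) s := fun s hs =>
    (((zr_deriv hs).pow j).const_mul (16 * A)).const_add _
  have hpos : ∀ s ∈ Set.Icc s₀ s₁, 0 < s := fun s hs => by linarith [hs.1]
  refine fun s hs => image_norm_le_of_norm_deriv_right_le_deriv_boundary' (f' := f')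
    (B' := fun s => 16 * A * (j * zr s ^ (j - 1) * (zr s / (16 * s))))
    (fun s hs => (hd s hs).continuousAt.continuousWithinAt)
    (fun s hs => (hd s ⟨hs.1, hs.2.le⟩).hasDerivWithinAt) ?_
    (fun s hs => (hB s (hpos s hs)).continuousAt.continuousWithinAt)
    (fun s hs => (hB s (hpos s ⟨hs.1, hs.2.le⟩)).hasDerivWithinAt) (fun s hs => ?_) hs
  · have := zr_pos (show 0 < s₀ by linarith)
    rw [norm_eq_abs]
    have : 0 ≤ 16 * A * zr s₀ ^ j := by positivity
    linarith
  · have h := hb s ⟨hs.1, hs.2.le⟩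
    have hs0 := hpos s ⟨hs.1, hs.2.le⟩
    have hz := zr_pos hs0
    have hj' : (1 : ℝ) ≤ j := by exact_mod_cast hj
    have e : 16 * A * (j * zr s ^ (j - 1) * (zr s / (16 * s))) = j * (A * zr s ^ j) / s := by
      obtain ⟨i, rfl⟩ : ∃ i, j = i + 1 := ⟨j - 1, by omega⟩
      simp only [Nat.add_sub_cancel, pow_succ]
      field_simp
    rw [norm_eq_abs, e, le_div_iff₀ hs0]
    have : 0 ≤ A * zr s ^ j := by positivity
    nlinarith

/-- Pointwise bound of `v` itself, by integrating `(s / t) ∂ₜv` in `s` at fixed `x`. For `j ≥ 1` the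
integral of `zr s ^ j / s` is again of order `zr s ^ j`, so no logarithm is lost. -/
theorem decay_0 {t₀ s₀ s₁ B p : ℝ} {v : SF} (j : ℕ) (hj : 1 ≤ j) (ht₀ : 1 ≤ t₀) (hs₀ : t₀ < s₀)
    (hB : 2 * s₁ ^ 2 ≤ B) (hv : Vo (Oc t₀) v) (hp : 0 ≤ p)
    (h : ∀ s ∈ Set.Icc s₀ s₁, HE B 2 v s ≤ (p * zr s ^ j) ^ 2) (x y : ℝ) :
    ∀ s ∈ Set.Icc s₀ s₁, |Hy s v x y| ≤ |Hy s₀ v x y| + 32000 * p * zr s ^ j := by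
  have := zr_integrate (f := fun s => Hy s v x y)
    (f' := fun s => s / hT s x y * Hy s (Dt v) x y) (s₀ := s₀) (s₁ := s₁) (A := 2000 * p) j hj
    (by linarith) (by positivity) (fun s hs => Hy_d0 (by linarith [hs.1]) v x y) (fun s hs => ?_)
  · intro s hs
    have := this s hs
    linarith
  · have hs0 : 0 < s := by linarith [hs.1]
    have hB' : 2 * s ^ 2 ≤ B := by
      have : s ^ 2 ≤ s₁ ^ 2 := pow_le_pow_left₀ hs0.le hs.2 2
      linarith
    have hz := zr_pos hs0
    have h1 := (decay_D ht₀ (by linarith [hs.1]) hB' hv (by positivity) (h s hs) x y).1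
    have hT0 := hT_pos hs0 x y
    have h2 : s / hT s x y ≤ 1 := (div_le_one hT0).2 (hT_ge x y)
    rw [abs_mul, abs_of_pos (div_pos hs0 hT0)]
    have h3 : 0 ≤ s * |Hy s (Dt v) x y| := by positivity
    calc s * (s / hT s x y * |Hy s (Dt v) x y|) = s / hT s x y * (s * |Hy s (Dt v) x y|) := by ring
      _ ≤ 1 * (s * |Hy s (Dt v) x y|) := by gcongr
      _ ≤ _ := by linarith

/-- The pointwise bounds, of size `m`, for one component of a solution on the hyperboloids
`s₀ ≤ s ≤ s₁`. -/
structure Dec (s₀ s₁ m : ℝ) (a : SF) : Prop where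
  d : ∀ s ∈ Set.Icc s₀ s₁, ∀ x y, s * |Hy s (Dt a) x y| ≤ m * zr s ∧
    s * |Hy s (D1 a) x y| ≤ m * zr s ∧ s * |Hy s (D2 a) x y| ≤ m * zr s
  z : ∀ s ∈ Set.Icc s₀ s₁, ∀ x y, |Hy s a x y| ≤ m * zr s
  l : ∀ s ∈ Set.Icc s₀ s₁, ∀ x y, |Hy s (L1 a) x y| ≤ m * zr s ∧ |Hy s (L2 a) x y| ≤ m * zr s
  ll : ∀ s ∈ Set.Icc s₀ s₁, ∀ x y, |Hy s (L1 (L1 a)) x y| ≤ m * zr s ^ 4 ∧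
    |Hy s (L2 (L1 a)) x y| ≤ m * zr s ^ 4 ∧ |Hy s (L1 (L2 a)) x y| ≤ m * zr s ^ 4 ∧
    |Hy s (L2 (L2 a)) x y| ≤ m * zr s ^ 4

/-- The second-order energy gives the bounds with factor `zr s`; second boosts of the solution need
the third-order energy and carry the factor `zr s ^ 4`. -/
theorem Dec.of_energy {t₀ s₀ s₁ B e : ℝ} {a : SF} (ht₀ : 1 ≤ t₀) (hs₀ : t₀ < s₀)
    (hB : 2 * s₁ ^ 2 ≤ B) (ha : Vo (Oc t₀) a) (he : 0 ≤ e)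
    (h2 : ∀ s ∈ Set.Icc s₀ s₁, HE B 2 a s ≤ e ^ 2 * zr s)
    (h3 : ∀ s ∈ Set.Icc s₀ s₁, HE B 3 a s ≤ e ^ 2 * zr s ^ 8)
    (h0 : ∀ x y, |Hy s₀ a x y| ≤ e) : Dec s₀ s₁ (33000 * e) a := by
  have hB' : ∀ s ∈ Set.Icc s₀ s₁, 2 * s ^ 2 ≤ B := fun s hs => by
    have : s ^ 2 ≤ s₁ ^ 2 := pow_le_pow_left₀ (by linarith [hs.1]) hs.2 2
    linarith
  have hz1 : ∀ s ∈ Set.Icc s₀ s₁, 1 ≤ zr s := fun s hs => one_le_zr (by linarith [hs.1])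
  have h2' : ∀ s ∈ Set.Icc s₀ s₁, HE B 2 a s ≤ (e * zr s) ^ 2 := fun s hs => by
    have := hz1 s hs
    refine (h2 s hs).trans ?_
    rw [mul_pow]
    gcongr
    nlinarith
  have h3' : ∀ s ∈ Set.Icc s₀ s₁, HE B 3 a s ≤ (e * zr s ^ 4) ^ 2 := fun s hs =>
    (h3 s hs).trans (by ring_nf; rfl)
  refine ⟨fun s hs x y => ?_, fun s hs x y => ?_, fun s hs x y => ?_, fun s hs x y => ?_⟩
  · have hz := hz1 s hs
    have hp : 0 ≤ e * zr s := by positivity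
    have := decay_D ht₀ (by linarith [hs.1]) (hB' s hs) ha hp (h2' s hs) x y
    exact ⟨by linarith [this.1], by linarith [this.2.1], by linarith [this.2.2]⟩
  · have hz := hz1 s hs
    have := decay_0 1 le_rfl ht₀ hs₀ hB ha he (by simpa using h2') x y s hs
    rw [pow_one] at this
    nlinarith [h0 x y]
  · have hz := hz1 s hs
    have hp : 0 ≤ e * zr s := by positivity
    have := decay_L ht₀ (by linarith [hs.1]) (hB' s hs) ha hp (h2' s hs) x y
    exact ⟨by linarith [this.1], by linarith [this.2]⟩
  · have hz := hz1 s hs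
    have hp : 0 ≤ e * zr s ^ 4 := by positivity
    have k1 := decay_L ht₀ (by linarith [hs.1]) (hB' s hs) (ha.L1 (Oc_open _)) hp
      ((Qs_A_le (hE_nonneg B s) 2 a).trans (h3' s hs)) x y
    have k2 := decay_L ht₀ (by linarith [hs.1]) (hB' s hs) (ha.L2 (Oc_open _)) hp
      ((Qs_B_le (hE_nonneg B s) 2 a).trans (h3' s hs)) x y
    exact ⟨by linarith [k1.1], by linarith [k1.2], by linarith [k2.1], by linarith [k2.2]⟩

/-! ### The transport equation along outgoing rays -/

/-- The value of `v` at the point of the outgoing ray `r = τ - c` in the direction `ω`. -/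
def Ry (v : SF) (c ω1 ω2 τ : ℝ) : ℝ := v τ ((τ - c) * ω1) ((τ - c) * ω2)

/-- `(∂ₜ - ∂ᵣ)(r^{1/2} v)` along the outgoing ray `r = τ - c` in the direction `ω`. -/
def Wr (v : SF) (c ω1 ω2 τ : ℝ) : ℝ :=
  √(τ - c) * (Ry (Dt v) c ω1 ω2 τ - ω1 * Ry (D1 v) c ω1 ω2 τ - ω2 * Ry (D2 v) c ω1 ω2 τ) -
    Ry v c ω1 ω2 τ / (2 * √(τ - c))

theorem Ry_deriv (v : SF) (c ω1 ω2 τ : ℝ) : HasDerivAt (Ry v c ω1 ω2)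
    (Ry (Dt v) c ω1 ω2 τ + ω1 * Ry (D1 v) c ω1 ω2 τ + ω2 * Ry (D2 v) c ω1 ω2 τ) τ := by
  have h := v.comp_curve (hasDerivAt_id τ) (((hasDerivAt_id τ).sub_const c).mul_const ω1)
    (((hasDerivAt_id τ).sub_const c).mul_const ω2)
  refine (h.congr_deriv ?_)
  simp only [Ry, id]
  ring

theorem Om_Om (v : SF) : Om (Om v) = X1 * X1 * D2 (D2 v) - X1 * X2 * D1 (D2 v)
    - X1 * X2 * D1 (D2 v) + X2 * X2 * D1 (D1 v) - X1 * D1 v - X2 * D2 v := by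
  simp [Om_def, D2_D1]
  ring

/-- The wave operator in characteristic form along a ray `r = τ - c`:
`(∂ₜ + ∂ᵣ)(∂ₜ - ∂ᵣ)(r^{1/2} v) = r^{1/2} □v + r^{-3/2} (Ω² v + v / 4)`. -/
theorem ray_deriv (v : SF) {c ω1 ω2 τ : ℝ} (hω : ω1 ^ 2 + ω2 ^ 2 = 1) (hτ : c < τ) :
    HasDerivAt (Wr v c ω1 ω2) (√(τ - c) * Ry (box v) c ω1 ω2 τ +
      (Ry (Om (Om v)) c ω1 ω2 τ + Ry v c ω1 ω2 τ / 4) / √(τ - c) ^ 3) τ := by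
  have hr : 0 < τ - c := sub_pos.2 hτ
  have hs := (((hasDerivAt_id τ).sub_const c).sqrt hr.ne')
  have h := (hs.mul (((Ry_deriv (Dt v) c ω1 ω2 τ).sub
    ((Ry_deriv (D1 v) c ω1 ω2 τ).const_mul ω1)).sub
    ((Ry_deriv (D2 v) c ω1 ω2 τ).const_mul ω2))).sub
    ((Ry_deriv v c ω1 ω2 τ).div (hs.const_mul 2) (by positivity))
  refine h.congr_deriv ?_
  have e : Ry (Om (Om v)) c ω1 ω2 τ = (τ - c) ^ 2 * (ω1 ^ 2 * Ry (D2 (D2 v)) c ω1 ω2 τ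
      - 2 * ω1 * ω2 * Ry (D1 (D2 v)) c ω1 ω2 τ + ω2 ^ 2 * Ry (D1 (D1 v)) c ω1 ω2 τ)
      - (τ - c) * (ω1 * Ry (D1 v) c ω1 ω2 τ + ω2 * Ry (D2 v) c ω1 ω2 τ) := by
    simp only [Ry, Om_Om, SF.add_app, SF.sub_app, SF.mul_app, X1_app, X2_app]
    ring
  have e2 : Ry (box v) c ω1 ω2 τ = Ry (Dt (Dt v)) c ω1 ω2 τ - Ry (D1 (D1 v)) c ω1 ω2 τ
      - Ry (D2 (D2 v)) c ω1 ω2 τ := rfl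
  rw [e, e2, D1_Dt, D2_Dt, D2_D1]
  simp only [id, Pi.sub_apply]
  set R := √(τ - c)
  have hR : 0 < R := sqrt_pos.2 hr
  have hR2 : τ - c = R ^ 2 := (sq_sqrt hr.le).symm
  rw [hR2]
  set A := Ry v c ω1 ω2 τ
  set d0 := Ry (Dt v) c ω1 ω2 τ
  set d1 := Ry (D1 v) c ω1 ω2 τ
  set d2 := Ry (D2 v) c ω1 ω2 τ
  set d01 := Ry (Dt (D1 v)) c ω1 ω2 τ
  set d02 := Ry (Dt (D2 v)) c ω1 ω2 τ
  set d12 := Ry (D1 (D2 v)) c ω1 ω2 τ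
  set d11 := Ry (D1 (D1 v)) c ω1 ω2 τ
  set d22 := Ry (D2 (D2 v)) c ω1 ω2 τ
  set d00 := Ry (Dt (Dt v)) c ω1 ω2 τ
  have hω1 : ω1 ^ 2 = 1 - ω2 ^ 2 := by linarith
  field_simp
  ring_nf
  simp only [hω1]
  ring

/-- Uniqueness of the hyperboloid through a point. -/
theorem Hy_of_sq {s t x y : ℝ} (ht : 0 ≤ t) (h : t ^ 2 = s ^ 2 + x ^ 2 + y ^ 2) (v : SF) :
    Hy s v x y = v t x y := by
  rw [Hy, hT, ← h, sqrt_sq ht]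

theorem X0_Om (v : SF) : X0 * Om v = X1 * L2 v - X2 * L1 v := by
  simp only [Om_def, L1_def, L2_def]; ring

theorem X0_Om_Om (v : SF) : X0 * Om (Om v) =
    X1 * Om (L2 v) - X2 * Om (L1 v) - X2 * L2 v - X1 * L1 v := by
  have h := congrArg Om (X0_Om v)
  have h0 : Om X0 = 0 := by simp [Om_def]
  have h1 : Om X1 = -X2 := by simp [Om_def]
  have h2 : Om X2 = X1 := by simp [Om_def]
  rw [map_sub, Derivation.leibniz, Derivation.leibniz, Derivation.leibniz, h0, h1, h2] at h
  simp only [smul_eq_mul, mul_zero, add_zero] at h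
  rw [h]; ring

theorem pos_mul_abs {t z : ℝ} (ht : 0 < t) : t * |z| = |t * z| := by rw [abs_mul, abs_of_pos ht]

theorem Om_abs {t x y : ℝ} (ht : 0 < t) (hx : |x| ≤ t) (hy : |y| ≤ t) (v : SF) :
    |Om v t x y| ≤ |L1 v t x y| + |L2 v t x y| := by
  have h : t * Om v t x y = x * L2 v t x y - y * L1 v t x y := by
    have := congrArg (fun w : SF => w t x y) (X0_Om v)
    simpa using this
  have : t * |Om v t x y| ≤ t * (|L1 v t x y| + |L2 v t x y|) := by
    rw [pos_mul_abs ht, h]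
    refine (abs_sub _ _).trans ?_
    rw [abs_mul, abs_mul]
    nlinarith [mul_le_mul_of_nonneg_right hx (abs_nonneg (L2 v t x y)),
      mul_le_mul_of_nonneg_right hy (abs_nonneg (L1 v t x y))]
  exact le_of_mul_le_mul_left this ht

theorem Om_Om_abs {t x y : ℝ} (ht : 0 < t) (hx : |x| ≤ t) (hy : |y| ≤ t) (v : SF) :
    |Om (Om v) t x y| ≤ |L1 (L1 v) t x y| + |L2 (L1 v) t x y| + |L1 (L2 v) t x y|
      + |L2 (L2 v) t x y| + |L1 v t x y| + |L2 v t x y| := by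
  have h : t * Om (Om v) t x y = x * Om (L2 v) t x y - y * Om (L1 v) t x y - y * L2 v t x y
      - x * L1 v t x y := by
    have := congrArg (fun w : SF => w t x y) (X0_Om_Om v)
    simpa using this
  have k1 := Om_abs ht hx hy (L1 v)
  have k2 := Om_abs ht hx hy (L2 v)
  have a1 : ∀ {p q : ℝ}, |p| ≤ t → |p * q| ≤ t * |q| := fun {p q} hp => by
    rw [abs_mul]; exact mul_le_mul_of_nonneg_right hp (abs_nonneg q)
  have b1 := a1 hx (q := Om (L2 v) t x y)
  have b2 := a1 hy (q := Om (L1 v) t x y)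
  have b3 := a1 hy (q := L2 v t x y)
  have b4 := a1 hx (q := L1 v t x y)
  have m1 := mul_le_mul_of_nonneg_left k1 ht.le
  have m2 := mul_le_mul_of_nonneg_left k2 ht.le
  refine le_of_mul_le_mul_left ?_ ht
  rw [pos_mul_abs ht, h]
  have t1 := abs_sub (x * Om (L2 v) t x y - y * Om (L1 v) t x y - y * L2 v t x y) (x * L1 v t x y)
  have t2 := abs_sub (x * Om (L2 v) t x y - y * Om (L1 v) t x y) (y * L2 v t x y)
  have t3 := abs_sub (x * Om (L2 v) t x y) (y * Om (L1 v) t x y)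
  linarith

section
variable {t₀ s₀ s₁ m K c ω1 ω2 τ : ℝ} {a b : SF}

theorem unit_abs (hω : ω1 ^ 2 + ω2 ^ 2 = 1) : |ω1| ≤ 1 ∧ |ω2| ≤ 1 :=
  ⟨abs_le_one_iff_mul_self_le_one.2 (by nlinarith [sq_nonneg ω2]),
    abs_le_one_iff_mul_self_le_one.2 (by nlinarith [sq_nonneg ω1])⟩

/-- The pointwise bounds in the region `2 r ≥ t` of the cone `t - r ≥ 1`, in terms of `t`. -/
theorem ray_pw (hs₀ : 1 ≤ s₀) (hm : 0 ≤ m) (hd : Dec s₀ s₁ m a) (hω : ω1 ^ 2 + ω2 ^ 2 = 1)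
    (hc : 1 ≤ c) (hτ : 2 * c ≤ τ) (h0 : s₀ ^ 2 ≤ c * (2 * τ - c)) (h1 : c * (2 * τ - c) ≤ s₁ ^ 2)
    (hs₁ : 0 ≤ s₁) :
    |Ry a c ω1 ω2 τ| ≤ m * zr τ ∧ |Ry (Om (Om a)) c ω1 ω2 τ| ≤ 6 * m * zr τ ^ 4 ∧
    τ * |Ry (Dt a) c ω1 ω2 τ + ω1 * Ry (D1 a) c ω1 ω2 τ + ω2 * Ry (D2 a) c ω1 ω2 τ| ≤
      3 * m * zr τ := by
  obtain ⟨s, hsp, hs2⟩ : ∃ s, 0 < s ∧ s ^ 2 = c * (2 * τ - c) :=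
    ⟨√(c * (2 * τ - c)), sqrt_pos.2 (by nlinarith), sq_sqrt (by nlinarith)⟩
  have hss : s ∈ Set.Icc s₀ s₁ := ⟨abs_le_of_sq_le_sq' (by linarith) hsp.le |>.2,
    abs_le_of_sq_le_sq' (by linarith) hs₁ |>.2⟩
  have hτ0 : 0 < τ := by linarith
  have hcs : c ≤ s := abs_le_of_sq_le_sq' (by nlinarith) hsp.le |>.2
  have hsτ : s ≤ τ := abs_le_of_sq_le_sq' (by nlinarith [sq_nonneg (τ - c)]) hτ0.le |>.2
  have hz : zr s ≤ zr τ := zr_mono hsp.le hsτ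
  have hz1 : 1 ≤ zr s := one_le_zr (by linarith [hss.1])
  have hp : ∀ v : SF, Hy s v ((τ - c) * ω1) ((τ - c) * ω2) = Ry v c ω1 ω2 τ := fun v =>
    Hy_of_sq hτ0.le (by
      rw [hs2]
      have : ((τ - c) * ω1) ^ 2 + ((τ - c) * ω2) ^ 2 = (τ - c) ^ 2 * (ω1 ^ 2 + ω2 ^ 2) := by ring
      rw [add_assoc, this, hω]; ring) v
  obtain ⟨u1, u2⟩ := unit_abs hω
  have hx : ∀ ω : ℝ, |ω| ≤ 1 → |(τ - c) * ω| ≤ τ := fun ω h => by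
    rw [abs_mul, abs_of_nonneg (by linarith : 0 ≤ τ - c)]
    nlinarith
  have hl := hd.l s hss ((τ - c) * ω1) ((τ - c) * ω2)
  have hll := hd.ll s hss ((τ - c) * ω1) ((τ - c) * ω2)
  have hdd := (hd.d s hss ((τ - c) * ω1) ((τ - c) * ω2)).1
  have hzz := hd.z s hss ((τ - c) * ω1) ((τ - c) * ω2)
  rw [hp] at hdd hzz
  have mz : m * zr s ≤ m * zr τ := mul_le_mul_of_nonneg_left hz hm
  have mz4 : m * zr s ^ 4 ≤ m * zr τ ^ 4 := by gcongr
  have mz14 : m * zr τ ≤ m * zr τ ^ 4 :=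
    mul_le_mul_of_nonneg_left (le_self_pow₀ (hz1.trans hz) (by norm_num)) hm
  refine ⟨hzz.trans mz, ?_, ?_⟩
  · have := Om_Om_abs hτ0 (hx _ u1) (hx _ u2) a
    simp only [hp] at hl hll
    simp only [Ry] at *
    linarith [hll.1, hll.2.1, hll.2.2.1, hll.2.2.2, hl.1, hl.2]
  · have e : τ * (Ry (Dt a) c ω1 ω2 τ + ω1 * Ry (D1 a) c ω1 ω2 τ + ω2 * Ry (D2 a) c ω1 ω2 τ) =
        ω1 * Ry (L1 a) c ω1 ω2 τ + ω2 * Ry (L2 a) c ω1 ω2 τ + c * Ry (Dt a) c ω1 ω2 τ := by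
      simp only [Ry, L1_def, L2_def, SF.add_app, SF.mul_app, X0_app, X1_app, X2_app]
      linear_combination (-(τ - c) * Dt a τ ((τ - c) * ω1) ((τ - c) * ω2)) * hω
    simp only [hp] at hl
    rw [pos_mul_abs hτ0, e]
    refine (abs_add_three _ _ _).trans ?_
    rw [abs_mul, abs_mul, abs_mul, abs_of_pos (by linarith : 0 < c)]
    have g1 := mul_le_mul_of_nonneg_right u1 (abs_nonneg (Ry (L1 a) c ω1 ω2 τ))
    have g2 := mul_le_mul_of_nonneg_right u2 (abs_nonneg (Ry (L2 a) c ω1 ω2 τ))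
    have g3 := mul_le_mul_of_nonneg_right hcs (abs_nonneg (Ry (Dt a) c ω1 ω2 τ))
    linarith [hl.1, hl.2]
end

section
variable {t₀ s₀ s₁ m K c ω1 ω2 τ : ℝ} {a b : SF}

/-- A damped linear equation does not amplify: only the error term contributes to the growth. -/
theorem damped {W B B' : ℝ → ℝ} {τ₁ t : ℝ}
    (h : ∀ τ ∈ Set.Icc τ₁ t, ∃ q e, 0 ≤ q ∧ HasDerivAt W (-q * W τ + e) τ ∧ |e| < B' τ)
    (hB : ∀ τ ∈ Set.Icc τ₁ t, HasDerivAt B (B' τ) τ) (hB0 : ∀ τ ∈ Set.Icc τ₁ t, 0 ≤ B τ)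
    (h0 : |W τ₁| ≤ B τ₁) : ∀ τ ∈ Set.Icc τ₁ t, |W τ| ≤ B τ := by
  have h1 : ∀ τ ∈ Set.Icc τ₁ t, W τ ≤ B τ := by
    refine ode_cmp (fun τ hτ => ?_) hB ((le_abs_self _).trans h0)
    obtain ⟨q, e, hq, hd, he⟩ := h τ hτ
    refine ⟨_, hd, fun eq => ?_⟩
    rw [eq]
    nlinarith [mul_nonneg hq (hB0 τ hτ), le_abs_self e]
  have h2 : ∀ τ ∈ Set.Icc τ₁ t, -W τ ≤ B τ := by
    refine ode_cmp (f := fun τ => -W τ) (fun τ hτ => ?_) hB ((neg_le_abs _).trans h0)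
    obtain ⟨q, e, hq, hd, he⟩ := h τ hτ
    refine ⟨_, hd.neg, fun eq => ?_⟩
    have : W τ = -B τ := by linarith
    rw [this]
    nlinarith [mul_nonneg hq (hB0 τ hτ), neg_le_abs e]
  exact fun τ hτ => abs_le.2 ⟨by linarith [h2 τ hτ], h1 τ hτ⟩

/-- Comparison of `r^{1/2}` with `zr τ ^ 8 = τ^{1/2}` where `τ ≤ 2 r`. -/
theorem root_bounds (hc : 1 ≤ c) (hτ : 2 * c ≤ τ) :
    √(τ - c) ≤ zr τ ^ 8 ∧ 7 * zr τ ^ 8 ≤ 10 * √(τ - c) := by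
  have hτ0 : 0 < τ := by linarith
  have hz := zr_pos hτ0
  have e := zr_pow hτ0.le
  have hh := sq_sqrt (by linarith : 0 ≤ τ - c)
  have hn := sqrt_nonneg (τ - c)
  constructor
  · refine abs_le_of_sq_le_sq' ?_ (by positivity) |>.2
    rw [hh, ← pow_mul, e]; linarith
  · refine abs_le_of_sq_le_sq' ?_ (by positivity) |>.2
    rw [mul_pow, mul_pow, hh, ← pow_mul, e]; linarith

/-- The characteristic derivative `(∂ₜ - ∂ᵣ)(r^{1/2} a)` agrees with `2 r^{1/2} ∂ₜa` up to a bounded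
remainder which decays along the ray, since `∂ₜ + ∂ᵣ` is a good derivative. -/
theorem Wr_bd (hs₀ : 1 ≤ s₀) (hm : 0 ≤ m) (hd : Dec s₀ s₁ m a) (hω : ω1 ^ 2 + ω2 ^ 2 = 1)
    (hc : 1 ≤ c) (hτ : 2 * c ≤ τ) (h0 : s₀ ^ 2 ≤ c * (2 * τ - c)) (h1 : c * (2 * τ - c) ≤ s₁ ^ 2)
    (hs₁ : 0 ≤ s₁) : |Wr a c ω1 ω2 τ - 2 * √(τ - c) * Ry (Dt a) c ω1 ω2 τ| ≤ 4 * m ∧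
    τ * |Wr a c ω1 ω2 τ - 2 * √(τ - c) * Ry (Dt a) c ω1 ω2 τ| ≤ 4 * m * (zr τ * zr τ ^ 8) := by
  obtain ⟨p1, -, p3⟩ := ray_pw hs₀ hm hd hω hc hτ h0 h1 hs₁
  obtain ⟨r1, r2⟩ := root_bounds hc hτ
  have hτ0 : 0 < τ := by linarith
  have hz := one_le_zr (show 1 ≤ τ by linarith)
  have ez := zr_pow hτ0.le
  have hh : 0 < √(τ - c) := sqrt_pos.2 (by linarith)
  set h := √(τ - c) with hdef
  set G := Ry (Dt a) c ω1 ω2 τ + ω1 * Ry (D1 a) c ω1 ω2 τ + ω2 * Ry (D2 a) c ω1 ω2 τ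
  set A := Ry a c ω1 ω2 τ
  set Z := zr τ
  have e : Wr a c ω1 ω2 τ - 2 * h * Ry (Dt a) c ω1 ω2 τ = -(h * G + A / (2 * h)) := by
    simp only [Wr, ← hdef, G, A]; ring
  have k1 : τ * (h * |G|) ≤ 3 * m * (Z * Z ^ 8) := by
    calc τ * (h * |G|) = h * (τ * |G|) := by ring
      _ ≤ Z ^ 8 * (3 * m * Z) := by gcongr
      _ = _ := by ring
  have k2 : τ * (|A| / (2 * h)) ≤ m * (Z * Z ^ 8) := by
    rw [mul_div_assoc', div_le_iff₀ (by positivity), ← ez]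
    have : 0 ≤ m * Z * Z ^ 8 := by positivity
    calc Z ^ 16 * |A| ≤ Z ^ 16 * (m * Z) := by gcongr
      _ = (m * Z * Z ^ 8) * Z ^ 8 := by ring
      _ ≤ (m * Z * Z ^ 8) * (2 * h) := by gcongr; linarith
      _ = _ := by ring
  have k3 : τ * |-(h * G + A / (2 * h))| ≤ 4 * m * (Z * Z ^ 8) := by
    rw [abs_neg]
    have := abs_add_le (h * G) (A / (2 * h))
    rw [abs_mul, abs_div, abs_of_pos hh, abs_of_pos (by positivity : 0 < 2 * h)] at this
    nlinarith [mul_le_mul_of_nonneg_left this hτ0.le]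
  rw [e]
  refine ⟨le_of_mul_le_mul_left (k3.trans ?_) hτ0, k3⟩
  have : Z * Z ^ 8 ≤ Z ^ 16 := by
    calc Z * Z ^ 8 = Z ^ 9 := by ring
      _ ≤ Z ^ 16 := pow_le_pow_right₀ hz (by norm_num)
  rw [← ez]
  nlinarith [mul_le_mul_of_nonneg_left this hm]

/-- The characteristic derivative solves a damped linear equation with damping `q = (∂ₜb)² / 2` and
an error of order `τ^{-5/4}`, which is integrable along the ray. -/
theorem ray_err (ht₀ : 1 ≤ t₀) (hs₀ : t₀ < s₀) (h : HSol t₀ a b) (hm : 0 ≤ m)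
    (hd : Dec s₀ s₁ m a)
    (hK1 : K ^ 2 ≤ 1) (hK : ∀ s ∈ Set.Icc s₀ s₁, Pb K s a b) (hω : ω1 ^ 2 + ω2 ^ 2 = 1)
    (hc : 1 ≤ c) (hτ : 2 * c ≤ τ) (h0 : s₀ ^ 2 ≤ c * (2 * τ - c)) (h1 : c * (2 * τ - c) ≤ s₁ ^ 2)
    (hs₁ : 0 ≤ s₁) : ∃ q e, 0 ≤ q ∧ HasDerivAt (Wr a c ω1 ω2) (-q * Wr a c ω1 ω2 τ + e) τ ∧
      |e| ≤ 21 * m / zr τ ^ 20 := by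
  obtain ⟨p1, p2, -⟩ := ray_pw (by linarith) hm hd hω hc hτ h0 h1 hs₁
  have p3 := (Wr_bd (by linarith) hm hd hω hc hτ h0 h1 hs₁).2
  obtain ⟨r1, r2⟩ := root_bounds hc hτ
  have hτ0 : 0 < τ := by linarith
  have hz := one_le_zr (show 1 ≤ τ by linarith)
  have ez := zr_pow hτ0.le
  have hτs : s₀ ≤ τ := abs_le_of_sq_le_sq' (by nlinarith [sq_nonneg (τ - c)]) hτ0.le |>.2
  have hh : 0 < √(τ - c) := sqrt_pos.2 (by linarith)
  have hq : τ * Ry (Dt b) c ω1 ω2 τ ^ 2 ≤ 1 := by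
    obtain ⟨s, hsp, hs2⟩ : ∃ s, 0 < s ∧ s ^ 2 = c * (2 * τ - c) :=
      ⟨√(c * (2 * τ - c)), sqrt_pos.2 (by nlinarith), sq_sqrt (by nlinarith)⟩
    have hss : s ∈ Set.Icc s₀ s₁ := ⟨abs_le_of_sq_le_sq' (by linarith) hsp.le |>.2,
      abs_le_of_sq_le_sq' (by linarith) hs₁ |>.2⟩
    have e2 : τ ^ 2 = s ^ 2 + ((τ - c) * ω1) ^ 2 + ((τ - c) * ω2) ^ 2 := by
      have : ((τ - c) * ω1) ^ 2 + ((τ - c) * ω2) ^ 2 = (τ - c) ^ 2 * (ω1 ^ 2 + ω2 ^ 2) := by ring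
      rw [hs2, add_assoc, this, hω]; ring
    have := (hK s hss ((τ - c) * ω1) ((τ - c) * ω2)).2
    rw [Hy_of_sq hτ0.le e2, hT, ← e2, sqrt_sq hτ0.le] at this
    exact this.trans hK1
  have hbox : Ry (box a) c ω1 ω2 τ = -(Ry (Dt b) c ω1 ω2 τ ^ 2) * Ry (Dt a) c ω1 ω2 τ := by
    have := h.ea τ ((τ - c) * ω1) ((τ - c) * ω2) (show t₀ < τ by linarith)
    rw [SF.sub_app, sub_eq_zero] at this
    rw [Ry, this, Fn]
    simp only [SF.neg_app, SF.mul_app, Ry]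
    ring
  have hder := ray_deriv a hω (show c < τ by linarith)
  set h' := √(τ - c) with hdef
  set W := Wr a c ω1 ω2 τ
  set dt := Ry (Dt a) c ω1 ω2 τ
  set q := Ry (Dt b) c ω1 ω2 τ ^ 2
  set A := Ry a c ω1 ω2 τ
  set O := Ry (Om (Om a)) c ω1 ω2 τ
  set Z := zr τ
  have hq0 : 0 ≤ q := sq_nonneg _
  -- `r^{1/2} □a = -q r^{1/2} ∂ₜa`, and `2 r^{1/2} ∂ₜa` is `W` up to the remainder of `Wr_bd`.
  refine ⟨q / 2, q / 2 * (W - 2 * h' * dt) + (O + A / 4) / h' ^ 3, by positivity,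
    hder.congr_deriv (by rw [hbox]; ring), ?_⟩
  have hZ0 : 0 < Z := by linarith
  have k1 : |q / 2 * (W - 2 * h' * dt)| ≤ 2 * m / Z ^ 20 := by
    rw [abs_mul, abs_of_nonneg (by positivity : 0 ≤ q / 2), le_div_iff₀ (by positivity)]
    have h5 : Z ^ 20 * Z ^ 9 ≤ Z ^ 32 := by
      rw [← pow_add]; exact pow_le_pow_right₀ hz (by norm_num)
    have h6 : Z ^ 32 = τ * τ := by rw [← ez]; ring
    have h7 : (τ * q) * (τ * |W - 2 * h' * dt|) ≤ 1 * (4 * m * Z ^ 9) :=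
      mul_le_mul hq (p3.trans (by apply le_of_eq; ring)) (by positivity) (by norm_num)
    have h9 : 0 < Z ^ 9 := by positivity
    refine le_of_mul_le_mul_right ?_ h9
    calc q / 2 * |W - 2 * h' * dt| * Z ^ 20 * Z ^ 9 = q / 2 * |W - 2 * h' * dt| * (Z ^ 20 * Z ^ 9) := by
          ring
      _ ≤ q / 2 * |W - 2 * h' * dt| * Z ^ 32 := by gcongr
      _ = 1 / 2 * ((τ * q) * (τ * |W - 2 * h' * dt|)) := by rw [h6]; ring
      _ ≤ 1 / 2 * (1 * (4 * m * Z ^ 9)) := by gcongr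
      _ = _ := by ring
  have k2 : |(O + A / 4) / h' ^ 3| ≤ 19 * m / Z ^ 20 := by
    rw [abs_div, abs_of_pos (by positivity : 0 < h' ^ 3), div_le_div_iff₀ (by positivity)
      (by positivity)]
    have h5 : Z ≤ Z ^ 4 := le_self_pow₀ hz (by norm_num)
    have h6 : |O + A / 4| ≤ 25 / 4 * m * Z ^ 4 := by
      have := abs_add_le O (A / 4)
      rw [abs_div, abs_of_pos (by norm_num : (0 : ℝ) < 4)] at this
      nlinarith [mul_le_mul_of_nonneg_left h5 hm]
    have h7 : (7 * Z ^ 8) ^ 3 ≤ (10 * h') ^ 3 := pow_le_pow_left₀ (by positivity) r2 3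
    have h8 : Z ^ 24 ≤ 1000 / 343 * h' ^ 3 := by
      have : (7 * Z ^ 8) ^ 3 = 343 * Z ^ 24 := by ring
      have h' : (10 * h') ^ 3 = 1000 * h' ^ 3 := by ring
      linarith
    calc |O + A / 4| * Z ^ 20 ≤ 25 / 4 * m * Z ^ 4 * Z ^ 20 := by gcongr
      _ = 25 / 4 * m * Z ^ 24 := by ring
      _ ≤ 25 / 4 * m * (1000 / 343 * h' ^ 3) := by gcongr
      _ ≤ _ := by nlinarith [show 0 ≤ m * h' ^ 3 by positivity]
  refine (abs_add_le _ _).trans ((add_le_add k1 k2).trans (le_of_eq ?_))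
  ring

set_option maxHeartbeats 1600000 in
/-- The decay `t^{1/2} |∂ₜ a| ≲ m`; the constant is independent of the bootstrap constant `K`. -/
theorem ray_bound (ht₀ : 1 ≤ t₀) (hs₀ : t₀ < s₀) (h : HSol t₀ a b) (hm : 0 < m)
    (hd : Dec s₀ s₁ m a) (hK1 : K ^ 2 ≤ 1) (hK : ∀ s ∈ Set.Icc s₀ s₁, Pb K s a b) :
    ∀ s ∈ Set.Icc s₀ s₁, ∀ x y, hT s x y * Hy s (Dt a) x y ^ 2 ≤ (100 * s₀ * m) ^ 2 := by
  intro s hs x y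
  have hs0 : 0 < s := by linarith [hs.1]
  have hs00 : 0 < s₀ := by linarith
  have hs₁ : 0 ≤ s₁ := by linarith [hs.1, hs.2]
  have hT2 := hT_sq s x y
  have hTs := hT_ge (s := s) x y
  have hmz : ∀ s' : ℝ, 1 ≤ s' → zr s' ^ 2 ≤ s' := fun s' h' => by
    calc zr s' ^ 2 ≤ zr s' ^ 16 := pow_le_pow_right₀ (one_le_zr h') (by norm_num)
      _ = s' := zr_pow (by linarith)
  obtain ⟨r, hr0, hr2⟩ : ∃ r, 0 ≤ r ∧ r ^ 2 = x ^ 2 + y ^ 2 :=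
    ⟨√(x ^ 2 + y ^ 2), sqrt_nonneg _, sq_sqrt (by positivity)⟩
  set t := hT s x y with htdef
  have ht0 : 0 < t := by linarith
  have hs2 : s ^ 2 = (t - r) * (t + r) := by linear_combination hr2 - hT2
  rcases lt_or_ge (t - r) 1 with hc | hc
  · have : Hy s (Dt a) x y = 0 := h.va.Dt (Oc_open _) t x y
      ⟨by linarith [hs.1], by
        change (t - 1) ^ 2 < x ^ 2 + y ^ 2
        rw [← hr2]; nlinarith [hs.1]⟩
    rw [this]; nlinarith [sq_nonneg (100 * s₀ * m)]
  rcases lt_or_ge t (2 * (t - r)) with hn | hf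
  · have hts : t ≤ 2 * s := abs_le_of_sq_le_sq' (by nlinarith) (by linarith) |>.2
    have h1 := (hd.d s hs x y).1
    have h2 : (s * |Hy s (Dt a) x y|) ^ 2 ≤ (m * zr s) ^ 2 := pow_le_pow_left₀ (by positivity) h1 2
    rw [mul_pow, sq_abs, mul_pow] at h2
    have h3 := mul_le_mul_of_nonneg_left (hmz s (by linarith [hs.1])) (sq_nonneg m)
    have h4 : s * Hy s (Dt a) x y ^ 2 ≤ m ^ 2 := by
      refine le_of_mul_le_mul_left ?_ hs0
      nlinarith
    have h5 := mul_le_mul_of_nonneg_right hts (sq_nonneg (Hy s (Dt a) x y))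
    have h6 : 1 ≤ s₀ ^ 2 := by nlinarith
    nlinarith [mul_le_mul_of_nonneg_right h6 (sq_nonneg m)]
  obtain ⟨c, hcdef⟩ : ∃ c, c = t - r := ⟨_, rfl⟩
  rw [← hcdef] at hc hf
  have hrp : 0 < r := by linarith
  obtain ⟨ω1, hω1⟩ : ∃ ω1, ω1 = x / r := ⟨_, rfl⟩
  obtain ⟨ω2, hω2⟩ : ∃ ω2, ω2 = y / r := ⟨_, rfl⟩
  have hω : ω1 ^ 2 + ω2 ^ 2 = 1 := by
    rw [hω1, hω2, div_pow, div_pow, ← add_div, ← hr2, div_self (by positivity)]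
  have hxr : (t - c) * ω1 = x := by
    rw [hcdef, hω1, sub_sub_cancel]; field_simp
  have hyr : (t - c) * ω2 = y := by
    rw [hcdef, hω2, sub_sub_cancel]; field_simp
  have hs2' : s ^ 2 = c * (2 * t - c) := by rw [hs2, hcdef]; ring
  obtain ⟨τ₁, hτ₁⟩ : ∃ τ₁, τ₁ = max (2 * c) ((s₀ ^ 2 / c + c) / 2) := ⟨_, rfl⟩
  have hc0 : 0 < c := by linarith
  have hA : ∀ τ, (s₀ ^ 2 / c + c) / 2 ≤ τ ↔ s₀ ^ 2 ≤ c * (2 * τ - c) := fun τ => by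
    rw [div_le_iff₀ (by norm_num), ← le_sub_iff_add_le, div_le_iff₀ hc0, mul_comm c, mul_comm τ]
  have hss0 : s₀ ^ 2 ≤ s ^ 2 := pow_le_pow_left₀ (by linarith) hs.1 2
  have hss1 : s ^ 2 ≤ s₁ ^ 2 := pow_le_pow_left₀ hs0.le hs.2 2
  have hτt : τ₁ ≤ t := by
    rw [hτ₁]; exact max_le hf ((hA t).2 (by linarith))
  have hI : ∀ τ ∈ Set.Icc τ₁ t, 2 * c ≤ τ ∧ s₀ ^ 2 ≤ c * (2 * τ - c) ∧
      c * (2 * τ - c) ≤ s₁ ^ 2 := fun τ hτ =>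
    ⟨((le_max_left _ _).trans hτ₁.ge).trans hτ.1,
      (hA τ).1 (((le_max_right _ _).trans hτ₁.ge).trans hτ.1), by nlinarith [hτ.2]⟩
  have hp : ∀ τ ∈ Set.Icc τ₁ t, 0 < τ ∧ 1 ≤ zr τ := fun τ hτ =>
    ⟨by linarith [(hI τ hτ).1], one_le_zr (by linarith [(hI τ hτ).1])⟩
  have hW0 : |Wr a c ω1 ω2 τ₁| ≤ 6 * s₀ * m := by
    obtain ⟨i1, i2, i3⟩ := hI τ₁ ⟨le_rfl, hτt⟩
    have hb := (Wr_bd (by linarith) hm.le hd hω hc i1 i2 i3 hs₁).1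
    obtain ⟨s', hsp, hs2⟩ : ∃ s, 0 < s ∧ s ^ 2 = c * (2 * τ₁ - c) :=
      ⟨√(c * (2 * τ₁ - c)), sqrt_pos.2 (by nlinarith), sq_sqrt (by nlinarith)⟩
    have hss : s' ∈ Set.Icc s₀ s₁ := ⟨abs_le_of_sq_le_sq' (by linarith) hsp.le |>.2,
      abs_le_of_sq_le_sq' (by linarith) hs₁ |>.2⟩
    have e2 : τ₁ ^ 2 = s' ^ 2 + ((τ₁ - c) * ω1) ^ 2 + ((τ₁ - c) * ω2) ^ 2 := by
      have : ((τ₁ - c) * ω1) ^ 2 + ((τ₁ - c) * ω2) ^ 2 = (τ₁ - c) ^ 2 * (ω1 ^ 2 + ω2 ^ 2) := by ring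
      rw [hs2, add_assoc, this, hω]; ring
    have h1 := (hd.d s' hss ((τ₁ - c) * ω1) ((τ₁ - c) * ω2)).1
    rw [Hy_of_sq (by linarith) e2] at h1
    change s' * |Ry (Dt a) c ω1 ω2 τ₁| ≤ _ at h1
    have hh := sq_sqrt (show 0 ≤ τ₁ - c by linarith)
    have hh0 := sqrt_nonneg (τ₁ - c)
    set h' := √(τ₁ - c)
    set d := Ry (Dt a) c ω1 ω2 τ₁
    have hz' := one_le_zr (show 1 ≤ s' by linarith [hss.1])
    have key : h' * |d| ≤ s₀ * m := by
      have h2 : (s' * |d|) ^ 2 ≤ (m * zr s') ^ 2 := pow_le_pow_left₀ (by positivity) h1 2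
      rw [mul_pow m] at h2
      have h3 := mul_le_mul_of_nonneg_left (hmz s' (by linarith [hss.1])) (sq_nonneg m)
      refine abs_le_of_sq_le_sq' ?_ (by positivity) |>.2
      rw [mul_pow, hh]
      have h4 : s' * |d| ^ 2 ≤ m ^ 2 := by
        refine le_of_mul_le_mul_left ?_ hsp
        linear_combination h2 + h3
      have h7 : 1 ≤ s₀ ^ 2 := one_le_pow₀ (by linarith)
      rcases max_choice (2 * c) ((s₀ ^ 2 / c + c) / 2) with e | e
      -- the ray enters the region `2 r ≥ t` after it has crossed the initial hyperboloid
      · rw [e] at hτ₁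
        have h5 : τ₁ - c ≤ s' := abs_le_of_sq_le_sq' (by
          rw [hs2, hτ₁]; linear_combination 2 * sq_nonneg c) hsp.le |>.2
        have h6 := mul_le_mul_of_nonneg_right h5 (sq_nonneg |d|)
        have h8 := mul_le_mul_of_nonneg_right h7 (sq_nonneg m)
        linear_combination h6 + h4 + h8
      · rw [e] at hτ₁
        have h5 : s' ^ 2 = s₀ ^ 2 := by rw [hs2, hτ₁]; field_simp; ring
        have h5' : s' = s₀ := by
          rw [← abs_of_pos hsp, ← abs_of_pos (show 0 < s₀ by linarith)]
          exact (sq_eq_sq_iff_abs_eq_abs _ _).1 h5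
        have h6 : τ₁ - c ≤ s₀ ^ 2 := by linarith [div_le_self (sq_nonneg s₀) hc, sq_nonneg s₀]
        calc (τ₁ - c) * |d| ^ 2 ≤ s₀ ^ 2 * |d| ^ 2 := by gcongr
          _ = s₀ * (s' * |d| ^ 2) := by rw [h5']; ring
          _ ≤ s₀ * m ^ 2 := by gcongr
          _ ≤ (s₀ * m) ^ 2 := by
            rw [mul_pow]; gcongr; exact le_self_pow₀ (by linarith) two_ne_zero
    have h9 : |Wr a c ω1 ω2 τ₁| ≤ |Wr a c ω1 ω2 τ₁ - 2 * h' * d| + |2 * h' * d| := by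
      simpa using abs_add_le (Wr a c ω1 ω2 τ₁ - 2 * h' * d) (2 * h' * d)
    rw [abs_mul, abs_of_nonneg (by positivity : 0 ≤ 2 * h')] at h9
    have h10 : m ≤ s₀ * m := le_mul_of_one_le_left hm.le (by linarith)
    linarith
  have hWt := damped (W := Wr a c ω1 ω2) (τ₁ := τ₁) (t := t)
    (B := fun τ => 6 * s₀ * m + 88 * m - 88 * m / zr τ ^ 4)
    (B' := fun τ => 22 * m / zr τ ^ 20) (fun τ hτ => ?_) (fun τ hτ => ?_) (fun τ hτ => ?_) ?_
    t ⟨hτt, le_rfl⟩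
  · obtain ⟨i1, i2, i3⟩ := hI t ⟨hτt, le_rfl⟩
    have hb := (Wr_bd (by linarith) hm.le hd hω hc i1 i2 i3 hs₁).1
    obtain ⟨r1, r2⟩ := root_bounds hc i1
    have hh := sq_sqrt (show 0 ≤ t - c by linarith)
    have hh0 := sqrt_nonneg (t - c)
    have hz := (hp t ⟨hτt, le_rfl⟩).2
    have e : Hy s (Dt a) x y = Ry (Dt a) c ω1 ω2 t := by
      rw [Ry, hxr, hyr]; rfl
    rw [e]
    set h' := √(t - c)
    set d := Ry (Dt a) c ω1 ω2 t
    have h9 : |2 * h' * d| ≤ |Wr a c ω1 ω2 t| + |Wr a c ω1 ω2 t - 2 * h' * d| := by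
      simpa using abs_sub (Wr a c ω1 ω2 t) (Wr a c ω1 ω2 t - 2 * h' * d)
    rw [abs_mul, abs_of_nonneg (by positivity : 0 ≤ 2 * h')] at h9
    have h8 : 0 ≤ 88 * m / zr t ^ 4 := by positivity
    have h10 : m ≤ s₀ * m := le_mul_of_one_le_left hm.le (by linarith)
    have h7 : h' * |d| ≤ 49 * s₀ * m := by linarith
    have h6 : (h' * |d|) ^ 2 ≤ (49 * s₀ * m) ^ 2 := pow_le_pow_left₀ (by positivity) h7 2
    rw [mul_pow, hh, sq_abs] at h6
    calc t * d ^ 2 ≤ 2 * (t - c) * d ^ 2 :=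
          mul_le_mul_of_nonneg_right (by linarith) (sq_nonneg d)
      _ = 2 * ((t - c) * d ^ 2) := by ring
      _ ≤ 2 * (49 * s₀ * m) ^ 2 := by gcongr
      _ ≤ (100 * s₀ * m) ^ 2 := by
        have := sq_nonneg (s₀ * m)
        linear_combination 5198 * this
  · obtain ⟨i1, i2, i3⟩ := hI τ hτ
    obtain ⟨q, e, hq, hder, he⟩ := ray_err ht₀ hs₀ h hm.le hd hK1 hK hω hc i1 i2 i3 hs₁
    refine ⟨q, e, hq, hder, he.trans_lt ?_⟩
    have := (hp τ hτ).2
    change 21 * m / zr τ ^ 20 < 22 * m / zr τ ^ 20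
    exact div_lt_div_of_pos_right (by linarith) (by positivity)
  · obtain ⟨h1, h2⟩ := hp τ hτ
    have hz : 0 < zr τ := by linarith
    have := ((((zr_deriv h1).pow 4).inv (show (zr ^ 4) τ ≠ 0 from (pow_pos hz 4).ne')).const_mul (88 * m)).const_sub
      (6 * s₀ * m + 88 * m)
    refine this.congr_deriv ?_
    have ez := zr_pow h1.le
    have e20 : zr τ ^ 20 = τ * zr τ ^ 4 := by
      calc zr τ ^ 20 = zr τ ^ 16 * zr τ ^ 4 := by ring
        _ = _ := by rw [ez]
    rw [e20]
    simp only [Pi.pow_apply]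
    push_cast
    field_simp
    ring
  · have h2 := (hp τ hτ).2
    have : 88 * m / zr τ ^ 4 ≤ 88 * m := div_le_self (by positivity) (one_le_pow₀ h2)
    have : 0 < s₀ * m := by positivity
    linarith
  · have h2 := (hp τ₁ ⟨le_rfl, hτt⟩).2
    have : 88 * m / zr τ₁ ^ 4 ≤ 88 * m := div_le_self (by positivity) (one_le_pow₀ h2)
    linarith
end

/-! ### Bootstrap on the hyperboloids -/

section
variable {t₀ s₀ s₁ e K : ℝ} {a b : SF}

theorem Pb_closed (a b : SF) (K : ℝ) : IsClosed {s | Pb K s a b} := by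
  have key : ∀ v : SF, ∀ x y, Continuous fun s => hT s x y * Hy s v x y ^ 2 := fun v x y =>
    (hT_cont.comp (f := fun s : ℝ => (s, x, y)) (by fun_prop)).mul
      (((Hy_cont3 v).comp (f := fun s : ℝ => (s, x, y)) (by fun_prop)).pow 2)
  have : {s | Pb K s a b} = ⋂ x, ⋂ y, {s | hT s x y * Hy s (Dt a) x y ^ 2 ≤ K ^ 2} ∩
      {s | hT s x y * Hy s (Dt b) x y ^ 2 ≤ K ^ 2} := by
    ext s; simp [Pb]
  rw [this]
  exact isClosed_iInter fun x => isClosed_iInter fun y =>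
    (isClosed_le (key _ x y) continuous_const).inter (isClosed_le (key _ x y) continuous_const)

/-- A strict bound on one hyperboloid persists for a short while: the solution is supported over
a compact set. -/
theorem Pb_open (ht₀ : 1 ≤ t₀) (hs : t₀ < s₁) (h : HSol t₀ a b) {k : ℝ} (hk : 0 ≤ k) (hkK : k < K)
    (hp : Pb k s₁ a b) : ∀ᶠ s in 𝓝 s₁, Pb K s a b := by
  have hK2 : k ^ 2 < K ^ 2 := pow_lt_pow_left₀ hkK hk two_ne_zero
  have key : ∀ v : SF, Vo (Oc t₀) v → (∀ x y, hT s₁ x y * Hy s₁ v x y ^ 2 ≤ k ^ 2) →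
      ∀ᶠ s in 𝓝 s₁, ∀ x y, hT s x y * Hy s v x y ^ 2 ≤ K ^ 2 := fun v hv hb => by
    have h1 : ∀ᶠ s in 𝓝 s₁, ∀ p ∈ Qb ((s₁ + 1) ^ 2),
        hT s p.1 p.2 * Hy s v p.1 p.2 ^ 2 < K ^ 2 := by
      refine (Qb_compact _).eventually_forall_of_forall_eventually fun p _ => ?_
      have hc : Continuous fun q : ℝ × ℝ × ℝ => hT q.1 q.2.1 q.2.2 * Hy q.1 v q.2.1 q.2.2 ^ 2 :=
        hT_cont.mul ((Hy_cont3 v).pow 2)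
      exact hc.continuousAt.eventually_lt continuousAt_const ((hb p.1 p.2).trans_lt hK2)
    filter_upwards [h1, lt_mem_nhds hs, gt_mem_nhds (lt_add_one s₁)] with s h1 h2 h3 x y
    by_cases hq : (x, y) ∈ Qb ((s₁ + 1) ^ 2)
    · exact (h1 (x, y) hq).le
    · have hb' : s ^ 2 ≤ (s₁ + 1) ^ 2 := pow_le_pow_left₀ (by linarith) h3.le 2
      have hxy : s ^ 2 ≤ |x| ∨ s ^ 2 ≤ |y| := by
        by_contra hcon
        push Not at hcon
        refine hq ⟨abs_le.1 ?_, abs_le.1 ?_⟩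
        · exact hcon.1.le.trans hb'
        · exact hcon.2.le.trans hb'
      rw [hv.hy h2 (hT_big (by linarith) hxy)]
      simp; positivity
  filter_upwards [key _ (h.va.Dt (Oc_open _)) fun x y => (hp x y).1,
    key _ (h.vb.Dt (Oc_open _)) fun x y => (hp x y).2] with s h1 h2 x y
  exact ⟨h1 x y, h2 x y⟩

/-- Continuity argument on a half-line. -/
theorem continuity_method {P Q : ℝ → Prop} {s₀ : ℝ} (hP : IsClosed {s | P s}) (h0 : Q s₀)
    (hQP : ∀ s, s₀ ≤ s → Q s → ∀ᶠ s' in 𝓝 s, P s')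
    (hPQ : ∀ s₁, s₀ ≤ s₁ → (∀ s ∈ Set.Icc s₀ s₁, P s) → Q s₁) : ∀ s, s₀ ≤ s → P s := by
  have hp0 : P s₀ := (hQP s₀ le_rfl h0).self_of_nhds
  intro s₁ hs₁
  set S : Set ℝ := {s | ∀ s' ∈ Set.Icc s₀ s, P s'}
  have hS : Set.Icc s₀ s₁ ⊆ S := by
    refine IsClosed.Icc_subset_of_forall_exists_gt ?_ ?_ ?_
    · refine isClosed_of_closure_subset fun s hs => ?_
      have hsI : s ∈ Set.Icc s₀ s₁ :=
        (closure_minimal Set.inter_subset_right isClosed_Icc) hs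
      refine ⟨fun s' hs' => ?_, hsI⟩
      have hlt : ∀ s' ∈ Set.Ico s₀ s, P s' := fun s' hs' => by
        obtain ⟨z, hz, hzS⟩ := mem_closure_iff_nhds.1 hs _ (lt_mem_nhds hs'.2)
        exact hzS.1 s' ⟨hs'.1, le_of_lt hz⟩
      rcases hs'.2.lt_or_eq with h | rfl
      · exact hlt s' ⟨hs'.1, h⟩
      · rcases hs'.1.lt_or_eq with h | rfl
        · have : closure (Set.Ico s₀ s') ⊆ {s | P s} := closure_minimal hlt hP
          rw [closure_Ico h.ne] at this
          exact this ⟨h.le, le_rfl⟩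
        · exact hp0
    · intro s' hs'
      rw [le_antisymm hs'.2 hs'.1]; exact hp0
    · rintro s ⟨hsS, hsI⟩ y hy
      obtain ⟨d, hd, hdP⟩ := Metric.eventually_nhds_iff.1 (hQP s hsI.1 (hPQ s hsI.1 hsS))
      refine ⟨min y (s + d / 2), fun s' hs' => ?_, lt_min hy (by linarith), min_le_left _ _⟩
      rcases le_or_gt s' s with h | h
      · exact hsS s' ⟨hs'.1, h⟩
      · refine hdP ?_
        rw [Real.dist_eq, abs_of_pos (by linarith)]
        linarith [hs'.2.trans (min_le_right _ _)]
  exact hS ⟨hs₁, le_rfl⟩ s₁ ⟨hs₁, le_rfl⟩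

/-- Closing the bootstrap. The hypothesis with constant `2e'` on an interval implies the one with
`e'` on the same interval, hence it holds on all hyperboloids. -/
theorem boot_dec {e' : ℝ} (ht₀ : 1 ≤ t₀) (hs₀ : t₀ < s₀) (h : HSol t₀ a b) (he : 0 < e)
    (he' : e' = 100 * s₀ * (33000 * e))
    (hsmall : 1000000000000000000000000 * ((2 * e') ^ 2 + e ^ 2) ≤ 1 / 4)
    (h0 : ∀ B, EE B 3 a b s₀ ≤ e ^ 2) (ha : ∀ x y, |Hy s₀ a x y| ≤ e)
    (hb : ∀ x y, |Hy s₀ b x y| ≤ e) (hP0 : Pb e' s₀ a b) : ∀ s, s₀ ≤ s → Pb (2 * e') s a b := by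
  have he'0 : 0 < e' := by rw [he']; nlinarith
  have hK1 : (2 * e') ^ 2 ≤ 1 := by nlinarith [sq_nonneg e]
  refine continuity_method (Q := fun s => Pb e' s a b) (Pb_closed a b _) hP0
    (fun s hs hQ => Pb_open ht₀ (by linarith) h he'0.le (by linarith) hQ) fun s₁ hs₁ hP => ?_
  obtain ⟨h2, h3, -⟩ := boot_energy ht₀ hs₀ le_rfl h (by linarith : 0 < 2 * e') hP
    (by positivity : 0 < e ^ 2) hsmall (h0 _)
  have hda : Dec s₀ s₁ (33000 * e) a := Dec.of_energy ht₀ hs₀ le_rfl h.va he.le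
    (fun s hs => (le_add_of_nonneg_right (HE_nonneg _ _ _ _)).trans (h2 s hs))
    (fun s hs => (le_add_of_nonneg_right (HE_nonneg _ _ _ _)).trans (h3 s hs)) ha
  have hdb : Dec s₀ s₁ (33000 * e) b := Dec.of_energy ht₀ hs₀ le_rfl h.vb he.le
    (fun s hs => (le_add_of_nonneg_left (HE_nonneg _ _ _ _)).trans (h2 s hs))
    (fun s hs => (le_add_of_nonneg_left (HE_nonneg _ _ _ _)).trans (h3 s hs)) hb
  intro x y
  rw [he']
  exact ⟨ray_bound ht₀ hs₀ h (by linarith) hda hK1 hP s₁ ⟨hs₁, le_rfl⟩ x y,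
    ray_bound ht₀ hs₀ h.symm (by linarith) hdb hK1 (fun s hs => (hP s hs).symm) s₁
      ⟨hs₁, le_rfl⟩ x y⟩

end

/-! ### Initial data on the first hyperboloid and global bounds -/

theorem Bd.sh {K : Set (ℝ × ℝ × ℝ)} {b c : ℝ} : ∀ {n : ℕ} {v : SF}, Bd K n c v →
    Bd {p | (p.1 - b, p.2.1, p.2.2) ∈ K} n c (sh b v)
  | 0, _, h => fun t x y hp => h (t - b) x y hp
  | n + 1, v, h => by
    refine ⟨fun t x y hp => h.1 (t - b) x y hp, ?_, ?_, ?_⟩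
    · rw [sh_Dt]; exact Bd.sh h.2.1
    · rw [sh_D1]; exact Bd.sh h.2.2.1
    · rw [sh_D2]; exact Bd.sh h.2.2.2

/-- An integral over a large square is bounded through the smaller square carrying the support. -/
theorem J_le_of_supp {B B₀ c : ℝ} (hB₀ : 0 ≤ B₀) (hc : 0 ≤ c) {G : ℝ → ℝ → ℝ} (hG : Cont2 G)
    (h : ∀ x y, G x y ≤ c) (h0 : ∀ x y, B₀ ≤ |x| ∨ B₀ ≤ |y| → G x y = 0) :
    J B G ≤ c * (2 * B₀) ^ 2 := by
  have hm : MeasurableSet (Qb B₀) := (Qb_compact B₀).measurableSet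
  have hfin : volume (Qb B₀) ≠ ⊤ := (Qb_compact B₀).measure_lt_top.ne
  have hi : Integrable ((Qb B₀).indicator fun _ => c) (volume : Measure (ℝ × ℝ)) :=
    (integrable_indicator_iff hm).2 (integrableOn_const hfin)
  calc J B G ≤ ∫ p in Qb B, (Qb B₀).indicator (fun _ => c) p := by
        refine setIntegral_mono (hG.integrableOn B) hi.integrableOn fun p => ?_
        by_cases hp : p ∈ Qb B₀
        · rw [Set.indicator_of_mem hp]; exact h _ _
        · rw [Set.indicator_of_notMem hp]
          refine (h0 p.1 p.2 ?_).le
          by_contra hcon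
          push Not at hcon
          exact hp ⟨abs_le.1 hcon.1.le, abs_le.1 hcon.2.le⟩
    _ ≤ ∫ p, (Qb B₀).indicator (fun _ => c) p :=
        setIntegral_le_integral hi (Eventually.of_forall fun p => Set.indicator_nonneg
          (fun _ _ => hc) p)
    _ = c * (2 * B₀) ^ 2 := by
        rw [integral_indicator hm, setIntegral_const, smul_eq_mul, mul_comm]
        congr 1
        rw [Qb, Measure.volume_eq_prod, measureReal_prod_prod, Real.volume_real_Icc_of_le
          (by linarith)]
        ring

section
variable {t₀ s₀ T : ℝ} {K : Set (ℝ × ℝ × ℝ)}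

/-- Bounds on a set `K` containing the first hyperboloid inside the cone are bounds on the whole
first hyperboloid, since `v` vanishes on the rest of it. -/
theorem init_bound (hs : t₀ < s₀)
    (hK : ∀ x y, 2 * hT s₀ x y ≤ s₀ ^ 2 + 1 → (hT s₀ x y, x, y) ∈ K) {n : ℕ} {c : ℝ} (hc : 0 ≤ c)
    {v : SF} (hv : Vo (Oc t₀) v) (h : Bd K n c v) (x y : ℝ) : |Hy s₀ v x y| ≤ c := by
  rcases le_or_gt (2 * hT s₀ x y) (s₀ ^ 2 + 1) with h1 | h1
  · exact h.zero _ _ _ (hK x y h1)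
  · rw [hv.hy hs h1, abs_zero]; exact hc

/-- The energy on the first hyperboloid is controlled by pointwise bounds near it, uniformly in
the size of the square over which it is integrated. -/
theorem init_hE (ht₀ : 1 ≤ t₀) (hs : t₀ < s₀) (hT1 : 1 ≤ T)
    (hK : ∀ x y, 2 * hT s₀ x y ≤ s₀ ^ 2 + 1 → (hT s₀ x y, x, y) ∈ K)
    (hKT : ∀ t x y, (t, x, y) ∈ K → |t| ≤ T ∧ |x| ≤ T ∧ |y| ≤ T) (k : ℕ) :
    ∃ A : ℝ, 0 < A ∧ ∀ c : ℝ, 0 ≤ c → ∀ v : SF, Vo (Oc t₀) v → Bd K (k + 1) c v →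
      ∀ B, HE B k v s₀ ≤ A * c ^ 2 := by
  have hs0 : 0 < s₀ := by linarith
  have base : ∀ n : ℕ, ∀ c : ℝ, 0 ≤ c → ∀ v : SF, Vo (Oc t₀) v → Bd K (n + 1) c v → ∀ B,
      hE B s₀ v ≤ (s₀ ^ 2 + 2 * (2 ^ (n + 1) * T) ^ 2) * (2 * s₀ ^ 2) ^ 2 * c ^ 2 := by
    intro n c hc v hv hb B
    obtain ⟨b1, b2⟩ := hb.boosts hT1 hKT hc
    have := J_le_of_supp (B := B) (B₀ := s₀ ^ 2) (c := (s₀ ^ 2 + 2 * (2 ^ (n + 1) * T) ^ 2) * c ^ 2)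
      (by positivity) (by positivity) (hD_cont hs0 v) (fun x y => ?_) (fun x y hxy => ?_)
    · calc hE B s₀ v ≤ _ := this
        _ = _ := by ring
    · have e0 := init_bound hs hK hc (hv.Dt (Oc_open _)) hb.2.1 x y
      have e1 := init_bound hs hK (by positivity) (hv.L1 (Oc_open _)) b1 x y
      have e2 := init_bound hs hK (by positivity) (hv.L2 (Oc_open _)) b2 x y
      have hT0 : 1 ≤ hT s₀ x y ^ 2 := one_le_pow₀ (by linarith [hT_ge (s := s₀) x y])
      have f0 : Hy s₀ (Dt v) x y ^ 2 ≤ c ^ 2 := sq_le_sq' (abs_le.1 e0).1 (abs_le.1 e0).2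
      have f1 := sq_le_sq' (abs_le.1 e1).1 (abs_le.1 e1).2
      have f2 := sq_le_sq' (abs_le.1 e2).1 (abs_le.1 e2).2
      have f3 := mul_le_mul_of_nonneg_left f0 (sq_nonneg s₀)
      refine (div_le_self (by positivity) hT0).trans ?_
      linear_combination f3 + f1 + f2
    · have hh := hT_big (s := s₀) (x := x) (y := y) (by linarith) hxy
      simp only [hD]
      rw [(hv.Dt (Oc_open _)).hy hs hh, (hv.L1 (Oc_open _)).hy hs hh,
        (hv.L2 (Oc_open _)).hy hs hh]
      simp
  induction k with
  | zero =>
    exact ⟨_, by positivity, fun c hc v hv hb B => base 0 c hc v hv hb B⟩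
  | succ k ih =>
    obtain ⟨A, hA, ih⟩ := ih
    refine ⟨(s₀ ^ 2 + 2 * (2 ^ (k + 1 + 1) * T) ^ 2) * (2 * s₀ ^ 2) ^ 2 +
      2 * A * (2 ^ (k + 1 + 1) * T) ^ 2, by positivity, fun c hc v hv hb B => ?_⟩
    obtain ⟨b1, b2⟩ := hb.boosts hT1 hKT hc
    have e0 := base (k + 1) c hc v hv hb B
    have e1 := ih _ (by positivity) _ (hv.L1 (Oc_open _)) b1 B
    have e2 := ih _ (by positivity) _ (hv.L2 (Oc_open _)) b2 B
    change hE B s₀ v + HE B k (L1 v) s₀ + HE B k (L2 v) s₀ ≤ _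
    linear_combination e0 + e1 + e2

end

theorem Van.sh {R : ℝ} {v : SF} (h : Van (Outs R) v) : Vo (Oc (R + 1)) (sh (R + 1) v) :=
  fun t x y hp => h (t - (R + 1)) x y (by linarith [hp.1]) (by
    have := hp.2
    change (t - (R + 1) + R) ^ 2 < x ^ 2 + y ^ 2
    convert this using 2; ring)

theorem Sol.sh {R : ℝ} {a b : SF} (h : Sol R a b) : HSol (R + 1) (sh (R + 1) a) (sh (R + 1) b) := by
  have key : ∀ v : SF, Van Set.univ v → Vo (Ot (R + 1)) (_root_.sh (R + 1) v) := fun v hv t x y hp =>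
    hv (t - (R + 1)) x y (by linarith [show R + 1 < t from hp]) trivial
  refine ⟨h.van1.sh, h.van2.sh, ?_, ?_⟩
  · rw [sh_box, sh_Fn, ← sh_sub]; exact key _ h.eq1
  · rw [sh_box, sh_Fn, ← sh_sub]; exact key _ h.eq2

/-- The decay of the difference `w` between a small solution and the free solution with the same
data, on all hyperboloids. -/
def Wdec (s₀ p : ℝ) (w : SF) : Prop := ∀ s, s₀ ≤ s → ∀ x y,
  (s * |Hy s (Dt w) x y| ≤ p * zr s ^ 4 ∧ s * |Hy s (D1 w) x y| ≤ p * zr s ^ 4 ∧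
    s * |Hy s (D2 w) x y| ≤ p * zr s ^ 4) ∧ |Hy s w x y| ≤ p * zr s ^ 4

/-- On all hyperboloids, the solution differs from `ε` times the free wave with the same data by
`O(ε³)`. The shift of time by `R + 1` places the supports inside the cone `|x| ≤ t - 1`. -/
theorem global_bounds {R : ℝ} (hR : 0 ≤ R) (z₁ z₂ : SF) (hz₁ : Van (Outs R) z₁)
    (hz₂ : Van (Outs R) z₂) (hb₁ : Van Set.univ (box z₁)) (hb₂ : Van Set.univ (box z₂)) :
    ∃ C ε₀ : ℝ, 0 < C ∧ 0 < ε₀ ∧ ∀ ε, 0 < ε → ε < ε₀ → ∀ a b, Sol R a b →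
      Zd (a - ε • z₁) → Zd (b - ε • z₂) →
      Wdec (R + 2) (C * ε ^ 3) (sh (R + 1) (a - ε • z₁)) ∧
      Wdec (R + 2) (C * ε ^ 3) (sh (R + 1) (b - ε • z₂)) := by
  obtain ⟨s₀, hs₀⟩ : ∃ s₀, s₀ = R + 2 := ⟨_, rfl⟩
  obtain ⟨T, hTd⟩ : ∃ T, T = s₀ ^ 2 := ⟨_, rfl⟩
  have hs2 : 2 ≤ s₀ := by linarith
  have hT0 : s₀ ≤ T := by rw [hTd]; nlinarith
  obtain ⟨C₁, ε₁, hC₁, hε₁, hloc⟩ := local_bounds hR (by linarith : 0 ≤ T) le_rfl z₁ z₂ hz₁ hz₂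
    hb₁ hb₂
  set K : Set (ℝ × ℝ × ℝ) := {p | (p.1 - (R + 1), p.2.1, p.2.2) ∈ Kb T (T + R + 1)} with hKd
  have hK : ∀ x y, 2 * hT s₀ x y ≤ s₀ ^ 2 + 1 → (hT s₀ x y, x, y) ∈ K := fun x y h => by
    have h1 := hT_ge (s := s₀) x y
    have h2 := hT_ge_x s₀ x y
    have h3 := hT_ge_y s₀ x y
    have h4 : hT s₀ x y ≤ T := by nlinarith
    exact ⟨⟨show 0 ≤ hT s₀ x y - (R + 1) by linarith, show hT s₀ x y - (R + 1) ≤ T by linarith⟩,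
      show |x| ≤ _ by linarith, show |y| ≤ _ by linarith⟩
  have hKT : ∀ t x y, (t, x, y) ∈ K → |t| ≤ T + R + 1 ∧ |x| ≤ T + R + 1 ∧ |y| ≤ T + R + 1 :=
    fun t x y h => by
      have h1 : 0 ≤ t - (R + 1) := h.1.1
      have h2 : t - (R + 1) ≤ T := h.1.2
      exact ⟨by rw [abs_of_nonneg (by linarith)]; linarith, h.2.1, h.2.2⟩
  obtain ⟨A, hA, hE3⟩ := init_hE (t₀ := R + 1) (by linarith) (by linarith) (by linarith) hK hKT 3
  obtain ⟨A', hA', hE2⟩ := init_hE (t₀ := R + 1) (by linarith) (by linarith) (by linarith) hK hKT 2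
  -- the energy constant `E`, the bootstrap constant `M`, and the constant `G` for the difference
  obtain ⟨E, hE⟩ : ∃ E, E = C₁ * (1 + 2 * A) := ⟨_, rfl⟩
  obtain ⟨M, hM⟩ : ∃ M, M = 2 * (100 * s₀ * (33000 * E)) := ⟨_, rfl⟩
  obtain ⟨G, hG⟩ : ∃ G, G = 1 + A' * C₁ ^ 2 + 1000000000000 * M ^ 4 * E ^ 2 := ⟨_, rfl⟩
  have hE0 : 0 < E := by rw [hE]; positivity
  have hEC : C₁ ≤ E := by rw [hE]; nlinarith
  have hEA : 2 * A * C₁ ^ 2 ≤ E ^ 2 := by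
    rw [hE, mul_pow, mul_comm]; gcongr; nlinarith
  have hEM : E ≤ M := by rw [hM]; nlinarith
  have hM0 : 0 < M := by linarith
  have hG1 : 1 ≤ G := by rw [hG]; nlinarith [show 0 ≤ A' * C₁ ^ 2 by positivity,
    show 0 ≤ 1000000000000 * M ^ 4 * E ^ 2 by positivity]
  refine ⟨C₁ + 32000 * G, min ε₁ (1 / (10000000000000 * M)), by positivity,
    lt_min hε₁ (by positivity), fun ε hε hεm a b hab hza hzb => ?_⟩
  obtain ⟨⟨ba, bb⟩, bwa, bwb⟩ := hloc ε hε (hεm.trans_le (min_le_left _ _)) a b hab hza hzb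
  have hMε : 10000000000000 * (M * ε) ≤ 1 := by
    have := (hεm.trans_le (min_le_right _ _)).le
    rw [le_div_iff₀ (by positivity)] at this
    linarith
  have hsol := hab.sh
  have ba' : Bd K 4 (C₁ * ε) (sh (R + 1) a) := ba.sh
  have bb' : Bd K 4 (C₁ * ε) (sh (R + 1) b) := bb.sh
  have hs1 : R + 1 < s₀ := by linarith
  have hcε : C₁ * ε ≤ E * ε := by gcongr
  have h0 : ∀ B, EE B 3 (sh (R + 1) a) (sh (R + 1) b) s₀ ≤ (E * ε) ^ 2 := fun B => by
    have e1 := hE3 _ (by positivity) _ hsol.va ba' B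
    have e2 := hE3 _ (by positivity) _ hsol.vb bb' B
    have e3 := mul_le_mul_of_nonneg_right hEA (sq_nonneg ε)
    rw [EE]
    linear_combination e1 + e2 + e3
  have hP0 : Pb (100 * s₀ * (33000 * (E * ε))) s₀ (sh (R + 1) a) (sh (R + 1) b) := by
    have key : ∀ v : SF, Vo (Oc (R + 1)) v → Bd K 3 (C₁ * ε) v → ∀ x y,
        hT s₀ x y * Hy s₀ v x y ^ 2 ≤ (100 * s₀ * (33000 * (E * ε))) ^ 2 := fun v hv hb x y => by
      have hpos : 0 < E * ε := by positivity
      rcases le_or_gt (2 * hT s₀ x y) (s₀ ^ 2 + 1) with h1 | h1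
      · have h2 := (init_bound hs1 hK (by positivity) hv hb x y).trans hcε
        have h3 : Hy s₀ v x y ^ 2 ≤ (E * ε) ^ 2 := sq_le_sq' (abs_le.1 h2).1 (abs_le.1 h2).2
        calc hT s₀ x y * Hy s₀ v x y ^ 2 ≤ s₀ ^ 2 * (E * ε) ^ 2 := by
              refine mul_le_mul (by nlinarith) h3 (by positivity) (by positivity)
          _ ≤ _ := by
            have := sq_nonneg (s₀ * (E * ε))
            linear_combination (100 ^ 2 * 33000 ^ 2 - 1) * this
      · rw [hv.hy hs1 h1]; simp; positivity
    exact fun x y => ⟨key _ (hsol.va.Dt (Oc_open _)) ba'.2.1 x y,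
      key _ (hsol.vb.Dt (Oc_open _)) bb'.2.1 x y⟩
  have hMe : 2 * (100 * s₀ * (33000 * (E * ε))) = M * ε := by rw [hM]; ring
  have hsm : 1000000000000000000000000 * ((M * ε) ^ 2 + (E * ε) ^ 2) ≤ 1 / 4 := by
    have h1 : (E * ε) ^ 2 ≤ (M * ε) ^ 2 := by gcongr
    have h2 : (10000000000000 * (M * ε)) ^ 2 ≤ 1 := by
      exact pow_le_one₀ (by positivity) hMε
    nlinarith
  have hPb := boot_dec (by linarith) hs1 hsol (by positivity : 0 < E * ε) rfl
    (by rw [hMe]; exact hsm) h0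
    (fun x y => (init_bound hs1 hK (by positivity) hsol.va ba' x y).trans hcε)
    (fun x y => (init_bound hs1 hK (by positivity) hsol.vb bb' x y).trans hcε) hP0
  rw [hMe] at hPb
  have fin : ∀ a b z : SF, HSol (R + 1) (sh (R + 1) a) (sh (R + 1) b) →
      (∀ s, s₀ ≤ s → Pb (M * ε) s (sh (R + 1) a) (sh (R + 1) b)) →
      (∀ B, EE B 3 (sh (R + 1) a) (sh (R + 1) b) s₀ ≤ (E * ε) ^ 2) →
      Van (Outs R) z → Van Set.univ (box z) → Bd K 4 (C₁ * ε ^ 3) (sh (R + 1) (a - ε • z)) →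
      Wdec s₀ ((C₁ + 32000 * G) * ε ^ 3) (sh (R + 1) (a - ε • z)) := by
    intro a b z hsol hPb h0 hz hbz hbw s hs x y
    have hv : Vo (Oc (R + 1)) (sh (R + 1) (a - ε • z)) := fun t x y hp => by
      rw [sh_sub, sh_smul, SF.sub_app, SF.smul_app, hsol.va t x y hp, hz.sh t x y hp]
      simp
    have hw : Vo (Ot (R + 1)) (box (sh (R + 1) (a - ε • z)) - Fn (sh (R + 1) a) (sh (R + 1) b)) :=
      fun t x y hp => by
        have h1 := hsol.ea t x y hp
        have h2 := hbz (t - (R + 1)) x y (by linarith [show R + 1 < t from hp]) trivial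
        rw [SF.sub_app] at h1 ⊢
        rw [sh_sub, sh_smul, box_sub, box_smul, sh_box (R + 1) z, SF.sub_app, SF.smul_app,
          sh_app, h2]
        linarith
    obtain ⟨-, -, h4⟩ := boot_energy (K := M * ε) (s₁ := s) (by linarith : 1 ≤ R + 1) hs1
      le_rfl hsol (by positivity) (fun s' hs' => hPb s' hs'.1) (by positivity : 0 < (E * ε) ^ 2)
      hsm (h0 _)
    have hbw3 : Bd K 3 (C₁ * ε ^ 3) (sh (R + 1) (a - ε • z)) := hbw.pred
    have h5 := h4 _ hv hw ((G * ε ^ 3) ^ 2) (by positivity) (by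
        have e1 : 1000000000000 * M ^ 4 * E ^ 2 ≤ G ^ 2 := by
          have : 0 ≤ A' * C₁ ^ 2 := by positivity
          nlinarith
        have := mul_le_mul_of_nonneg_right e1 (by positivity : 0 ≤ (ε ^ 3) ^ 2)
        linear_combination this) (by
        have e1 : A' * C₁ ^ 2 ≤ G ^ 2 := by
          have : 0 ≤ 1000000000000 * M ^ 4 * E ^ 2 := by positivity
          nlinarith
        have := mul_le_mul_of_nonneg_right e1 (by positivity : 0 ≤ (ε ^ 3) ^ 2)
        have e2 := hE2 _ (by positivity) _ hv hbw3 (2 * s ^ 2)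
        linear_combination this + e2)
    have h6 : ∀ s' ∈ Set.Icc s₀ s, HE (2 * s ^ 2) 2 (sh (R + 1) (a - ε • z)) s' ≤
        (G * ε ^ 3 * zr s' ^ 4) ^ 2 := fun s' hs' => (h5 s' hs').trans (le_of_eq (by ring))
    have hz1 : 1 ≤ zr s := one_le_zr (by linarith)
    have d1 := decay_D (by linarith) (by linarith) le_rfl hv (by positivity) (h6 s ⟨hs, le_rfl⟩) x y
    have d0 := decay_0 4 (by norm_num) (by linarith) hs1 le_rfl hv (by positivity) h6 x y s
      ⟨hs, le_rfl⟩
    have hi := init_bound hs1 hK (by positivity) hv hbw x y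
    have hz4 : C₁ * ε ^ 3 ≤ C₁ * ε ^ 3 * zr s ^ 4 :=
      le_mul_of_one_le_right (by positivity) (one_le_pow₀ hz1)
    have hp1 : 0 ≤ C₁ * ε ^ 3 * zr s ^ 4 := by positivity
    have hp2 : 0 ≤ G * ε ^ 3 * zr s ^ 4 := by positivity
    refine ⟨⟨?_, ?_, ?_⟩, ?_⟩
    · linarith [d1.1]
    · linarith [d1.2.1]
    · linarith [d1.2.2]
    · linarith
  rw [← hs₀]
  exact ⟨fin a b z₁ hsol hPb h0 hz₁ hb₁ bwa.sh,
    fin b a z₂ hsol.symm (fun s hs => (hPb s hs).symm) (fun B => by rw [EE_comm]; exact h0 B)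
      hz₂ hb₂ bwb.sh⟩

/-! ### Free waves: spherical means -/

/-- Integrals over a square of a function depending smoothly on parameters are smooth in the
parameters. -/
theorem contDiff_setIntegral (B : ℝ) (n : ℕ) :
    ∀ {F : Type} [NormedAddCommGroup F] [NormedSpace ℝ F] [CompleteSpace F]
      {G : (ℝ × ℝ × ℝ) → (ℝ × ℝ) → F},
      ContDiff ℝ (⊤ : ℕ∞) (fun z : (ℝ × ℝ × ℝ) × (ℝ × ℝ) => G z.1 z.2) →
      ContDiff ℝ n (fun q => ∫ p in Qb B, G q p) := by
  induction n with
  | zero =>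
    intro F _ _ _ G hG
    have h := continuous_parametric_integral_of_continuous (μ := volume) (f := G)
      hG.continuous (Qb_compact B)
    exact contDiff_zero.2 h
  | succ n ih =>
    intro F _ _ _ G hG
    set H : (ℝ × ℝ × ℝ) × (ℝ × ℝ) → F := fun z => G z.1 z.2 with hH
    set G' : (ℝ × ℝ × ℝ) → (ℝ × ℝ) → ((ℝ × ℝ × ℝ) →L[ℝ] F) := fun q p =>
      (fderiv ℝ H (q, p)).comp (ContinuousLinearMap.inl ℝ (ℝ × ℝ × ℝ) (ℝ × ℝ)) with hG'
    have hs : ContDiff ℝ (⊤ : ℕ∞) (fun z : (ℝ × ℝ × ℝ) × (ℝ × ℝ) => G' z.1 z.2) :=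
      ((contDiff_infty_iff_fderiv.1 hG).2).clm_comp contDiff_const
    have hd : ∀ q p, HasFDerivAt (fun q => G q p) (G' q p) q := fun q p => by
      have h1 := ((contDiff_infty_iff_fderiv.1 hG).1 (q, p)).hasFDerivAt
      have h2 : HasFDerivAt (fun q : ℝ × ℝ × ℝ => (q, p))
        (ContinuousLinearMap.inl ℝ (ℝ × ℝ × ℝ) (ℝ × ℝ)) q := hasFDerivAt_prodMk_left q p
      exact h1.comp q h2
    refine contDiff_succ_iff_hasFDerivAt.2 ⟨fun q => ∫ p in Qb B, G' q p, ih hs, fun q => ?_⟩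
    have hc : ∀ q, Continuous (G q) := fun q =>
      hG.continuous.comp (f := fun p : ℝ × ℝ => (q, p)) (by fun_prop)
    have hc' : ∀ q, Continuous (G' q) := fun q =>
      hs.continuous.comp (f := fun p : ℝ × ℝ => (q, p)) (by fun_prop)
    obtain ⟨K, hK⟩ := ((isCompact_closedBall q 1).prod (Qb_compact B)).exists_bound_of_continuousOn
      hs.continuous.continuousOn
    refine hasFDerivAt_integral_of_dominated_of_fderiv_le (s := Metric.closedBall q 1)
      (bound := fun _ => K) (F' := G') (Metric.closedBall_mem_nhds q one_pos)
      (Eventually.of_forall fun q => (hc q).aestronglyMeasurable)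
      ((hc q).continuousOn.integrableOn_compact (Qb_compact B)) (hc' q).aestronglyMeasurable
      ?_ ?_ ?_
    · refine (ae_restrict_iff' (Qb_meas B)).2 (Eventually.of_forall fun p hp x hx => ?_)
      exact hK (x, p) ⟨hx, hp⟩
    · exact continuous_const.continuousOn.integrableOn_compact (Qb_compact B)
    · exact Eventually.of_forall fun p x _ => hd x p

/-- First frame component of the point of the unit disc with angles `(β, ψ)`. -/
def fa (β ψ : ℝ) : ℝ := -(cos (β / 2) * cos ψ)
/-- Second frame component of the point of the unit disc with angles `(β, ψ)`. -/
def fg (β _ψ : ℝ) : ℝ := sin (β / 2)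
/-- The density of surface measure in the angles `(β, ψ)`, up to a constant. -/
def fc (β _ψ : ℝ) : ℝ := cos (β / 2)

/-- The value of `φ(0,·)` at `x + t (a e + g e^⊥)`, where `e = (e1,e2)`. -/
def fP (e1 e2 : ℝ) (φ : SF) (t x y β ψ : ℝ) : ℝ :=
  φ 0 (x + t * (fa β ψ * e1 - fg β ψ * e2)) (y + t * (fa β ψ * e2 + fg β ψ * e1))

/-- Weighted mean of `φ(0,·)` over the projected sphere of radius `t` about `x`. -/
def NN (e1 e2 : ℝ) (wt : ℝ → ℝ → ℝ) (φ : SF) (t x y : ℝ) : ℝ :=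
  J π (fun β ψ => wt β ψ * fP e1 e2 φ t x y β ψ)

/-- Poisson's formula: the free wave with data `(0, φ(0,·))`. -/
def MM (e1 e2 : ℝ) (φ : SF) : SF := ⟨fun t x y => t / (8 * π) * NN e1 e2 fc φ t x y, by
  change ContDiff ℝ (⊤ : ℕ∞) (fun p : ℝ × ℝ × ℝ =>
    p.1 / (8 * π) * NN e1 e2 fc φ p.1 p.2.1 p.2.2)
  refine ContDiff.mul (by fun_prop) ?_
  refine contDiff_infty.2 fun n => contDiff_setIntegral π n
    (G := fun q p => fc p.1 p.2 * fP e1 e2 φ q.1 q.2.1 q.2.2 p.1 p.2) ?_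
  refine ContDiff.mul (by unfold fc; fun_prop) ?_
  exact φ.smooth.comp (f := fun z : (ℝ × ℝ × ℝ) × (ℝ × ℝ) =>
    ((0 : ℝ), z.1.2.1 + z.1.1 * (fa z.2.1 z.2.2 * e1 - fg z.2.1 z.2.2 * e2),
      z.1.2.2 + z.1.1 * (fa z.2.1 z.2.2 * e2 + fg z.2.1 z.2.2 * e1)))
    (by unfold fa fg; fun_prop)⟩

theorem MM_app (e1 e2 : ℝ) (φ : SF) (t x y : ℝ) :
    MM e1 e2 φ t x y = t / (8 * π) * NN e1 e2 fc φ t x y := rfl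

/-- The derivative in the direction `e`. -/
def dA (e1 e2 : ℝ) : Derivation ℝ SF SF := e1 • D1 + e2 • D2
/-- The derivative in the direction `e^⊥`. -/
def dB (e1 e2 : ℝ) : Derivation ℝ SF SF := (-e2) • D1 + e1 • D2

theorem dA_def (e1 e2 : ℝ) (v : SF) : dA e1 e2 v = e1 • D1 v + e2 • D2 v := rfl
theorem dB_def (e1 e2 : ℝ) (v : SF) : dB e1 e2 v = (-e2) • D1 v + e1 • D2 v := rfl

theorem fa_cont : Continuous (fun p : ℝ × ℝ => fa p.1 p.2) := by unfold fa; fun_prop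
theorem fg_cont : Continuous (fun p : ℝ × ℝ => fg p.1 p.2) := by unfold fg; fun_prop
theorem fc_cont : Continuous (fun p : ℝ × ℝ => fc p.1 p.2) := by unfold fc; fun_prop

theorem cont2_mul {G H : ℝ → ℝ → ℝ} (hG : Cont2 G) (hH : Cont2 H) :
    Cont2 (fun x y => G x y * H x y) := Continuous.mul hG hH

theorem fP_cont (e1 e2 : ℝ) (φ : SF) : Continuous (fun z : (ℝ × ℝ × ℝ) × (ℝ × ℝ) =>
    fP e1 e2 φ z.1.1 z.1.2.1 z.1.2.2 z.2.1 z.2.2) := by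
  unfold fP
  refine φ.cont_comp continuous_const ?_ ?_ <;> (unfold fa fg; fun_prop)

theorem fP_cont2 (e1 e2 : ℝ) (φ : SF) (t x y : ℝ) : Cont2 (fP e1 e2 φ t x y) :=
  (fP_cont e1 e2 φ).comp (f := fun p : ℝ × ℝ => ((t, x, y), p)) (by fun_prop)

theorem NN_cont2 (e1 e2 : ℝ) {wt : ℝ → ℝ → ℝ} (hw : Cont2 wt) (φ : SF) (t x y : ℝ) :
    Cont2 (fun β ψ => wt β ψ * fP e1 e2 φ t x y β ψ) :=
  Continuous.mul hw (fP_cont2 e1 e2 φ t x y)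

theorem fP_deriv_t (e1 e2 : ℝ) (φ : SF) (t x y β ψ : ℝ) :
    HasDerivAt (fun t => fP e1 e2 φ t x y β ψ)
      (fa β ψ * fP e1 e2 (dA e1 e2 φ) t x y β ψ + fg β ψ * fP e1 e2 (dB e1 e2 φ) t x y β ψ) t := by
  have h := φ.comp_curve (hasDerivAt_const t (0 : ℝ))
    (((hasDerivAt_id t).mul_const (fa β ψ * e1 - fg β ψ * e2)).const_add x)
    (((hasDerivAt_id t).mul_const (fa β ψ * e2 + fg β ψ * e1)).const_add y)
  refine h.congr_deriv ?_
  simp only [fP, dA_def, dB_def, SF.add_app, SF.smul_app, id]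
  ring

theorem NN_deriv_t (e1 e2 : ℝ) {wt : ℝ → ℝ → ℝ} (hw : Cont2 wt) (φ : SF) (t x y : ℝ) :
    HasDerivAt (fun t => NN e1 e2 wt φ t x y)
      (NN e1 e2 (fun β ψ => wt β ψ * fa β ψ) (dA e1 e2 φ) t x y
        + NN e1 e2 (fun β ψ => wt β ψ * fg β ψ) (dB e1 e2 φ) t x y) t := by
  have hw' : Continuous (fun q : ℝ × ℝ × ℝ => wt q.2.1 q.2.2) := hw.comp (by fun_prop)
  have h := J_hasDerivAt (B := π) (s₀ := t) isOpen_univ (Set.mem_univ t)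
    (G := fun t β ψ => wt β ψ * fP e1 e2 φ t x y β ψ)
    (G' := fun t β ψ => wt β ψ * fa β ψ * fP e1 e2 (dA e1 e2 φ) t x y β ψ
        + wt β ψ * fg β ψ * fP e1 e2 (dB e1 e2 φ) t x y β ψ)
    (fun s _ => NN_cont2 e1 e2 hw φ s x y) ?_ ?_
  · refine h.congr_deriv ?_
    exact J_add (NN_cont2 e1 e2 (cont2_mul hw fa_cont) _ t x y)
      (NN_cont2 e1 e2 (cont2_mul hw fg_cont) _ t x y)
  · refine Continuous.continuousOn ?_
    have h1 : ∀ φ : SF, Continuous (fun q : ℝ × ℝ × ℝ => fP e1 e2 φ q.1 x y q.2.1 q.2.2) := fun φ =>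
      (fP_cont e1 e2 φ).comp (f := fun q : ℝ × ℝ × ℝ => ((q.1, x, y), (q.2.1, q.2.2)))
        (by fun_prop)
    have h2 : Continuous (fun q : ℝ × ℝ × ℝ => fa q.2.1 q.2.2) := fa_cont.comp (by fun_prop)
    have h3 : Continuous (fun q : ℝ × ℝ × ℝ => fg q.2.1 q.2.2) := fg_cont.comp (by fun_prop)
    exact ((hw'.mul h2).mul (h1 _)).add ((hw'.mul h3).mul (h1 _))
  · intro s _ β ψ
    refine ((fP_deriv_t e1 e2 φ s x y β ψ).const_mul (wt β ψ)).congr_deriv ?_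
    ring

theorem NN_deriv_1 (e1 e2 : ℝ) {wt : ℝ → ℝ → ℝ} (hw : Cont2 wt) (φ : SF) (t x y : ℝ) :
    HasDerivAt (fun x => NN e1 e2 wt φ t x y) (NN e1 e2 wt (D1 φ) t x y) x := by
  have hw' : Continuous (fun q : ℝ × ℝ × ℝ => wt q.2.1 q.2.2) := hw.comp (by fun_prop)
  refine J_hasDerivAt (B := π) (s₀ := x) isOpen_univ (Set.mem_univ x)
    (G := fun x β ψ => wt β ψ * fP e1 e2 φ t x y β ψ)
    (G' := fun x β ψ => wt β ψ * fP e1 e2 (D1 φ) t x y β ψ)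
    (fun s _ => NN_cont2 e1 e2 hw φ t s y) ?_ ?_
  · refine Continuous.continuousOn (hw'.mul ?_)
    exact (fP_cont e1 e2 (D1 φ)).comp (f := fun q : ℝ × ℝ × ℝ => ((t, q.1, y), (q.2.1, q.2.2)))
        (by fun_prop)
  · intro s _ β ψ
    have h := φ.comp_curve (hasDerivAt_const s (0 : ℝ))
      ((hasDerivAt_id s).add_const (t * (fa β ψ * e1 - fg β ψ * e2)))
      (hasDerivAt_const s (y + t * (fa β ψ * e2 + fg β ψ * e1)))
    refine (h.const_mul (wt β ψ)).congr_deriv ?_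
    simp only [fP, id]
    ring

theorem NN_deriv_2 (e1 e2 : ℝ) {wt : ℝ → ℝ → ℝ} (hw : Cont2 wt) (φ : SF) (t x y : ℝ) :
    HasDerivAt (fun y => NN e1 e2 wt φ t x y) (NN e1 e2 wt (D2 φ) t x y) y := by
  have hw' : Continuous (fun q : ℝ × ℝ × ℝ => wt q.2.1 q.2.2) := hw.comp (by fun_prop)
  refine J_hasDerivAt (B := π) (s₀ := y) isOpen_univ (Set.mem_univ y)
    (G := fun y β ψ => wt β ψ * fP e1 e2 φ t x y β ψ)
    (G' := fun y β ψ => wt β ψ * fP e1 e2 (D2 φ) t x y β ψ)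
    (fun s _ => NN_cont2 e1 e2 hw φ t x s) ?_ ?_
  · refine Continuous.continuousOn (hw'.mul ?_)
    exact (fP_cont e1 e2 (D2 φ)).comp (f := fun q : ℝ × ℝ × ℝ => ((t, x, q.1), (q.2.1, q.2.2)))
        (by fun_prop)
  · intro s _ β ψ
    have h := φ.comp_curve (hasDerivAt_const s (0 : ℝ))
      (hasDerivAt_const s (x + t * (fa β ψ * e1 - fg β ψ * e2)))
      ((hasDerivAt_id s).add_const (t * (fa β ψ * e2 + fg β ψ * e1)))
    refine (h.const_mul (wt β ψ)).congr_deriv ?_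
    simp only [fP, id]
    ring

theorem MM_D1 (e1 e2 : ℝ) (φ : SF) : D1 (MM e1 e2 φ) = MM e1 e2 (D1 φ) := SF.ext' fun t x y =>
  ((MM e1 e2 φ).hasDerivAt_1 t x y).unique ((NN_deriv_1 e1 e2 fc_cont φ t x y).const_mul _)

theorem MM_D2 (e1 e2 : ℝ) (φ : SF) : D2 (MM e1 e2 φ) = MM e1 e2 (D2 φ) := SF.ext' fun t x y =>
  ((MM e1 e2 φ).hasDerivAt_2 t x y).unique ((NN_deriv_2 e1 e2 fc_cont φ t x y).const_mul _)

theorem NN_lin (e1 e2 : ℝ) {wt : ℝ → ℝ → ℝ} (hw : Cont2 wt) (φ ψ : SF) (c d : ℝ) (t x y : ℝ) :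
    NN e1 e2 wt (c • φ + d • ψ) t x y = c * NN e1 e2 wt φ t x y + d * NN e1 e2 wt ψ t x y := by
  unfold NN
  rw [← J_const_mul, ← J_const_mul, ← J_add]
  · congr 1; funext β ψ'
    simp only [fP, SF.add_app, SF.smul_app]; ring
  · exact Continuous.mul continuous_const (NN_cont2 e1 e2 hw φ t x y)
  · exact Continuous.mul continuous_const (NN_cont2 e1 e2 hw ψ t x y)

theorem MM_lin (e1 e2 : ℝ) (φ ψ : SF) (c d : ℝ) :
    MM e1 e2 (c • φ + d • ψ) = c • MM e1 e2 φ + d • MM e1 e2 ψ := SF.ext' fun t x y => by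
  simp only [SF.add_app, SF.smul_app, MM_app, NN_lin e1 e2 fc_cont]; ring

theorem MM_Dt (e1 e2 : ℝ) (φ : SF) (t x y : ℝ) :
    Dt (MM e1 e2 φ) t x y = 1 / (8 * π) * NN e1 e2 fc φ t x y
      + t / (8 * π) * (NN e1 e2 (fun β ψ => fc β ψ * fa β ψ) (dA e1 e2 φ) t x y
        + NN e1 e2 (fun β ψ => fc β ψ * fg β ψ) (dB e1 e2 φ) t x y) :=
  ((MM e1 e2 φ).hasDerivAt_t t x y).unique
    (((hasDerivAt_id t).div_const (8 * π)).mul (NN_deriv_t e1 e2 fc_cont φ t x y))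

/-- The divergence identity on the sphere behind the wave equation for `MM`. -/
theorem sphere_div (e1 e2 : ℝ) (φ : SF) (t x y : ℝ) :
    J π (fun β ψ => t * fc β ψ * ((1 - fa β ψ ^ 2) * fP e1 e2 (dA e1 e2 (dA e1 e2 φ)) t x y β ψ
        - 2 * (fa β ψ * fg β ψ) * fP e1 e2 (dA e1 e2 (dB e1 e2 φ)) t x y β ψ
        + (1 - fg β ψ ^ 2) * fP e1 e2 (dB e1 e2 (dB e1 e2 φ)) t x y β ψ)
      - 2 * fc β ψ * (fa β ψ * fP e1 e2 (dA e1 e2 φ) t x y β ψ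
        + fg β ψ * fP e1 e2 (dB e1 e2 φ) t x y β ψ)) = 0 := by
  set A := dA e1 e2
  set B := dB e1 e2
  have hBA : B (A φ) = A (B φ) := by
    simp only [A, B, dA_def, dB_def, map_add, Derivation.map_smul, D2_D1]
    module
  have hc : ∀ v : SF, Continuous (fun p : ℝ × ℝ => fP e1 e2 v t x y p.1 p.2) :=
    fun v => fP_cont2 e1 e2 v t x y
  have hβ : ∀ (v : SF) (β ψ : ℝ), HasDerivAt (fun β => fP e1 e2 v t x y β ψ)
      (t * (sin (β / 2) * cos ψ / 2 * fP e1 e2 (A v) t x y β ψ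
        + cos (β / 2) / 2 * fP e1 e2 (B v) t x y β ψ)) β := fun v β ψ => by
    have hb : HasDerivAt (fun β : ℝ => β / 2) (1 / 2) β := (hasDerivAt_id β).div_const 2
    have h1 : HasDerivAt (fun β => fa β ψ) (sin (β / 2) * cos ψ / 2) β :=
      ((hb.cos.mul_const (cos ψ)).neg).congr_deriv (by ring)
    have h2 : HasDerivAt (fun β => fg β ψ) (cos (β / 2) / 2) β :=
      hb.sin.congr_deriv (by ring)
    have h := v.comp_curve (hasDerivAt_const β (0 : ℝ))
      ((((h1.mul_const e1).sub (h2.mul_const e2)).const_mul t).const_add x)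
      ((((h1.mul_const e2).add (h2.mul_const e1)).const_mul t).const_add y)
    refine h.congr_deriv ?_
    simp only [fP, A, B, dA_def, dB_def, SF.add_app, SF.smul_app, Pi.sub_apply, Pi.add_apply]
    ring
  have hψ : ∀ (v : SF) (β ψ : ℝ), HasDerivAt (fun ψ => fP e1 e2 v t x y β ψ)
      (t * (cos (β / 2) * sin ψ * fP e1 e2 (A v) t x y β ψ)) ψ := fun v β ψ => by
    have h1 : HasDerivAt (fun ψ => fa β ψ) (cos (β / 2) * sin ψ) ψ :=
      (((hasDerivAt_cos ψ).const_mul (cos (β / 2))).neg).congr_deriv (by ring)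
    have h2 : HasDerivAt (fun ψ => fg β ψ) 0 ψ := hasDerivAt_const _ _
    have h := v.comp_curve (hasDerivAt_const ψ (0 : ℝ))
      ((((h1.mul_const e1).sub (h2.mul_const e2)).const_mul t).const_add x)
      ((((h1.mul_const e2).add (h2.mul_const e1)).const_mul t).const_add y)
    refine h.congr_deriv ?_
    simp only [fP, A, dA_def, SF.add_app, SF.smul_app, Pi.sub_apply, Pi.add_apply]
    ring
  -- the `β`-divergence
  have k1 := J_d1 pi_pos.le
    (G := fun β ψ => 2 * (cos (β / 2) * (sin (β / 2) * cos ψ * fP e1 e2 (A φ) t x y β ψ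
      + cos (β / 2) * fP e1 e2 (B φ) t x y β ψ)))
    (G' := fun β ψ => -(sin (β / 2)) * (sin (β / 2) * cos ψ * fP e1 e2 (A φ) t x y β ψ
      + cos (β / 2) * fP e1 e2 (B φ) t x y β ψ)
      + cos (β / 2) * (cos (β / 2) * cos ψ * fP e1 e2 (A φ) t x y β ψ
        + sin (β / 2) * cos ψ * (t * (sin (β / 2) * cos ψ * fP e1 e2 (A (A φ)) t x y β ψ
          + cos (β / 2) * fP e1 e2 (A (B φ)) t x y β ψ))
        - sin (β / 2) * fP e1 e2 (B φ) t x y β ψ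
        + cos (β / 2) * (t * (sin (β / 2) * cos ψ * fP e1 e2 (A (B φ)) t x y β ψ
          + cos (β / 2) * fP e1 e2 (B (B φ)) t x y β ψ))))
    (by have := hc; unfold Cont2; fun_prop) (fun β ψ => by
      have hb : HasDerivAt (fun β : ℝ => β / 2) (1 / 2) β := (hasDerivAt_id β).div_const 2
      have h1 := hβ (A φ) β ψ
      rw [hBA] at h1
      refine ((hb.cos.mul (((hb.sin.mul_const (cos ψ)).mul h1).add
        (hb.cos.mul (hβ (B φ) β ψ)))).const_mul 2).congr_deriv ?_
      simp only [Pi.mul_apply, Pi.add_apply]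
      ring) (fun β ψ h => by
      have : cos (β / 2) = 0 := by
        rcases abs_eq pi_pos.le |>.1 h with h | h <;> rw [h]
        · exact cos_pi_div_two
        · rw [neg_div, cos_neg]; exact cos_pi_div_two
      simp [this])
  have k2 := J_d2 pi_pos.le
    (G := fun β ψ => sin ψ * fP e1 e2 (A φ) t x y β ψ)
    (G' := fun β ψ => cos ψ * fP e1 e2 (A φ) t x y β ψ
      + sin ψ * (t * (cos (β / 2) * sin ψ * fP e1 e2 (A (A φ)) t x y β ψ)))
    (by have := hc; unfold Cont2; fun_prop) (fun β ψ =>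
      ((hasDerivAt_sin ψ).mul (hψ (A φ) β ψ))) (fun β ψ h => by
      have : sin ψ = 0 := by
        rcases abs_eq pi_pos.le |>.1 h with h | h <;> rw [h] <;> simp
      simp [this])
  have k3 := J_add (B := π) (G := fun β ψ => -(sin (β / 2)) * (sin (β / 2) * cos ψ * fP e1 e2 (A φ) t x y β ψ
      + cos (β / 2) * fP e1 e2 (B φ) t x y β ψ)
      + cos (β / 2) * (cos (β / 2) * cos ψ * fP e1 e2 (A φ) t x y β ψ
        + sin (β / 2) * cos ψ * (t * (sin (β / 2) * cos ψ * fP e1 e2 (A (A φ)) t x y β ψ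
          + cos (β / 2) * fP e1 e2 (A (B φ)) t x y β ψ))
        - sin (β / 2) * fP e1 e2 (B φ) t x y β ψ
        + cos (β / 2) * (t * (sin (β / 2) * cos ψ * fP e1 e2 (A (B φ)) t x y β ψ
          + cos (β / 2) * fP e1 e2 (B (B φ)) t x y β ψ))))
    (H := fun β ψ => cos ψ * fP e1 e2 (A φ) t x y β ψ
      + sin ψ * (t * (cos (β / 2) * sin ψ * fP e1 e2 (A (A φ)) t x y β ψ)))
    (by have := hc; unfold Cont2; fun_prop) (by have := hc; unfold Cont2; fun_prop)
  rw [k1, k2, add_zero] at k3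
  rw [← k3]
  congr 1; funext β ψ
  simp only [fa, fg, fc]
  have s1 : sin (β / 2) ^ 2 = 1 - cos (β / 2) ^ 2 := sin_sq _
  have s2 : sin ψ ^ 2 = 1 - cos ψ ^ 2 := sin_sq _
  generalize fP e1 e2 (A φ) t x y β ψ = p1
  generalize fP e1 e2 (B φ) t x y β ψ = p2
  generalize fP e1 e2 (A (A φ)) t x y β ψ = p3
  generalize fP e1 e2 (A (B φ)) t x y β ψ = p4
  generalize fP e1 e2 (B (B φ)) t x y β ψ = p5
  generalize sin (β / 2) = a at *
  generalize cos (β / 2) = b at *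
  generalize sin ψ = c at *
  generalize cos ψ = d at *
  linear_combination (d * p1 - t * b * d ^ 2 * p3 - t * b * p5) * s1 - t * b * p3 * s2

theorem frame_lap {e1 e2 : ℝ} (he : e1 ^ 2 + e2 ^ 2 = 1) (φ : SF) :
    D1 (D1 φ) + D2 (D2 φ) = dA e1 e2 (dA e1 e2 φ) + dB e1 e2 (dB e1 e2 φ) := SF.ext' fun t x y => by
  simp only [dA_def, dB_def, map_add, Derivation.map_smul, D2_D1, SF.add_app, SF.smul_app]
  linear_combination (-(D1 (D1 φ) t x y) - D2 (D2 φ) t x y) * he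

theorem dB_dA (e1 e2 : ℝ) (φ : SF) : dB e1 e2 (dA e1 e2 φ) = dA e1 e2 (dB e1 e2 φ) := by
  simp only [dA_def, dB_def, map_add, Derivation.map_smul, D2_D1]
  module

/-- Poisson's formula solves the wave equation, by integration by parts in the two angles. -/
theorem MM_box {e1 e2 : ℝ} (he : e1 ^ 2 + e2 ^ 2 = 1) (φ : SF) : box (MM e1 e2 φ) = 0 :=
  SF.ext' fun t x y => by
  have hA := frame_lap he φ
  have h1 : D1 (D1 (MM e1 e2 φ)) + D2 (D2 (MM e1 e2 φ))
      = MM e1 e2 (dA e1 e2 (dA e1 e2 φ)) + MM e1 e2 (dB e1 e2 (dB e1 e2 φ)) := by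
    have l := MM_lin e1 e2 (D1 (D1 φ)) (D2 (D2 φ)) 1 1
    have r := MM_lin e1 e2 (dA e1 e2 (dA e1 e2 φ)) (dB e1 e2 (dB e1 e2 φ)) 1 1
    simp only [one_smul] at l r
    rw [MM_D1, MM_D1, MM_D2, MM_D2, ← l, hA, r]
  have h2 := (((hasDerivAt_id t).div_const (8 * π)).mul
    ((NN_deriv_t e1 e2 (cont2_mul fc_cont fa_cont) (dA e1 e2 φ) t x y).add
      (NN_deriv_t e1 e2 (cont2_mul fc_cont fg_cont) (dB e1 e2 φ) t x y)))
  have h3 := (NN_deriv_t e1 e2 fc_cont φ t x y).const_mul (1 / (8 * π))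
  have h4 := (Dt (MM e1 e2 φ)).hasDerivAt_t t x y
  have h5 := h4.unique ((h3.add h2).congr_of_eventuallyEq
    (Eventually.of_forall fun s => MM_Dt e1 e2 φ s x y))
  have h6 := congrArg (fun v : SF => v t x y) h1
  simp only [SF.add_app, MM_app] at h6
  have h7 : box (MM e1 e2 φ) t x y = pt (Dt (MM e1 e2 φ)) t x y
    - (D1 (D1 (MM e1 e2 φ)) t x y + D2 (D2 (MM e1 e2 φ)) t x y) := by
    rw [box]; simp only [SF.sub_app]; rw [← Dt_coe]; ring
  rw [h7, h5, h6, SF.zero_app]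
  have hd := sphere_div e1 e2 φ t x y
  simp only [Pi.add_apply, id, dB_dA, NN]
  set P := fP e1 e2 (dA e1 e2 (dA e1 e2 φ)) t x y
  set Q := fP e1 e2 (dA e1 e2 (dB e1 e2 φ)) t x y
  set S := fP e1 e2 (dB e1 e2 (dB e1 e2 φ)) t x y
  set U := fP e1 e2 (dA e1 e2 φ) t x y
  set V := fP e1 e2 (dB e1 e2 φ) t x y
  have cP : Continuous fun p : ℝ × ℝ => P p.1 p.2 := fP_cont2 e1 e2 _ t x y
  have cQ : Continuous fun p : ℝ × ℝ => Q p.1 p.2 := fP_cont2 e1 e2 _ t x y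
  have cS : Continuous fun p : ℝ × ℝ => S p.1 p.2 := fP_cont2 e1 e2 _ t x y
  have cU : Continuous fun p : ℝ × ℝ => U p.1 p.2 := fP_cont2 e1 e2 _ t x y
  have cV : Continuous fun p : ℝ × ℝ => V p.1 p.2 := fP_cont2 e1 e2 _ t x y
  have ca := fa_cont
  have cg := fg_cont
  have cc := fc_cont
  -- the two sides are integrals of the same function
  have key : J π (fun β ψ => t * fc β ψ * ((1 - fa β ψ ^ 2) * P β ψ
        - 2 * (fa β ψ * fg β ψ) * Q β ψ + (1 - fg β ψ ^ 2) * S β ψ)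
      - 2 * fc β ψ * (fa β ψ * U β ψ + fg β ψ * V β ψ))
    = (t * (J π (fun β ψ => fc β ψ * P β ψ) + J π (fun β ψ => fc β ψ * S β ψ))
      - t * ((J π (fun β ψ => fc β ψ * fa β ψ * fa β ψ * P β ψ)
        + J π (fun β ψ => fc β ψ * fa β ψ * fg β ψ * Q β ψ))
        + (J π (fun β ψ => fc β ψ * fg β ψ * fa β ψ * Q β ψ)
        + J π (fun β ψ => fc β ψ * fg β ψ * fg β ψ * S β ψ))))
      - 2 * (J π (fun β ψ => fc β ψ * fa β ψ * U β ψ)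
        + J π (fun β ψ => fc β ψ * fg β ψ * V β ψ)) := by
    have hadd : ∀ {G H : ℝ → ℝ → ℝ}, Cont2 G → Cont2 H →
      J π G + J π H = J π (fun x y => G x y + H x y) := fun hG hH => (J_add hG hH).symm
    have hsub : ∀ {G H : ℝ → ℝ → ℝ}, Cont2 G → Cont2 H →
      J π G - J π H = J π (fun x y => G x y - H x y) := fun hG hH => (J_sub hG hH).symm
    have hmul : ∀ {G : ℝ → ℝ → ℝ} (c : ℝ), c * J π G = J π (fun x y => c * G x y) :=
      fun c => J_const_mul.symm
    rw [hadd, hadd, hadd, hadd, hadd, hmul, hmul, hsub, hmul, hsub]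
    · congr 1; funext β ψ; ring
    all_goals unfold Cont2; fun_prop
  rw [key] at hd
  linear_combination (-1 / (8 * π)) * hd

theorem MM_zero (e1 e2 : ℝ) (φ : SF) (x y : ℝ) : MM e1 e2 φ 0 x y = 0 := by
  rw [MM_app]; simp

theorem J_fc : J π fc = 8 * π := by
  rw [J_iter2 fc_cont]
  have h : (∫ x in Set.Icc (-π) π, cos (x / 2)) = 4 := by
    rw [integral_Icc_eq_integral_Ioc, ← intervalIntegral.integral_of_le (by linarith [pi_pos])]
    have := intervalIntegral.integral_comp_div (a := -π) (b := π) cos (c := 2) (by norm_num)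
    rw [this, integral_cos]
    simp [neg_div]; norm_num
  simp only [fc, setIntegral_const, smul_eq_mul, integral_const_mul]
  rw [h]
  simp [Measure.real, Real.volume_Icc]
  rw [ENNReal.toReal_ofReal (by linarith [pi_pos])]; ring

theorem MM_Dt_zero (e1 e2 : ℝ) (φ : SF) (x y : ℝ) : Dt (MM e1 e2 φ) 0 x y = φ 0 x y := by
  rw [MM_Dt]
  have : NN e1 e2 fc φ 0 x y = φ 0 x y * J π fc := by
    rw [← J_const_mul]; unfold NN fP; congr 1; funext β ψ; simp [mul_comm]
  rw [this, J_fc]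
  have : (π : ℝ) ≠ 0 := pi_ne_zero
  field_simp; simp

/-- The free wave with data `(f(0,·), g(0,·))`. -/
def ZZ (e1 e2 : ℝ) (f g : SF) : SF := Dt (MM e1 e2 f) + MM e1 e2 g

theorem ZZ_box {e1 e2 : ℝ} (he : e1 ^ 2 + e2 ^ 2 = 1) (f g : SF) : box (ZZ e1 e2 f g) = 0 := by
  rw [ZZ, box_add, box_Dt, MM_box he, MM_box he]; simp

theorem MM_Dt2 {e1 e2 : ℝ} (he : e1 ^ 2 + e2 ^ 2 = 1) (φ : SF) :
    Dt (Dt (MM e1 e2 φ)) = MM e1 e2 (D1 (D1 φ) + D2 (D2 φ)) := by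
  have h := MM_box he φ
  have l := MM_lin e1 e2 (D1 (D1 φ)) (D2 (D2 φ)) 1 1
  simp only [one_smul] at l
  rw [l, ← MM_D1, ← MM_D1, ← MM_D2, ← MM_D2]
  rw [box] at h
  linear_combination h

theorem ZZ_zero (e1 e2 : ℝ) (f g : SF) (x y : ℝ) : ZZ e1 e2 f g 0 x y = f 0 x y := by
  rw [ZZ, SF.add_app, MM_zero, MM_Dt_zero, add_zero]

theorem ZZ_Dt_zero {e1 e2 : ℝ} (he : e1 ^ 2 + e2 ^ 2 = 1) (f g : SF) (x y : ℝ) :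
    Dt (ZZ e1 e2 f g) 0 x y = g 0 x y := by
  rw [ZZ, map_add, SF.add_app, MM_Dt2 he, MM_zero, MM_Dt_zero, zero_add]

/-- The frame used in Poisson's formula is immaterial. -/
theorem ZZ_frame {e1 e2 : ℝ} (he : e1 ^ 2 + e2 ^ 2 = 1) (f g : SF) {t x y : ℝ} (ht : 0 ≤ t) :
    ZZ 1 0 f g t x y = ZZ e1 e2 f g t x y := by
  have h1 : (1 : ℝ) ^ 2 + 0 ^ 2 = 1 := by norm_num
  refine free_unique (fun t x y _ => by rw [ZZ_box h1]; rfl)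
    (fun t x y _ => by rw [ZZ_box he]; rfl) (fun x y => ?_) (fun x y => ?_) ht
  · rw [ZZ_zero, ZZ_zero]
  · rw [ZZ_Dt_zero h1, ZZ_Dt_zero he]

theorem ZZ_frame_Dt {e1 e2 : ℝ} (he : e1 ^ 2 + e2 ^ 2 = 1) (f g : SF) {t x y : ℝ} (ht : 0 < t) :
    Dt (ZZ 1 0 f g) t x y = Dt (ZZ e1 e2 f g) t x y :=
  ((ZZ 1 0 f g).hasDerivAt_t t x y).unique (((ZZ e1 e2 f g).hasDerivAt_t t x y).congr_of_eventuallyEq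
    (by filter_upwards [lt_mem_nhds ht] with s hs using ZZ_frame he f g hs.le))

theorem ZZ_frame_D1 {e1 e2 : ℝ} (he : e1 ^ 2 + e2 ^ 2 = 1) (f g : SF) {t x y : ℝ} (ht : 0 ≤ t) :
    D1 (ZZ 1 0 f g) t x y = D1 (ZZ e1 e2 f g) t x y :=
  ((ZZ 1 0 f g).hasDerivAt_1 t x y).unique (((ZZ e1 e2 f g).hasDerivAt_1 t x y).congr_of_eventuallyEq
    (Eventually.of_forall fun _ => ZZ_frame he f g ht))

theorem ZZ_frame_D2 {e1 e2 : ℝ} (he : e1 ^ 2 + e2 ^ 2 = 1) (f g : SF) {t x y : ℝ} (ht : 0 ≤ t) :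
    D2 (ZZ 1 0 f g) t x y = D2 (ZZ e1 e2 f g) t x y :=
  ((ZZ 1 0 f g).hasDerivAt_2 t x y).unique (((ZZ e1 e2 f g).hasDerivAt_2 t x y).congr_of_eventuallyEq
    (Eventually.of_forall fun _ => ZZ_frame he f g ht))

/-- `φ` is supported in the disc of radius `R`. -/
def Ts (R : ℝ) (φ : SF) : Prop := Vo {p | R ^ 2 < p.2.1 ^ 2 + p.2.2 ^ 2} φ

theorem Ts_open (R : ℝ) : IsOpen {p : ℝ × ℝ × ℝ | R ^ 2 < p.2.1 ^ 2 + p.2.2 ^ 2} :=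
  isOpen_lt (by fun_prop) (by fun_prop)

theorem Ts.add {R : ℝ} {φ ψ : SF} (h : Ts R φ) (h' : Ts R ψ) : Ts R (φ + ψ) := fun t x y hp => by
  rw [SF.add_app, h t x y hp, h' t x y hp, add_zero]
theorem Ts.sub {R : ℝ} {φ ψ : SF} (h : Ts R φ) (h' : Ts R ψ) : Ts R (φ - ψ) := fun t x y hp => by
  rw [SF.sub_app, h t x y hp, h' t x y hp, sub_zero]
theorem Ts.smul {R : ℝ} {φ : SF} (h : Ts R φ) (c : ℝ) : Ts R (c • φ) := fun t x y hp => by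
  rw [SF.smul_app, h t x y hp, mul_zero]
theorem Ts.mul {R : ℝ} {φ : SF} (h : Ts R φ) (ψ : SF) : Ts R (ψ * φ) := fun t x y hp => by
  rw [SF.mul_app, h t x y hp, mul_zero]
theorem Ts.D1 {R : ℝ} {φ : SF} (h : Ts R φ) : Ts R (D1 φ) := Vo.D1 (Ts_open R) h
theorem Ts.D2 {R : ℝ} {φ : SF} (h : Ts R φ) : Ts R (D2 φ) := Vo.D2 (Ts_open R) h
theorem Ts.dA {R : ℝ} {φ : SF} (h : Ts R φ) (e1 e2 : ℝ) : Ts R (dA e1 e2 φ) :=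
  (h.D1.smul e1).add (h.D2.smul e2)
theorem Ts.dB {R : ℝ} {φ : SF} (h : Ts R φ) (e1 e2 : ℝ) : Ts R (dB e1 e2 φ) :=
  (h.D1.smul (-e2)).add (h.D2.smul e1)
theorem Ts.Om {R : ℝ} {φ : SF} (h : Ts R φ) : Ts R (Om φ) := (h.D2.mul X1).sub (h.D1.mul X2)

theorem ZZ_Van {R : ℝ} (hR : 0 ≤ R) {f g : SF} (hf : Ts R f) (hg : Ts R g) :
    Van (Outs R) (ZZ 1 0 f g) := by
  have h1 : (1 : ℝ) ^ 2 + 0 ^ 2 = 1 := by norm_num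
  have := finite_speed (v := ZZ 1 0 f g) (q := 0) (fun _ _ _ _ => le_rfl)
    (fun t x y _ => by rw [ZZ_box h1]; simp) hR
    (fun x y h => by rw [ZZ_zero]; exact hf 0 x y h)
    (fun x y h => by rw [ZZ_Dt_zero h1]; exact hg 0 x y h)
  exact fun t x y ht h => this t x y ht h

theorem ZZ_Om (f g : SF) {t x y : ℝ} (ht : 0 ≤ t) :
    Om (ZZ 1 0 f g) t x y = ZZ 1 0 (Om f) (Om g) t x y := by
  have h1 : (1 : ℝ) ^ 2 + 0 ^ 2 = 1 := by norm_num
  refine free_unique (fun t x y _ => by rw [box_Om, ZZ_box h1]; simp)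
    (fun t x y _ => by rw [ZZ_box h1]; rfl) (fun x y => ?_) (fun x y => ?_) ht
  · rw [ZZ_zero]
    simp only [Om_def, SF.sub_app, SF.mul_app]
    congr 2
    · exact ((ZZ 1 0 f g).hasDerivAt_2 0 x y).unique ((f.hasDerivAt_2 0 x y).congr_of_eventuallyEq
        (Eventually.of_forall fun s => ZZ_zero 1 0 f g x s))
    · exact ((ZZ 1 0 f g).hasDerivAt_1 0 x y).unique ((f.hasDerivAt_1 0 x y).congr_of_eventuallyEq
        (Eventually.of_forall fun s => ZZ_zero 1 0 f g s y))
  · rw [ZZ_Dt_zero h1]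
    have e : Dt (Om (ZZ 1 0 f g)) = Om (Dt (ZZ 1 0 f g)) := by
      simp [Om_def, D1_Dt, D2_Dt]
    rw [e]
    simp only [Om_def, SF.sub_app, SF.mul_app]
    congr 2
    · exact ((Dt (ZZ 1 0 f g)).hasDerivAt_2 0 x y).unique
        ((g.hasDerivAt_2 0 x y).congr_of_eventuallyEq
        (Eventually.of_forall fun s => ZZ_Dt_zero h1 f g x s))
    · exact ((Dt (ZZ 1 0 f g)).hasDerivAt_1 0 x y).unique
        ((g.hasDerivAt_1 0 x y).congr_of_eventuallyEq
        (Eventually.of_forall fun s => ZZ_Dt_zero h1 f g s y))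

/-! ### Free waves: decay -/

/-- Integral of a function bounded by `K` whose support has diameter at most `d`. -/
theorem small_supp_int {h : ℝ → ℝ} {S : Set ℝ} (hS : MeasurableSet S) {K d : ℝ} (hK0 : 0 ≤ K) (hd : 0 ≤ d)
    (hK : ∀ x ∈ S, |h x| ≤ K)
    (hsm : ∀ x ∈ S, ∀ y ∈ S, h x ≠ 0 → h y ≠ 0 → |x - y| ≤ d) :
    |∫ x in S, h x| ≤ 2 * K * d := by
  by_cases h0 : ∀ x ∈ S, h x = 0
  · rw [setIntegral_congr_fun hS (g := fun _ => 0) h0]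
    simp; positivity
  · push Not at h0
    obtain ⟨x₀, hx₀, hne⟩ := h0
    have h1 : ∫ x in S, h x = ∫ x in S ∩ Set.Icc (x₀ - d) (x₀ + d), h x := by
      refine setIntegral_eq_of_subset_of_forall_sdiff_eq_zero hS Set.inter_subset_left
        fun x hx => ?_
      by_contra hx0
      have := abs_le.1 (hsm x hx.1 x₀ hx₀ hx0 hne)
      exact hx.2 ⟨hx.1, ⟨by linarith, by linarith⟩⟩
    rw [h1]
    have hfin : volume (S ∩ Set.Icc (x₀ - d) (x₀ + d)) < ⊤ :=
      (measure_mono Set.inter_subset_right).trans_lt (by simp)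
    have h2 := norm_setIntegral_le_of_norm_le_const (f := h) (C := K) hfin
      (fun x hx => hK x hx.1)
    have h3 : volume.real (S ∩ Set.Icc (x₀ - d) (x₀ + d)) ≤ 2 * d := by
      have := measureReal_mono (μ := volume) (s₁ := S ∩ Set.Icc (x₀ - d) (x₀ + d))
        Set.inter_subset_right (by simp)
      rw [Real.volume_real_Icc_of_le (by linarith)] at this
      linarith
    calc _ ≤ K * volume.real (S ∩ Set.Icc (x₀ - d) (x₀ + d)) := h2
      _ ≤ K * (2 * d) := mul_le_mul_of_nonneg_left h3 hK0
      _ = _ := by ring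

/-- A quantitative form of strict monotonicity of the cosine: in the angular variable, points with
close cosines are close. -/
theorem cos_gap {x y : ℝ} (hx : 0 ≤ x) (hxy : x ≤ y) (hy : y ≤ π) :
    2 * ((y - x) / π) ^ 2 ≤ cos x - cos y := by
  have hp := pi_pos
  have h1 : (y - x) / π ≤ sin ((y - x) / 2) := by
    have := Real.mul_le_sin (x := (y - x) / 2) (by linarith) (by linarith)
    calc _ = 2 / π * ((y - x) / 2) := by field_simp
      _ ≤ _ := this
  have h0 : 0 ≤ (y - x) / π := div_nonneg (by linarith) hp.le
  have h2 : sin ((y - x) / 2) ≤ sin ((x + y) / 2) := by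
    rcases le_total ((x + y) / 2) (π / 2) with h | h
    · exact sin_le_sin_of_le_of_le_pi_div_two (by linarith) h (by linarith)
    · rw [← sin_pi_sub ((x + y) / 2)]
      exact sin_le_sin_of_le_of_le_pi_div_two (by linarith) (by linarith) (by linarith)
  have h3 : cos x - cos y = 2 * sin ((x + y) / 2) * sin ((y - x) / 2) := by
    rw [cos_sub_cos]
    have : (x - y) / 2 = -((y - x) / 2) := by ring
    rw [this, sin_neg]; ring
  rw [h3]
  have := mul_le_mul h1 h1 h0 (h0.trans h1)
  have h4 := mul_le_mul_of_nonneg_right h2 (h0.trans h1)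
  linarith

theorem Ts.fP_supp {R : ℝ} {φ : SF} (h : Ts R φ) {e1 e2 : ℝ} (he : e1 ^ 2 + e2 ^ 2 = 1)
    {t r β ψ : ℝ} (hne : fP e1 e2 φ t (r * e1) (r * e2) β ψ ≠ 0) :
    (r + t * fa β ψ) ^ 2 + (t * fg β ψ) ^ 2 ≤ R ^ 2 := by
  by_contra hlt
  push Not at hlt
  refine hne (h 0 _ _ ?_)
  change R ^ 2 < _ ^ 2 + _ ^ 2
  refine hlt.trans_eq ?_
  linear_combination (-(r + t * fa β ψ) ^ 2 - (t * fg β ψ) ^ 2) * he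

theorem abs_of_supp {R a b : ℝ} (hR : 0 ≤ R) (h : a ^ 2 + b ^ 2 ≤ R ^ 2) : |a| ≤ R ∧ |b| ≤ R :=
  ⟨abs_le_of_sq_le_sq (by nlinarith) hR, abs_le_of_sq_le_sq (by nlinarith) hR⟩

/-- The region of integration has area `O(t^{-3/2})`. -/
theorem NN_decay {R K : ℝ} (hR : 0 ≤ R) {φ : SF} (h : Ts R φ) (hK : ∀ x y, |φ 0 x y| ≤ K)
    {e1 e2 : ℝ} (he : e1 ^ 2 + e2 ^ 2 = 1) {wt : ℝ → ℝ → ℝ} (hw : Cont2 wt)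
    (hw1 : ∀ β ψ, |wt β ψ| ≤ 1) {t : ℝ} (ht : 2 * R < t) (r : ℝ) :
    |NN e1 e2 wt φ t (r * e1) (r * e2)| ≤ 16 * π ^ 2 * R * √(2 * R) * K / (t * √t) := by
  have hp := pi_pos
  have ht0 : 0 < t := by linarith
  have hK0 : 0 ≤ K := (abs_nonneg _).trans (hK 0 0)
  set D : ℝ := π * (√(2 * R) / √t) with hD
  have hD0 : 0 ≤ D := by positivity
  set G : ℝ → ℝ → ℝ := fun β ψ => wt β ψ * fP e1 e2 φ t (r * e1) (r * e2) β ψ with hG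
  have hGc : Cont2 G := NN_cont2 e1 e2 hw φ t _ _
  have hGK : ∀ β ψ, |G β ψ| ≤ K := fun β ψ => by
    rw [hG, abs_mul]
    calc _ ≤ 1 * K := mul_le_mul (hw1 _ _) (hK _ _) (abs_nonneg _) zero_le_one
      _ = K := one_mul K
  have hsupp : ∀ β ψ, G β ψ ≠ 0 → |r + t * fa β ψ| ≤ R ∧ |t * fg β ψ| ≤ R := fun β ψ hne =>
    abs_of_supp hR (h.fP_supp he (right_ne_zero_of_mul hne))
  -- the range of `ψ` for given `β`
  have key : ∀ β ∈ Set.Icc (-π) π, ∀ x y : ℝ, |x| ≤ |y| → |y| ≤ π → G β x ≠ 0 → G β y ≠ 0 →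
      |y| - |x| ≤ D := by
    intro β hβ x y hxy hy hx0 hy0
    obtain ⟨a1, b1⟩ := hsupp β x hx0
    obtain ⟨a2, -⟩ := hsupp β y hy0
    have hs : |sin (β / 2)| ≤ 1 / 2 := by
      rw [fg, abs_mul, abs_of_pos ht0] at b1
      by_contra hlt
      push Not at hlt
      have := mul_lt_mul_of_pos_left hlt ht0
      linarith
    have hc0 : 0 ≤ cos (β / 2) := cos_nonneg_of_neg_pi_div_two_le_of_le
      (by linarith [hβ.1]) (by linarith [hβ.2])
    have hc : 1 / 2 ≤ cos (β / 2) := by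
      have h1 := sin_sq_add_cos_sq (β / 2)
      have h2 := sq_le_sq' (by linarith [(abs_le.1 hs).1]) (abs_le.1 hs).2
      nlinarith
    have hg := cos_gap (abs_nonneg x) hxy hy
    rw [cos_abs, cos_abs] at hg
    have h1 : t * (cos (β / 2) * (cos x - cos y)) ≤ 2 * R := by
      have e1 := (abs_le.1 a1).1
      have e2 := (abs_le.1 a2).2
      simp only [fa] at e1 e2
      linarith
    have h0 : 0 ≤ cos x - cos y := le_trans (by positivity) hg
    have h2 : t * (1 / 2 * (cos x - cos y)) ≤ 2 * R :=
      (mul_le_mul_of_nonneg_left (mul_le_mul_of_nonneg_right hc h0) ht0.le).trans h1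
    have h3 := mul_le_mul_of_nonneg_left hg ht0.le
    refine abs_le_of_sq_le_sq' ?_ hD0 |>.2
    have hsq : √(2 * R) ^ 2 = 2 * R := sq_sqrt (by linarith)
    have hsq' : √t ^ 2 = t := sq_sqrt ht0.le
    have e : D ^ 2 = π ^ 2 * (2 * R / t) := by rw [hD, mul_pow, div_pow, hsq, hsq']
    have e' : (|y| - |x|) ^ 2 = π ^ 2 * ((|y| - |x|) / π) ^ 2 := by field_simp
    rw [e, e']
    refine mul_le_mul_of_nonneg_left ?_ (sq_nonneg π)
    rw [le_div_iff₀ ht0]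
    linarith
  have hin : ∀ β ∈ Set.Icc (-π) π, |∫ ψ in Set.Icc (-π) π, G β ψ| ≤ 4 * K * D := by
    intro β hβ
    have hcont : Continuous (G β) := hGc.comp (f := fun ψ : ℝ => (β, ψ)) (by fun_prop)
    rw [← Set.Icc_union_Ioc_eq_Icc (b := (0 : ℝ)) (by linarith) hp.le,
      setIntegral_union (Set.disjoint_left.2 fun x hx hx' => absurd hx.2 (not_le.2 hx'.1))
        measurableSet_Ioc (hcont.integrableOn_Icc)
        (hcont.integrableOn_Icc.mono_set Set.Ioc_subset_Icc_self)]
    have i1 := small_supp_int (h := G β) (S := Set.Icc (-π) 0) (d := D) (K := K)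
      measurableSet_Icc hK0 hD0 (fun x _ => hGK β x) (fun x hx y hy hx0 hy0 => by
        have ax := abs_of_nonpos hx.2
        have ay := abs_of_nonpos hy.2
        rcases le_total |x| |y| with hle | hle
        · have := key β hβ x y hle (by rw [ay]; linarith [hy.1]) hx0 hy0
          rw [abs_of_nonneg (by linarith)]; linarith
        · have := key β hβ y x hle (by rw [ax]; linarith [hx.1]) hy0 hx0
          rw [abs_of_nonpos (by linarith)]; linarith)
    have i2 := small_supp_int (h := G β) (S := Set.Ioc 0 π) (d := D) (K := K)
      measurableSet_Ioc hK0 hD0 (fun x _ => hGK β x) (fun x hx y hy hx0 hy0 => by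
        have ax := abs_of_pos hx.1
        have ay := abs_of_pos hy.1
        rcases le_total |x| |y| with hle | hle
        · have := key β hβ x y hle (by rw [ay]; linarith [hy.2]) hx0 hy0
          rw [abs_of_nonpos (by linarith)]; linarith
        · have := key β hβ y x hle (by rw [ax]; linarith [hx.2]) hy0 hx0
          rw [abs_of_nonneg (by linarith)]; linarith)
    exact (abs_add_le _ _).trans (by linarith)
  have hout := small_supp_int (h := fun β => ∫ ψ in Set.Icc (-π) π, G β ψ)
    (S := Set.Icc (-π) π) (d := 2 * π * R / t) (K := 4 * K * D) measurableSet_Icc (by positivity)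
    (by positivity) hin (fun x hx y hy hx0 hy0 => by
      have hb : ∀ β ∈ Set.Icc (-π) π, (∫ ψ in Set.Icc (-π) π, G β ψ) ≠ 0 → |β| ≤ π * R / t := by
        intro β hβ hne
        have : ∃ ψ, G β ψ ≠ 0 := by
          by_contra hall
          push Not at hall
          exact hne (by simp [hall])
        obtain ⟨ψ, hψ⟩ := this
        have h1 := (hsupp β ψ hψ).2
        rw [fg, abs_mul, abs_of_pos ht0] at h1
        have h2 := Real.mul_abs_le_abs_sin (x := β / 2)
          (by rw [abs_div, abs_two]; have := abs_le.2 ⟨hβ.1, hβ.2⟩; linarith)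
        rw [abs_div, abs_two] at h2
        rw [le_div_iff₀ ht0]
        have h3 := (mul_le_mul_of_nonneg_left h2 ht0.le).trans h1
        have h4 := mul_le_mul_of_nonneg_left h3 hp.le
        calc _ = π * (t * (2 / π * (|β| / 2))) := by field_simp
          _ ≤ _ := h4
      have := abs_sub x y
      have h1 := hb x hx hx0
      have h2 := hb y hy hy0
      calc |x - y| ≤ |x| + |y| := this
        _ ≤ π * R / t + π * R / t := add_le_add h1 h2
        _ = _ := by ring)
  have e : NN e1 e2 wt φ t (r * e1) (r * e2) = ∫ β in Set.Icc (-π) π, ∫ ψ in Set.Icc (-π) π, G β ψ :=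
    J_iter2 hGc
  rw [e]
  refine hout.trans_eq ?_
  rw [hD]
  have : √t ≠ 0 := (sqrt_pos.2 ht0).ne'
  field_simp
  ring

theorem Ts.bdd {R : ℝ} {φ : SF} (h : Ts R φ) : ∃ K, 0 ≤ K ∧ ∀ x y, |φ 0 x y| ≤ K := by
  obtain ⟨K, hK⟩ := (Qb_compact |R|).exists_bound_of_continuousOn
    (f := fun p : ℝ × ℝ => φ 0 p.1 p.2)
    (φ.cont_comp continuous_const continuous_fst continuous_snd).continuousOn
  have hK0 : 0 ≤ K := (norm_nonneg _).trans (hK (0, 0) ⟨by simp, by simp⟩)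
  refine ⟨K, hK0, fun x y => ?_⟩
  by_cases hx : (x, y) ∈ Qb |R|
  · exact hK (x, y) hx
  · have : R ^ 2 < x ^ 2 + y ^ 2 := by
      by_contra hle
      push Not at hle
      refine hx ⟨?_, ?_⟩
      · exact abs_le.1 (sq_le_sq.1 (by nlinarith [sq_nonneg y]))
      · exact abs_le.1 (sq_le_sq.1 (by nlinarith [sq_nonneg x]))
    rw [h 0 x y this]; simpa using hK0

theorem frame_abs {e1 e2 : ℝ} (he : e1 ^ 2 + e2 ^ 2 = 1) : |e1| ≤ 1 ∧ |e2| ≤ 1 :=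
  abs_of_supp zero_le_one (by rw [he, one_pow])

theorem dA_bdd {e1 e2 : ℝ} (he : e1 ^ 2 + e2 ^ 2 = 1) {φ : SF} {K1 K2 : ℝ}
    (h1 : ∀ x y, |D1 φ 0 x y| ≤ K1) (h2 : ∀ x y, |D2 φ 0 x y| ≤ K2) (x y : ℝ) :
    |dA e1 e2 φ 0 x y| ≤ K1 + K2 ∧ |dB e1 e2 φ 0 x y| ≤ K1 + K2 := by
  obtain ⟨a1, a2⟩ := frame_abs he
  have hm : ∀ {a b K : ℝ}, |a| ≤ 1 → |b| ≤ K → |a * b| ≤ K := fun {a b K} ha hb => by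
    rw [abs_mul]
    calc _ ≤ 1 * K := mul_le_mul ha hb (abs_nonneg _) zero_le_one
      _ = K := one_mul K
  constructor
  · rw [dA_def, SF.add_app, SF.smul_app, SF.smul_app]
    exact (abs_add_le _ _).trans (add_le_add (hm a1 (h1 x y)) (hm a2 (h2 x y)))
  · rw [dB_def, SF.add_app, SF.smul_app, SF.smul_app]
    exact (abs_add_le _ _).trans
      (add_le_add (hm (by rwa [abs_neg]) (h1 x y)) (hm a1 (h2 x y)))

theorem fa_le (β ψ : ℝ) : |fa β ψ| ≤ 1 := by
  rw [fa, abs_neg, abs_mul]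
  exact mul_le_one₀ (abs_cos_le_one _) (abs_nonneg _) (abs_cos_le_one _)
theorem fg_le (β ψ : ℝ) : |fg β ψ| ≤ 1 := abs_sin_le_one _
theorem fc_le (β ψ : ℝ) : |fc β ψ| ≤ 1 := abs_cos_le_one _
theorem fcfa_le (β ψ : ℝ) : |fc β ψ * fa β ψ| ≤ 1 := by
  rw [abs_mul]; exact mul_le_one₀ (fc_le _ _) (abs_nonneg _) (fa_le _ _)
theorem fcfg_le (β ψ : ℝ) : |fc β ψ * fg β ψ| ≤ 1 := by
  rw [abs_mul]; exact mul_le_one₀ (fc_le _ _) (abs_nonneg _) (fg_le _ _)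

theorem polar (x y : ℝ) : ∃ r e1 e2 : ℝ, e1 ^ 2 + e2 ^ 2 = 1 ∧ x = r * e1 ∧ y = r * e2 := by
  by_cases h : x ^ 2 + y ^ 2 = 0
  · have hx : x = 0 := by nlinarith [sq_nonneg x, sq_nonneg y]
    have hy : y = 0 := by nlinarith [sq_nonneg x, sq_nonneg y]
    exact ⟨0, 1, 0, by norm_num, by simp [hx], by simp [hy]⟩
  · have hp : 0 < x ^ 2 + y ^ 2 := lt_of_le_of_ne (by positivity) (Ne.symm h)
    have hs := sq_sqrt hp.le
    have h0 := (sqrt_pos.2 hp).ne'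
    refine ⟨√(x ^ 2 + y ^ 2), x / √(x ^ 2 + y ^ 2), y / √(x ^ 2 + y ^ 2), ?_, ?_, ?_⟩
    · rw [div_pow, div_pow, hs]; field_simp
    · field_simp
    · field_simp

/-- Free waves with compactly supported data are `O(t^{-1/2})`. -/
theorem ZZ_decay {R : ℝ} (hR : 0 ≤ R) {f g : SF} (hf : Ts R f) (hg : Ts R g) :
    ∃ C, 0 ≤ C ∧ ∀ t x y, 2 * R + 1 < t → |ZZ 1 0 f g t x y| ≤ C / √t := by
  obtain ⟨K, hK0, hK⟩ := hf.bdd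
  obtain ⟨K1, hK10, hK1⟩ := hf.D1.bdd
  obtain ⟨K2, hK20, hK2⟩ := hf.D2.bdd
  obtain ⟨K3, hK30, hK3⟩ := hg.bdd
  have hp := pi_pos
  set c : ℝ := 16 * π ^ 2 * R * √(2 * R) with hc
  have hc0 : 0 ≤ c := by positivity
  refine ⟨(c * K + c * (K1 + K2) + c * (K1 + K2) + c * K3) / (8 * π), by positivity,
    fun t x y ht => ?_⟩
  obtain ⟨r, e1, e2, he, rfl, rfl⟩ := polar x y
  have ht0 : 0 < t := by linarith
  have hs0 : 0 < √t := sqrt_pos.2 ht0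
  have hAB := dA_bdd he hK1 hK2
  have ht' : 2 * R < t := by linarith
  have b1 := NN_decay hR hf hK he fc_cont fc_le ht' r
  have b2 := NN_decay hR (hf.dA e1 e2) (fun x y => (hAB x y).1) he
    (cont2_mul fc_cont fa_cont) fcfa_le ht' r
  have b3 := NN_decay hR (hf.dB e1 e2) (fun x y => (hAB x y).2) he
    (cont2_mul fc_cont fg_cont) fcfg_le ht' r
  have b4 := NN_decay hR hg hK3 he fc_cont fc_le ht' r
  rw [ZZ_frame he f g ht0.le, ZZ, SF.add_app, MM_Dt, MM_app]
  rw [← hc] at b1 b2 b3 b4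
  have hq : 0 ≤ t / (8 * π) := by positivity
  have e : ∀ K, t / (8 * π) * (c * K / (t * √t)) = c * K / (8 * π) / √t := fun K => by
    field_simp
  have m1 : |1 / (8 * π) * NN e1 e2 fc f t (r * e1) (r * e2)| ≤ c * K / (8 * π) / √t := by
    rw [← e, abs_mul, abs_of_pos (by positivity : 0 < 1 / (8 * π))]
    refine mul_le_mul ?_ b1 (abs_nonneg _) hq
    gcongr; linarith
  have mm : ∀ {a K : ℝ}, |a| ≤ c * K / (t * √t) → |t / (8 * π) * a| ≤ c * K / (8 * π) / √t :=
    fun {a K} ha => by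
      rw [← e, abs_mul, abs_of_nonneg hq]; exact mul_le_mul_of_nonneg_left ha hq
  rw [mul_add]
  refine ((abs_add_le _ _).trans (add_le_add ((abs_add_le _ _).trans (add_le_add m1
    ((abs_add_le _ _).trans (add_le_add (mm b2) (mm b3))))) (mm b4))).trans_eq ?_
  field_simp
  ring

/-! ### Free waves: the radiation field -/

theorem J_interval {B : ℝ} (hB : 0 ≤ B) {G : ℝ → ℝ → ℝ} (hG : Cont2 G) :
    J B G = ∫ x in -B..B, ∫ y in -B..B, G x y := by
  rw [J_iter2 hG, intervalIntegral.integral_of_le (by linarith), integral_Icc_eq_integral_Ioc]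
  congr 1; funext x
  rw [intervalIntegral.integral_of_le (by linarith), integral_Icc_eq_integral_Ioc]

theorem interval_trunc {a b : ℝ} (ha : 0 ≤ a) (hab : a ≤ b) {h : ℝ → ℝ}
    (h0 : ∀ x, |x| ≤ b → a < |x| → h x = 0) : ∫ x in -b..b, h x = ∫ x in -a..a, h x := by
  rw [intervalIntegral.integral_of_le (by linarith), intervalIntegral.integral_of_le (by linarith),
    ← integral_Icc_eq_integral_Ioc, ← integral_Icc_eq_integral_Ioc]
  refine setIntegral_eq_of_subset_of_forall_sdiff_eq_zero measurableSet_Icc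
    (Set.Icc_subset_Icc (by linarith) hab) fun x hx => ?_
  refine h0 x (abs_le.2 ⟨hx.1.1, hx.1.2⟩) ?_
  by_contra hle
  push Not at hle
  exact hx.2 ⟨(abs_le.1 hle).1, (abs_le.1 hle).2⟩

/-- Anisotropic scaling of a double integral. -/
theorem J_scale {B P κ l : ℝ} (hB : 0 ≤ B) (hκ : 0 < κ) (hl : 0 < l) (hκB : κ * B ≤ P)
    (hlB : l * B ≤ P) {G : ℝ → ℝ → ℝ} (hG : Cont2 G)
    (h0 : ∀ x y, |x| ≤ P → |y| ≤ P → G x y ≠ 0 → |x| ≤ κ * B ∧ |y| ≤ l * B) :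
    J P G = κ * l * J B (fun x y => G (κ * x) (l * y)) := by
  have hP : 0 ≤ P := le_trans (by positivity) hκB
  have hG' : Cont2 (fun x y => G (κ * x) (l * y)) :=
    hG.comp (f := fun p : ℝ × ℝ => (κ * p.1, l * p.2)) (by fun_prop)
  rw [J_interval hP hG, J_interval hB hG']
  have h1 : (∫ x in -P..P, ∫ y in -P..P, G x y)
      = ∫ x in -(κ * B)..(κ * B), ∫ y in -P..P, G x y := by
    refine interval_trunc (by positivity) hκB fun x hx hx' => ?_
    refine intervalIntegral.integral_zero_ae (Eventually.of_forall fun y hy => ?_)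
    rw [Set.uIoc_of_le (by linarith)] at hy
    by_contra hne
    exact absurd (h0 x y hx (abs_le.2 ⟨hy.1.le, hy.2⟩) hne).1 (not_le.2 hx')
  have h2 : (∫ x in -(κ * B)..(κ * B), ∫ y in -P..P, G x y)
      = ∫ x in -(κ * B)..(κ * B), ∫ y in -(l * B)..(l * B), G x y := by
    refine intervalIntegral.integral_congr fun x hx => ?_
    have hκ0 : 0 ≤ κ * B := by positivity
    rw [Set.uIcc_of_le (by linarith)] at hx
    refine interval_trunc (by positivity) hlB fun y hy hy' => ?_
    by_contra hne
    exact absurd (h0 x y ((abs_le.2 ⟨hx.1, hx.2⟩).trans hκB) hy hne).2 (not_le.2 hy')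
  rw [h1, h2]
  have h3 := intervalIntegral.integral_comp_mul_left (a := -B) (b := B)
    (fun x => ∫ y in -(l * B)..(l * B), G x y) hκ.ne'
  have h4 : ∀ x, (∫ y in -B..B, G x (l * y)) = l⁻¹ • ∫ y in l * -B..l * B, G x y := fun x =>
    intervalIntegral.integral_comp_mul_left (fun y => G x y) hl.ne'
  simp only [h4, smul_eq_mul, intervalIntegral.integral_const_mul, mul_neg] at h3 ⊢
  rw [h3]
  field_simp

theorem tendsto_mul_sin (c : ℝ) : Tendsto (fun s : ℝ => s * sin (c / s)) atTop (𝓝 c) := by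
  have h : HasDerivAt (fun y : ℝ => sin (c * y)) c 0 := by
    have := ((hasDerivAt_id (0 : ℝ)).const_mul c).sin
    simpa using this
  have h1 := hasDerivAt_iff_tendsto_slope_zero.1 h
  have h2 : Tendsto (fun s : ℝ => s⁻¹) atTop (𝓝[≠] 0) :=
    tendsto_inv_atTop_nhdsGT_zero.mono_right (nhdsWithin_mono _ fun x hx => ne_of_gt hx)
  have h3 := h1.comp h2
  refine h3.congr fun s => ?_
  simp [div_eq_mul_inv]

/-- The integrand of the twofold integral representing the radiation field. -/
def fL (e1 e2 : ℝ) (φ : SF) (σ τ w : ℝ) : ℝ :=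
  φ 0 ((σ + w ^ 2) * e1 - τ * e2) ((σ + w ^ 2) * e2 + τ * e1)

theorem fL_cont2 (e1 e2 : ℝ) (φ : SF) (σ : ℝ) : Cont2 (fL e1 e2 φ σ) := by
  unfold fL Cont2
  exact φ.cont_comp continuous_const (by fun_prop) (by fun_prop)

/-- Rescaled spherical means converge along rays. -/
theorem NN_limit {R σ B : ℝ} (hR : 0 ≤ R) (hB : 0 ≤ B) (hB1 : π * R / 2 ≤ B)
    (hB2 : π ^ 2 * (R - σ) / 4 ≤ B ^ 2) {φ : SF} (h : Ts R φ)
    {e1 e2 : ℝ} (he : e1 ^ 2 + e2 ^ 2 = 1) {wt : ℝ → ℝ → ℝ} (hw : Cont2 wt)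
    (hw1 : ∀ β ψ, |wt β ψ| ≤ 1) :
    Tendsto (fun t => t * √t * NN e1 e2 wt φ t ((t + σ) * e1) ((t + σ) * e2)) atTop
      (𝓝 (2 * √2 * (wt 0 0 * J B (fL e1 e2 φ σ)))) := by
  have hp := pi_pos
  obtain ⟨K, hK0, hK⟩ := h.bdd
  set G : ℝ → ℝ → ℝ → ℝ := fun t β ψ => wt β ψ * fP e1 e2 φ t ((t + σ) * e1) ((t + σ) * e2) β ψ
  have hGc : ∀ t, Cont2 (G t) := fun t => NN_cont2 e1 e2 hw φ t _ _
  have h2 : (0 : ℝ) < √2 := sqrt_pos.2 two_pos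
  have h22 : √2 ^ 2 = (2 : ℝ) := sq_sqrt two_pos.le
  -- the scaled integral
  have hscale : ∀ᶠ t : ℝ in atTop,
      2 * √2 * J B (fun τ w => G t (2 / t * τ) (√2 / √t * w))
        = t * √t * NN e1 e2 wt φ t ((t + σ) * e1) ((t + σ) * e2) := by
    filter_upwards [eventually_gt_atTop 0, eventually_gt_atTop (R - σ),
      eventually_ge_atTop (2 * B / π), eventually_ge_atTop (2 * B ^ 2 / π ^ 2)] with t ht0 ht1 ht2 ht3
    have hst : 0 < √t := sqrt_pos.2 ht0
    have hst2 : √t ^ 2 = t := sq_sqrt ht0.le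
    have hsc := J_scale (P := π) hB (κ := 2 / t) (l := √2 / √t) (by positivity) (by positivity)
      (by rw [div_le_iff₀ hp] at ht2
          calc 2 / t * B = 2 * B / t := by ring
            _ ≤ π := by rw [div_le_iff₀ ht0]; linarith)
      (by refine abs_le_of_sq_le_sq' ?_ hp.le |>.2
          rw [mul_pow, div_pow, h22, hst2]
          rw [div_le_iff₀ (by positivity)] at ht3
          calc 2 / t * B ^ 2 = 2 * B ^ 2 / t := by ring
            _ ≤ π ^ 2 := by rw [div_le_iff₀ ht0]; linarith) (hGc t) ?_
    · unfold NN
      rw [hsc]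
      field_simp
    · intro β ψ hβ hψ hne
      obtain ⟨a1, a2⟩ := abs_of_supp hR (h.fP_supp he (right_ne_zero_of_mul hne))
      constructor
      · rw [fg, abs_mul, abs_of_pos ht0] at a2
        have h2 := Real.mul_abs_le_abs_sin (x := β / 2) (by rw [abs_div, abs_two]; linarith)
        rw [abs_div, abs_two] at h2
        have h3 := (mul_le_mul_of_nonneg_left h2 ht0.le).trans a2
        have h4 := mul_le_mul_of_nonneg_left h3 hp.le
        have h5 : π * (t * (2 / π * (|β| / 2))) = |β| * t := by field_simp
        calc |β| ≤ 2 * B / t := by rw [le_div_iff₀ ht0]; linarith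
          _ = _ := by ring
      · have hc0 : 0 ≤ cos (β / 2) := cos_nonneg_of_neg_pi_div_two_le_of_le
          (by linarith [(abs_le.1 hβ).1]) (by linarith [(abs_le.1 hβ).2])
        have h1 : t * (1 - cos (β / 2) * cos ψ) ≤ R - σ := by
          have := (abs_le.1 a1).2
          simp only [fa] at this
          linarith
        have hcc : 0 < cos (β / 2) * cos ψ := by
          by_contra hle
          push Not at hle
          have := mul_nonneg ht0.le (neg_nonneg.2 hle)
          linarith
        have hcψ : 0 < cos ψ := pos_of_mul_pos_right hcc hc0
        have h3 : cos (β / 2) * cos ψ ≤ 1 * cos ψ :=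
          mul_le_mul_of_nonneg_right (cos_le_one _) hcψ.le
        have h4 := cos_gap le_rfl (abs_nonneg ψ) hψ
        rw [cos_zero, cos_abs, sub_zero] at h4
        have h5 : t * (2 * (|ψ| / π) ^ 2) ≤ R - σ :=
          (mul_le_mul_of_nonneg_left (h4.trans (by linarith)) ht0.le).trans h1
        refine abs_le_of_sq_le_sq' ?_ (by positivity) |>.2
        rw [mul_pow, div_pow, h22, hst2]
        have h6 := mul_le_mul_of_nonneg_left h5 (sq_nonneg π)
        have h7 : π ^ 2 * (t * (2 * (|ψ| / π) ^ 2)) = 2 * (|ψ| ^ 2 * t) := by field_simp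
        calc |ψ| ^ 2 ≤ 2 * B ^ 2 / t := by rw [le_div_iff₀ ht0]; linarith
          _ = _ := by ring
  refine Tendsto.congr' hscale ?_
  refine Tendsto.const_mul _ ?_
  rw [← J_const_mul]
  refine tendsto_integral_filter_of_dominated_convergence (fun _ => K) ?_ ?_ ?_ ?_
  · refine Eventually.of_forall fun t => Continuous.aestronglyMeasurable ?_
    exact (hGc t).comp (f := fun p : ℝ × ℝ => (2 / t * p.1, √2 / √t * p.2)) (by fun_prop)
  · refine Eventually.of_forall fun t => Eventually.of_forall fun p => ?_
    rw [Real.norm_eq_abs, abs_mul]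
    calc _ ≤ 1 * K := mul_le_mul (hw1 _ _) (hK _ _) (abs_nonneg _) zero_le_one
      _ = K := one_mul K
  · exact continuous_const.continuousOn.integrableOn_compact (Qb_compact B)
  · refine Eventually.of_forall fun p => ?_
    obtain ⟨τ, w⟩ := p
    have hsq : Tendsto (fun t : ℝ => √t) atTop atTop := tendsto_sqrt_atTop
    have z1 : Tendsto (fun t : ℝ => 2 / t * τ) atTop (𝓝 0) := by
      simpa using (tendsto_const_nhds (x := (2 : ℝ))).div_atTop tendsto_id |>.mul_const τ
    have z2 : Tendsto (fun t : ℝ => √2 / √t * w) atTop (𝓝 0) := by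
      simpa using (tendsto_const_nhds (x := √2)).div_atTop hsq |>.mul_const w
    have s1 : Tendsto (fun t : ℝ => t * fg (2 / t * τ) (√2 / √t * w)) atTop (𝓝 τ) := by
      refine (tendsto_mul_sin τ).congr fun t => ?_
      rw [fg]; congr 2; ring
    have s2 : Tendsto (fun t : ℝ => t + σ + t * fa (2 / t * τ) (√2 / √t * w)) atTop
        (𝓝 (σ + w ^ 2)) := by
      have y1 : Tendsto (fun t : ℝ => sin (τ / 2 / t)) atTop (𝓝 0) := by
        have : Tendsto (fun t : ℝ => τ / 2 / t) atTop (𝓝 0) :=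
          tendsto_const_nhds.div_atTop tendsto_id
        simpa [Function.comp_def] using (continuous_sin.tendsto 0).comp this
      have y2 : Tendsto (fun t : ℝ => cos (τ / t)) atTop (𝓝 1) := by
        have : Tendsto (fun t : ℝ => τ / t) atTop (𝓝 0) :=
          tendsto_const_nhds.div_atTop tendsto_id
        simpa [Function.comp_def] using (continuous_cos.tendsto 0).comp this
      have y3 := (tendsto_mul_sin (w / √2)).comp hsq
      have y4 := (((tendsto_mul_sin (τ / 2)).mul y1).const_mul 2).add
        (y2.mul ((y3.pow 2).const_mul 2))
      have y5 := y4.const_add σ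
      have e : σ + (2 * (τ / 2 * 0) + 1 * (2 * (w / √2) ^ 2)) = σ + w ^ 2 := by
        rw [div_pow, h22]; ring
      rw [e] at y5
      refine y5.congr' ?_
      filter_upwards [eventually_gt_atTop 0] with t ht0
      have hst2 : √t ^ 2 = t := sq_sqrt ht0.le
      have c1 : 2 * sin (τ / 2 / t) ^ 2 = 1 - cos (τ / t) := by
        rw [sin_sq_eq_half_sub]
        have : 2 * (τ / 2 / t) = τ / t := by ring
        rw [this]; ring
      have c2 : 2 * sin (w / √2 / √t) ^ 2 = 1 - cos (√2 / √t * w) := by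
        rw [sin_sq_eq_half_sub]
        have : 2 * (w / √2 / √t) = √2 / √t * w := by
          field_simp
          rw [h22]
          ring
        rw [this]; ring
      have c3 : fa (2 / t * τ) (√2 / √t * w) = -(cos (τ / t) * cos (√2 / √t * w)) := by
        rw [fa]; congr 3; ring
      simp only [Function.comp, mul_pow, hst2]
      rw [c3]
      linear_combination t * c1 + t * cos (τ / t) * c2
    have hφ : Continuous fun q : ℝ × ℝ => φ 0 (q.1 * e1 - q.2 * e2) (q.1 * e2 + q.2 * e1) :=
      φ.cont_comp continuous_const (by fun_prop) (by fun_prop)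
    have l1 := (hφ.tendsto (σ + w ^ 2, τ)).comp (s2.prodMk_nhds s1)
    have l2 := ((hw : Continuous fun p : ℝ × ℝ => wt p.1 p.2).tendsto (0, 0)).comp
      (z1.prodMk_nhds z2)
    refine (l2.mul l1).congr fun t => ?_
    simp only [G, Function.comp, fP]
    congr 2; ring_nf

theorem fL_supp {R σ B : ℝ} (hR : 0 ≤ R) (hB : 0 ≤ B) (hB1 : R ≤ B) (hB2 : R - σ ≤ B ^ 2) {φ : SF}
    (h : Ts R φ) {e1 e2 : ℝ} (he : e1 ^ 2 + e2 ^ 2 = 1) {τ w : ℝ}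
    (hne : fL e1 e2 φ σ τ w ≠ 0) : |τ| ≤ B ∧ |w| ≤ B := by
  have hle : ((σ + w ^ 2) * e1 - τ * e2) ^ 2 + ((σ + w ^ 2) * e2 + τ * e1) ^ 2 ≤ R ^ 2 := by
    by_contra hc
    push Not at hc
    exact hne (h 0 _ _ hc)
  have e : ((σ + w ^ 2) * e1 - τ * e2) ^ 2 + ((σ + w ^ 2) * e2 + τ * e1) ^ 2
      = (σ + w ^ 2) ^ 2 + τ ^ 2 := by
    linear_combination ((σ + w ^ 2) ^ 2 + τ ^ 2) * he
  rw [e] at hle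
  obtain ⟨h1, h2⟩ := abs_of_supp hR hle
  refine ⟨h2.trans hB1, ?_⟩
  refine abs_le_of_sq_le_sq ?_ hB
  linarith [(abs_le.1 h1).2]

theorem full_trunc {B : ℝ} {h : ℝ → ℝ} (h0 : ∀ x, B < |x| → h x = 0) :
    ∫ x, h x = ∫ x in Set.Icc (-B) B, h x := by
  rw [← setIntegral_univ]
  refine setIntegral_eq_of_subset_of_forall_sdiff_eq_zero MeasurableSet.univ
    (Set.subset_univ _) fun x hx => h0 x ?_
  by_contra hle
  push Not at hle
  exact hx.2 ⟨(abs_le.1 hle).1, (abs_le.1 hle).2⟩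

/-- The substitution `s = σ + w²` removes the singularity in the definition of `R₂`. -/
theorem R2_eq {R σ B : ℝ} (hR : 0 ≤ R) (hB : 0 ≤ B) (hB1 : R ≤ B) (hB2 : R - σ ≤ B ^ 2) {φ : SF}
    (h : Ts R φ) {e1 e2 : ℝ} (he : e1 ^ 2 + e2 ^ 2 = 1) :
    R2 (fun x y => φ 0 x y) σ e1 e2 = 1 / (2 * √2 * π) * J B (fL e1 e2 φ σ) := by
  unfold R2
  congr 1
  set H : ℝ → ℝ := fun s => Rline (fun x y => φ 0 x y) s e1 e2 with hH
  have s1 : ∫ s in Set.Ioi σ, H s / √(s - σ) = ∫ s in Set.Ioi 0, H (s + σ) / √s := by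
    rw [← integral_indicator measurableSet_Ioi, ← integral_indicator measurableSet_Ioi,
      ← integral_add_right_eq_self _ σ]
    congr 1; funext s
    simp [Set.indicator]
  have s2 : ∫ s in Set.Ioi 0, H (s + σ) / √s = 2 * ∫ w in Set.Ioi 0, H (w ^ 2 + σ) := by
    rw [← integral_comp_rpow_Ioi_of_pos (p := 2) two_pos, ← integral_const_mul]
    refine setIntegral_congr_fun measurableSet_Ioi fun w hw => ?_
    have hw0 : (0 : ℝ) < w := hw
    have e1 : (2 : ℝ) - 1 = 1 := by norm_num
    simp only [rpow_two, smul_eq_mul, e1, rpow_one, sqrt_sq hw0.le]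
    field_simp
  have s3 : 2 * ∫ w in Set.Ioi 0, H (w ^ 2 + σ) = ∫ w, H (w ^ 2 + σ) := by
    rw [← integral_comp_abs (f := fun w => H (w ^ 2 + σ))]
    simp only [sq_abs]
  rw [s1, s2, s3, J_swap, J_iter2 (fL_cont2 e1 e2 φ σ).swap]
  have hsw : ∀ w, H (w ^ 2 + σ) = ∫ τ in Set.Icc (-B) B, fL e1 e2 φ σ τ w := fun w => by
    have : H (w ^ 2 + σ) = ∫ τ, fL e1 e2 φ σ τ w := by
      simp only [hH, Rline, fL, add_comm σ]
    rw [this]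
    refine full_trunc fun τ hτ => ?_
    by_contra hne
    exact absurd (fL_supp hR hB hB1 hB2 h he hne).1 (not_le.2 hτ)
  simp only [hsw]
  refine full_trunc fun w hw => ?_
  refine integral_eq_zero_of_ae (Eventually.of_forall fun τ => ?_)
  by_contra hne
  exact absurd (fL_supp hR hB hB1 hB2 h he hne).2 (not_le.2 hw)

/-- A square large enough to contain the effective domain of integration for all parameters
near `σ`. -/
theorem exists_B (R σ : ℝ) : ∃ B, 0 ≤ B ∧ R < B ∧ π * R / 2 ≤ B ∧ ∀ s, σ - 1 < s →
    π ^ 2 * (R - s) / 4 ≤ B ^ 2 ∧ R - s ≤ B ^ 2 := by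
  have hp := pi_pos
  refine ⟨|R| + 1 + π * |R| / 2 + |π ^ 2 * (R - σ + 1) / 4| + |R - σ + 1| , by positivity,
    ?_, ?_, fun s hs => ?_⟩
  · have := le_abs_self R
    have : 0 ≤ π * |R| / 2 := by positivity
    have := abs_nonneg (π ^ 2 * (R - σ + 1) / 4)
    have := abs_nonneg (R - σ + 1)
    linarith
  · have h1 : π * R / 2 ≤ π * |R| / 2 := by
      have := mul_le_mul_of_nonneg_left (le_abs_self R) hp.le
      linarith
    have := abs_nonneg R
    have := abs_nonneg (π ^ 2 * (R - σ + 1) / 4)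
    have := abs_nonneg (R - σ + 1)
    linarith
  · set X := |π ^ 2 * (R - σ + 1) / 4| with hX
    set Y := |R - σ + 1| with hY
    set Z := |R| + π * |R| / 2 with hZ
    have hX0 : 0 ≤ X := abs_nonneg _
    have hY0 : 0 ≤ Y := abs_nonneg _
    have hZ0 : 0 ≤ Z := by positivity
    have h2 : X + Y ≤ (|R| + 1 + π * |R| / 2 + X + Y) ^ 2 := by
      have e : |R| + 1 + π * |R| / 2 + X + Y = Z + 1 + X + Y := by rw [hZ]; ring
      rw [e]
      nlinarith [mul_nonneg hX0 hY0, mul_nonneg hX0 hZ0, mul_nonneg hY0 hZ0]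
    have h3 : R - s ≤ Y := (by linarith : R - s ≤ R - σ + 1).trans (le_abs_self _)
    have h4 : π ^ 2 * (R - s) / 4 ≤ X := by
      refine le_trans ?_ (le_abs_self _)
      have := mul_le_mul_of_nonneg_left (by linarith : R - s ≤ R - σ + 1) (sq_nonneg π)
      linarith
    exact ⟨by linarith, by linarith⟩

/-- Differentiating `R₂` in the retarded time amounts to differentiating the datum normally to the
lines of integration. -/
theorem R2_hasDerivAt {R : ℝ} (hR : 0 ≤ R) {φ : SF} (h : Ts R φ) {e1 e2 : ℝ}
    (he : e1 ^ 2 + e2 ^ 2 = 1) (σ : ℝ) :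
    HasDerivAt (fun s => R2 (fun x y => φ 0 x y) s e1 e2)
      (R2 (fun x y => dA e1 e2 φ 0 x y) σ e1 e2) σ := by
  obtain ⟨B, hB, hRB, -, hB2⟩ := exists_B R σ
  have hU : Set.Ioi (σ - 1) ∈ 𝓝 σ := Ioi_mem_nhds (by linarith)
  have hev : (fun s => R2 (fun x y => φ 0 x y) s e1 e2)
      =ᶠ[𝓝 σ] fun s => 1 / (2 * √2 * π) * J B (fL e1 e2 φ s) := by
    filter_upwards [hU] with s hs
    exact R2_eq hR hB hRB.le (hB2 s hs).2 h he
  rw [R2_eq hR hB hRB.le (hB2 σ (by linarith)).2 (h.dA e1 e2) he]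
  refine HasDerivAt.congr_of_eventuallyEq ?_ hev
  refine HasDerivAt.const_mul _ ?_
  refine J_hasDerivAt (U := Set.univ) isOpen_univ trivial (G := fun s => fL e1 e2 φ s)
    (G' := fun s => fL e1 e2 (dA e1 e2 φ) s) (fun s _ => fL_cont2 e1 e2 φ s) ?_ fun s _ τ w => ?_
  · refine Continuous.continuousOn ?_
    unfold fL
    exact (dA e1 e2 φ).cont_comp continuous_const (by fun_prop) (by fun_prop)
  · unfold fL
    have d1 : HasDerivAt (fun s : ℝ => (s + w ^ 2) * e1 - τ * e2) e1 s := by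
      simpa using (((hasDerivAt_id s).add_const (w ^ 2)).mul_const e1).sub_const (τ * e2)
    have d2 : HasDerivAt (fun s : ℝ => (s + w ^ 2) * e2 + τ * e1) e2 s := by
      simpa using (((hasDerivAt_id s).add_const (w ^ 2)).mul_const e2).add_const (τ * e1)
    refine (φ.comp_curve (hasDerivAt_const s (0 : ℝ)) d1 d2).congr_deriv ?_
    rw [dA_def, SF.add_app, SF.smul_app, SF.smul_app]
    ring

/-- `R₂` annihilates derivatives tangential to the lines of integration. -/
theorem R2_dB {R : ℝ} (hR : 0 ≤ R) {φ : SF} (h : Ts R φ) {e1 e2 : ℝ}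
    (he : e1 ^ 2 + e2 ^ 2 = 1) (σ : ℝ) :
    R2 (fun x y => dB e1 e2 φ 0 x y) σ e1 e2 = 0 := by
  obtain ⟨B, hB, hRB, -, hB2⟩ := exists_B R σ
  have hs := (hB2 σ (by linarith)).2
  rw [R2_eq hR hB hRB.le hs (h.dB e1 e2) he]
  rw [J_d1 hB (G := fL e1 e2 φ σ) (fL_cont2 e1 e2 _ σ), mul_zero]
  · intro τ w
    unfold fL
    have d1 : HasDerivAt (fun τ : ℝ => (σ + w ^ 2) * e1 - τ * e2) (-e2) τ := by
      simpa using ((hasDerivAt_id τ).mul_const e2).const_sub ((σ + w ^ 2) * e1)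
    have d2 : HasDerivAt (fun τ : ℝ => (σ + w ^ 2) * e2 + τ * e1) e1 τ := by
      simpa using ((hasDerivAt_id τ).mul_const e1).const_add ((σ + w ^ 2) * e2)
    refine (φ.comp_curve (hasDerivAt_const τ (0 : ℝ)) d1 d2).congr_deriv ?_
    rw [dB_def, SF.add_app, SF.smul_app, SF.smul_app]
    ring
  · intro τ w hτ
    by_contra hne
    have : |τ| ≤ R := by
      have hle : ((σ + w ^ 2) * e1 - τ * e2) ^ 2 + ((σ + w ^ 2) * e2 + τ * e1) ^ 2 ≤ R ^ 2 := by
        by_contra hc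
        push Not at hc
        exact hne (h 0 _ _ hc)
      have e : ((σ + w ^ 2) * e1 - τ * e2) ^ 2 + ((σ + w ^ 2) * e2 + τ * e1) ^ 2
          = (σ + w ^ 2) ^ 2 + τ ^ 2 := by
        linear_combination ((σ + w ^ 2) ^ 2 + τ ^ 2) * he
      rw [e] at hle
      exact (abs_of_supp hR hle).2
    linarith

/-- The derivative of the radiation field in terms of `R₂`. -/
theorem dF0_eq {R : ℝ} (hR : 0 ≤ R) {f g : SF} (hf : Ts R f) (hg : Ts R g) {e1 e2 : ℝ}
    (he : e1 ^ 2 + e2 ^ 2 = 1) (σ : ℝ) :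
    dF0 (fun x y => f 0 x y) (fun x y => g 0 x y) σ e1 e2
      = R2 (fun x y => dA e1 e2 g 0 x y) σ e1 e2
        - R2 (fun x y => dA e1 e2 (dA e1 e2 f) 0 x y) σ e1 e2 := by
  unfold dF0 F0
  have e : (fun s => -deriv (fun s' => R2 (fun x y => f 0 x y) s' e1 e2) s
      + R2 (fun x y => g 0 x y) s e1 e2)
      = fun s => -R2 (fun x y => dA e1 e2 f 0 x y) s e1 e2 + R2 (fun x y => g 0 x y) s e1 e2 := by
    funext s
    rw [(R2_hasDerivAt hR hf he s).deriv]
  rw [e]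
  have d := (R2_hasDerivAt hR (hf.dA e1 e2) he σ).neg.add (R2_hasDerivAt hR hg he σ)
  rw [show (fun s => -R2 (fun x y => dA e1 e2 f 0 x y) s e1 e2 + R2 (fun x y => g 0 x y) s e1 e2)
    = (-fun s => R2 (fun x y => dA e1 e2 f 0 x y) s e1 e2)
      + fun s => R2 (fun x y => g 0 x y) s e1 e2 from rfl, d.deriv]
  ring

/-- The radiation field of Poisson's formula along the rays `r = t + σ`. -/
theorem MM_limit {R : ℝ} (hR : 0 ≤ R) {φ : SF} (h : Ts R φ) {e1 e2 : ℝ}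
    (he : e1 ^ 2 + e2 ^ 2 = 1) (σ : ℝ) :
    Tendsto (fun t => √t * MM e1 e2 φ t ((t + σ) * e1) ((t + σ) * e2)) atTop
      (𝓝 (R2 (fun x y => φ 0 x y) σ e1 e2)) := by
  obtain ⟨B, hB, hRB, hB1, hB2⟩ := exists_B R σ
  have hs := hB2 σ (by linarith)
  rw [R2_eq hR hB hRB.le hs.2 h he]
  have l := (NN_limit hR hB hB1 hs.1 h he fc_cont fc_le).const_mul (1 / (8 * π))
  have hp := pi_pos
  have h2 : (0 : ℝ) < √2 := sqrt_pos.2 two_pos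
  have h22 : √2 ^ 2 = (2 : ℝ) := sq_sqrt two_pos.le
  have e : 1 / (8 * π) * (2 * √2 * (fc 0 0 * J B (fL e1 e2 φ σ)))
      = 1 / (2 * √2 * π) * J B (fL e1 e2 φ σ) := by
    simp only [fc, zero_div, cos_zero]
    field_simp
    rw [h22]; ring
  rw [e] at l
  refine l.congr fun t => ?_
  rw [MM_app]; ring

/-- The time derivative of Poisson's formula along the rays `r = t + σ`: in the limit `∂ₜ` acts as
`-∂_σ`. -/
theorem MM_Dt_limit {R : ℝ} (hR : 0 ≤ R) {φ : SF} (h : Ts R φ) {e1 e2 : ℝ}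
    (he : e1 ^ 2 + e2 ^ 2 = 1) (σ : ℝ) :
    Tendsto (fun t => √t * Dt (MM e1 e2 φ) t ((t + σ) * e1) ((t + σ) * e2)) atTop
      (𝓝 (-R2 (fun x y => dA e1 e2 φ 0 x y) σ e1 e2)) := by
  obtain ⟨B, hB, hRB, hB1, hB2⟩ := exists_B R σ
  have hs := hB2 σ (by linarith)
  rw [R2_eq hR hB hRB.le hs.2 (h.dA e1 e2) he]
  have l0 := (NN_limit hR hB hB1 hs.1 h he fc_cont fc_le).mul tendsto_inv_atTop_zero
  have l1 := NN_limit hR hB hB1 hs.1 (h.dA e1 e2) he (cont2_mul fc_cont fa_cont) fcfa_le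
  have l2 := NN_limit hR hB hB1 hs.1 (h.dB e1 e2) he (cont2_mul fc_cont fg_cont) fcfg_le
  have l := (l0.add (l1.add l2)).const_mul (1 / (8 * π))
  have hp := pi_pos
  have h2 : (0 : ℝ) < √2 := sqrt_pos.2 two_pos
  have h22 : √2 ^ 2 = (2 : ℝ) := sq_sqrt two_pos.le
  have e : 1 / (8 * π) * (2 * √2 * (fc 0 0 * J B (fL e1 e2 φ σ)) * 0
      + (2 * √2 * (fc 0 0 * fa 0 0 * J B (fL e1 e2 (dA e1 e2 φ) σ))
        + 2 * √2 * (fc 0 0 * fg 0 0 * J B (fL e1 e2 (dB e1 e2 φ) σ))))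
      = -(1 / (2 * √2 * π) * J B (fL e1 e2 (dA e1 e2 φ) σ)) := by
    simp only [fc, fa, fg, zero_div, cos_zero, sin_zero]
    field_simp
    rw [h22]; ring
  rw [e] at l
  refine l.congr' ?_
  filter_upwards [eventually_gt_atTop 0] with t ht
  rw [MM_Dt]
  field_simp

theorem ZZ_limit {R : ℝ} (hR : 0 ≤ R) {f g : SF} (hf : Ts R f) (hg : Ts R g) {e1 e2 : ℝ}
    (he : e1 ^ 2 + e2 ^ 2 = 1) (σ : ℝ) : ∃ l,
    Tendsto (fun t => √t * ZZ e1 e2 f g t ((t + σ) * e1) ((t + σ) * e2)) atTop (𝓝 l) := by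
  refine ⟨_, ((MM_Dt_limit hR hf he σ).add (MM_limit hR hg he σ)).congr fun t => ?_⟩
  rw [ZZ, SF.add_app]; ring

/-- The ingoing derivative of a free wave along an outgoing ray. The transversal part of the
Laplacian of the data does not contribute, since it is a derivative along the lines of
integration. -/
theorem ZZ_dlimit {R : ℝ} (hR : 0 ≤ R) {f g : SF} (hf : Ts R f) (hg : Ts R g) {e1 e2 : ℝ}
    (he : e1 ^ 2 + e2 ^ 2 = 1) (σ : ℝ) :
    Tendsto (fun t => √t * (Dt (ZZ e1 e2 f g) - dA e1 e2 (ZZ e1 e2 f g)) t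
      ((t + σ) * e1) ((t + σ) * e2)) atTop
      (𝓝 (-2 * dF0 (fun x y => f 0 x y) (fun x y => g 0 x y) σ e1 e2)) := by
  have i1 : Dt (ZZ e1 e2 f g) = MM e1 e2 (dA e1 e2 (dA e1 e2 f)) + MM e1 e2 (dB e1 e2 (dB e1 e2 f))
      + Dt (MM e1 e2 g) := by
    rw [ZZ, map_add, MM_Dt2 he, frame_lap he]
    have := MM_lin e1 e2 (dA e1 e2 (dA e1 e2 f)) (dB e1 e2 (dB e1 e2 f)) 1 1
    simp only [one_smul] at this
    rw [this]
  have iA : ∀ φ, dA e1 e2 (MM e1 e2 φ) = MM e1 e2 (dA e1 e2 φ) := fun φ => by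
    rw [dA_def, dA_def, MM_D1, MM_D2, MM_lin]
  have iD : ∀ φ, dA e1 e2 (Dt φ) = Dt (dA e1 e2 φ) := fun φ => by
    rw [dA_def, dA_def, D1_Dt, D2_Dt, map_add, Derivation.map_smul, Derivation.map_smul]
  have i2 : dA e1 e2 (ZZ e1 e2 f g) = Dt (MM e1 e2 (dA e1 e2 f)) + MM e1 e2 (dA e1 e2 g) := by
    rw [ZZ, map_add, iD, iA, iA]
  have l := (((MM_limit hR ((hf.dA e1 e2).dA e1 e2) he σ).add
    (MM_limit hR ((hf.dB e1 e2).dB e1 e2) he σ)).add (MM_Dt_limit hR hg he σ)).sub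
    ((MM_Dt_limit hR (hf.dA e1 e2) he σ).add (MM_limit hR (hg.dA e1 e2) he σ))
  rw [dF0_eq hR hf hg he]
  have z := R2_dB hR (hf.dB e1 e2) he σ
  rw [z] at l
  refine (l.congr fun t => ?_).trans_eq ?_
  · rw [i1, i2]
    simp only [SF.add_app, SF.sub_app]
    ring
  · congr 1; ring

theorem sqrt_ratio (σ : ℝ) : Tendsto (fun t => √(t + σ) / √t) atTop (𝓝 1) := by
  have h1 : Tendsto (fun t : ℝ => 1 + σ * t⁻¹) atTop (𝓝 1) := by
    simpa using (tendsto_inv_atTop_zero.const_mul σ).const_add 1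
  have h2 := (continuous_sqrt.tendsto 1).comp h1
  rw [sqrt_one] at h2
  refine h2.congr' ?_
  filter_upwards [eventually_gt_atTop 0] with t ht
  rw [← sqrt_div' _ ht.le]
  simp only [Function.comp]
  congr 1
  field_simp

/-- For the free wave, `(∂ₜ - ∂ᵣ)(r^{1/2} z)` tends to `-2 ∂_σ F₀` along rays. -/
theorem Wr_limit {R : ℝ} (hR : 0 ≤ R) {f g : SF} (hf : Ts R f) (hg : Ts R g) {e1 e2 : ℝ}
    (he : e1 ^ 2 + e2 ^ 2 = 1) (σ : ℝ) :
    Tendsto (Wr (ZZ 1 0 f g) (-σ) e1 e2) atTop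
      (𝓝 (-2 * dF0 (fun x y => f 0 x y) (fun x y => g 0 x y) σ e1 e2)) := by
  obtain ⟨l, hl⟩ := ZZ_limit hR hf hg he σ
  have hr := sqrt_ratio σ
  have hi : Tendsto (fun t : ℝ => (√t)⁻¹) atTop (𝓝 0) :=
    tendsto_inv_atTop_zero.comp tendsto_sqrt_atTop
  have hi2 : Tendsto (fun t : ℝ => (√(t + σ))⁻¹) atTop (𝓝 0) :=
    tendsto_inv_atTop_zero.comp (tendsto_sqrt_atTop.comp (tendsto_atTop_add_const_right _ σ tendsto_id))
  have L := (hr.mul (ZZ_dlimit hR hf hg he σ)).sub (((hl.mul hi).mul hi2).div_const 2)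
  have e : ∀ x : ℝ, 1 * x - l * 0 * 0 / 2 = x := fun x => by ring
  rw [e] at L
  refine L.congr' ?_
  filter_upwards [eventually_gt_atTop 0, eventually_gt_atTop (-σ)] with t ht ht2
  have hs : 0 < √t := sqrt_pos.2 ht
  have hs2 : 0 < √(t + σ) := sqrt_pos.2 (by linarith)
  simp only [Wr, Ry, sub_neg_eq_add, ZZ_frame he f g ht.le, ZZ_frame_Dt he f g ht,
    ZZ_frame_D1 he f g ht.le, ZZ_frame_D2 he f g ht.le, SF.sub_app, dA_def, SF.add_app, SF.smul_app]
  field_simp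
  ring

theorem ZZ_OmOm (f g : SF) {t x y : ℝ} (ht : 0 ≤ t) :
    Om (Om (ZZ 1 0 f g)) t x y = ZZ 1 0 (Om (Om f)) (Om (Om g)) t x y := by
  have h : ∀ x y, Om (ZZ 1 0 f g) t x y = ZZ 1 0 (Om f) (Om g) t x y := fun x y => ZZ_Om f g ht
  have h1 : D1 (Om (ZZ 1 0 f g)) t x y = D1 (ZZ 1 0 (Om f) (Om g)) t x y :=
    ((Om (ZZ 1 0 f g)).hasDerivAt_1 t x y).unique
      (((ZZ 1 0 (Om f) (Om g)).hasDerivAt_1 t x y).congr_of_eventuallyEq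
        (Eventually.of_forall fun _ => h _ _))
  have h2 : D2 (Om (ZZ 1 0 f g)) t x y = D2 (ZZ 1 0 (Om f) (Om g)) t x y :=
    ((Om (ZZ 1 0 f g)).hasDerivAt_2 t x y).unique
      (((ZZ 1 0 (Om f) (Om g)).hasDerivAt_2 t x y).congr_of_eventuallyEq
        (Eventually.of_forall fun _ => h _ _))
  rw [← ZZ_Om (Om f) (Om g) ht, Om_def (Om (ZZ 1 0 f g)), Om_def (ZZ 1 0 (Om f) (Om g))]
  simp only [SF.sub_app, SF.mul_app, h1, h2]

/-- Rate of convergence to the radiation field, uniform in the direction and in the retarded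
time as long as `r ≥ t / 2`: integrate `ray_deriv` from `t` to infinity. -/
theorem Wr_rate {R : ℝ} (hR : 0 ≤ R) {f g : SF} (hf : Ts R f) (hg : Ts R g) :
    ∃ C, 0 ≤ C ∧ ∀ t σ e1 e2, e1 ^ 2 + e2 ^ 2 = 1 → 2 * R + 1 < t → -2 * σ ≤ t →
      |Wr (ZZ 1 0 f g) (-σ) e1 e2 t
        + 2 * dF0 (fun x y => f 0 x y) (fun x y => g 0 x y) σ e1 e2| ≤ C / t := by
  obtain ⟨C1, h10, h1⟩ := ZZ_decay hR hf hg
  obtain ⟨C2, h20, h2⟩ := ZZ_decay hR hf.Om.Om hg.Om.Om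
  have h110 : (1 : ℝ) ^ 2 + 0 ^ 2 = 1 := by norm_num
  set C := 4 * (C1 + C2) with hC
  have hC0 : 0 ≤ C := by positivity
  refine ⟨C, hC0, fun t σ e1 e2 he ht hσ => ?_⟩
  have ht0 : 0 < t := by linarith
  set W := Wr (ZZ 1 0 f g) (-σ) e1 e2 with hW
  set q : ℝ → ℝ := fun τ => (Ry (Om (Om (ZZ 1 0 f g))) (-σ) e1 e2 τ
    + Ry (ZZ 1 0 f g) (-σ) e1 e2 τ / 4) / √(τ + σ) ^ 3 with hq
  have hd : ∀ τ, t ≤ τ → HasDerivAt W (q τ) τ := fun τ hτ => by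
    have := ray_deriv (ZZ 1 0 f g) he (c := -σ) (τ := τ) (by linarith)
    rw [ZZ_box h110] at this
    refine this.congr_deriv ?_
    simp only [hq, sub_neg_eq_add, Ry, SF.zero_app]
    ring
  have hb : ∀ τ, t ≤ τ → |q τ| ≤ C / τ ^ 2 := fun τ hτ => by
    have hτ0 : 0 < τ := by linarith
    have a1 : |Ry (ZZ 1 0 f g) (-σ) e1 e2 τ / 4| ≤ C1 / √τ := by
      rw [abs_div, abs_of_pos (by norm_num : (0 : ℝ) < 4)]
      have := h1 τ ((τ - -σ) * e1) ((τ - -σ) * e2) (by linarith)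
      unfold Ry
      linarith [abs_nonneg (ZZ 1 0 f g τ ((τ - -σ) * e1) ((τ - -σ) * e2))]
    have a2 : |Ry (Om (Om (ZZ 1 0 f g))) (-σ) e1 e2 τ| ≤ C2 / √τ := by
      unfold Ry
      rw [ZZ_OmOm f g hτ0.le]
      exact h2 τ _ _ (by linarith)
    have hs : 0 < √τ := sqrt_pos.2 hτ0
    have hs2 : √τ ^ 2 = τ := sq_sqrt hτ0.le
    have hr : √τ / √2 ≤ √(τ + σ) := by
      rw [← sqrt_div' _ two_pos.le]; exact sqrt_le_sqrt (by linarith)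
    have hr3 : √τ ^ 3 / 4 ≤ √(τ + σ) ^ 3 := by
      refine le_trans ?_ (pow_le_pow_left₀ (by positivity) hr 3)
      rw [div_pow]
      have : √2 ^ 3 ≤ 4 := by
        have h22 : √2 ^ 2 = (2 : ℝ) := sq_sqrt two_pos.le
        have : √2 ≤ 2 := by rw [sqrt_le_left two_pos.le]; norm_num
        calc √2 ^ 3 = √2 ^ 2 * √2 := by ring
          _ ≤ 4 := by rw [h22]; linarith
      gcongr
    rw [hq]
    simp only []
    rw [abs_div, abs_of_nonneg (by positivity : 0 ≤ √(τ + σ) ^ 3)]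
    calc _ ≤ (C2 / √τ + C1 / √τ) / (√τ ^ 3 / 4) :=
        div_le_div₀ (by positivity) ((abs_add_le _ _).trans (add_le_add a2 a1)) (by positivity) hr3
      _ = C / (√τ ^ 2) ^ 2 := by rw [hC]; field_simp; ring
      _ = C / τ ^ 2 := by rw [hs2]
  have hlim := Wr_limit hR hf hg he σ
  have hinv : ∀ τ, t ≤ τ → HasDerivAt (fun τ : ℝ => C / τ) (-(C / τ ^ 2)) τ := fun τ hτ => by
    have hτ0 : τ ≠ 0 := by linarith
    refine ((hasDerivAt_inv hτ0).const_mul C).congr_deriv ?_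
    field_simp
  have hci : Tendsto (fun τ : ℝ => C / τ) atTop (𝓝 0) := tendsto_const_nhds.div_atTop tendsto_id
  have mono : ∀ (F F' : ℝ → ℝ), (∀ τ, t ≤ τ → HasDerivAt F (F' τ) τ) → (∀ τ, t ≤ τ → 0 ≤ F' τ) →
      ∀ l, Tendsto F atTop (𝓝 l) → F t ≤ l := fun F F' hF hF' l hl => by
    have hm : MonotoneOn F (Set.Ici t) := by
      refine monotoneOn_of_deriv_nonneg (convex_Ici t)
        (fun τ hτ => (hF τ hτ).continuousAt.continuousWithinAt) (fun τ hτ => ?_) (fun τ hτ => ?_)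
      · rw [interior_Ici] at hτ
        exact (hF τ (le_of_lt hτ)).differentiableAt.differentiableWithinAt
      · rw [interior_Ici] at hτ
        rw [(hF τ (le_of_lt hτ)).deriv]; exact hF' τ (le_of_lt hτ)
    refine ge_of_tendsto hl ?_
    filter_upwards [eventually_ge_atTop t] with τ hτ
    exact hm Set.self_mem_Ici hτ hτ
  -- `W - C / τ` and `-W - C / τ` are nondecreasing along the ray.
  have m1 := mono (fun τ => W τ - C / τ) (fun τ => q τ - -(C / τ ^ 2))
    (fun τ hτ => (hd τ hτ).sub (hinv τ hτ))
    (fun τ hτ => by linarith [(abs_le.1 (hb τ hτ)).1]) _ (hlim.sub hci)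
  have m2 := mono (fun τ => -W τ - C / τ) (fun τ => -q τ - -(C / τ ^ 2))
    (fun τ hτ => (hd τ hτ).neg.sub (hinv τ hτ))
    (fun τ hτ => by linarith [(abs_le.1 (hb τ hτ)).2]) _ (hlim.neg.sub hci)
  rw [abs_le]
  constructor <;> linarith

/-! ### The system along rays -/

/-- The operator `½ (∂ᵣ - ∂ₜ) r^{1/2}` in terms of the characteristic derivative `Wr`. -/
theorem Vop_eq (u : SF) {t σ e1 e2 : ℝ} (he : e1 ^ 2 + e2 ^ 2 = 1) (hr : 0 < t + σ) :
    Vop u t σ e1 e2 = -(1 / 2) * Wr u (-σ) e1 e2 t := by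
  set r := t + σ with hrd
  have hq : (r * e1) ^ 2 + (r * e2) ^ 2 = r ^ 2 := by linear_combination r ^ 2 * he
  have hrad : radius (r * e1) (r * e2) = r := by rw [radius, hq, sqrt_sq hr.le]
  have hs : 0 < √r := sqrt_pos.2 hr
  have hs2 : √r ^ 2 = r := sq_sqrt hr.le
  have d1 : HasDerivAt (fun y => radius y (r * e2) ^ ((1 : ℝ) / 2) * u t y (r * e2))
      (e1 / (2 * √r) * u t (r * e1) (r * e2) + √r * p1 u t (r * e1) (r * e2)) (r * e1) := by
    have h0 : HasDerivAt (fun y => y ^ 2 + (r * e2) ^ 2) (2 * (r * e1)) (r * e1) := by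
      simpa using (hasDerivAt_pow 2 (r * e1)).add_const ((r * e2) ^ 2)
    have h1 : HasDerivAt (fun y => radius y (r * e2)) e1 (r * e1) := by
      refine (h0.sqrt (by rw [hq]; positivity)).congr_deriv ?_
      rw [hq, sqrt_sq hr.le]; field_simp
    have h2 : HasDerivAt (fun y => √(radius y (r * e2))) (e1 / (2 * √r)) (r * e1) := by
      refine (h1.sqrt (by rw [hrad]; exact hr.ne')).congr_deriv ?_
      rw [hrad]
    have h3 := h2.mul (u.hasDerivAt_1 t (r * e1) (r * e2))
    simp only [hrad] at h3
    simp only [← sqrt_eq_rpow]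
    exact h3
  have d2 : HasDerivAt (fun y => radius (r * e1) y ^ ((1 : ℝ) / 2) * u t (r * e1) y)
      (e2 / (2 * √r) * u t (r * e1) (r * e2) + √r * p2 u t (r * e1) (r * e2)) (r * e2) := by
    have h0 : HasDerivAt (fun y => (r * e1) ^ 2 + y ^ 2) (2 * (r * e2)) (r * e2) := by
      simpa using (hasDerivAt_pow 2 (r * e2)).const_add ((r * e1) ^ 2)
    have h1 : HasDerivAt (fun y => radius (r * e1) y) e2 (r * e2) := by
      refine (h0.sqrt (by rw [hq]; positivity)).congr_deriv ?_
      rw [hq, sqrt_sq hr.le]; field_simp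
    have h2 : HasDerivAt (fun y => √(radius (r * e1) y)) (e2 / (2 * √r)) (r * e2) := by
      refine (h1.sqrt (by rw [hrad]; exact hr.ne')).congr_deriv ?_
      rw [hrad]
    have h3 := h2.mul (u.hasDerivAt_2 t (r * e1) (r * e2))
    simp only [hrad] at h3
    simp only [← sqrt_eq_rpow]
    exact h3
  have d3 : HasDerivAt (fun s => radius (r * e1) (r * e2) ^ ((1 : ℝ) / 2) * u s (r * e1) (r * e2))
      (√r * pt u t (r * e1) (r * e2)) t := by
    rw [hrad, ← sqrt_eq_rpow]
    exact (u.hasDerivAt_t t (r * e1) (r * e2)).const_mul _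
  have a1 : Dt u t (r * e1) (r * e2) = pt u t (r * e1) (r * e2) := rfl
  have a2 : D1 u t (r * e1) (r * e2) = p1 u t (r * e1) (r * e2) := rfl
  have a3 : D2 u t (r * e1) (r * e2) = p2 u t (r * e1) (r * e2) := rfl
  rw [Vop, ← hrd, Uop, p1, p2, pt, d1.deriv, d2.deriv, d3.deriv, hrad, Wr]
  simp only [Ry, sub_neg_eq_add, ← hrd, a1, a2, a3]
  have f1 : r * e1 / r = e1 := by field_simp
  have f2 : r * e2 / r = e2 := by field_simp
  rw [f1, f2]
  generalize u t (r * e1) (r * e2) = U0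
  generalize pt u t (r * e1) (r * e2) = U1
  generalize p1 u t (r * e1) (r * e2) = U2
  generalize p2 u t (r * e1) (r * e2) = U3
  clear_value r
  clear d1 d2 d3 a1 a2 a3
  field_simp
  linear_combination U0 * he

theorem Wr_split (a z : SF) (ε c e1 e2 t : ℝ) :
    Wr a c e1 e2 t = Wr (a - ε • z) c e1 e2 t + ε * Wr z c e1 e2 t := by
  simp only [Wr, Ry, map_sub, Derivation.map_smul, SF.sub_app, SF.smul_app]
  ring

set_option maxHeartbeats 1600000 in
/-- The nonlinear part of the solution is negligible at the time in question: either `t = 1/ε`,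
where only a small power of `t` is lost, or `r = t / 2`, where the decay is better. -/
theorem Wr_w {R P ε t σ e1 e2 : ℝ} (hR : 0 ≤ R) (hP : 0 ≤ P) (hε : 0 < ε) {w : SF}
    (hv : Van (Outs R) w) (hdec : Wdec (R + 2) P (sh (R + 1) w)) (he : e1 ^ 2 + e2 ^ 2 = 1)
    (htm : t = max ε⁻¹ (-2 * σ)) (hT : (R + 2) ^ 2 < ε⁻¹) :
    |Wr w (-σ) e1 e2 t| ≤ 7 * P / ε := by
  have ht1 : ε⁻¹ ≤ t := htm ▸ le_max_left _ _
  have ht2 : -2 * σ ≤ t := htm ▸ le_max_right _ _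
  have ht4 : (R + 2) ^ 2 < t := hT.trans_le ht1
  have ht3 : R + 2 < t := by nlinarith
  have hεi : 0 < ε⁻¹ := inv_pos.2 hε
  set r := t + σ with hrd
  have hr2 : t / 2 ≤ r := by linarith
  have hr1 : 1 ≤ r := by linarith
  have hx : (r * e1) ^ 2 + (r * e2) ^ 2 = r ^ 2 := by linear_combination r ^ 2 * he
  have hWr : Wr w (-σ) e1 e2 t = √r * (Dt w t (r * e1) (r * e2) - e1 * D1 w t (r * e1) (r * e2)
      - e2 * D2 w t (r * e1) (r * e2)) - w t (r * e1) (r * e2) / (2 * √r) := by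
    simp only [Wr, Ry, sub_neg_eq_add, ← hrd]
  rw [hWr]
  by_cases hout : t + R < r
  · have hp : (t, r * e1, r * e2) ∈ Outs R := by
      change (t + R) ^ 2 < (r * e1) ^ 2 + (r * e2) ^ 2
      rw [hx]
      exact pow_lt_pow_left₀ hout (by linarith) two_ne_zero
    have hO := Outs_open R
    rw [hv t _ _ (by linarith) hp, hv.Dt hO t _ _ (by linarith) hp,
      hv.D1 hO t _ _ (by linarith) hp, hv.D2 hO t _ _ (by linarith) hp]
    simp only [mul_zero, sub_zero, zero_div, abs_zero]
    positivity
  · push Not at hout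
    set t' := t + (R + 1) with ht'
    have htr : 1 ≤ t' - r := by linarith
    have htr2 : t' + r ≤ t' ^ 2 - r ^ 2 := by
      have := mul_le_mul_of_nonneg_right htr (by linarith : 0 ≤ t' + r)
      linarith
    have hpos : 0 < t' ^ 2 - r ^ 2 := by linarith
    set s := √(t' ^ 2 - r ^ 2) with hs
    have hs2 : s ^ 2 = t' ^ 2 - r ^ 2 := sq_sqrt hpos.le
    have hs0 : 0 < s := sqrt_pos.2 hpos
    have hsR : R + 2 ≤ s := by
      refine le_sqrt_of_sq_le ?_
      linarith
    have hst : s ≤ t' := by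
      refine (sqrt_le_left (by linarith)).2 ?_
      linarith [sq_nonneg r]
    have ht't : t' ≤ 2 * t := by linarith
    obtain ⟨⟨b1, b2, b3⟩, b4⟩ := hdec s hsR (r * e1) (r * e2)
    have hyp : t' ^ 2 = s ^ 2 + (r * e1) ^ 2 + (r * e2) ^ 2 := by rw [hs2, add_assoc, hx]; ring
    rw [sh_Dt, Hy_of_sq (by linarith) hyp, sh_app, ht', add_sub_cancel_right] at b1
    rw [sh_D1, Hy_of_sq (by linarith) hyp, sh_app, ht', add_sub_cancel_right] at b2
    rw [sh_D2, Hy_of_sq (by linarith) hyp, sh_app, ht', add_sub_cancel_right] at b3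
    rw [Hy_of_sq (by linarith) hyp, sh_app, ht', add_sub_cancel_right] at b4
    set Z := zr s ^ 4 with hZ
    have hz1 : 1 ≤ zr s := one_le_zr (by linarith)
    have hZ1 : 1 ≤ Z := one_le_pow₀ hz1
    have hZ4 : Z ^ 4 = s := by rw [hZ, ← pow_mul]; exact zr_pow hs0.le
    have hZs : Z ^ 2 ≤ s := by
      rw [← hZ4]; exact pow_le_pow_right₀ hZ1 (by norm_num)
    have hZs' : Z ≤ s := le_trans (le_self_pow₀ hZ1 two_ne_zero) hZs
    have hsr : 0 < √r := sqrt_pos.2 (by linarith)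
    have hsr1 : 1 ≤ √r := one_le_sqrt.2 hr1
    have hsr2 : √r ^ 2 = r := sq_sqrt (by linarith)
    have hε1 : 1 < ε⁻¹ :=
      (one_lt_pow₀ (by linarith : 1 < R + 2) two_ne_zero).trans hT
    -- the two cases in the definition of `t`
    have key : √r * Z ≤ 2 * ε⁻¹ * s ∧ Z ≤ 2 * ε⁻¹ * √r := by
      rcases le_total ε⁻¹ (-2 * σ) with hc | hc
      · rw [max_eq_right hc] at htm
        have hrt : r = t / 2 := by linarith
        have hrs : r ≤ s := by
          refine le_sqrt_of_sq_le ?_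
          rw [hrt]
          nlinarith
        have k1 : √r * Z ≤ s := by
          refine (abs_le_of_sq_le_sq' ?_ hs0.le).2
          rw [mul_pow, hsr2]
          calc r * Z ^ 2 ≤ s * s := mul_le_mul hrs hZs (by positivity) hs0.le
            _ = s ^ 2 := by ring
        have k2 : Z ≤ 2 * √r := by
          refine (abs_le_of_sq_le_sq' ?_ (by positivity)).2
          rw [mul_pow, hsr2]
          linarith
        have hh : 1 ≤ 2 * ε⁻¹ := by linarith
        constructor
        · nlinarith [mul_le_mul_of_nonneg_right hh hs0.le]
        · nlinarith [mul_le_mul_of_nonneg_right hε1.le hsr.le]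
      · rw [max_eq_left hc] at htm
        rw [← htm]
        have k1 : √r ≤ 2 * t := by
          have := le_self_pow₀ hsr1 two_ne_zero
          linarith
        constructor
        · exact mul_le_mul k1 hZs' (by positivity) (by linarith)
        · calc Z ≤ 2 * t * 1 := by linarith
            _ ≤ 2 * t * √r := mul_le_mul_of_nonneg_left hsr1 (by linarith)
    obtain ⟨k1, k2⟩ := key
    have cc : ∀ {d : ℝ}, s * |d| ≤ P * Z → √r * |d| ≤ 2 * P * ε⁻¹ := fun {d} hd => by
      have h1 := mul_le_mul_of_nonneg_left hd hsr.le
      have h2 := mul_le_mul_of_nonneg_left k1 hP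
      have h3 : s * (√r * |d|) ≤ s * (2 * P * ε⁻¹) := by linarith
      exact le_of_mul_le_mul_left h3 hs0
    have c1 := cc b1
    have c2 := cc b2
    have c3 := cc b3
    have c4 : |w t (r * e1) (r * e2) / (2 * √r)| ≤ P * ε⁻¹ := by
      rw [abs_div, abs_of_pos (by positivity : 0 < 2 * √r), div_le_iff₀ (by positivity)]
      have := mul_le_mul_of_nonneg_left k2 hP
      linarith
    obtain ⟨f1, f2⟩ := frame_abs he
    have ff : ∀ {e d : ℝ}, |e| ≤ 1 → √r * |d| ≤ 2 * P * ε⁻¹ → |√r * (e * d)| ≤ 2 * P * ε⁻¹ :=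
      fun {e d} h h' => by
        rw [abs_mul, abs_of_pos hsr, abs_mul]
        refine le_trans (mul_le_mul_of_nonneg_left ?_ hsr.le) h'
        exact mul_le_of_le_one_left (abs_nonneg d) h
    have g1 : |√r * Dt w t (r * e1) (r * e2)| ≤ 2 * P * ε⁻¹ := by
      rwa [abs_mul, abs_of_pos hsr]
    have g2 := ff f1 c2
    have g3 := ff f2 c3
    rw [(by ring : 7 * P / ε = 7 * (P * ε⁻¹)), mul_sub, mul_sub]
    refine (abs_sub _ _).trans ?_
    have := (abs_sub (√r * Dt w t (r * e1) (r * e2) - √r * (e1 * D1 w t (r * e1) (r * e2)))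
      (√r * (e2 * D2 w t (r * e1) (r * e2))))
    have := (abs_sub (√r * Dt w t (r * e1) (r * e2)) (√r * (e1 * D1 w t (r * e1) (r * e2))))
    linarith

/-- A compactly supported function on the plane as a time-independent function. -/
def dat (f : ℝ → ℝ → ℝ) (hf : SmoothCompact2 f) : SF := ⟨fun _ x y => f x y, by
  change ContDiff ℝ (⊤ : ℕ∞) (fun p : ℝ × ℝ × ℝ => f p.2.1 p.2.2)
  exact hf.1.comp (f := fun p : ℝ × ℝ × ℝ => (p.2.1, p.2.2)) (by fun_prop)⟩

theorem dat_Ts {f : ℝ → ℝ → ℝ} (hf : SmoothCompact2 f) :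
    ∃ R, ∀ R', R ≤ R' → 0 ≤ R' ∧ Ts R' (dat f hf) := by
  obtain ⟨K, hK⟩ := hf.2.isBounded.exists_norm_le
  refine ⟨2 * |K|, fun R' hR' => ⟨(by positivity : 0 ≤ 2 * |K|).trans hR', fun t x y hp => ?_⟩⟩
  have hp' : R' ^ 2 < x ^ 2 + y ^ 2 := hp
  change f x y = 0
  by_contra hne
  have hm : (x, y) ∈ tsupport (fun p : ℝ × ℝ => f p.1 p.2) := subset_tsupport _ hne
  have h1 := (hK _ hm).trans (le_abs_self K)
  rw [Prod.norm_def, sup_le_iff, Real.norm_eq_abs, Real.norm_eq_abs] at h1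
  have h2 : x ^ 2 ≤ |K| ^ 2 := sq_le_sq.2 (by simpa using h1.1)
  have h3 : y ^ 2 ≤ |K| ^ 2 := sq_le_sq.2 (by simpa using h1.2)
  have h4 : (2 * |K|) ^ 2 ≤ R' ^ 2 := pow_le_pow_left₀ (by positivity) hR' 2
  nlinarith [sq_nonneg |K|]

theorem sol_van {R ε : ℝ} (hR : 0 ≤ R) {a b f g : SF}
    (hbox : ∀ t x y, 0 < t → box a t x y = -(Dt b t x y) ^ 2 * Dt a t x y)
    (hf : Ts R f) (hg : Ts R g) (h0 : ∀ x y, a 0 x y = ε * f 0 x y)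
    (h1 : ∀ x y, Dt a 0 x y = ε * g 0 x y) : Van (Outs R) a := by
  intro t x y ht hp
  refine finite_speed (v := a) (q := Dt b * Dt b) (fun t x y _ => ?_) (fun t x y ht => ?_) hR
    (fun x y h => ?_) (fun x y h => ?_) t x y ht hp
  · rw [SF.mul_app]; exact mul_self_nonneg _
  · rw [hbox t x y ht, SF.mul_app]; ring
  · rw [h0, hf 0 x y h, mul_zero]
  · rw [h1, hg 0 x y h, mul_zero]

theorem sol_eq {a b : SF}
    (hbox : ∀ t x y, 0 < t → box a t x y = -(Dt b t x y) ^ 2 * Dt a t x y) :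
    Van Set.univ (box a - Fn a b) := by
  refine Van.of_pos fun t x y ht => ?_
  simp only [Fn, SF.sub_app, SF.neg_app, SF.mul_app, hbox t x y ht]
  ring

theorem sol_zd {a f g : SF} {ε : ℝ} (h0 : ∀ x y, a 0 x y = ε * f 0 x y)
    (h1 : ∀ x y, Dt a 0 x y = ε * g 0 x y) : Zd (a - ε • ZZ 1 0 f g) := fun x y => by
  have h10 : (1 : ℝ) ^ 2 + 0 ^ 2 = 1 := by norm_num
  constructor
  · rw [SF.sub_app, SF.smul_app, h0, ZZ_zero, sub_self]
  · rw [map_sub, Derivation.map_smul, SF.sub_app, SF.smul_app, h1, ZZ_Dt_zero h10, sub_self]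

/-- One component of the system at the time `max(ε⁻¹, -2σ)`: the free part contributes the radiation
field up to `O(ε / t)`, the nonlinear part is `O(ε²)`. -/
theorem comp_bound {R C C' ε : ℝ} (hR : 0 ≤ R) (hC : 0 ≤ C) (hC' : 0 ≤ C') (hε : 0 < ε)
    (hε1 : ε < 1) {a f g : SF} (hva : Van (Outs R) a) (hvz : Van (Outs R) (ZZ 1 0 f g))
    (hdec : Wdec (R + 2) (C * ε ^ 3) (sh (R + 1) (a - ε • ZZ 1 0 f g)))
    (hrate : ∀ t σ e1 e2, e1 ^ 2 + e2 ^ 2 = 1 → 2 * R + 1 < t → -2 * σ ≤ t →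
      |Wr (ZZ 1 0 f g) (-σ) e1 e2 t
        + 2 * dF0 (fun x y => f 0 x y) (fun x y => g 0 x y) σ e1 e2| ≤ C' / t)
    (hT : (R + 2) ^ 2 < ε⁻¹) {μ : ℝ} (hμ : 0 < μ) {σ e1 e2 : ℝ} (he : e1 ^ 2 + e2 ^ 2 = 1) :
    |Vop a (max ε⁻¹ (-2 * σ)) σ e1 e2
      - ε * dF0 (fun x y => f 0 x y) (fun x y => g 0 x y) σ e1 e2|
      ≤ (4 * C + C' + 1) * ε ^ ((2 : ℝ) - μ) := by
  obtain ⟨t, ht⟩ : ∃ t, t = max ε⁻¹ (-2 * σ) := ⟨_, rfl⟩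
  rw [← ht]
  have ht1 : ε⁻¹ ≤ t := ht ▸ le_max_left _ _
  have ht2 : -2 * σ ≤ t := ht ▸ le_max_right _ _
  have hεi : 0 < ε⁻¹ := inv_pos.2 hε
  have hvw : Van (Outs R) (a - ε • ZZ 1 0 f g) := fun t x y h h' => by
    rw [SF.sub_app, SF.smul_app, hva t x y h h', hvz t x y h h']; ring
  have h1 := Wr_w hR (by positivity : 0 ≤ C * ε ^ 3) hε hvw hdec he ht hT
  have h2 := hrate t σ e1 e2 he (by nlinarith) ht2
  have e1' : 7 * (C * ε ^ 3) / ε = 7 * C * ε ^ 2 := by field_simp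
  have e2' : C' / t ≤ C' * ε := by
    rw [div_eq_mul_inv]
    exact mul_le_mul_of_nonneg_left (inv_le_of_inv_le₀ hε ht1) hC'
  rw [e1'] at h1
  have h3 := mul_le_mul_of_nonneg_left (h2.trans e2') hε.le
  rw [Vop_eq a he (by linarith), Wr_split a (ZZ 1 0 f g) ε]
  set W1 := Wr (a - ε • ZZ 1 0 f g) (-σ) e1 e2 t
  set W2 := Wr (ZZ 1 0 f g) (-σ) e1 e2 t
  set L := dF0 (fun x y => f 0 x y) (fun x y => g 0 x y) σ e1 e2
  have e3 : -(1 / 2) * (W1 + ε * W2) - ε * L = -(1 / 2) * (W1 + ε * (W2 + 2 * L)) := by ring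
  have h4 : |ε * (W2 + 2 * L)| ≤ ε * (C' * ε) := by rwa [abs_mul, abs_of_pos hε]
  have h5 := (abs_add_le W1 (ε * (W2 + 2 * L))).trans (add_le_add h1 h4)
  have hpow : ε ^ 2 ≤ ε ^ ((2 : ℝ) - μ) := by
    rw [← rpow_two]
    exact rpow_le_rpow_of_exponent_ge hε hε1.le (by linarith)
  rw [e3, abs_mul, abs_neg, abs_of_pos (by norm_num : (0 : ℝ) < 1 / 2)]
  calc 1 / 2 * |W1 + ε * (W2 + 2 * L)| ≤ 1 / 2 * (7 * C * ε ^ 2 + ε * (C' * ε)) := by linarith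
    _ ≤ (4 * C + C' + 1) * ε ^ 2 := by nlinarith [sq_nonneg ε, mul_nonneg hC (sq_nonneg ε), mul_nonneg hC' (sq_nonneg ε)]
    _ ≤ _ := mul_le_mul_of_nonneg_left hpow (by positivity)

/-- at time `t_{1,σ} = max{ε⁻¹, −2σ}`, `V_j` is `ε∂_σF_j` up to
`O(ε^{2−μ})`. -/
theorem V_at_t1_approx (f1 f2 g1 g2 : ℝ → ℝ → ℝ)
    (hf1 : SmoothCompact2 f1) (hf2 : SmoothCompact2 f2)
    (hg1 : SmoothCompact2 g1) (hg2 : SmoothCompact2 g2)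
    (k : ℕ) (hk : 4 ≤ k) (μ ν : ℝ) (hμ0 : 0 < μ) (hμ1 : μ < 1 / 10)
    (hν0 : 0 < ν) (hν1 : ((8 * k + 7 : ℕ) : ℝ) * ν < μ) :
    ∃ ε₀ C : ℝ, 0 < ε₀ ∧ 0 < C ∧ ∀ ε : ℝ, 0 < ε → ε < ε₀ →
      ∀ u1 u2 : ℝ → ℝ → ℝ → ℝ, IsSolution ε f1 f2 g1 g2 u1 u2 →
        ∀ σ ω1 ω2 : ℝ, ω1 ^ 2 + ω2 ^ 2 = 1 →
          |Vop u1 (max ε⁻¹ (-2 * σ)) σ ω1 ω2 - ε * dF0 f1 g1 σ ω1 ω2|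
            ≤ C * ε ^ ((2 : ℝ) - μ) ∧
          |Vop u2 (max ε⁻¹ (-2 * σ)) σ ω1 ω2 - ε * dF0 f2 g2 σ ω1 ω2|
            ≤ C * ε ^ ((2 : ℝ) - μ) := by
  obtain ⟨R1, h1⟩ := dat_Ts hf1
  obtain ⟨R2', h2⟩ := dat_Ts hf2
  obtain ⟨R3, h3⟩ := dat_Ts hg1
  obtain ⟨R4, h4⟩ := dat_Ts hg2
  obtain ⟨R, r1, r2, r3, r4⟩ : ∃ R, R1 ≤ R ∧ R2' ≤ R ∧ R3 ≤ R ∧ R4 ≤ R :=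
    ⟨max (max R1 R2') (max R3 R4), by simp, by simp, by simp, by simp⟩
  obtain ⟨hR, h1⟩ := h1 R r1
  replace h2 := (h2 R r2).2
  replace h3 := (h3 R r3).2
  replace h4 := (h4 R r4).2
  have h10 : (1 : ℝ) ^ 2 + 0 ^ 2 = 1 := by norm_num
  have v1 := ZZ_Van hR h1 h3
  have v2 := ZZ_Van hR h2 h4
  have hb : ∀ f g, Van Set.univ (box (ZZ 1 0 f g)) := fun f g t x y _ _ => by
    rw [ZZ_box h10]; rfl
  obtain ⟨C, ε₁, hC, hε₁, hG⟩ := global_bounds hR _ _ v1 v2 (hb _ _) (hb _ _)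
  obtain ⟨C1, hC1, hr1⟩ := Wr_rate hR h1 h3
  obtain ⟨C2, hC2, hr2⟩ := Wr_rate hR h2 h4
  have hRp : 0 < (R + 2) ^ 2 := by positivity
  refine ⟨min ε₁ ((R + 2) ^ 2)⁻¹, 4 * C + (C1 + C2) + 1, lt_min hε₁ (inv_pos.2 hRp), by positivity,
    fun ε hε hlt u1 u2 hu σ e1 e2 he => ?_⟩
  obtain ⟨l1, l2⟩ := lt_min_iff.1 hlt
  have hT : (R + 2) ^ 2 < ε⁻¹ := (lt_inv_comm₀ hε hRp).1 l2
  have hε1 : ε < 1 := l2.trans_le (inv_le_one_of_one_le₀ (by nlinarith))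
  obtain ⟨a, ha⟩ : ∃ a : SF, (a : ℝ → ℝ → ℝ → ℝ) = u1 := ⟨⟨u1, hu.smooth1⟩, rfl⟩
  obtain ⟨b, hb'⟩ : ∃ b : SF, (b : ℝ → ℝ → ℝ → ℝ) = u2 := ⟨⟨u2, hu.smooth2⟩, rfl⟩
  subst ha hb'
  have a0 : ∀ x y, a 0 x y = ε * dat f1 hf1 0 x y := hu.init1
  have a1 : ∀ x y, Dt a 0 x y = ε * dat g1 hg1 0 x y := hu.initd1
  have b0 : ∀ x y, b 0 x y = ε * dat f2 hf2 0 x y := hu.init2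
  have b1 : ∀ x y, Dt b 0 x y = ε * dat g2 hg2 0 x y := hu.initd2
  have va := sol_van hR hu.pde1 h1 h3 a0 a1
  have vb := sol_van hR hu.pde2 h2 h4 b0 b1
  obtain ⟨w1, w2⟩ := hG ε hε l1 a b ⟨va, vb, sol_eq hu.pde1, sol_eq hu.pde2⟩
    (sol_zd a0 a1) (sol_zd b0 b1)
  have q1 := comp_bound hR hC.le hC1 hε hε1 va v1 w1 hr1 hT hμ0 (σ := σ) he
  have q2 := comp_bound hR hC.le hC2 hε hε1 vb v2 w2 hr2 hT hμ0 (σ := σ) he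
  have hp : 0 ≤ ε ^ ((2 : ℝ) - μ) := rpow_nonneg hε.le _
  exact ⟨q1.trans (mul_le_mul_of_nonneg_right (by linarith) hp),
    q2.trans (mul_le_mul_of_nonneg_right (by linarith) hp)⟩

end
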